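/- Let r ∈ {1,2,…,∞} and let q ≥ 1 be an integer. There is a residual subset 𝓔^r_* of 𝓔^r containing 𝓔^ω such that for every T ∈ 𝓔^r_* there is a residual subset of the space of C^r families (f_t)_{t∈[0,1]^q} with the following property: for every family in this residual subset, for Lebesgue-almost every t ∈ [0,1]^q, the pair (f_t, T) is uniquely maximized by a periodic measure. -/

import Mathlib

/-!
Fix an expanding map `T` whose derivative oscillates by at most `√ρ` at arbitrarily small scales `ρ`
(`EC.ExpData.HoldScales`). Maps with this property form a residual set which contains every map with
Lipschitz derivative, in particular all analytic ones (`EC.exists_Estar`).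

Let `f` be a function with Lipschitz derivative and perturb it to `g_ω = f + ∑ ω_k φ_k`, where the
`φ_k` are small multiples of the trigonometric monomials and of smooth plateau functions, and the
`ω_k ∈ [0,1]` are independent and uniform. The heart of the proof is that `g_ω` is almost surely
*locked* (`EC.Pert.lock_ae`): every function Lipschitz-close to `g_ω` is uniquely maximized by a
periodic measure. The steps are as follows.

* `β` is convex along each coordinate of `ω`, so almost surely it has a second order upper bound in
  every direction `φ_k` (`EC.Pert.quad_ae`). In particular the maximizing measure `ν` is unique, hence
  ergodic.
* Such a bound forces the orbits on which `g_ω` is nearly maximal to have zero entropy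
  (`EC.ExpData.zero_entropy`). Along these orbits the defects of `g_ω` and of `g_ω + h φ_k` both have
  small Birkhoff sums. Two backward branches that split at a point have slopes which differ for some
  `φ_k` (`EC.ExpData.trans_unif`), so the point at which two such orbits merge is determined up to a
  very small error (`EC.ExpData.merge_lemma`). Counting pairs of orbits by their merging points then
  excludes exponential growth.
* By zero entropy there are subexponentially many candidate pairs of splitting backward orbits. A
  union bound at the good scales of `T` shows that almost surely no two such orbits in the nearly
  maximizing set have the same slope for `g_ω` (`EC.Pert.no_collide_ae`). Comparing slopes, on either
  side of each point the support of `ν` meets only one inverse branch of `T`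
  (`EC.GoodMax.one_branch`).
* Zero entropy gives very fast recurrence. Together with the second order bound in the plateau
  directions, this shows that the `ν`-measure of an arc whose end points avoid the support is rational
  (`EC.GoodMax.ball_rat`). If `ν` had no atoms, `T` would act in the coordinate given by the
  distribution function of `ν` by isometries with translations in `(1/q)ℤ`, up to finitely many points
  (`EC.GoodMax.global_iso`); this contradicts ergodicity. So `ν` has an atom and is periodic
  (`EC.GoodMax.exists_periodic`).
* Plateaus away from the periodic orbit penalize mass outside of it, which yields locking
  (`EC.GoodMax.lock`).

Locking is a `C^1`-open condition, so the families for which the non-locked parameters in the cube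
have measure less than `1/(n+1)` form an open set (`EC.GoodFam_open`). By Fubini, almost every `ω`
makes almost every member of the perturbed family locked, so that this set is dense
(`EC.GoodFam_dense`; for `r = 1` the family is first smoothed by Steklov averages). The intersection
over `n` is the required residual set of families.
-/

open MeasureTheory Topology Filter Set
open scoped UniformConvergence

noncomputable section

/-- The circle `ℝ/ℤ`. -/
abbrev Circle1 : Type := AddCircle (1 : ℝ)

/-- The canonical representative in `[0,1)` of a point of `ℝ/ℤ`. -/
noncomputable def rep (z : Circle1) : ℝ := (AddCircle.equivIco 1 0 z : ℝ)

/-- The circle map induced by a lift `F : ℝ → ℝ`. -/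
noncomputable def cmap (F : ℝ → ℝ) : Circle1 → Circle1 := fun z => ((F (rep z) : ℝ) : Circle1)

/-- The data determining the `C^r` topology: all derivatives of order `≤ r`, viewed in the
space of functions `ℝ → ℝ` with the uniform-convergence topology. -/
noncomputable def crSeq (r : ℕ∞) (f : ℝ → ℝ) : ℕ → (ℝ →ᵤ ℝ) :=
  fun k => UniformFun.ofFun (if (k : ℕ∞) ≤ r then iteratedDeriv k f else 0)

/-- The space `𝓒^r` of `C^r` functions `ℝ/ℤ → ℝ`. -/
def CrFun (r : ℕ∞) : Type := {f : Circle1 → ℝ // ContDiff ℝ r fun x : ℝ => f ↑x}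

/-- The `C^r` topology on `𝓒^r`. -/
noncomputable instance (r : ℕ∞) : TopologicalSpace (CrFun r) :=
  TopologicalSpace.induced (fun f : CrFun r => crSeq r fun x : ℝ => f.1 ↑x) inferInstance

/-- `F : ℝ → ℝ` is a lift of a `C^r` expanding circle map: it is `C^r`, sends `x+1` to
`F x + d` for a fixed integer `d`, and `|(Fⁿ)'| ≥ C λⁿ` for some `C > 0`, `λ > 1`. -/
def ExpandingLift (r : ℕ∞) (F : ℝ → ℝ) : Prop :=
  ContDiff ℝ r F ∧ (∃ d : ℤ, ∀ x : ℝ, F (x + 1) = F x + d) ∧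
    ∃ C > (0 : ℝ), ∃ l > (1 : ℝ), ∀ n : ℕ, 1 ≤ n → ∀ x : ℝ, C * l ^ n ≤ |deriv (F^[n]) x|

/-- The space `𝓔^r` of (lifts of) `C^r` expanding circle maps, with the `C^r` topology. -/
def ExpMap (r : ℕ∞) : Type := {F : ℝ → ℝ // ExpandingLift r F}

noncomputable instance (r : ℕ∞) : TopologicalSpace (ExpMap r) :=
  TopologicalSpace.induced (fun F : ExpMap r => crSeq r F.1) inferInstance

/-- `μ` is a `T`-invariant Borel probability measure. -/
def InvProb (T : Circle1 → Circle1) (μ : Measure Circle1) : Prop :=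
  IsProbabilityMeasure μ ∧ μ.map T = μ

/-- `β(f,T)`, the maximal ergodic average. -/
noncomputable def beta (f : Circle1 → ℝ) (T : Circle1 → Circle1) : ℝ :=
  sSup ((fun μ : Measure Circle1 => ∫ x, f x ∂μ) '' {μ | InvProb T μ})

/-- `μ` is a maximizing measure for `(f,T)`. -/
def IsMaximizing (f : Circle1 → ℝ) (T : Circle1 → Circle1) (μ : Measure Circle1) : Prop :=
  InvProb T μ ∧ ∫ x, f x ∂μ = beta f T

/-- `μ` is a periodic measure: an invariant measure supported on a periodic orbit. -/
def IsPeriodicMeasure (T : Circle1 → Circle1) (μ : Measure Circle1) : Prop :=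
  InvProb T μ ∧ ∃ x : Circle1, ∃ n : ℕ, 0 < n ∧ T^[n] x = x ∧
    μ (Set.range fun k : ℕ => T^[k] x) = 1

/-- `(f,T)` is uniquely maximized by a periodic measure. -/
def UniqMaxPeriodic (f : Circle1 → ℝ) (T : Circle1 → Circle1) : Prop :=
  ∃ μ : Measure Circle1, IsMaximizing f T μ ∧ IsPeriodicMeasure T μ ∧
    ∀ ν : Measure Circle1, IsMaximizing f T ν → ν = μ

/-- A (continuous) sub-action for `(f,T)`. -/
def IsSubaction (f : Circle1 → ℝ) (T : Circle1 → Circle1) (g : Circle1 → ℝ) : Prop :=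
  Continuous g ∧ ∀ x, g x + f x ≤ g (T x) + beta f T

/-- A calibrated sub-action for `(f,T)`. -/
def IsCalibrated (f : Circle1 → ℝ) (T : Circle1 → Circle1) (g : Circle1 → ℝ) : Prop :=
  IsSubaction f T g ∧ ∀ x, ∃ y, T y = x ∧ g y + f y = g x + beta f T

/-- `G_{f,T}`: the set of Lipschitz calibrated sub-actions of `(f,T)`. -/
def Gset (f : Circle1 → ℝ) (T : Circle1 → Circle1) : Set (Circle1 → ℝ) :=
  {g | (∃ K : NNReal, LipschitzWith K g) ∧ IsCalibrated f T g}

/-- The set `E_{f,T,g}`. -/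
def Eset (f : Circle1 → ℝ) (T : Circle1 → Circle1) (g : Circle1 → ℝ) : Set Circle1 :=
  {x | g x + f x = g (T x) + beta f T}

/-- The set `Λ*_{f,T,g}`. -/
def LambdaStar (f : Circle1 → ℝ) (T : Circle1 → Circle1) (g : Circle1 → ℝ) : Set Circle1 :=
  {x | ∀ n : ℕ, T^[n] x ∈ Eset f T g}

/-- The set `Λ_{f,T,g}`. -/
def Lambda (f : Circle1 → ℝ) (T : Circle1 → Circle1) (g : Circle1 → ℝ) : Set Circle1 :=
  ⋂ n : ℕ, T^[n] '' LambdaStar f T g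

/-- The set `K(f,T)`. -/
def Kset (f : Circle1 → ℝ) (T : Circle1 → Circle1) : Set Circle1 :=
  ⋃ g ∈ Gset f T, Lambda f T g

/-- The `(f,T)`-non-wandering set `Ω(f,T)`. -/
def OmegaSet (f : Circle1 → ℝ) (T : Circle1 → Circle1) : Set Circle1 :=
  {x | ∀ ε > (0 : ℝ), ∃ n : ℕ, 1 ≤ n ∧ ∃ z : Circle1, T^[n] z = x ∧ dist z x < ε ∧
    |∑ i ∈ Finset.range n, (f (T^[i] z) - beta f T)| < ε}

/-- `A` is a periodic orbit of `T`. -/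
def IsPeriodicOrbit (T : Circle1 → Circle1) (A : Set Circle1) : Prop :=
  ∃ x : Circle1, (∃ n : ℕ, 0 < n ∧ T^[n] x = x) ∧ A = Set.range fun k : ℕ => T^[k] x

/-- `A` is a `T`-minimal set: a nonempty compact invariant set with no proper nonempty
compact invariant subset. -/
def IsMinimalSet (T : Circle1 → Circle1) (A : Set Circle1) : Prop :=
  A.Nonempty ∧ IsCompact A ∧ T '' A ⊆ A ∧
    ∀ B ⊆ A, B.Nonempty → IsCompact B → T '' B ⊆ B → B = A

/-- The space of `C^r` families of functions on the circle with `q` parameters,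
i.e. maps `(t,x) ↦ f_t(x)` that are jointly `C^r` (the circle variable via a lift). -/
def FamFun (r : ℕ∞) (q : ℕ) : Type :=
  {G : ((Fin q → ℝ) × ℝ) → ℝ // ContDiff ℝ r G ∧ ∀ t x, G (t, x + 1) = G (t, x)}

noncomputable def famSeq (r : ℕ∞) (q : ℕ) (G : ((Fin q → ℝ) × ℝ) → ℝ) :
    (k : ℕ) → (((Fin q → ℝ) × ℝ) →ᵤ (((Fin q → ℝ) × ℝ) [×k]→L[ℝ] ℝ)) :=
  fun k => UniformFun.ofFun (if (k : ℕ∞) ≤ r then iteratedFDeriv ℝ k G else 0)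

/-- The `C^r` topology on the space of `C^r` families. -/
noncomputable instance (r : ℕ∞) (q : ℕ) : TopologicalSpace (FamFun r q) :=
  TopologicalSpace.induced (fun G : FamFun r q => famSeq r q G.1) inferInstance

/-- The member `f_t : ℝ/ℤ → ℝ` of a family, at the parameter `t`. -/
noncomputable def famMem {r : ℕ∞} {q : ℕ} (G : FamFun r q) (t : Fin q → ℝ) : Circle1 → ℝ :=
  fun z => G.1 (t, rep z)

/-- The product `m_∞` over `ℕ` of Lebesgue measure on `[0,1]`, realised as the pushforward of
the Haar probability measure of the compact group `(ℝ/ℤ)^ℕ` under the coordinatewise choice of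
representatives in `[0,1)`. -/
noncomputable def mInfty : Measure (ℕ → ℝ) :=
  Measure.map (fun (t : ℕ → Circle1) (n : ℕ) => rep (t n))
    (MeasureTheory.Measure.addHaarMeasure (⊤ : TopologicalSpace.PositiveCompacts (ℕ → Circle1)))

/-- `S` is an `N`-dimensionally shy subset of a normed real vector space `V`. -/
def NDimShy {V : Type*} [NormedAddCommGroup V] [NormedSpace ℝ V] (N : ℕ) (S : Set V) : Prop :=
  ∃ φ : Fin N → V, ∀ f : V,
    volume {t : Fin N → ℝ | (∀ i, t i ∈ Set.Icc (0 : ℝ) 1) ∧ f + ∑ i, t i • φ i ∈ S} = 0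

/-- `S` is a finite dimensionally shy subset of a normed real vector space `V`. -/
def FinDimShy {V : Type*} [NormedAddCommGroup V] [NormedSpace ℝ V] (S : Set V) : Prop :=
  ∃ N : ℕ, 0 < N ∧ NDimShy N S

/-- `S` is a shy subset of `V`: there are a compactly supported Borel probability measure `μ`
on `V` and a Borel set `S̃ ⊇ S` all of whose translates are `μ`-null. -/
def IsShy {V : Type*} [NormedAddCommGroup V] [NormedSpace ℝ V] (S : Set V) : Prop :=
  letI : MeasurableSpace V := borel V
  ∃ μ : Measure V, μ Set.univ = 1 ∧ (∃ K : Set V, IsCompact K ∧ μ K = 1) ∧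
    ∃ St : Set V, MeasurableSet St ∧ S ⊆ St ∧
      ∀ v : V, μ ((fun x => x + v) ⁻¹' St) = 0

/-- `S` is a prevalent subset of `V`. -/
def IsPrevalent {V : Type*} [NormedAddCommGroup V] [NormedSpace ℝ V] (S : Set V) : Prop :=
  IsShy Sᶜ

/-- `F` is the (normalized) lift of an orientation-preserving real analytic expanding circle
map of degree `d` fixing `π(0)`. -/
def AnalyticExpandingLift (F : ℝ → ℝ) (d : ℕ) : Prop :=
  (∀ x : ℝ, AnalyticAt ℝ F x) ∧ (∀ x : ℝ, F (x + 1) = F x + d) ∧ StrictMono F ∧ F 0 = 0 ∧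
    2 ≤ d ∧ ∃ C > (0 : ℝ), ∃ l > (1 : ℝ), ∀ n : ℕ, 1 ≤ n → ∀ x : ℝ, C * l ^ n ≤ |deriv (F^[n]) x|

/-- The inverse branches `τ_{i,n} = τ_{i_n} ∘ ⋯ ∘ τ_{i_1}`, where `τ = F⁻¹` and
`τ_i(x) = τ(x+i)`; the word `i` is indexed from `0`, so `i 0` is the first letter `i_1`. -/
noncomputable def tauIter (F : ℝ → ℝ) {d : ℕ} (i : ℕ → Fin d) : ℕ → ℝ → ℝ
  | 0, x => x
  | n + 1, x => Function.invFun F (tauIter F i n x + ((i n : ℕ) : ℝ))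

/-- The function `h^f_i` associated to an infinite word `i`. -/
noncomputable def hSum (F : ℝ → ℝ) {d : ℕ} (i : ℕ → Fin d) (f : Circle1 → ℝ) : ℝ → ℝ :=
  fun x => ∑' n : ℕ,
    (f ((tauIter F i (n + 1) x : ℝ) : Circle1) - f ((tauIter F i (n + 1) 0 : ℝ) : Circle1))

/-- The function `h^f_i` associated to a finite word of length `m` (the first `m` letters
of `i`). -/
noncomputable def hSumFin (F : ℝ → ℝ) {d : ℕ} (i : ℕ → Fin d) (m : ℕ) (f : Circle1 → ℝ) :
    ℝ → ℝ :=
  fun x => ∑ n ∈ Finset.range m,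
    (f ((tauIter F i (n + 1) x : ℝ) : Circle1) - f ((tauIter F i (n + 1) 0 : ℝ) : Circle1))

/-- `i ∈ CL(x,K)`: all backward images of `x` along the word `i` lie over `K`. -/
def WordIn (F : ℝ → ℝ) {d : ℕ} (i : ℕ → Fin d) (x : ℝ) (K : Set Circle1) : Prop :=
  ∀ n : ℕ, 1 ≤ n → ((tauIter F i n x : ℝ) : Circle1) ∈ K

/-- `x` (a real, lying over `K`) is an `f`-supercritical value of `K`. -/
def IsSupercriticalValue (F : ℝ → ℝ) (d : ℕ) (f : Circle1 → ℝ) (K : Set Circle1) (x : ℝ) :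
    Prop :=
  ((x : ℝ) : Circle1) ∈ K ∧ ∃ i j : ℕ → Fin d, WordIn F i x K ∧ WordIn F j x K ∧ i 0 ≠ j 0 ∧
    deriv (hSum F i f) x = deriv (hSum F j f) x

/-- `x` is a critical value of `T|K`. -/
def IsCriticalValue (T : Circle1 → Circle1) (K : Set Circle1) (x : Circle1) : Prop :=
  x ∈ K ∧ ∃ y z, y ∈ K ∧ z ∈ K ∧ y ≠ z ∧ T y = x ∧ T z = x

/-- A critical value `x` of `T|K` is regular: on each side of `x` there is a continuous
inverse branch of `T` selecting the unique preimage in `K`. -/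
def IsRegularCriticalValue (T : Circle1 → Circle1) (K : Set Circle1) (x : Circle1) : Prop :=
  ∃ U : Set Circle1, U ∈ 𝓝 x ∧ IsConnected U ∧
    ∀ b ∈ U \ {x}, ∃ s : Circle1 → Circle1,
      ContinuousOn s (connectedComponentIn (U \ {x}) b) ∧
      (∀ y ∈ connectedComponentIn (U \ {x}) b, T (s y) = y) ∧
      (∀ y ∈ K ∩ connectedComponentIn (U \ {x}) b, T ⁻¹' {y} ∩ K = {s y})

/-- `T|K` is Sturmian-like: every critical value is regular. -/
def SturmianLike (T : Circle1 → Circle1) (K : Set Circle1) : Prop :=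
  ∀ x, IsCriticalValue T K x → IsRegularCriticalValue T K x

/-- `f : ℝ/ℤ → ℝ` is a trigonometric polynomial. -/
def IsTrigPoly (f : Circle1 → ℝ) : Prop :=
  ∃ m : ℕ, ∃ a b : ℕ → ℝ, ∀ x : ℝ,
    f ↑x = a 0 + ∑ k ∈ Finset.range m,
      (a (k + 1) * Real.cos (2 * Real.pi * (k + 1) * x) +
        b (k + 1) * Real.sin (2 * Real.pi * (k + 1) * x))

end

noncomputable section

namespace EC

/-! ### Circle and lifts -/

theorem coe_rep (z : Circle1) : ((rep z : ℝ) : Circle1) = z :=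
  (AddCircle.equivIco 1 0).symm_apply_apply z

theorem rep_nonneg (z : Circle1) : 0 ≤ rep z := (AddCircle.equivIco 1 0 z).2.1

theorem rep_lt_one (z : Circle1) : rep z < 1 := by
  have := (AddCircle.equivIco 1 0 z).2.2; simpa [rep] using this

theorem coe_eq_iff {a b : ℝ} : (a : Circle1) = b ↔ ∃ m : ℤ, b = a + m := by
  rw [eq_comm, ← sub_eq_zero, ← AddCircle.coe_sub, AddCircle.coe_eq_zero_iff]
  constructor
  · rintro ⟨m, hm⟩; exact ⟨m, by simp at hm; linarith⟩
  · rintro ⟨m, hm⟩; exact ⟨m, by simp; linarith⟩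

theorem exists_rep (a : ℝ) : ∃ m : ℤ, rep (a : Circle1) = a + m :=
  coe_eq_iff.1 (coe_rep (a : Circle1)).symm

theorem coe_int_eq_zero (m : ℤ) : (((m : ℤ) : ℝ) : Circle1) = 0 := by
  rw [AddCircle.coe_eq_zero_iff]; exact ⟨m, by simp⟩

theorem coe_add_int (a : ℝ) (m : ℤ) : ((a + m : ℝ) : Circle1) = a :=
  (coe_eq_iff.2 ⟨m, rfl⟩).symm

theorem measurable_rep : Measurable rep :=
  measurable_subtype_coe.comp (AddCircle.measurableEquivIco 1 0).measurable

theorem continuous_of_coe {Y : Type*} [TopologicalSpace Y] {h : Circle1 → Y}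
    (H : Continuous fun x : ℝ => h x) : Continuous h :=
  (QuotientAddGroup.isQuotientMap_mk _).continuous_iff.2 H

theorem dist_coe_le (a b : ℝ) : dist (a : Circle1) b ≤ |a - b| := by
  rw [dist_eq_norm, ← AddCircle.coe_sub, AddCircle.norm_eq]
  simp only [inv_one, one_mul, mul_one]
  have := round_le (a - b) 0
  simpa using this

theorem dist_coe_eq {a b : ℝ} (h : |a - b| ≤ 1 / 2) : dist (a : Circle1) b = |a - b| := by
  rw [dist_eq_norm, ← AddCircle.coe_sub]
  have h1 := AddCircle.norm_coe_eq_abs_iff (1 : ℝ) (x := a - b) one_ne_zero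
  exact h1.2 (by simpa using h)

theorem dist_le_half (x y : Circle1) : dist x y ≤ 1 / 2 := by
  rw [dist_eq_norm]
  simpa using AddCircle.norm_le_half_period (1 : ℝ) (x := x - y) one_ne_zero

/-- Two points of the circle differ by a real displacement of length their distance. -/
theorem exists_disp (x y : Circle1) : ∃ t : ℝ, y = x + (t : Circle1) ∧ |t| = dist x y := by
  have h1 : ∃ t : ℝ, (t : Circle1) = y - x ∧ |t| ≤ 1 / 2 := by
    refine ⟨rep (y - x) - round (rep (y - x)), ?_, by simpa using abs_sub_round (rep (y - x))⟩
    rw [AddCircle.coe_sub, coe_rep, coe_int_eq_zero, sub_zero]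
  obtain ⟨t, ht, h2⟩ := h1
  refine ⟨t, by rw [ht]; abel, ?_⟩
  have h3 := dist_coe_eq (a := t) (b := 0) (by simpa using h2)
  rw [sub_zero] at h3
  rw [← h3, dist_comm x y, dist_eq_norm, dist_eq_norm, ht]; simp

/-! ### Expanding lifts -/

/-- A `C^1` lift `F` of an expanding circle map together with its derivative `F'`, its degree
and its expansion constants. The expansion is also required for `n = 0`, i.e. `c ≤ 1`. -/
structure ExpData where
  F : ℝ → ℝ
  F' : ℝ → ℝ
  hasDeriv : ∀ x, HasDerivAt F (F' x) x
  cont : Continuous F'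
  d : ℤ
  periodic : ∀ x, F (x + 1) = F x + d
  c : ℝ
  lam : ℝ
  c_pos : 0 < c
  lam_gt : 1 < lam
  expand : ∀ n x, c * lam ^ n ≤ |∏ k ∈ Finset.range n, F' (F^[k] x)|

namespace ExpData

variable (D : ExpData)

/-- The derivative of the `n`-th iterate of the lift. -/
def J (n : ℕ) (x : ℝ) : ℝ := ∏ k ∈ Finset.range n, D.F' (D.F^[k] x)

theorem lam_pos : 0 < D.lam := zero_lt_one.trans D.lam_gt

theorem J_expand (n : ℕ) (x : ℝ) : D.c * D.lam ^ n ≤ |D.J n x| := D.expand n x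

theorem J_ne (n : ℕ) (x : ℝ) : D.J n x ≠ 0 := by
  have h := D.J_expand n x
  have := mul_pos D.c_pos (pow_pos D.lam_pos n)
  intro h0; rw [h0, abs_zero] at h; linarith

theorem J_add (m n : ℕ) (x : ℝ) : D.J (m + n) x = D.J m x * D.J n (D.F^[m] x) := by
  simp only [J, Finset.prod_range_add]
  congr 1
  refine Finset.prod_congr rfl fun k _ => ?_
  rw [← Function.iterate_add_apply, add_comm k m]

theorem c_le_one : D.c ≤ 1 := by simpa using D.expand 0 0

theorem iter_hasDeriv (n : ℕ) (x : ℝ) : HasDerivAt D.F^[n] (D.J n x) x := by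
  induction n with
  | zero => simpa [J] using hasDerivAt_id x
  | succ n ih =>
    rw [Function.iterate_succ', J, Finset.prod_range_succ, mul_comm]
    exact (D.hasDeriv _).comp x ih

theorem contF : Continuous D.F := continuous_iff_continuousAt.2 fun x => (D.hasDeriv x).continuousAt

theorem cont_iter (n : ℕ) : Continuous D.F^[n] := D.contF.iterate n

theorem J_cont (n : ℕ) : Continuous (D.J n) :=
  continuous_finsetProd _ fun k _ => D.cont.comp (D.cont_iter k)

theorem expand_dist (n : ℕ) (a b : ℝ) :
    D.c * D.lam ^ n * |a - b| ≤ |D.F^[n] a - D.F^[n] b| := by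
  wlog h : a ≤ b generalizing a b
  · rw [abs_sub_comm a, abs_sub_comm (D.F^[n] a)]; exact this b a (le_of_not_ge h)
  rcases h.eq_or_lt with rfl | h
  · simp
  obtain ⟨x, -, hx⟩ := exists_hasDerivAt_eq_slope D.F^[n] (D.J n) h (D.cont_iter n).continuousOn
    fun x _ => D.iter_hasDeriv n x
  have h1 : D.F^[n] b - D.F^[n] a = D.J n x * (b - a) := by
    rw [hx]; field_simp [sub_ne_zero.2 h.ne']
  rw [abs_sub_comm a, abs_sub_comm (D.F^[n] a), h1, abs_mul]
  exact mul_le_mul_of_nonneg_right (D.J_expand n x) (abs_nonneg _)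

theorem iter_inj (n : ℕ) : Function.Injective D.F^[n] := by
  intro a b h
  have h1 := D.expand_dist n a b
  rw [h, sub_self, abs_zero] at h1
  have h2 := mul_pos D.c_pos (pow_pos D.lam_pos n)
  have h3 : |a - b| ≤ 0 := by
    by_contra h4; push Not at h4; have := mul_pos h2 h4; linarith
  exact sub_eq_zero.1 (abs_nonpos_iff.1 h3)

theorem F_add_int (x : ℝ) (m : ℤ) : D.F (x + m) = D.F x + (D.d * m : ℤ) := by
  induction m using Int.induction_on with
  | zero => simp
  | succ n ih =>
    push_cast at ih ⊢
    rw [← add_assoc, D.periodic, ih]; ring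
  | pred n ih =>
    have h := D.periodic (x + ((-(n : ℤ) - 1 : ℤ) : ℝ))
    have e : x + ((-(n : ℤ) - 1 : ℤ) : ℝ) + 1 = x + ((-(n : ℤ) : ℤ) : ℝ) := by push_cast; ring
    rw [e, ih] at h
    push_cast at h ⊢; linarith

theorem iter_add_int (n : ℕ) (x : ℝ) (m : ℤ) :
    D.F^[n] (x + m) = D.F^[n] x + (D.d ^ n * m : ℤ) := by
  induction n with
  | zero => simp
  | succ n ih =>
    rw [Function.iterate_succ_apply', ih, D.F_add_int, Function.iterate_succ_apply']
    push_cast; ring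

theorem F'_periodic : Function.Periodic D.F' 1 := by
  intro x
  have h1 : HasDerivAt (fun y => D.F (y + 1)) (D.F' (x + 1)) x := by
    simpa using (D.hasDeriv (x + 1)).comp_add_const x 1
  have h2 : HasDerivAt (fun y => D.F (y + 1)) (D.F' x) x := by
    simp only [D.periodic]; exact (D.hasDeriv x).add_const _
  exact h1.unique h2

theorem F'_add_int (x : ℝ) (m : ℤ) : D.F' (x + m) = D.F' x := by
  have := D.F'_periodic.int_mul m x; simpa using this

theorem J_add_int (n : ℕ) (x : ℝ) (m : ℤ) : D.J n (x + m) = D.J n x := by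
  refine Finset.prod_congr rfl fun k _ => ?_
  rw [D.iter_add_int, D.F'_add_int]

theorem d_ne : D.d ≠ 0 := by
  intro h
  have h1 := D.periodic 0
  rw [h] at h1
  have := D.iter_inj 1 (show D.F^[1] (0 + 1) = D.F^[1] 0 by simpa using h1)
  norm_num at this

theorem F_surj : Function.Surjective D.F := by
  intro y
  have key : ∀ m : ℤ, D.F (m : ℝ) = D.F 0 + (D.d * m : ℤ) := fun m => by
    simpa using D.F_add_int 0 m
  obtain ⟨N, hN⟩ := exists_nat_ge |y - D.F 0|
  have hab := abs_le.1 hN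
  have hd : (1 : ℝ) ≤ |(D.d : ℝ)| := by exact_mod_cast Int.one_le_abs D.d_ne
  have h2 : (D.d : ℝ) * D.d ≥ 1 := by nlinarith [abs_mul_abs_self (D.d : ℝ)]
  have hN0 : (0 : ℝ) ≤ N := N.cast_nonneg
  refine mem_range_of_exists_le_of_exists_ge D.contF ⟨((-(N : ℤ) * D.d : ℤ) : ℝ), ?_⟩
    ⟨(((N : ℤ) * D.d : ℤ) : ℝ), ?_⟩
  · rw [key]; push_cast; nlinarith
  · rw [key]; push_cast; nlinarith

/-- The lift as a bijection of the line. -/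
def equiv : ℝ ≃ ℝ := Equiv.ofBijective D.F ⟨D.iter_inj 1, D.F_surj⟩

/-- The inverse of the lift. -/
def Finv : ℝ → ℝ := D.equiv.symm

theorem F_Finv (y : ℝ) : D.F (D.Finv y) = y := D.equiv.apply_symm_apply y

theorem iter_Finv (n : ℕ) (y : ℝ) : D.F^[n] (D.Finv^[n] y) = y :=
  Function.RightInverse.iterate (fun y => D.F_Finv y) n y

/-- The inverse branch of `F^n` that sends `F^n a` to `a`, evaluated at `F^n a + s`. -/
def B (n : ℕ) (a s : ℝ) : ℝ := D.Finv^[n] (D.F^[n] a + s)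

theorem iter_B (n : ℕ) (a s : ℝ) : D.F^[n] (D.B n a s) = D.F^[n] a + s := D.iter_Finv _ _

theorem B_zero (n : ℕ) (a : ℝ) : D.B n a 0 = a := D.iter_inj n (by rw [iter_B, add_zero])

theorem B_eq {n : ℕ} {a s b : ℝ} (h : D.F^[n] b = D.F^[n] a + s) : D.B n a s = b :=
  D.iter_inj n (by rw [iter_B, h])

theorem iter_B_add (k j : ℕ) (a s : ℝ) : D.F^[k] (D.B (k + j) a s) = D.B j (D.F^[k] a) s := by
  refine (D.B_eq ?_).symm
  rw [← Function.iterate_add_apply, ← Function.iterate_add_apply, add_comm j k, D.iter_B]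

theorem B_sub_le (n : ℕ) (a s t : ℝ) :
    |D.B n a s - D.B n a t| ≤ D.c⁻¹ * D.lam⁻¹ ^ n * |s - t| := by
  have h := D.expand_dist n (D.B n a s) (D.B n a t)
  rw [iter_B, iter_B, add_sub_add_left_eq_sub] at h
  have h2 := mul_pos D.c_pos (pow_pos D.lam_pos n)
  rw [inv_pow, ← mul_inv, inv_mul_eq_div, le_div_iff₀ h2]; linarith

theorem B_cont (n : ℕ) (a : ℝ) : Continuous (D.B n a) := by
  have : LipschitzWith (Real.toNNReal (D.c⁻¹ * D.lam⁻¹ ^ n)) (D.B n a) := by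
    refine LipschitzWith.of_dist_le_mul fun s t => ?_
    rw [Real.coe_toNNReal _ (by have := D.c_pos; have := D.lam_pos; positivity)]
    exact D.B_sub_le n a s t
  exact this.continuous

theorem B_hasDeriv (n : ℕ) (a s : ℝ) : HasDerivAt (D.B n a) (D.J n (D.B n a s))⁻¹ s := by
  have h1 : HasDerivAt (fun x => D.F^[n] x - D.F^[n] a) (D.J n (D.B n a s)) (D.B n a s) :=
    (D.iter_hasDeriv n _).sub_const _
  exact HasDerivAt.of_local_left_inverse (D.B_cont n a).continuousAt h1 (D.J_ne _ _)
    (Eventually.of_forall fun y => by simp [iter_B])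

theorem exists_Lam : ∃ M : ℝ, 1 ≤ M ∧ ∀ x, |D.F' x| ≤ M := by
  obtain ⟨M, hM⟩ := (isCompact_Icc (a := (0:ℝ)) (b := 1)).exists_bound_of_continuousOn
    D.cont.continuousOn
  refine ⟨max M 1, le_max_right _ _, fun x => ?_⟩
  have h := D.F'_add_int (Int.fract x) ⌊x⌋
  rw [Int.fract_add_floor] at h
  rw [h]
  exact (hM _ ⟨Int.fract_nonneg x, (Int.fract_lt_one x).le⟩).trans (le_max_left _ _)

/-- An upper bound, at least `1`, for `|F'|`. -/
def Lam : ℝ := D.exists_Lam.choose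

theorem one_le_Lam : 1 ≤ D.Lam := D.exists_Lam.choose_spec.1

theorem Lam_pos : 0 < D.Lam := zero_lt_one.trans_le D.one_le_Lam

theorem F'_le (x : ℝ) : |D.F' x| ≤ D.Lam := D.exists_Lam.choose_spec.2 x

theorem F_lip (a b : ℝ) : |D.F a - D.F b| ≤ D.Lam * |a - b| := by
  have := Convex.norm_image_sub_le_of_norm_hasDerivWithin_le (f := D.F) (f' := D.F') (s := univ)
    (C := D.Lam) (fun x _ => (D.hasDeriv x).hasDerivWithinAt) (fun x _ => D.F'_le x)
    convex_univ (mem_univ b) (mem_univ a)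
  simpa using this

theorem iter_lip (n : ℕ) (a b : ℝ) : |D.F^[n] a - D.F^[n] b| ≤ D.Lam ^ n * |a - b| := by
  induction n with
  | zero => simp
  | succ n ih =>
    rw [Function.iterate_succ_apply', Function.iterate_succ_apply']
    refine (D.F_lip _ _).trans ?_
    rw [pow_succ', mul_assoc]
    exact mul_le_mul_of_nonneg_left ih D.Lam_pos.le

/-! ### The circle map -/

/-- The circle map. -/
def T : Circle1 → Circle1 := cmap D.F

theorem T_coe (x : ℝ) : D.T (x : Circle1) = (D.F x : Circle1) := by
  obtain ⟨m, hm⟩ := exists_rep x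
  rw [T, cmap, hm, D.F_add_int, coe_add_int]

theorem iter_coe (n : ℕ) (x : ℝ) : D.T^[n] (x : Circle1) = (D.F^[n] x : Circle1) := by
  induction n with
  | zero => simp
  | succ n ih => rw [Function.iterate_succ_apply', ih, T_coe, Function.iterate_succ_apply']

theorem T_cont : Continuous D.T :=
  continuous_of_coe (by
    simp only [T_coe]; exact (AddCircle.continuous_mk' 1).comp D.contF)

theorem Titer_cont (n : ℕ) : Continuous D.T^[n] := D.T_cont.iterate n

/-- The derivative of the circle map, as a function on the circle. -/
def dT (z : Circle1) : ℝ := D.F' (rep z)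

theorem dT_coe (x : ℝ) : D.dT (x : Circle1) = D.F' x := by
  obtain ⟨m, hm⟩ := exists_rep x
  rw [dT, hm, D.F'_add_int]

/-- The derivative of the `n`-th iterate of the circle map. -/
def Jc (n : ℕ) (z : Circle1) : ℝ := D.J n (rep z)

theorem Jc_coe (n : ℕ) (x : ℝ) : D.Jc n (x : Circle1) = D.J n x := by
  obtain ⟨m, hm⟩ := exists_rep x
  rw [Jc, hm, D.J_add_int]

theorem Jc_cont (n : ℕ) : Continuous (D.Jc n) :=
  continuous_of_coe (by simpa only [Jc_coe] using D.J_cont n)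

theorem Jc_expand (n : ℕ) (z : Circle1) : D.c * D.lam ^ n ≤ |D.Jc n z| := D.J_expand _ _

theorem Jc_ne (n : ℕ) (z : Circle1) : D.Jc n z ≠ 0 := D.J_ne _ _

theorem Jc_add (m n : ℕ) (z : Circle1) : D.Jc (m + n) z = D.Jc m z * D.Jc n (D.T^[m] z) := by
  rw [← coe_rep z, D.iter_coe]; simp only [Jc_coe, J_add]

theorem Jc_one (z : Circle1) : D.Jc 1 z = D.dT z := by simp [Jc, J, dT]

theorem inv_Jc_le (n : ℕ) (z : Circle1) : |(D.Jc n z)⁻¹| ≤ D.c⁻¹ * D.lam⁻¹ ^ n := by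
  rw [abs_inv, inv_pow, ← mul_inv]
  exact inv_anti₀ (mul_pos D.c_pos (pow_pos D.lam_pos n)) (D.Jc_expand n z)

/-- The inverse branch of `T^n` sending `T^n z` to `z`, at displacement `t` from `T^n z`. -/
def br (n : ℕ) (z : Circle1) (t : ℝ) : Circle1 := (D.B n (rep z) t : Circle1)

theorem br_coe (n : ℕ) (a t : ℝ) : D.br n (a : Circle1) t = (D.B n a t : Circle1) := by
  obtain ⟨m, hm⟩ := exists_rep a
  rw [br, hm, ← coe_add_int (D.B n a t) m]
  congr 1
  refine D.B_eq ?_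
  rw [D.iter_add_int, D.iter_add_int, D.iter_B]; ring

theorem br_zero (n : ℕ) (z : Circle1) : D.br n z 0 = z := by rw [br, B_zero, coe_rep]

theorem iter_br (n : ℕ) (z : Circle1) (t : ℝ) : D.T^[n] (D.br n z t) = D.T^[n] z + (t : Circle1) := by
  rw [← coe_rep z, br_coe, iter_coe, iter_B, iter_coe, AddCircle.coe_add]

theorem iter_br_add (k j : ℕ) (z : Circle1) (t : ℝ) :
    D.T^[k] (D.br (k + j) z t) = D.br j (D.T^[k] z) t := by
  rw [← coe_rep z, br_coe, iter_coe, iter_B_add, iter_coe, br_coe]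

theorem dist_br_le (n : ℕ) (z : Circle1) (s t : ℝ) :
    dist (D.br n z s) (D.br n z t) ≤ D.c⁻¹ * D.lam⁻¹ ^ n * |s - t| :=
  (dist_coe_le _ _).trans (D.B_sub_le _ _ _ _)

theorem dist_br_self_le (n : ℕ) (z : Circle1) (t : ℝ) :
    dist z (D.br n z t) ≤ D.c⁻¹ * D.lam⁻¹ ^ n * |t| := by
  have := D.dist_br_le n z 0 t
  rwa [br_zero, zero_sub, abs_neg] at this

theorem T_lip (x y : Circle1) : dist (D.T x) (D.T y) ≤ D.Lam * dist x y := by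
  obtain ⟨t, rfl, ht⟩ := exists_disp x y
  rw [← ht, ← coe_rep x, ← AddCircle.coe_add, T_coe, T_coe]
  refine (dist_coe_le _ _).trans ((D.F_lip _ _).trans_eq ?_)
  congr 1
  rw [abs_sub_comm]; congr 1; ring

theorem Titer_lip (n : ℕ) (x y : Circle1) :
    dist (D.T^[n] x) (D.T^[n] y) ≤ D.Lam ^ n * dist x y := by
  induction n with
  | zero => simp
  | succ n ih =>
    rw [Function.iterate_succ_apply', Function.iterate_succ_apply']
    refine (D.T_lip _ _).trans ?_
    rw [pow_succ', mul_assoc]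
    exact mul_le_mul_of_nonneg_left ih D.Lam_pos.le

/-- A scale below which the circle map is controlled by its lift. -/
def r0 : ℝ := (2 * D.Lam)⁻¹

theorem r0_pos : 0 < D.r0 := by have := D.Lam_pos; unfold r0; positivity

theorem Lam_r0 : D.Lam * D.r0 = 1 / 2 := by
  unfold r0; have := D.Lam_pos; field_simp

/-- Orbits that stay `r0`-close for times `< n` have lifts whose distances up to time `n` are
the distances on the circle. -/
theorem exists_lift {n : ℕ} {x y : Circle1}
    (h : ∀ k < n, dist (D.T^[k] x) (D.T^[k] y) ≤ D.r0) :
    ∃ a b : ℝ, (a : Circle1) = x ∧ (b : Circle1) = y ∧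
      ∀ k ≤ n, |D.F^[k] a - D.F^[k] b| = dist (D.T^[k] x) (D.T^[k] y) := by
  obtain ⟨t, rfl, ht⟩ := exists_disp x y
  refine ⟨rep x, rep x + t, coe_rep x, by rw [AddCircle.coe_add, coe_rep], fun k => ?_⟩
  induction k with
  | zero => intro _; simpa using ht
  | succ k ih =>
    intro hk
    have h1 := ih (by omega)
    have h2 := h k (by omega)
    have h3 : |D.F^[k+1] (rep x) - D.F^[k+1] (rep x + t)| ≤ 1 / 2 := by
      rw [Function.iterate_succ_apply', Function.iterate_succ_apply', ← D.Lam_r0]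
      refine (D.F_lip _ _).trans (mul_le_mul_of_nonneg_left ?_ D.Lam_pos.le)
      rw [h1]; exact h2
    rw [← dist_coe_eq h3, ← D.iter_coe, ← D.iter_coe, AddCircle.coe_add, coe_rep]

theorem eq_of_T_eq {x y : Circle1} (h : D.T x = D.T y) (hd : dist x y ≤ D.r0) : x = y := by
  obtain ⟨a, b, rfl, rfl, H⟩ := D.exists_lift (n := 1) (x := x) (y := y)
    (fun k hk => by have : k = 0 := by omega
                    subst this; simpa using hd)
  have h1 := H 1 le_rfl
  rw [show D.T^[1] (a : Circle1) = D.T a from rfl, show D.T^[1] (b : Circle1) = D.T b from rfl, h,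
    dist_self, abs_eq_zero, sub_eq_zero] at h1
  rw [D.iter_inj 1 h1]

/-- Expansivity: orbits staying `r0`-close for times `< n` are exponentially close. -/
theorem dist_le_of_close {n : ℕ} {x y : Circle1}
    (h : ∀ k < n, dist (D.T^[k] x) (D.T^[k] y) ≤ D.r0) {k : ℕ} (hk : k ≤ n) :
    dist (D.T^[k] x) (D.T^[k] y) ≤
      D.c⁻¹ * D.lam⁻¹ ^ (n - k) * dist (D.T^[n] x) (D.T^[n] y) := by
  obtain ⟨a, b, rfl, rfl, H⟩ := D.exists_lift h
  rw [← H k hk, ← H n le_rfl]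
  have h1 := D.expand_dist (n - k) (D.F^[k] a) (D.F^[k] b)
  rw [← Function.iterate_add_apply, ← Function.iterate_add_apply, Nat.sub_add_cancel hk] at h1
  have h2 := mul_pos D.c_pos (pow_pos D.lam_pos (n - k))
  rw [inv_pow, ← mul_inv, inv_mul_eq_div, le_div_iff₀ h2]; linarith

/-- Orbits staying `r0`-close for times `< n` lie on a common inverse branch. -/
theorem exists_br_of_close {n : ℕ} {x y : Circle1}
    (h : ∀ k < n, dist (D.T^[k] x) (D.T^[k] y) ≤ D.r0) :
    ∃ t : ℝ, |t| = dist (D.T^[n] x) (D.T^[n] y) ∧ y = D.br n x t := by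
  obtain ⟨a, b, rfl, rfl, H⟩ := D.exists_lift h
  refine ⟨D.F^[n] b - D.F^[n] a, by rw [abs_sub_comm, H n le_rfl], ?_⟩
  rw [br_coe, D.B_eq (b := b) (by ring)]

theorem inv_lam_lt : D.lam⁻¹ < 1 := inv_lt_one_of_one_lt₀ D.lam_gt

theorem inv_lam_pos : 0 < D.lam⁻¹ := inv_pos.2 D.lam_pos

/-- The geometric constant `∑_j c⁻¹ λ^{-j}`. -/
def C2 : ℝ := D.c⁻¹ * (1 - D.lam⁻¹)⁻¹

theorem C2_pos : 0 < D.C2 :=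
  mul_pos (inv_pos.2 D.c_pos) (inv_pos.2 (sub_pos.2 D.inv_lam_lt))

theorem geom_le (n : ℕ) : ∑ k ∈ Finset.range n, D.c⁻¹ * D.lam⁻¹ ^ (n - k) ≤ D.C2 := by
  rw [← Finset.mul_sum, C2]
  refine mul_le_mul_of_nonneg_left ?_ (inv_pos.2 D.c_pos).le
  rw [← tsum_geometric_of_lt_one D.inv_lam_pos.le D.inv_lam_lt]
  have h : ∑ k ∈ Finset.range n, D.lam⁻¹ ^ (n - k) = ∑ k ∈ Finset.range n, D.lam⁻¹ ^ (k + 1) := by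
    rw [← Finset.sum_range_reflect]
    refine Finset.sum_congr rfl fun k hk => ?_
    rw [Finset.mem_range] at hk
    congr 1; omega
  rw [h]
  have hs := summable_geometric_of_lt_one D.inv_lam_pos.le D.inv_lam_lt
  refine le_trans (Finset.sum_le_sum fun k _ => ?_)
    (hs.sum_le_tsum (Finset.range n) fun k _ => pow_nonneg D.inv_lam_pos.le k)
  exact pow_le_pow_of_le_one D.inv_lam_pos.le D.inv_lam_lt.le (Nat.le_succ k)

end ExpData

/-! ### Invariant measures and the maximal ergodic average -/

/-- `f` is `L`-Lipschitz on the circle, with a real constant. -/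
def Lip (L : ℝ) (f : Circle1 → ℝ) : Prop := ∀ x y, |f x - f y| ≤ L * dist x y

theorem Lip.continuous {L : ℝ} {f : Circle1 → ℝ} (h : Lip L f) : Continuous f := by
  refine LipschitzWith.continuous (K := Real.toNNReal L) (LipschitzWith.of_dist_le_mul fun x y => ?_)
  rw [Real.dist_eq]
  exact (h x y).trans (mul_le_mul_of_nonneg_right (Real.le_coe_toNNReal L) dist_nonneg)

theorem Lip.mono {L L' : ℝ} {f : Circle1 → ℝ} (h : Lip L f) (hL : L ≤ L') : Lip L' f :=
  fun x y => (h x y).trans (mul_le_mul_of_nonneg_right hL dist_nonneg)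

theorem Lip.add {L L' : ℝ} {f g : Circle1 → ℝ} (hf : Lip L f) (hg : Lip L' g) :
    Lip (L + L') (fun x => f x + g x) := fun x y => by
  have h1 := abs_add_le (f x - f y) (g x - g y)
  have h2 := hf x y; have h3 := hg x y
  rw [show f x + g x - (f y + g y) = (f x - f y) + (g x - g y) by ring]; linarith

theorem Lip.const_mul {L : ℝ} {f : Circle1 → ℝ} (hf : Lip L f) (a : ℝ) :
    Lip (|a| * L) (fun x => a * f x) := fun x y => by
  rw [← mul_sub, abs_mul, mul_assoc]; exact mul_le_mul_of_nonneg_left (hf x y) (abs_nonneg _)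

theorem cont_bdd {f : Circle1 → ℝ} (hf : Continuous f) : ∃ M, 0 ≤ M ∧ ∀ x, |f x| ≤ M := by
  obtain ⟨M, hM⟩ := isCompact_univ.exists_bound_of_continuousOn (hf.continuousOn (s := univ))
  exact ⟨M, (norm_nonneg _).trans (hM 0 (mem_univ _)), fun x => hM x (mem_univ x)⟩

theorem integrable_of_cont {f : Circle1 → ℝ} (hf : Continuous f) (μ : Measure Circle1)
    [IsFiniteMeasure μ] : Integrable f μ := by
  obtain ⟨M, -, hM⟩ := cont_bdd hf
  exact Integrable.of_bound hf.aestronglyMeasurable M (Eventually.of_forall hM)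

theorem integral_le_of_le {f : Circle1 → ℝ} (hf : Continuous f) (μ : Measure Circle1)
    [IsProbabilityMeasure μ] {M : ℝ} (h : ∀ x, f x ≤ M) : ∫ x, f x ∂μ ≤ M := by
  have := integral_mono (integrable_of_cont hf μ) (integrable_const M) h
  simpa using this

theorem le_integral_of_le {f : Circle1 → ℝ} (hf : Continuous f) (μ : Measure Circle1)
    [IsProbabilityMeasure μ] {M : ℝ} (h : ∀ x, M ≤ f x) : M ≤ ∫ x, f x ∂μ := by
  have := integral_mono (integrable_const M) (integrable_of_cont hf μ) h
  simpa using this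

theorem integral_comp_T {T : Circle1 → Circle1} (hT : Continuous T) {μ : Measure Circle1}
    (hμ : InvProb T μ) {f : Circle1 → ℝ} (hf : Continuous f) :
    ∫ x, f (T x) ∂μ = ∫ x, f x ∂μ := by
  conv_rhs => rw [← hμ.2]
  rw [integral_map hT.measurable.aemeasurable hf.aestronglyMeasurable]

theorem InvProb.iterate {T : Circle1 → Circle1} (hT : Continuous T) {μ : Measure Circle1}
    (hμ : InvProb T μ) (n : ℕ) : InvProb T^[n] μ := by
  refine ⟨hμ.1, ?_⟩
  have : MeasurePreserving T μ μ := ⟨hT.measurable, hμ.2⟩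
  exact (this.iterate n).map_eq

theorem continuous_birkhoffSum {T : Circle1 → Circle1} (hT : Continuous T) {f : Circle1 → ℝ}
    (hf : Continuous f) (n : ℕ) : Continuous (birkhoffSum T f n) := by
  have : birkhoffSum T f n = fun x => ∑ k ∈ Finset.range n, f (T^[k] x) := rfl
  rw [this]
  exact continuous_finsetSum _ fun k _ => hf.comp (hT.iterate k)

theorem integral_birkhoffSum {T : Circle1 → Circle1} (hT : Continuous T) {μ : Measure Circle1}
    (hμ : InvProb T μ) {f : Circle1 → ℝ} (hf : Continuous f) (n : ℕ) :
    ∫ x, birkhoffSum T f n x ∂μ = n * ∫ x, f x ∂μ := by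
  have := hμ.1
  simp only [birkhoffSum]
  have hi : ∀ k ∈ Finset.range n, Integrable (fun x => f (T^[k] x)) μ :=
    fun k _ => integrable_of_cont (hf.comp (hT.iterate k)) μ
  rw [integral_finsetSum _ hi]
  rw [Finset.sum_congr rfl fun k _ => integral_comp_T (hT.iterate k) (InvProb.iterate hT hμ k) hf]
  simp

theorem beta_bddAbove {f : Circle1 → ℝ} (hf : Continuous f) (T : Circle1 → Circle1) :
    BddAbove ((fun μ : Measure Circle1 => ∫ x, f x ∂μ) '' {μ | InvProb T μ}) := by
  obtain ⟨M, -, hM⟩ := cont_bdd hf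
  refine ⟨M, ?_⟩
  rintro _ ⟨μ, hμ, rfl⟩
  have := hμ.1
  exact integral_le_of_le hf μ fun x => (abs_le.1 (hM x)).2

theorem le_beta {f : Circle1 → ℝ} (hf : Continuous f) {T : Circle1 → Circle1} {μ : Measure Circle1}
    (hμ : InvProb T μ) : ∫ x, f x ∂μ ≤ beta f T :=
  le_csSup (beta_bddAbove hf T) ⟨μ, hμ, rfl⟩

/-- The uniform measure on the first `n` points of an orbit. -/
def orbMeas (T : Circle1 → Circle1) (n : ℕ) (p : Circle1) : Measure Circle1 :=
  (n : ENNReal)⁻¹ • ∑ k ∈ Finset.range n, Measure.dirac (T^[k] p)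

theorem orbMeas_inv {T : Circle1 → Circle1} (hT : Continuous T) {n : ℕ} (hn : 0 < n) {p : Circle1}
    (hp : T^[n] p = p) : InvProb T (orbMeas T n p) := by
  constructor
  · constructor
    rw [orbMeas]
    simp [Measure.finsetSum_apply]
    exact ENNReal.inv_mul_cancel (by positivity) (by simp)
  · rw [orbMeas, Measure.map_smul]
    congr 1
    rw [← Measure.mapₗ_apply_of_measurable hT.measurable, map_sum]
    simp only [Measure.mapₗ_apply_of_measurable hT.measurable,
      Measure.map_dirac' hT.measurable, ← Function.iterate_succ_apply' T]
    have h1 := Finset.sum_range_succ (fun k => Measure.dirac (T^[k] p)) n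
    have h2 := Finset.sum_range_succ' (fun k => Measure.dirac (T^[k] p)) n
    rw [h2, hp] at h1
    ext s hs
    have h3 := congrArg (fun m : Measure Circle1 => m s) h1
    simp only [Measure.coe_add, Pi.add_apply, Function.iterate_zero, id] at h3
    exact (ENNReal.add_left_inj (measure_ne_top _ _)).1 h3

theorem integral_orbMeas {T : Circle1 → Circle1} {n : ℕ} {p : Circle1}
    {f : Circle1 → ℝ} (hf : Continuous f) :
    ∫ x, f x ∂(orbMeas T n p) = birkhoffSum T f n p / n := by
  rw [orbMeas, integral_smul_measure, integral_finsetSum_measure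
    fun k _ => integrable_of_cont hf _]
  simp [birkhoffSum, div_eq_inv_mul]

namespace ExpData
variable (D : ExpData)

theorem birkhoff_br {L : ℝ} {f : Circle1 → ℝ} (hL : 0 ≤ L) (hf : Lip L f) (n : ℕ) (z : Circle1)
    (t : ℝ) : |birkhoffSum D.T f n (D.br n z t) - birkhoffSum D.T f n z| ≤ L * D.C2 * |t| := by
  simp only [birkhoffSum]
  rw [← Finset.sum_sub_distrib]
  refine (Finset.abs_sum_le_sum_abs _ _).trans ?_
  calc _ ≤ ∑ k ∈ Finset.range n, L * (D.c⁻¹ * D.lam⁻¹ ^ (n - k)) * |t| := by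
        refine Finset.sum_le_sum fun k hk => ?_
        rw [Finset.mem_range] at hk
        refine (hf _ _).trans ?_
        rw [mul_assoc]
        refine mul_le_mul_of_nonneg_left ?_ hL
        obtain ⟨j, rfl⟩ := Nat.exists_eq_add_of_lt hk
        rw [add_assoc k j 1, D.iter_br_add, dist_comm, Nat.add_sub_cancel_left]
        exact D.dist_br_self_le _ _ _
    _ ≤ _ := by
        rw [← Finset.sum_mul, ← Finset.mul_sum]
        exact mul_le_mul_of_nonneg_right (mul_le_mul_of_nonneg_left (D.geom_le n) hL) (abs_nonneg _)

theorem exists_n1 : ∃ n : ℕ, 0 < n ∧ ∀ m ≥ n, D.c⁻¹ * D.lam⁻¹ ^ m ≤ 1 / 2 := by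
  have h := (tendsto_pow_atTop_nhds_zero_of_lt_one D.inv_lam_pos.le D.inv_lam_lt).const_mul D.c⁻¹
  rw [mul_zero] at h
  have h2 := h.eventually (ge_mem_nhds (show (0:ℝ) < 1 / 2 by norm_num))
  obtain ⟨n, hn⟩ := eventually_atTop.1 h2
  exact ⟨n + 1, n.succ_pos, fun m hm => hn m (by omega)⟩

/-- Closing lemma: every orbit segment of length `n`, long enough, is shadowed by a point of
period `n`. -/
theorem closing {n : ℕ} (h : D.c⁻¹ * D.lam⁻¹ ^ n ≤ 1 / 2) (z : Circle1) :
    ∃ s : ℝ, |s| ≤ 1 ∧ D.T^[n] (D.br n z s) = D.br n z s := by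
  set a := rep z with ha
  set m : ℤ := round (D.F^[n] a - a)
  set e := D.F^[n] a - a - m with he
  have he2 : |e| ≤ 1 / 2 := by simpa using abs_sub_round (D.F^[n] a - a)
  have hb : ∀ s, |D.B n a s - a| ≤ 1 / 2 * |s| := fun s => by
    have := D.B_sub_le n a s 0
    rw [B_zero, sub_zero] at this
    exact this.trans (mul_le_mul_of_nonneg_right h (abs_nonneg _))
  have hc : ContinuousOn (fun s => D.B n a s - a - s - e) (Icc (-1) 1) :=
    ((((D.B_cont n a).sub continuous_const).sub continuous_id).sub continuous_const).continuousOn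
  have h1 := intermediate_value_Icc' (by norm_num : (-1:ℝ) ≤ 1) hc
  have h2 : (0:ℝ) ∈ Icc (D.B n a 1 - a - 1 - e) (D.B n a (-1) - a - (-1) - e) := by
    have h3 := abs_le.1 (hb 1); have h4 := abs_le.1 (hb (-1)); have h5 := abs_le.1 he2
    simp only [abs_neg, abs_one, mul_one] at h3 h4
    constructor <;> linarith
  obtain ⟨s, hs, hs2⟩ := h1 h2
  refine ⟨s, abs_le.2 hs, ?_⟩
  have h6 : D.F^[n] (D.B n a s) = D.B n a s + m := by
    rw [D.iter_B]; simp only at hs2; linarith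
  have h7 : D.br n z s = (D.B n a s : Circle1) := rfl
  rw [h7, D.iter_coe, h6, coe_add_int]

theorem exists_inv : ∃ μ, InvProb D.T μ := by
  obtain ⟨n, hn, h⟩ := D.exists_n1
  obtain ⟨s, -, hs⟩ := D.closing (h n le_rfl) 0
  exact ⟨_, orbMeas_inv D.T_cont hn hs⟩

/-- Maximizing measures exist. -/
theorem exists_max {f : Circle1 → ℝ} (hf : Continuous f) : ∃ μ, IsMaximizing f D.T μ := by
  let K : Set (ProbabilityMeasure Circle1) :=
    {μ | μ.map (f := D.T) D.T_cont.measurable.aemeasurable = μ}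
  have hK : IsClosed K := isClosed_eq (ProbabilityMeasure.continuous_map D.T_cont) continuous_id
  have hKn : K.Nonempty := by
    obtain ⟨μ, hμ⟩ := D.exists_inv
    refine ⟨⟨μ, hμ.1⟩, Subtype.ext ?_⟩
    exact hμ.2
  let fb : BoundedContinuousFunction Circle1 ℝ := BoundedContinuousFunction.mkOfCompact ⟨f, hf⟩
  have hcont : Continuous fun μ : ProbabilityMeasure Circle1 => ∫ x, f x ∂(μ : Measure Circle1) :=
    continuous_iff_continuousAt.2 fun μ =>
      (ProbabilityMeasure.tendsto_iff_forall_integral_tendsto.1 tendsto_id) fb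
  obtain ⟨μ, hμ, hmax⟩ := hK.isCompact.exists_isMaxOn hKn hcont.continuousOn
  have hinv : InvProb D.T μ := ⟨μ.2, congrArg Subtype.val hμ⟩
  refine ⟨μ, hinv, le_antisymm (le_beta hf hinv) (csSup_le ⟨_, μ, hinv, rfl⟩ ?_)⟩
  rintro _ ⟨ν, hν, rfl⟩
  exact hmax (a := ⟨ν, hν.1⟩) (Subtype.ext hν.2)

theorem sub_beta_le {L : ℝ} {f : Circle1 → ℝ} (hf : Lip L f) (z : Circle1) :
    f z - beta f D.T ≤ |L| := by
  obtain ⟨μ, hμ⟩ := D.exists_inv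
  have := hμ.1
  have h1 := le_beta hf.continuous hμ
  have h2 := le_integral_of_le hf.continuous μ (M := f z - |L|) fun x => by
    have h3 := (abs_le.1 (hf z x)).2
    have h4 := dist_le_half z x
    have h5 := dist_nonneg (x := z) (y := x)
    nlinarith [le_abs_self L, abs_nonneg L]
  linarith

theorem period_le_beta {f : Circle1 → ℝ} (hf : Continuous f) {n : ℕ} (hn : 0 < n) {p : Circle1}
    (hp : D.T^[n] p = p) : birkhoffSum D.T f n p ≤ n * beta f D.T := by
  have h := le_beta hf (orbMeas_inv D.T_cont hn hp)
  rw [integral_orbMeas hf, div_le_iff₀ (by exact_mod_cast hn)] at h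
  linarith

/-- The constant bounding the oscillation of sub-actions relative to the Lipschitz constant. -/
def C1 : ℝ := D.exists_n1.choose + D.C2

theorem C1_pos : 0 < D.C1 := by
  unfold C1; have := D.C2_pos; positivity

theorem birkhoff_le {L : ℝ} {f : Circle1 → ℝ} (hL : 0 ≤ L) (hf : Lip L f) (n : ℕ) (z : Circle1) :
    birkhoffSum D.T f n z - n * beta f D.T ≤ D.C1 * L := by
  obtain ⟨hn0, hn⟩ := D.exists_n1.choose_spec
  rcases lt_or_ge n D.exists_n1.choose with h | h
  · have h1 : birkhoffSum D.T f n z - n * beta f D.T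
        = ∑ k ∈ Finset.range n, (f (D.T^[k] z) - beta f D.T) := by
      simp [birkhoffSum, Finset.sum_sub_distrib]
    rw [h1]
    have h2 : ∑ k ∈ Finset.range n, (f (D.T^[k] z) - beta f D.T) ≤ ∑ k ∈ Finset.range n, L :=
      Finset.sum_le_sum fun k _ => (D.sub_beta_le hf _).trans_eq (abs_of_nonneg hL)
    have h3 : (n : ℝ) ≤ D.exists_n1.choose := by exact_mod_cast h.le
    have h4 := D.C2_pos
    simp only [Finset.sum_const, Finset.card_range, nsmul_eq_mul] at h2
    unfold C1; nlinarith
  · obtain ⟨s, hs, hp⟩ := D.closing (hn n h) z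
    have h1 := D.period_le_beta hf.continuous (hn0.trans_le h) hp
    have h2 := (abs_le.1 (D.birkhoff_br hL hf n z s)).1
    have h3 : L * D.C2 * |s| ≤ L * D.C2 := by
      have := mul_nonneg hL D.C2_pos.le; nlinarith
    have h4 : (0:ℝ) ≤ D.exists_n1.choose := Nat.cast_nonneg _
    unfold C1; nlinarith

/-- The canonical sub-action: the largest normalized Birkhoff sum over backward orbits. -/
def sub (f : Circle1 → ℝ) (x : Circle1) : ℝ :=
  sSup {v | ∃ n z, D.T^[n] z = x ∧ v = birkhoffSum D.T f n z - n * beta f D.T}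

section
variable {L : ℝ} {f : Circle1 → ℝ} (hL : 0 ≤ L) (hf : Lip L f)
include hL hf

theorem sub_bdd (x : Circle1) :
    BddAbove {v | ∃ n z, D.T^[n] z = x ∧ v = birkhoffSum D.T f n z - n * beta f D.T} := by
  refine ⟨D.C1 * L, ?_⟩
  rintro _ ⟨n, z, -, rfl⟩
  exact D.birkhoff_le hL hf n z

theorem le_sub (n : ℕ) (z : Circle1) :
    birkhoffSum D.T f n z - n * beta f D.T ≤ D.sub f (D.T^[n] z) :=
  le_csSup (D.sub_bdd hL hf _) ⟨n, z, rfl, rfl⟩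

theorem sub_nonneg' (x : Circle1) : 0 ≤ D.sub f x := by
  simpa using D.le_sub hL hf 0 x

omit hL hf in
theorem sub_le {x : Circle1} {M : ℝ}
    (h : ∀ n z, D.T^[n] z = x → birkhoffSum D.T f n z - n * beta f D.T ≤ M) : D.sub f x ≤ M := by
  refine csSup_le ⟨_, 0, x, rfl, rfl⟩ ?_
  rintro _ ⟨n, z, hz, rfl⟩
  exact h n z hz

theorem sub_le_C1 (x : Circle1) : D.sub f x ≤ D.C1 * L :=
  D.sub_le fun n z _ => D.birkhoff_le hL hf n z

theorem sub_lip : Lip (L * D.C2) (D.sub f) := by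
  have key : ∀ x y, D.sub f x ≤ D.sub f y + L * D.C2 * dist x y := by
    intro x y
    obtain ⟨t, rfl, ht⟩ := exists_disp x y
    refine D.sub_le fun n z hz => ?_
    have h1 := D.le_sub hL hf n (D.br n z t)
    rw [D.iter_br, hz] at h1
    have h2 := (abs_le.1 (D.birkhoff_br hL hf n z t)).1
    rw [ht] at h2; linarith
  intro x y
  rw [abs_le]
  have h1 := key x y; have h2 := key y x
  rw [dist_comm y x] at h2
  constructor <;> linarith

theorem sub_ineq (x : Circle1) : D.sub f x + f x ≤ D.sub f (D.T x) + beta f D.T := by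
  have : D.sub f x ≤ D.sub f (D.T x) + beta f D.T - f x := by
    refine D.sub_le fun n z hz => ?_
    have h1 := D.le_sub hL hf (n + 1) z
    rw [Function.iterate_succ_apply', hz, birkhoffSum_succ, hz] at h1
    push_cast at h1; linarith
  linarith

end

/-- The defect `g∘T - g + β - f ≥ 0` of the canonical sub-action. -/
def R (f : Circle1 → ℝ) (x : Circle1) : ℝ := D.sub f (D.T x) - D.sub f x + beta f D.T - f x

section
variable {L : ℝ} {f : Circle1 → ℝ} (hL : 0 ≤ L) (hf : Lip L f)
include hL hf

theorem R_nonneg (x : Circle1) : 0 ≤ D.R f x := by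
  have := D.sub_ineq hL hf x; unfold R; linarith

theorem R_cont : Continuous (D.R f) := by
  have h := (D.sub_lip hL hf).continuous
  exact (((h.comp D.T_cont).sub h).add continuous_const).sub hf.continuous

omit hL hf in
theorem birkhoff_R (n : ℕ) (x : Circle1) : birkhoffSum D.T (D.R f) n x =
    D.sub f (D.T^[n] x) - D.sub f x + n * beta f D.T - birkhoffSum D.T f n x := by
  induction n with
  | zero => simp
  | succ n ih =>
    rw [birkhoffSum_succ, birkhoffSum_succ, ih, R, Function.iterate_succ_apply']
    push_cast; ring

theorem integral_R {μ : Measure Circle1} (hμ : InvProb D.T μ) :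
    ∫ x, D.R f x ∂μ = beta f D.T - ∫ x, f x ∂μ := by
  have := hμ.1
  have h := (D.sub_lip hL hf).continuous
  have hi := integrable_of_cont h μ
  have hi2 : Integrable (fun x => D.sub f (D.T x)) μ := integrable_of_cont (h.comp D.T_cont) μ
  have e1 : ∫ x, D.R f x ∂μ = ∫ x, (D.sub f (D.T x) - D.sub f x) ∂μ + beta f D.T
      - ∫ x, f x ∂μ := by
    unfold R
    have hi3 : Integrable (fun x => D.sub f (D.T x) - D.sub f x) μ := hi2.sub hi
    have hi4 : Integrable (fun x => D.sub f (D.T x) - D.sub f x + beta f D.T) μ :=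
      hi3.add (integrable_const _)
    rw [integral_sub hi4 (integrable_of_cont hf.continuous μ),
      integral_add hi3 (integrable_const _)]
    simp
  rw [e1, integral_sub hi2 hi, integral_comp_T D.T_cont hμ h]; ring

/-- The defect of `f` vanishes on the support of every maximizing measure. -/
theorem R_eq_zero {μ : Measure Circle1} (hμ : IsMaximizing f D.T μ) {x : Circle1}
    (hx : x ∈ μ.support) : D.R f x = 0 := by
  have := hμ.1.1
  have h1 := D.integral_R hL hf hμ.1
  rw [hμ.2, sub_self, integral_eq_zero_iff_of_nonneg (D.R_nonneg hL hf)
    (integrable_of_cont (D.R_cont hL hf) μ)] at h1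
  by_contra h2
  have h3 : {y | D.R f y ≠ 0} ∈ 𝓝 x := (D.R_cont hL hf).continuousAt.eventually_ne h2
  have h4 : μ {y | D.R f y ≠ 0} = 0 := h1
  rw [Measure.mem_support_iff_forall] at hx
  exact (hx _ h3).ne' h4

theorem isMaximizing_of_R {μ : Measure Circle1} (hμ : InvProb D.T μ)
    (h : ∀ᵐ x ∂μ, D.R f x = 0) : IsMaximizing f D.T μ := by
  refine ⟨hμ, ?_⟩
  have h1 := D.integral_R hL hf hμ
  rw [integral_eq_zero_of_ae h] at h1
  linarith

end

/-! ### Dependence of `β` on the function -/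

theorem beta_le_of_le {f g : Circle1 → ℝ} (hf : Continuous f) (hg : Continuous g) {M : ℝ}
    (h : ∀ x, f x ≤ g x + M) : beta f D.T ≤ beta g D.T + M := by
  obtain ⟨μ, hμ⟩ := D.exists_max hf
  have := hμ.1.1
  rw [← hμ.2]
  have h1 := integral_mono (integrable_of_cont hf μ)
    ((integrable_of_cont hg μ).add (integrable_const M)) h
  have h2 : ∫ x, (g x + M) ∂μ = ∫ x, g x ∂μ + M := by
    rw [integral_add (integrable_of_cont hg μ) (integrable_const M)]; simp
  have h3 := le_beta hg hμ.1
  have h4 : ∫ x, f x ∂μ ≤ ∫ x, (g x + M) ∂μ := h1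
  linarith

theorem abs_beta_sub_le {f g : Circle1 → ℝ} (hf : Continuous f) (hg : Continuous g) {M : ℝ}
    (h : ∀ x, |f x - g x| ≤ M) : |beta f D.T - beta g D.T| ≤ M := by
  have h1 := D.beta_le_of_le hf hg (M := M) fun x => by have := (abs_le.1 (h x)).2; linarith
  have h2 := D.beta_le_of_le hg hf (M := M) fun x => by have := (abs_le.1 (h x)).1; linarith
  rw [abs_le]; constructor <;> linarith

theorem beta_le_add {f φ : Circle1 → ℝ} (hf : Continuous f) (hφ : Continuous φ)
    {μ : Measure Circle1} (hμ : IsMaximizing f D.T μ) (h : ℝ) :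
    beta f D.T + h * ∫ x, φ x ∂μ ≤ beta (fun x => f x + h * φ x) D.T := by
  have := hμ.1.1
  have h1 : ∫ x, (f x + h * φ x) ∂μ ≤ beta (fun x => f x + h * φ x) D.T :=
    le_beta (hf.add (continuous_const.mul hφ) : Continuous fun x => f x + h * φ x) hμ.1
  have hi : Integrable (fun x => h * φ x) μ := integrable_of_cont (continuous_const.mul hφ) μ
  have h2 : ∫ x, (f x + h * φ x) ∂μ = ∫ x, f x ∂μ + h * ∫ x, φ x ∂μ := by
    rw [integral_add (integrable_of_cont hf μ) hi, integral_const_mul]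
  rw [h2, hμ.2] at h1
  exact h1

end ExpData

/-! ### Trigonometric functions on the circle -/

/-- `cos (2πmx)` on the circle. -/
def cosF (m : ℕ) (z : Circle1) : ℝ := (fourier (m : ℤ) z : ℂ).re

/-- `sin (2πmx)` on the circle. -/
def sinF (m : ℕ) (z : Circle1) : ℝ := (fourier (m : ℤ) z : ℂ).im

theorem cosF_cont (m : ℕ) : Continuous (cosF m) :=
  Complex.continuous_re.comp (fourier (m : ℤ) : C(Circle1, ℂ)).continuous

theorem sinF_cont (m : ℕ) : Continuous (sinF m) :=
  Complex.continuous_im.comp (fourier (m : ℤ) : C(Circle1, ℂ)).continuous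

theorem fourier_coe' (m : ℕ) (x : ℝ) :
    (fourier (m : ℤ) (x : Circle1) : ℂ) = Complex.exp ((2 * Real.pi * m * x : ℝ) * Complex.I) := by
  rw [fourier_coe_apply]; congr 1; push_cast; ring

theorem cosF_coe (m : ℕ) (x : ℝ) : cosF m (x : Circle1) = Real.cos (2 * Real.pi * m * x) := by
  rw [cosF, fourier_coe', Complex.exp_ofReal_mul_I_re]

theorem sinF_coe (m : ℕ) (x : ℝ) : sinF m (x : Circle1) = Real.sin (2 * Real.pi * m * x) := by
  rw [sinF, fourier_coe', Complex.exp_ofReal_mul_I_im]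

/-- A continuous linear functional killing all trigonometric monomials is zero. -/
theorem trig_dense (l : C(Circle1, ℝ) →L[ℝ] ℝ) (h1 : l 1 = 0)
    (hc : ∀ m, 1 ≤ m → l ⟨cosF m, cosF_cont m⟩ = 0)
    (hs : ∀ m, 1 ≤ m → l ⟨sinF m, sinF_cont m⟩ = 0) : l = 0 := by
  let re' : C(Circle1, ℂ) →L[ℝ] C(Circle1, ℝ) := Complex.reCLM.compLeftContinuous ℝ Circle1
  have hz : ∀ g ∈ Submodule.span ℂ (range (fourier (T := (1:ℝ)))), ∀ a : ℂ, l (re' (a • g)) = 0 := by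
    intro g hg
    induction hg using Submodule.span_induction with
    | mem g hg =>
      obtain ⟨n, rfl⟩ := hg
      intro a
      have key : ∀ (m : ℕ) (s : ℝ), re' (a • (⟨fun z => (⟨cosF m z, s * sinF m z⟩ : ℂ),
          by
            have h := ((Complex.continuous_ofReal.comp (cosF_cont m)).add
              ((Complex.continuous_ofReal.comp ((continuous_const (y := s)).mul (sinF_cont m))).mul
                (continuous_const (y := Complex.I))))
            refine h.congr fun z => ?_
            apply Complex.ext <;> simp⟩ : C(Circle1, ℂ)))
          = a.re • (⟨cosF m, cosF_cont m⟩ : C(Circle1, ℝ))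
            - (a.im * s) • (⟨sinF m, sinF_cont m⟩ : C(Circle1, ℝ)) := by
        intro m s
        ext z
        simp [re', mul_assoc]
      rcases Nat.eq_zero_or_pos n.natAbs with h0 | hpos
      · have hn : n = 0 := Int.natAbs_eq_zero.1 h0
        subst hn
        have : re' (a • (fourier (0:ℤ) : C(Circle1, ℂ))) = a.re • (1 : C(Circle1, ℝ)) := by
          ext z; simp [re']
        rw [this, map_smul, h1, smul_zero]
      · rcases Int.natAbs_eq n with hn | hn
        · have h2 := key n.natAbs 1
          have h3 : (fourier n : C(Circle1, ℂ)) = ⟨fun z =>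
              (⟨cosF n.natAbs z, 1 * sinF n.natAbs z⟩ : ℂ), by
                have h := (fourier n : C(Circle1, ℂ)).continuous
                refine h.congr fun z => ?_
                apply Complex.ext <;> simp [cosF, sinF, ← hn]⟩ := by
            ext z
            apply Complex.ext <;> simp [cosF, sinF, ← hn]
          rw [h3, h2, map_sub, map_smul, map_smul, hc _ hpos, hs _ hpos]; simp
        · have h2 := key n.natAbs (-1)
          have h4 : ∀ z : Circle1, (fourier n z : ℂ) =
              (⟨cosF n.natAbs z, (-1) * sinF n.natAbs z⟩ : ℂ) := by
            intro z
            conv_lhs => rw [hn]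
            rw [fourier_neg]
            apply Complex.ext <;> simp [cosF, sinF]
          have h3 : (fourier n : C(Circle1, ℂ)) = ⟨fun z =>
              (⟨cosF n.natAbs z, (-1) * sinF n.natAbs z⟩ : ℂ), by
                have h := (fourier n : C(Circle1, ℂ)).continuous
                exact h.congr h4⟩ := by
            ext z
            exact h4 z
          rw [h3, h2, map_sub, map_smul, map_smul, hc _ hpos, hs _ hpos]; simp
    | zero => intro a; simp
    | add x y _ _ hx hy =>
      intro a
      have h : a • (x + y) = a • x + a • y := by ext z; simp [mul_add]
      rw [h, map_add, map_add, hx, hy, add_zero]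
    | smul b x _ hx => intro a; rw [smul_smul]; exact hx _
  have hcl : ∀ g : C(Circle1, ℂ), l (re' g) = 0 := by
    intro g
    have hg : g ∈ (Submodule.span ℂ (range (fourier (T := (1:ℝ))))).topologicalClosure := by
      rw [span_fourier_closure_eq_top]; trivial
    have hcls : IsClosed {g | l (re' g) = 0} :=
      isClosed_eq (l.continuous.comp re'.continuous) continuous_const
    have hsub : ((Submodule.span ℂ (range (fourier (T := (1:ℝ))))) : Set C(Circle1, ℂ)) ⊆
        {g | l (re' g) = 0} := fun g hg => by simpa using hz g hg 1
    exact closure_minimal hsub hcls hg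
  ext g
  have := hcl ⟨fun z => (g z : ℂ), Complex.continuous_ofReal.comp g.continuous⟩
  have h2 : re' ⟨fun z => (g z : ℂ), Complex.continuous_ofReal.comp g.continuous⟩ = g := by
    ext z; simp [re']
  rw [h2] at this
  simpa using this

/-! ### Differentiable functions on the circle -/

/-- `φ` is `C¹` on the circle with derivative `φ'`. -/
def HasD (φ φ' : Circle1 → ℝ) : Prop :=
  Continuous φ' ∧ ∀ a : ℝ, HasDerivAt (fun x : ℝ => φ (x : Circle1)) (φ' (a : Circle1)) a

theorem HasD.lip {φ φ' : Circle1 → ℝ} (h : HasD φ φ') {M : ℝ} (hM : ∀ z, |φ' z| ≤ M) :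
    Lip M φ := by
  intro x y
  obtain ⟨t, rfl, ht⟩ := exists_disp x y
  obtain ⟨a, rfl⟩ := QuotientAddGroup.mk_surjective x
  have := Convex.norm_image_sub_le_of_norm_hasDerivWithin_le (𝕜 := ℝ) (C := M) (s := univ)
    (f := fun x : ℝ => φ (x : Circle1)) (x := a + t) (y := a)
    (fun x _ => (h.2 x).hasDerivWithinAt) (fun x _ => hM _) convex_univ
    (mem_univ _) (mem_univ _)
  rw [← ht]
  simpa [Real.norm_eq_abs] using this

theorem HasD.add {φ φ' ψ ψ' : Circle1 → ℝ} (h : HasD φ φ') (h' : HasD ψ ψ') :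
    HasD (fun z => φ z + ψ z) (fun z => φ' z + ψ' z) :=
  ⟨h.1.add h'.1, fun a => (h.2 a).add (h'.2 a)⟩

theorem HasD.const_mul {φ φ' : Circle1 → ℝ} (h : HasD φ φ') (b : ℝ) :
    HasD (fun z => b * φ z) (fun z => b * φ' z) :=
  ⟨continuous_const.mul h.1, fun a => (h.2 a).const_mul b⟩

theorem HasD.continuous {φ φ' : Circle1 → ℝ} (h : HasD φ φ') : Continuous φ :=
  continuous_of_coe (continuous_iff_continuousAt.2 fun a => (h.2 a).continuousAt)

namespace ExpData
variable (D : ExpData)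

/-! ### Slopes along backward orbits -/

/-- The `j`-th term of the slope series. -/
def term (φ' : Circle1 → ℝ) (j : ℕ) (x : Circle1) : ℝ := φ' x * (D.Jc (j + 1) x)⁻¹

/-- The derivative at the end point of the Birkhoff sum of length `n` starting at `z`, the
starting point moving along the inverse branch. -/
def W (n : ℕ) (φ' : Circle1 → ℝ) (z : Circle1) : ℝ :=
  ∑ j ∈ Finset.range n, D.term φ' j (D.T^[n - (j + 1)] z)

/-- The slope along an infinite backward orbit. -/
def Winf (φ' : Circle1 → ℝ) (y : ℕ → Circle1) : ℝ := ∑' j, D.term φ' j (y (j + 1))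

/-- The finite backward orbit of `T^n z` ending in `z`, continued constantly. -/
def back (n : ℕ) (z : Circle1) (j : ℕ) : Circle1 := D.T^[n - j] z

/-- `y` is a backward orbit. -/
def Back (y : ℕ → Circle1) : Prop := ∀ j, D.T (y (j + 1)) = y j

theorem Back.iter {D : ExpData} {y : ℕ → Circle1} (h : D.Back y) (n j : ℕ) :
    D.T^[n] (y (j + n)) = y j := by
  induction n with
  | zero => rfl
  | succ n ih => rw [Function.iterate_succ_apply, ← add_assoc, h, ih]

theorem term_cont {φ' : Circle1 → ℝ} (h : Continuous φ') (j : ℕ) : Continuous (D.term φ' j) :=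
  h.mul ((D.Jc_cont _).inv₀ fun z => D.Jc_ne _ z)

theorem term_le {φ' : Circle1 → ℝ} {M : ℝ} (hM : ∀ z, |φ' z| ≤ M) (j : ℕ) (x : Circle1) :
    |D.term φ' j x| ≤ M * (D.c⁻¹ * D.lam⁻¹ ^ (j + 1)) := by
  rw [term, abs_mul]
  exact mul_le_mul (hM x) (D.inv_Jc_le _ x) (abs_nonneg _) ((abs_nonneg _).trans (hM x))

theorem summable_bound (M : ℝ) : Summable fun j : ℕ => M * (D.c⁻¹ * D.lam⁻¹ ^ (j + 1)) := by
  have h := summable_geometric_of_lt_one D.inv_lam_pos.le D.inv_lam_lt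
  exact (((summable_nat_add_iff 1).2 h).mul_left _).mul_left _

theorem tsum_bound_tail (M : ℝ) (n : ℕ) :
    ∑' j : ℕ, M * (D.c⁻¹ * D.lam⁻¹ ^ (j + n + 1)) = M * D.C2 * D.lam⁻¹ ^ (n + 1) := by
  have h : ∀ j : ℕ, M * (D.c⁻¹ * D.lam⁻¹ ^ (j + n + 1))
      = (M * D.c⁻¹ * D.lam⁻¹ ^ (n + 1)) * D.lam⁻¹ ^ j := fun j => by ring
  simp only [h]
  rw [tsum_mul_left, tsum_geometric_of_lt_one D.inv_lam_pos.le D.inv_lam_lt, C2]; ring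

theorem summable_term {φ' : Circle1 → ℝ} {M : ℝ} (hM : ∀ z, |φ' z| ≤ M) (y : ℕ → Circle1) :
    Summable fun j => D.term φ' j (y (j + 1)) :=
  Summable.of_norm_bounded (D.summable_bound M) fun j => D.term_le hM j _

theorem Winf_le {φ' : Circle1 → ℝ} {M : ℝ} (hM : ∀ z, |φ' z| ≤ M) (y : ℕ → Circle1) :
    |D.Winf φ' y| ≤ M * D.C2 := by
  have h1 := tsum_of_norm_bounded (D.summable_bound M).hasSum
    (f := fun j => D.term φ' j (y (j + 1))) fun j => D.term_le hM j _
  have h2 := D.tsum_bound_tail M 0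
  simp only [add_zero, zero_add, pow_one] at h2
  rw [h2] at h1
  have h3 : 0 ≤ M * D.C2 := mul_nonneg ((abs_nonneg _).trans (hM 0)) D.C2_pos.le
  refine h1.trans ?_
  have := D.inv_lam_lt
  have := D.inv_lam_pos
  nlinarith

theorem Winf_cont {φ' : Circle1 → ℝ} (h : Continuous φ') : Continuous (D.Winf φ') := by
  obtain ⟨M, -, hM⟩ := cont_bdd h
  refine continuous_tsum (fun j => (D.term_cont h j).comp (continuous_apply _))
    (D.summable_bound M) fun j y => D.term_le hM j _

theorem Winf_sub_partial {φ' : Circle1 → ℝ} {M : ℝ} (hM : ∀ z, |φ' z| ≤ M) (n : ℕ)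
    (y : ℕ → Circle1) :
    |D.Winf φ' y - ∑ j ∈ Finset.range n, D.term φ' j (y (j + 1))| ≤
      M * D.C2 * D.lam⁻¹ ^ (n + 1) := by
  have h1 := (D.summable_term hM y).sum_add_tsum_nat_add n
  rw [Winf, ← h1, add_sub_cancel_left, ← D.tsum_bound_tail]
  refine tsum_of_norm_bounded (f := fun j => D.term φ' (j + n) (y (j + n + 1)))
    (((summable_nat_add_iff n).2 (D.summable_bound M)).hasSum) fun j => ?_
  exact D.term_le hM _ _

theorem W_sub_Winf {φ' : Circle1 → ℝ} {M : ℝ} (hM : ∀ z, |φ' z| ≤ M) (n : ℕ) (z : Circle1) :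
    |D.Winf φ' (D.back n z) - D.W n φ' z| ≤ M * D.C2 * D.lam⁻¹ ^ (n + 1) :=
  D.Winf_sub_partial hM n (D.back n z)

/-- Finite slopes converge to infinite ones. -/
theorem W_tendsto {φ' : Circle1 → ℝ} (h : Continuous φ') {p : ℕ → ℕ} (hp : Tendsto p atTop atTop)
    {z : ℕ → Circle1} {y : ℕ → Circle1}
    (hz : Tendsto (fun i => D.back (p i) (z i)) atTop (𝓝 y)) :
    Tendsto (fun i => D.W (p i) φ' (z i)) atTop (𝓝 (D.Winf φ' y)) := by
  obtain ⟨M, -, hM⟩ := cont_bdd h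
  have h1 := ((D.Winf_cont h).tendsto y).comp hz
  have h2 : Tendsto (fun i => M * D.C2 * D.lam⁻¹ ^ (p i + 1)) atTop (𝓝 0) := by
    have := ((tendsto_pow_atTop_nhds_zero_of_lt_one D.inv_lam_pos.le D.inv_lam_lt).comp
      ((tendsto_add_atTop_nat 1).comp hp)).const_mul (M * D.C2)
    simpa using this
  have h3 : Tendsto (fun i => D.Winf φ' (D.back (p i) (z i)) - D.W (p i) φ' (z i)) atTop (𝓝 0) :=
    squeeze_zero_norm (fun i => D.W_sub_Winf hM _ _) h2
  simpa using h1.sub h3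

theorem W_hasDeriv {φ φ' : Circle1 → ℝ} (h : HasD φ φ') (n : ℕ) (z : Circle1) (t : ℝ) :
    HasDerivAt (fun t => birkhoffSum D.T φ n (D.br n z t)) (D.W n φ' (D.br n z t)) t := by
  simp only [birkhoffSum, W]
  rw [← Finset.sum_range_reflect]
  refine HasDerivAt.fun_sum fun k hk => ?_
  rw [Finset.mem_range] at hk
  obtain ⟨j, rfl⟩ := Nat.exists_eq_add_of_lt hk
  rw [show k + j + 1 - 1 - k = j by omega, show k + j + 1 - (j + 1) = k by omega]
  simp only [add_assoc k j 1, D.iter_br_add]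
  have h1 := D.B_hasDeriv (j + 1) (rep (D.T^[k] z)) t
  have h2 := (h.2 (D.B (j + 1) (rep (D.T^[k] z)) t)).comp t h1
  have e : D.term φ' j (D.br (j + 1) (D.T^[k] z) t) = φ' ↑(D.B (j + 1) (rep (D.T^[k] z)) t) *
      (D.J (j + 1) (D.B (j + 1) (rep (D.T^[k] z)) t))⁻¹ := by
    rw [term, br, Jc_coe]
  rw [e]; exact h2

theorem dist_back_br_le (n : ℕ) (z : Circle1) (t : ℝ) (j : ℕ) (hj : j ≤ n) :
    dist (D.back n (D.br n z t) j) (D.back n z j) ≤ D.c⁻¹ * D.lam⁻¹ ^ j * |t| := by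
  obtain ⟨k, rfl⟩ := Nat.exists_eq_add_of_le' hj
  rw [back, back, Nat.add_sub_cancel, D.iter_br_add, dist_comm]
  exact D.dist_br_self_le _ _ _

theorem back_br_tendsto {p : ℕ → ℕ} (hp : Tendsto p atTop atTop) {z : ℕ → Circle1} {t : ℕ → ℝ}
    (ht : Tendsto t atTop (𝓝 0)) {y : ℕ → Circle1}
    (hz : Tendsto (fun i => D.back (p i) (z i)) atTop (𝓝 y)) :
    Tendsto (fun i => D.back (p i) (D.br (p i) (z i) (t i))) atTop (𝓝 y) := by
  rw [tendsto_pi_nhds] at hz ⊢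
  intro j
  refine (hz j).congr_dist ?_
  have h2 : Tendsto (fun i => D.c⁻¹ * D.lam⁻¹ ^ j * |t i|) atTop (𝓝 0) := by
    simpa using (ht.abs).const_mul (D.c⁻¹ * D.lam⁻¹ ^ j)
  refine squeeze_zero' (Eventually.of_forall fun _ => dist_nonneg) ?_ h2
  filter_upwards [hp.eventually_ge_atTop j] with i hi
  rw [dist_comm]; exact D.dist_back_br_le _ _ _ _ hi

theorem back_limit {p : ℕ → ℕ} (hp : Tendsto p atTop atTop) {z : ℕ → Circle1} {y : ℕ → Circle1}
    (hz : Tendsto (fun i => D.back (p i) (z i)) atTop (𝓝 y)) : D.Back y := by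
  rw [tendsto_pi_nhds] at hz
  intro j
  refine tendsto_nhds_unique ((D.T_cont.tendsto _).comp (hz (j + 1))) ((hz j).congr' ?_)
  filter_upwards [hp.eventually_ge_atTop (j + 1)] with i hi
  simp only [Function.comp, back]
  rw [← Function.iterate_succ_apply' D.T]; congr 1; omega

end ExpData

/-! ### Transversality of slopes -/

instance : IsProbabilityMeasure (volume : Measure Circle1) :=
  ⟨by rw [AddCircle.measure_univ]; simp⟩

theorem volume_singleton_zero (a : Circle1) : (volume : Measure Circle1) {a} = 0 := by
  have := AddCircle.volume_closedBall (T := (1:ℝ)) (x := a) 0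
  simpa using this

theorem integral_cosF {m : ℕ} (hm : 1 ≤ m) : ∫ z, cosF m z = 0 := by
  refine integral_eq_zero_of_add_right_eq_neg (μ := volume)
    (g := ((1 / 2 / (m : ℤ) : ℝ) : Circle1)) fun x => ?_
  have := fourier_add_half_inv_index (T := (1:ℝ)) (n := (m : ℤ)) (by exact_mod_cast (by omega))
    one_pos x
  rw [cosF, this]; simp [cosF]

theorem integral_sinF {m : ℕ} (hm : 1 ≤ m) : ∫ z, sinF m z = 0 := by
  refine integral_eq_zero_of_add_right_eq_neg (μ := volume)
    (g := ((1 / 2 / (m : ℤ) : ℝ) : Circle1)) fun x => ?_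
  have := fourier_add_half_inv_index (T := (1:ℝ)) (n := (m : ℤ)) (by exact_mod_cast (by omega))
    one_pos x
  rw [sinF, this]; simp [sinF]

/-- Tent functions shrinking to a point. -/
def tent (a : Circle1) (n : ℕ) (x : Circle1) : ℝ := max 0 (1 - n * dist x a)

theorem tent_cont (a : Circle1) (n : ℕ) : Continuous (tent a n) := by
  unfold tent; fun_prop

theorem tent_le (a : Circle1) (n : ℕ) (x : Circle1) : |tent a n x| ≤ 1 := by
  rw [abs_of_nonneg (le_max_left _ _)]
  refine max_le zero_le_one ?_
  have : 0 ≤ n * dist x a := by positivity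
  linarith

theorem tent_tendsto (a x : Circle1) :
    Tendsto (fun n => tent a n x) atTop (𝓝 (indicator {a} (fun _ => (1:ℝ)) x)) := by
  by_cases h : x = a
  · subst h; simp [tent]
  · rw [indicator_of_notMem (by simpa using h)]
    have hd : 0 < dist x a := dist_pos.2 h
    have h2 : Tendsto (fun n : ℕ => (n : ℝ) * dist x a) atTop atTop :=
      tendsto_natCast_atTop_atTop.atTop_mul_const hd
    refine tendsto_const_nhds.congr' ?_
    filter_upwards [h2.eventually_ge_atTop 1] with n hn
    rw [tent, max_eq_left (by linarith)]

theorem integral_tent_tendsto (a : Circle1) : Tendsto (fun n => ∫ x, tent a n x) atTop (𝓝 0) := by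
  have h := tendsto_integral_of_dominated_convergence (μ := (volume : Measure Circle1))
    (F := fun n => tent a n) (f := indicator {a} (fun _ => (1:ℝ))) (fun _ => 1)
    (fun n => (tent_cont a n).aestronglyMeasurable) (integrable_const _)
    (fun n => Eventually.of_forall fun x => tent_le a n x)
    (Eventually.of_forall fun x => tent_tendsto a x)
  rw [integral_indicator (measurableSet_singleton a),
    Measure.restrict_eq_zero.2 (volume_singleton_zero a), integral_zero_measure] at h
  exact h

namespace ExpData
variable (D : ExpData)

theorem Winf_tent_tendsto (a : Circle1) (y : ℕ → Circle1) :
    Tendsto (fun n => D.Winf (tent a n) y) atTop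
      (𝓝 (D.Winf (indicator {a} fun _ => (1:ℝ)) y)) := by
  refine tendsto_tsum_of_dominated_convergence (D.summable_bound 1) (fun j => ?_)
    (Eventually.of_forall fun n j => D.term_le (tent_le a n) j _)
  exact (tent_tendsto a _).mul_const _

theorem Winf_sub_add {φ ψ : Circle1 → ℝ} (hφ : Continuous φ) (hψ : Continuous ψ) (y : ℕ → Circle1) :
    D.Winf (fun z => φ z + ψ z) y = D.Winf φ y + D.Winf ψ y := by
  obtain ⟨M, -, hM⟩ := cont_bdd hφ
  obtain ⟨M', -, hM'⟩ := cont_bdd hψ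
  rw [Winf, Winf, Winf, ← (D.summable_term hM y).tsum_add (D.summable_term hM' y)]
  simp only [term, add_mul]

theorem Winf_smul (φ : Circle1 → ℝ) (a : ℝ) (y : ℕ → Circle1) :
    D.Winf (fun z => a * φ z) y = a * D.Winf φ y := by
  rw [Winf, Winf, ← tsum_mul_left]; simp only [term, mul_assoc]

/-- If slopes along two sequences agree for all trigonometric monomials, then the two weighted
atomic measures behind them have the same atoms. -/
theorem Winf_atom_eq {y y' : ℕ → Circle1}
    (hc : ∀ m, 1 ≤ m → D.Winf (cosF m) y = D.Winf (cosF m) y')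
    (hs : ∀ m, 1 ≤ m → D.Winf (sinF m) y = D.Winf (sinF m) y') (a : Circle1) :
    D.Winf (indicator {a} fun _ => (1:ℝ)) y = D.Winf (indicator {a} fun _ => (1:ℝ)) y' := by
  set m1 := D.Winf (fun _ => 1) y - D.Winf (fun _ => 1) y' with hm1
  let l0 : C(Circle1, ℝ) →ₗ[ℝ] ℝ :=
    { toFun := fun ψ => D.Winf ψ y - D.Winf ψ y' - m1 * ∫ z, ψ z
      map_add' := fun φ ψ => by
        have h1 := D.Winf_sub_add φ.continuous ψ.continuous y
        have h2 := D.Winf_sub_add φ.continuous ψ.continuous y'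
        have h3 : ∫ z, (φ z + ψ z) = (∫ z, φ z) + ∫ z, ψ z :=
          integral_add (integrable_of_cont φ.continuous _) (integrable_of_cont ψ.continuous _)
        change D.Winf (fun z => φ z + ψ z) y - D.Winf (fun z => φ z + ψ z) y'
          - m1 * ∫ z, (φ z + ψ z) = _
        rw [h1, h2, h3]; ring
      map_smul' := fun b ψ => by
        change D.Winf (fun z => b * ψ z) y - D.Winf (fun z => b * ψ z) y'
          - m1 * ∫ z, (b * ψ z) = b * _
        rw [D.Winf_smul, D.Winf_smul, integral_const_mul]; ring }
  have hbd : ∀ ψ : C(Circle1, ℝ), ‖l0 ψ‖ ≤ (D.C2 + D.C2 + |m1|) * ‖ψ‖ := by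
    intro ψ
    have hb : ∀ z, |ψ z| ≤ ‖ψ‖ := fun z => ψ.norm_coe_le_norm z
    have h1 := D.Winf_le hb y
    have h2 := D.Winf_le hb y'
    have h3 : |∫ z, ψ z| ≤ ‖ψ‖ := by
      have := norm_integral_le_of_norm_le_const (μ := (volume : Measure Circle1))
        (f := fun z => ψ z) (C := ‖ψ‖) (Eventually.of_forall hb)
      simpa using this
    change |D.Winf ψ y - D.Winf ψ y' - m1 * ∫ z, ψ z| ≤ _
    calc _ ≤ |D.Winf ψ y| + |D.Winf ψ y'| + |m1| * |∫ z, ψ z| := by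
          rw [← abs_mul]
          exact (abs_sub _ _).trans (add_le_add (abs_sub _ _) le_rfl)
      _ ≤ _ := by nlinarith [abs_nonneg m1]
  let l := l0.mkContinuous _ hbd
  have hl : l = 0 := by
    refine trig_dense l ?_ ?_ ?_
    · change D.Winf (fun _ => 1) y - D.Winf (fun _ => 1) y' - m1 * ∫ z : Circle1, (1:ℝ) = 0
      simp [hm1]
    · intro m hm
      change D.Winf (cosF m) y - D.Winf (cosF m) y' - m1 * ∫ z, cosF m z = 0
      rw [hc m hm, integral_cosF hm]; simp
    · intro m hm
      change D.Winf (sinF m) y - D.Winf (sinF m) y' - m1 * ∫ z, sinF m z = 0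
      rw [hs m hm, integral_sinF hm]; simp
  have h1 : ∀ n, D.Winf (tent a n) y - D.Winf (tent a n) y' = m1 * ∫ z, tent a n z := fun n => by
    have : l ⟨tent a n, tent_cont a n⟩ = 0 := by rw [hl]; rfl
    change D.Winf (tent a n) y - D.Winf (tent a n) y' - m1 * ∫ z, tent a n z = 0 at this
    linarith
  have h2 := (D.Winf_tent_tendsto a y).sub (D.Winf_tent_tendsto a y')
  simp only [h1] at h2
  have h3 := (integral_tent_tendsto a).const_mul m1
  rw [mul_zero] at h3
  exact (sub_eq_zero.1 (tendsto_nhds_unique h2 h3))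

theorem Jc_periodic_ne_one {x : Circle1} {j : ℕ} (hj : 0 < j) (hx : D.T^[j] x = x) :
    D.Jc j x ≠ 1 := by
  intro h
  have h1 : ∀ n, D.Jc (n * j) x = 1 ∧ D.T^[n * j] x = x := by
    intro n
    induction n with
    | zero => simp [Jc, J]
    | succ n ih =>
      rw [Nat.succ_mul, D.Jc_add, ih.1, ih.2, h, add_comm, Function.iterate_add_apply, ih.2, hx]
      simp
  have h2 : Tendsto (fun n : ℕ => D.c * D.lam ^ (n * j)) atTop atTop := by
    refine Tendsto.const_mul_atTop D.c_pos ((tendsto_pow_atTop_atTop_of_one_lt D.lam_gt).comp ?_)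
    exact tendsto_id.atTop_mul_const' hj
  obtain ⟨n, hn⟩ := (h2.eventually_gt_atTop 1).exists
  have h3 := D.Jc_expand (n * j) x
  rw [(h1 n).1, abs_one] at h3
  linarith

theorem Back.eq_periodic {D : ExpData} {y : ℕ → Circle1} (h : D.Back y) {i j : ℕ} (hij : i < j)
    (he : y i = y j) : D.T^[j - i] (y i) = y i := by
  obtain ⟨k, rfl⟩ := Nat.exists_eq_add_of_lt hij
  have := h.iter (k + 1) i
  rw [← add_assoc] at this
  rw [show i + k + 1 - i = k + 1 by omega]
  conv_lhs => rw [he]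
  exact this

theorem trans_aux {y y' : ℕ → Circle1} (hy : D.Back y) (hy' : D.Back y') (h0 : y 0 = y' 0)
    (h1 : y 1 ≠ y' 1) (hnp : ∀ n, 0 < n → D.T^[n] (y 1) ≠ y 1)
    (he : D.Winf (indicator {y 1} fun _ => (1:ℝ)) y = D.Winf (indicator {y 1} fun _ => (1:ℝ)) y') :
    False := by
  have e1 : D.Winf (indicator {y 1} fun _ => (1:ℝ)) y = (D.Jc 1 (y 1))⁻¹ := by
    rw [Winf, tsum_eq_single 0]
    · simp [term]
    · intro j hj
      have : y (j + 1) ≠ y 1 := fun e => by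
        refine hnp (j + 1 - 1) (by omega) (hy.eq_periodic (i := 1) (j := j + 1) (by omega) e.symm)
      simp [term, this]
  by_cases hex : ∃ j, y' (j + 1) = y 1
  · obtain ⟨j, hj⟩ := hex
    have hj0 : 0 < j := by
      rcases Nat.eq_zero_or_pos j with rfl | h
      · exact absurd hj.symm h1
      · exact h
    have e2 : D.Winf (indicator {y 1} fun _ => (1:ℝ)) y' = (D.Jc (j + 1) (y 1))⁻¹ := by
      rw [Winf, tsum_eq_single j]
      · simp [term, hj]
      · intro i hi
        have : y' (i + 1) ≠ y 1 := fun e => by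
          rcases lt_or_gt_of_ne hi with h | h
          · have := hy'.eq_periodic (i := i + 1) (j := j + 1) (by omega) (e.trans hj.symm)
            rw [e] at this
            exact hnp _ (by omega) this
          · have := hy'.eq_periodic (i := j + 1) (j := i + 1) (by omega) (hj.trans e.symm)
            rw [hj] at this
            exact hnp _ (by omega) this
        simp [term, this]
    rw [e1, e2, inv_inj, add_comm j 1, D.Jc_add, Function.iterate_one, hy 0] at he
    have h3 : D.Jc j (y 0) = 1 := by
      have := D.Jc_ne 1 (y 1)
      field_simp at he
      exact he.symm
    refine D.Jc_periodic_ne_one hj0 ?_ h3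
    have h4 := hy'.iter (j + 1) 0
    rw [zero_add, hj, Function.iterate_succ_apply, hy 0, ← h0] at h4
    exact h4
  · push Not at hex
    have e2 : D.Winf (indicator {y 1} fun _ => (1:ℝ)) y' = 0 := by
      rw [Winf]; simp [term, hex]
    rw [e1, e2] at he
    exact inv_ne_zero (D.Jc_ne _ _) he

/-- Two backward orbits that branch at their common end point are told apart by the slopes of
trigonometric monomials. -/
theorem trans_inf {y y' : ℕ → Circle1} (hy : D.Back y) (hy' : D.Back y') (h0 : y 0 = y' 0)
    (h1 : y 1 ≠ y' 1) : ∃ m, 1 ≤ m ∧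
      (D.Winf (cosF m) y ≠ D.Winf (cosF m) y' ∨ D.Winf (sinF m) y ≠ D.Winf (sinF m) y') := by
  by_contra hcon
  push Not at hcon
  have ha := D.Winf_atom_eq (y := y) (y' := y') (fun m hm => (hcon m hm).1)
    (fun m hm => (hcon m hm).2)
  by_cases hp : ∀ n, 0 < n → D.T^[n] (y 1) ≠ y 1
  · exact D.trans_aux hy hy' h0 h1 hp (ha _)
  by_cases hp' : ∀ n, 0 < n → D.T^[n] (y' 1) ≠ y' 1
  · exact D.trans_aux hy' hy h0.symm h1.symm hp' (ha _).symm
  push Not at hp hp'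
  obtain ⟨n, hn, hpn⟩ := hp
  obtain ⟨n', hn', hpn'⟩ := hp'
  apply h1
  have e1 : D.T^[n * n'] (y 1) = y 1 :=
    (Function.IsPeriodicPt.mul_const (show Function.IsPeriodicPt D.T n (y 1) from hpn) n')
  have e2 : D.T^[n * n'] (y' 1) = y' 1 :=
    (Function.IsPeriodicPt.const_mul (show Function.IsPeriodicPt D.T n' (y' 1) from hpn') n)
  obtain ⟨k, hk⟩ : ∃ k, n * n' = k + 1 := ⟨n * n' - 1, by have := Nat.mul_pos hn hn'; omega⟩
  rw [hk, Function.iterate_succ_apply, hy 0] at e1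
  rw [hk, Function.iterate_succ_apply, hy' 0, ← h0] at e2
  exact e1.symm.trans e2

/-- The derivatives of the family contain all trigonometric monomials, up to scalars. -/
def _root_.EC.Rich (φ' : ℕ → Circle1 → ℝ) : Prop := ∀ m, 1 ≤ m →
  (∃ k a, a ≠ 0 ∧ φ' k = fun z => a * cosF m z) ∧ (∃ k a, a ≠ 0 ∧ φ' k = fun z => a * sinF m z)

theorem trans_fam {φ' : ℕ → Circle1 → ℝ} (hr : Rich φ') {y y' : ℕ → Circle1} (hy : D.Back y)
    (hy' : D.Back y') (h0 : y 0 = y' 0) (h1 : y 1 ≠ y' 1) :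
    ∃ k, D.Winf (φ' k) y ≠ D.Winf (φ' k) y' := by
  obtain ⟨m, hm, h | h⟩ := D.trans_inf hy hy' h0 h1
  · obtain ⟨k, a, ha, hk⟩ := (hr m hm).1
    refine ⟨k, fun e => h ?_⟩
    rw [hk, D.Winf_smul, D.Winf_smul] at e
    exact mul_left_cancel₀ ha e
  · obtain ⟨k, a, ha, hk⟩ := (hr m hm).2
    refine ⟨k, fun e => h ?_⟩
    rw [hk, D.Winf_smul, D.Winf_smul] at e
    exact mul_left_cancel₀ ha e

theorem le_dist_of_T_eq {x x' : Circle1} (h : D.T x = D.T x') (hne : x ≠ x') :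
    D.r0 ≤ dist x x' := by
  by_contra hc
  exact hne (D.eq_of_T_eq h (not_le.1 hc).le)

/-- Uniform transversality for infinite backward orbits. -/
theorem trans_unif_inf {φ' : ℕ → Circle1 → ℝ} (hr : Rich φ') (hc : ∀ k, Continuous (φ' k)) :
    ∃ N : ℕ, ∃ c > 0, ∀ y y' : ℕ → Circle1, D.Back y → D.Back y' → y 0 = y' 0 → y 1 ≠ y' 1 →
      ∃ k < N, c ≤ |D.Winf (φ' k) y - D.Winf (φ' k) y'| := by
  by_contra hcon
  push Not at hcon
  choose y y' hy hy' h0 h1 h2 using fun n : ℕ => hcon n (1 / ((n : ℝ) + 1)) (by positivity)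
  obtain ⟨⟨a, a'⟩, s, hs, hlim⟩ := CompactSpace.tendsto_subseq (fun n => (y n, y' n))
  have hl1 := (continuous_fst.tendsto _).comp hlim
  have hl2 := (continuous_snd.tendsto _).comp hlim
  simp only [Function.comp_def] at hl1 hl2
  have hp1 := tendsto_pi_nhds.1 hl1
  have hp2 := tendsto_pi_nhds.1 hl2
  have hB : D.Back a := fun j => tendsto_nhds_unique
    ((D.T_cont.tendsto _).comp (hp1 (j + 1))) ((hp1 j).congr fun i => (hy _ j).symm)
  have hB' : D.Back a' := fun j => tendsto_nhds_unique
    ((D.T_cont.tendsto _).comp (hp2 (j + 1))) ((hp2 j).congr fun i => (hy' _ j).symm)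
  have e0 : a 0 = a' 0 := tendsto_nhds_unique (hp1 0) ((hp2 0).congr fun i => (h0 _).symm)
  have e1 : a 1 ≠ a' 1 := by
    have hd := (hp1 1).dist (hp2 1)
    have := ge_of_tendsto' hd fun i => D.le_dist_of_T_eq
      (by rw [hy, hy', h0]) (h1 (s i))
    exact dist_pos.1 (D.r0_pos.trans_le this)
  obtain ⟨k, hk⟩ := D.trans_fam hr hB hB' e0 e1
  apply hk
  have t1 := ((D.Winf_cont (hc k)).tendsto _).comp hl1
  have t2 := ((D.Winf_cont (hc k)).tendsto _).comp hl2
  have t3 := (t1.sub t2).abs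
  have t4 : Tendsto (fun i => 1 / ((s i : ℝ) + 1)) atTop (𝓝 0) :=
    tendsto_one_div_add_atTop_nhds_zero_nat.comp hs.tendsto_atTop
  have t5 := le_of_tendsto_of_tendsto t3 t4 (by
    filter_upwards [hs.tendsto_atTop.eventually_gt_atTop k] with i hi
    exact (h2 (s i) k hi).le)
  simpa [sub_eq_zero] using t5

/-- Uniform transversality for finite orbit segments that merge in the last step. -/
theorem trans_unif {φ' : ℕ → Circle1 → ℝ} (hr : Rich φ') (hc : ∀ k, Continuous (φ' k)) :
    ∃ N : ℕ, ∃ c > 0, ∀ p ≥ N, ∀ z z' : Circle1, dist (D.T^[p] z) (D.T^[p] z') ≤ c →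
      D.r0 ≤ dist (D.T^[p - 1] z) (D.T^[p - 1] z') →
      ∃ k < N, ∀ t, |t| ≤ c → c ≤ |D.W p (φ' k) (D.br p z t) - D.W p (φ' k) (D.br p z' t)| := by
  by_contra hcon
  push Not at hcon
  choose p hp z z' h0 h1 h2 using fun n : ℕ => hcon n (1 / ((n : ℝ) + 1)) (by positivity)
  obtain ⟨⟨a, a'⟩, s, hs, hlim⟩ :=
    CompactSpace.tendsto_subseq (fun n => (D.back (p n) (z n), D.back (p n) (z' n)))
  have hl1 := (continuous_fst.tendsto _).comp hlim
  have hl2 := (continuous_snd.tendsto _).comp hlim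
  simp only [Function.comp_def] at hl1 hl2
  have hp1 := tendsto_pi_nhds.1 hl1
  have hp2 := tendsto_pi_nhds.1 hl2
  have hpt : Tendsto (fun i => p (s i)) atTop atTop :=
    (tendsto_atTop_mono hp tendsto_id).comp hs.tendsto_atTop
  have hB : D.Back a := D.back_limit hpt hl1
  have hB' : D.Back a' := D.back_limit hpt hl2
  have t4 : Tendsto (fun i => 1 / ((s i : ℝ) + 1)) atTop (𝓝 0) :=
    tendsto_one_div_add_atTop_nhds_zero_nat.comp hs.tendsto_atTop
  have e0 : a 0 = a' 0 := by
    have := le_of_tendsto_of_tendsto' ((hp1 0).dist (hp2 0)) t4 fun i => h0 (s i)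
    exact dist_le_zero.1 this
  have e1 : a 1 ≠ a' 1 := by
    have := ge_of_tendsto' ((hp1 1).dist (hp2 1)) fun i => h1 (s i)
    exact dist_pos.1 (D.r0_pos.trans_le this)
  obtain ⟨k, hk⟩ := D.trans_fam hr hB hB' e0 e1
  apply hk
  have h3 : ∀ i, ∃ t, k < s i → |t| ≤ 1 / ((s i : ℝ) + 1) ∧
      |D.W (p (s i)) (φ' k) (D.br (p (s i)) (z (s i)) t) -
        D.W (p (s i)) (φ' k) (D.br (p (s i)) (z' (s i)) t)| < 1 / ((s i : ℝ) + 1) := by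
    intro i
    by_cases hi : k < s i
    · obtain ⟨t, ht⟩ := h2 (s i) k hi
      exact ⟨t, fun _ => ht⟩
    · exact ⟨0, fun h => absurd h hi⟩
  choose t ht using h3
  have hev := hs.tendsto_atTop.eventually_gt_atTop k
  have ht0 : Tendsto t atTop (𝓝 0) := by
    refine squeeze_zero_norm' ?_ t4
    filter_upwards [hev] with i hi
    exact (ht i hi).1
  have t1 := D.W_tendsto (hc k) hpt (D.back_br_tendsto hpt ht0 hl1)
  have t2 := D.W_tendsto (hc k) hpt (D.back_br_tendsto hpt ht0 hl2)
  have t3 := (t1.sub t2).abs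
  have t5 := le_of_tendsto_of_tendsto t3 t4 (by
    filter_upwards [hev] with i hi
    exact (ht i hi).2.le)
  simpa [sub_eq_zero] using t5

end ExpData
end EC

/-! ### Entropy of invariant sets -/

namespace EC
namespace ExpData
variable (D : ExpData)

/-- The first `n` iterates of `x` and `y` are pairwise within the expansivity scale `r0`. -/
def Close (n : ℕ) (x y : Circle1) : Prop := ∀ i < n, dist (D.T^[i] x) (D.T^[i] y) ≤ D.r0

theorem Close.add {D : ExpData} {m n : ℕ} {x y : Circle1} (h : D.Close m x y)
    (h' : D.Close n (D.T^[m] x) (D.T^[m] y)) : D.Close (m + n) x y := by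
  intro i hi
  rcases lt_or_ge i m with h1 | h1
  · exact h i h1
  · have := h' (i - m) (by omega)
    rwa [← Function.iterate_add_apply, ← Function.iterate_add_apply, Nat.sub_add_cancel h1] at this

theorem Close.symm {D : ExpData} {n : ℕ} {x y : Circle1} (h : D.Close n x y) : D.Close n y x :=
  fun i hi => by rw [dist_comm]; exact h i hi

theorem Close.mono {D : ExpData} {m n : ℕ} {x y : Circle1} (h : D.Close n x y) (hm : m ≤ n) :
    D.Close m x y := fun i hi => h i (by omega)

/-- `S` splits into at most `K` classes of points that stay close for `n` steps. -/
def Lab (S : Set Circle1) (n K : ℕ) : Prop :=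
  ∃ l : Circle1 → ℕ, (∀ x ∈ S, l x < K) ∧ ∀ x ∈ S, ∀ y ∈ S, l x = l y → D.Close n x y

theorem lab_of_finset {S : Set Circle1} {n : ℕ} {α : Type*} (F : Circle1 → α) (s : Finset α)
    (hs : ∀ x ∈ S, F x ∈ s) (h : ∀ x ∈ S, ∀ y ∈ S, F x = F y → D.Close n x y) :
    D.Lab S n s.card := by
  classical
  refine ⟨fun x => if hx : F x ∈ s then (s.equivFin ⟨F x, hx⟩ : ℕ) else 0, fun x hx => ?_,
    fun x hx y hy hxy => h x hx y hy ?_⟩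
  · simp only [hs x hx, dif_pos]
    exact (s.equivFin _).2
  · simp only [hs x hx, hs y hy, dif_pos] at hxy
    have := s.equivFin.injective (Fin.ext hxy)
    simpa using this

theorem lab_of_fintype {S : Set Circle1} {n : ℕ} {α : Type*} [Fintype α] (F : Circle1 → α)
    (h : ∀ x ∈ S, ∀ y ∈ S, F x = F y → D.Close n x y) :
    D.Lab S n (Fintype.card α) :=
  D.lab_of_finset F Finset.univ (fun _ _ => Finset.mem_univ _) h

/-- The index of the arc of length `1 / (Q + 1)` containing `z`. -/
def _root_.EC.cell (Q : ℕ) (z : Circle1) : Fin (Q + 1) :=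
  ⟨⌊rep z * (Q + 1)⌋₊, by
    rw [Nat.floor_lt (mul_nonneg (rep_nonneg z) (by positivity))]
    have := rep_lt_one z
    push_cast
    nlinarith [this, (Nat.cast_nonneg Q : (0:ℝ) ≤ Q)]⟩

theorem _root_.EC.dist_of_cell {Q : ℕ} {x y : Circle1} (h : cell Q x = cell Q y) :
    dist x y ≤ 1 / (Q + 1) := by
  have h1 : ⌊rep x * (Q + 1)⌋₊ = ⌊rep y * (Q + 1)⌋₊ := Fin.mk.inj_iff.1 h
  have hQ : (0:ℝ) < Q + 1 := by positivity
  have hx := Nat.floor_le (mul_nonneg (rep_nonneg x) hQ.le)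
  have hy := Nat.floor_le (mul_nonneg (rep_nonneg y) hQ.le)
  have hx' := Nat.lt_floor_add_one (rep x * (Q + 1))
  have hy' := Nat.lt_floor_add_one (rep y * (Q + 1))
  rw [h1] at hx hx'
  have h2 : |rep x - rep y| ≤ 1 / (Q + 1) := by
    rw [le_div_iff₀ hQ, ← abs_of_pos hQ, ← abs_mul, abs_le]
    constructor <;> nlinarith
  calc dist x y = dist ((rep x : ℝ) : Circle1) ((rep y : ℝ) : Circle1) := by
        rw [coe_rep, coe_rep]
    _ ≤ _ := (dist_coe_le _ _).trans h2

theorem exists_cell {δ : ℝ} (hδ : 0 < δ) : ∃ Q : ℕ, ∀ x y, cell Q x = cell Q y → dist x y ≤ δ := by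
  obtain ⟨Q, hQ⟩ := exists_nat_one_div_lt hδ
  exact ⟨Q, fun x y h => (dist_of_cell h).trans hQ.le⟩

theorem exists_lab (S : Set Circle1) (n : ℕ) : ∃ K, D.Lab S n K := by
  obtain ⟨Q, hQ⟩ := exists_cell (D.r0_pos)
  refine ⟨_, D.lab_of_fintype (α := Fin n → Fin (Q + 1)) (fun x i => cell Q (D.T^[i] x)) ?_⟩
  intro x _ y _ h i hi
  exact hQ _ _ (congrFun h ⟨i, hi⟩)

/-- Minimal number of classes of `n`-close points in `S`. -/
def cnt (S : Set Circle1) (n : ℕ) : ℕ := sInf {K | D.Lab S n K}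

theorem cnt_lab (S : Set Circle1) (n : ℕ) : D.Lab S n (D.cnt S n) := Nat.sInf_mem (D.exists_lab S n)

theorem cnt_le {S : Set Circle1} {n K : ℕ} (h : D.Lab S n K) : D.cnt S n ≤ K := Nat.sInf_le h

theorem exists_labF (S : Set Circle1) (n : ℕ) (hne : S.Nonempty) : ∃ l : Circle1 → Fin (D.cnt S n),
    ∀ x ∈ S, ∀ y ∈ S, l x = l y → D.Close n x y := by
  classical
  obtain ⟨l, hl, h⟩ := D.cnt_lab S n
  obtain ⟨x0, hx0⟩ := hne
  refine ⟨fun x => if hx : x ∈ S then ⟨l x, hl x hx⟩ else ⟨l x0, hl x0 hx0⟩, fun x hx y hy e => ?_⟩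
  simp only [hx, hy, dif_pos, Fin.mk.injEq] at e
  exact h x hx y hy e

theorem cnt_pos {S : Set Circle1} (hne : S.Nonempty) (n : ℕ) : 1 ≤ D.cnt S n := by
  obtain ⟨l, -⟩ := D.exists_labF S n hne
  obtain ⟨x0, hx0⟩ := hne
  exact (Nat.zero_le _).trans_lt (l x0).2

theorem iter_mem {M : Set Circle1} (hM : ∀ x ∈ M, D.T x ∈ M) {x : Circle1} (hx : x ∈ M) (n : ℕ) :
    D.T^[n] x ∈ M := by
  induction n with
  | zero => exact hx
  | succ n ih => rw [Function.iterate_succ_apply']; exact hM _ ih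

theorem cnt_add {M : Set Circle1} (hM : ∀ x ∈ M, D.T x ∈ M) (hne : M.Nonempty) (m n : ℕ) :
    D.cnt M (m + n) ≤ D.cnt M m * D.cnt M n := by
  obtain ⟨l, hl⟩ := D.exists_labF M m hne
  obtain ⟨l', hl'⟩ := D.exists_labF M n hne
  have := D.lab_of_fintype (S := M) (n := m + n) (fun x => (l x, l' (D.T^[m] x))) (by
    intro x hx y hy e
    rw [Prod.mk.injEq] at e
    exact (hl x hx y hy e.1).add (hl' _ (D.iter_mem hM hx m) _ (D.iter_mem hM hy m) e.2))
  simpa using D.cnt_le this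

theorem subadd {M : Set Circle1} (hM : ∀ x ∈ M, D.T x ∈ M) (hne : M.Nonempty) :
    Subadditive (fun n => Real.log (D.cnt M n)) := by
  intro m n
  have h1 : (1:ℝ) ≤ D.cnt M m := by exact_mod_cast D.cnt_pos hne m
  have h2 : (1:ℝ) ≤ D.cnt M n := by exact_mod_cast D.cnt_pos hne n
  have h3 : (1:ℝ) ≤ D.cnt M (m + n) := by exact_mod_cast D.cnt_pos hne (m + n)
  rw [← Real.log_mul (by positivity) (by positivity)]
  exact Real.log_le_log (by positivity) (by exact_mod_cast D.cnt_add hM hne m n)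

/-- Topological entropy of `T` on the invariant set `M`. -/
def ent (M : Set Circle1) : ℝ := sInf ((fun n : ℕ => Real.log (D.cnt M n) / n) '' Ici 1)

theorem ent_bdd (M : Set Circle1) : BddBelow (range fun n : ℕ => Real.log (D.cnt M n) / n) := by
  refine ⟨0, ?_⟩
  rintro _ ⟨n, rfl⟩
  exact div_nonneg (Real.log_natCast_nonneg _) (Nat.cast_nonneg n)

theorem ent_tendsto {M : Set Circle1} (hM : ∀ x ∈ M, D.T x ∈ M) (hne : M.Nonempty) :
    Tendsto (fun n : ℕ => Real.log (D.cnt M n) / n) atTop (𝓝 (D.ent M)) :=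
  by
  have := (D.subadd hM hne).tendsto_lim (D.ent_bdd M)
  rwa [Subadditive.lim] at this

theorem ent_nonneg (M : Set Circle1) : 0 ≤ D.ent M := by
  apply Real.sInf_nonneg
  rintro _ ⟨n, -, rfl⟩
  exact div_nonneg (Real.log_natCast_nonneg _) (Nat.cast_nonneg n)

theorem ent_mul_le {M : Set Circle1} (hM : ∀ x ∈ M, D.T x ∈ M) (hne : M.Nonempty) (n : ℕ) :
    n * D.ent M ≤ Real.log (D.cnt M n) := by
  rcases Nat.eq_zero_or_pos n with rfl | hn
  · simpa using Real.log_natCast_nonneg _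
  · have := (D.subadd hM hne).lim_le_div (D.ent_bdd M) hn.ne'
    rw [Subadditive.lim] at this
    rw [mul_comm]
    exact (le_div_iff₀ (by exact_mod_cast hn)).1 this

theorem cnt_le_exp {M : Set Circle1} (hM : ∀ x ∈ M, D.T x ∈ M) (hne : M.Nonempty) {κ : ℝ}
    (hκ : D.ent M < κ) : ∃ n0, ∀ n ≥ n0, (D.cnt M n : ℝ) ≤ Real.exp (n * κ) := by
  obtain ⟨n0, h⟩ := ((D.ent_tendsto hM hne).eventually (gt_mem_nhds hκ)).exists_forall_of_atTop
  refine ⟨max n0 1, fun n hn => ?_⟩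
  have h1 := h n (le_trans (le_max_left _ _) hn)
  have hn' : (0:ℝ) < n := by exact_mod_cast (lt_of_lt_of_le one_pos ((le_max_right n0 1).trans hn))
  rw [← Real.log_le_iff_le_exp (by exact_mod_cast D.cnt_pos hne n), mul_comm]
  rw [div_lt_iff₀ hn'] at h1
  exact h1.le

/-- Words of length `R` over `α ⊕ β` with at most `B` letters in `β`: weighting each such letter by
`1 / card β` bounds their number. -/
theorem count_words {α β : Type*} [Fintype α] [Fintype β] [Nonempty β] [DecidableEq α]
    [DecidableEq β] (R B : ℕ)
    (s : Finset (Fin R → α ⊕ β))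
    (hs : ∀ w ∈ s, (Finset.univ.filter fun i => (w i).isRight = true).card ≤ B) :
    (s.card : ℝ) ≤ (Fintype.card β : ℝ) ^ B * (Fintype.card α + 1 : ℝ) ^ R := by
  have hβ : (1:ℝ) ≤ Fintype.card β := by exact_mod_cast Fintype.card_pos
  set θ : ℝ := (Fintype.card β : ℝ)⁻¹ with hθ
  set g : α ⊕ β → ℝ := Sum.elim (fun _ => 1) (fun _ => θ) with hg
  have hsum : ∑ x, g x = Fintype.card α + 1 := by
    simp only [Fintype.sum_sum_type, hg, Sum.elim_inl, Sum.elim_inr, Finset.sum_const,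
      Finset.card_univ, nsmul_eq_mul, mul_one, hθ]
    rw [mul_inv_cancel₀ (by positivity)]
  have hprod : ∀ w : Fin R → α ⊕ β, ∏ i, g (w i) =
      θ ^ (Finset.univ.filter fun i => (w i).isRight = true).card := by
    intro w
    have : ∀ i, g (w i) = if (w i).isRight = true then θ else 1 := by
      intro i
      cases h : w i <;> simp [hg]
    rw [Finset.prod_congr rfl fun i _ => this i, Finset.prod_ite, Finset.prod_const,
      Finset.prod_const_one, mul_one]
  have hθ1 : θ ≤ 1 := inv_le_one_of_one_le₀ hβ
  have hθ0 : 0 < θ := by positivity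
  have hpw : (∑ w : Fin R → α ⊕ β, ∏ i, g (w i)) = (Fintype.card α + 1 : ℝ) ^ R := by
    rw [← hsum, Finset.sum_pow', Fintype.piFinset_univ]
  have h1 : (s.card : ℝ) * θ ^ B ≤ (Fintype.card α + 1 : ℝ) ^ R := by
    calc (s.card : ℝ) * θ ^ B = ∑ w ∈ s, θ ^ B := by simp
      _ ≤ ∑ w ∈ s, ∏ i, g (w i) := Finset.sum_le_sum fun w hw => by
          rw [hprod]; exact pow_le_pow_of_le_one hθ0.le hθ1 (hs w hw)
      _ ≤ ∑ w : Fin R → α ⊕ β, ∏ i, g (w i) :=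
          Finset.sum_le_sum_of_subset_of_nonneg (Finset.subset_univ _) fun w _ _ => by
            rw [hprod]; positivity
      _ = _ := hpw
  have h2 : (Fintype.card β : ℝ) ^ B * θ ^ B = 1 := by
    rw [← mul_pow, hθ, mul_inv_cancel₀ (by positivity), one_pow]
  calc (s.card : ℝ) = (Fintype.card β : ℝ) ^ B * ((s.card : ℝ) * θ ^ B) := by
        rw [mul_left_comm, h2, mul_one]
    _ ≤ _ := by gcongr

/-- If all but a small proportion of the blocks of length `W` along orbits of `M` are good, and the
good points split into `Z` classes, the entropy of `M` is controlled by `Z`. -/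
theorem ent_le_of_good {M : Set Circle1} (hM : ∀ x ∈ M, D.T x ∈ M) (hne : M.Nonempty) (W Z : ℕ)
    (Gd : Circle1 → Prop) (hZ : D.Lab {x | x ∈ M ∧ Gd x} W Z) (B ε : ℝ)
    (hB : ∀ x ∈ M, ∀ R : ℕ, ∃ s : Finset ℕ, (∀ j < R, ¬ Gd (D.T^[W * j] x) → j ∈ s) ∧
      (s.card : ℝ) ≤ B + ε * R) :
    W * D.ent M ≤ ε * Real.log (D.cnt M W) + Real.log (Z + 1) := by
  classical
  obtain ⟨l, hl, hl'⟩ := hZ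
  obtain ⟨l2, hl2⟩ := D.exists_labF M W hne
  have hW0 : 0 < D.cnt M W := D.cnt_pos hne W
  have : Nonempty (Fin (D.cnt M W)) := ⟨⟨0, hW0⟩⟩
  have hlog : 0 ≤ Real.log (D.cnt M W) := Real.log_natCast_nonneg _
  have key : ∀ R : ℕ, R * (W * D.ent M) ≤
      (B + ε * R) * Real.log (D.cnt M W) + R * Real.log (Z + 1) := by
    intro R
    let F : Circle1 → (Fin R → Fin Z ⊕ Fin (D.cnt M W)) := fun x j =>
      if h : D.T^[W * j] x ∈ M ∧ Gd (D.T^[W * j] x) then Sum.inl ⟨l (D.T^[W * j] x), hl _ h⟩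
      else Sum.inr (l2 (D.T^[W * j] x))
    let s : Finset (Fin R → Fin Z ⊕ Fin (D.cnt M W)) := Finset.univ.filter fun w => ∃ x ∈ M, F x = w
    have hclose : ∀ x ∈ M, ∀ y ∈ M, F x = F y → D.Close (W * R) x y := by
      intro x hx y hy e
      have hj : ∀ j < R, D.Close W (D.T^[W * j] x) (D.T^[W * j] y) := by
        intro j hj
        have e1 := congrFun e ⟨j, hj⟩
        simp only [F] at e1
        have hxM := D.iter_mem hM hx (W * j)
        have hyM := D.iter_mem hM hy (W * j)
        split_ifs at e1 with h1 h2 h2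
        · exact hl' _ h1 _ h2 (by simpa using e1)
        · exact hl2 _ hxM _ hyM (by simpa using e1)
      intro i hi
      have hW : 0 < W := Nat.pos_of_ne_zero (by rintro rfl; simp at hi)
      have := hj (i / W) (Nat.div_lt_of_lt_mul hi) (i % W) (Nat.mod_lt _ hW)
      rwa [← Function.iterate_add_apply, ← Function.iterate_add_apply, Nat.mod_add_div] at this
    have hlab : D.Lab M (W * R) s.card := D.lab_of_finset F s
      (fun x hx => by simp only [s, Finset.mem_filter, Finset.mem_univ, true_and]; exact ⟨x, hx, rfl⟩)
      hclose
    have hBB : 0 ≤ B + ε * R := by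
      obtain ⟨x, hx⟩ := hne
      obtain ⟨t, -, ht⟩ := hB x hx R
      exact le_trans (by positivity) ht
    have hcard : (s.card : ℝ) ≤ (D.cnt M W : ℝ) ^ ⌊B + ε * R⌋₊ * (Z + 1 : ℝ) ^ R := by
      have := count_words R ⌊B + ε * R⌋₊ s (by
        intro w hw
        simp only [s, Finset.mem_filter, Finset.mem_univ, true_and] at hw
        obtain ⟨x, hx, rfl⟩ := hw
        obtain ⟨t, ht, htc⟩ := hB x hx R
        apply Nat.le_floor
        refine le_trans ?_ htc
        have : (Finset.univ.filter fun i => (F x i).isRight = true).card ≤ t.card := by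
          apply Finset.card_le_card_of_injOn (fun i : Fin R => (i : ℕ))
          · intro i hi
            simp only [Finset.coe_filter, Finset.mem_univ, true_and, mem_setOf_eq, F] at hi
            refine ht i i.2 fun hg => ?_
            rw [dif_pos ⟨D.iter_mem hM hx _, hg⟩] at hi
            simp at hi
          · intro i _ j _ h
            exact Fin.ext h
        exact_mod_cast this)
      simpa using this
    have h1 := D.ent_mul_le hM hne (W * R)
    have h2 : Real.log (D.cnt M (W * R)) ≤ Real.log ((D.cnt M W : ℝ) ^ ⌊B + ε * R⌋₊ * (Z + 1 : ℝ) ^ R) := by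
      apply Real.log_le_log (by exact_mod_cast D.cnt_pos hne _)
      refine le_trans ?_ hcard
      exact_mod_cast D.cnt_le hlab
    have hc0 : (0:ℝ) < D.cnt M W := by exact_mod_cast hW0
    rw [Real.log_mul (by positivity) (by positivity), Real.log_pow, Real.log_pow] at h2
    have h3 : (⌊B + ε * R⌋₊ : ℝ) * Real.log (D.cnt M W) ≤ (B + ε * R) * Real.log (D.cnt M W) :=
      mul_le_mul_of_nonneg_right (Nat.floor_le hBB) hlog
    push_cast at h1
    nlinarith
  by_contra hcon
  push Not at hcon
  set A := W * D.ent M - (ε * Real.log (D.cnt M W) + Real.log (Z + 1)) with hA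
  have hA0 : 0 < A := by linarith
  obtain ⟨R, hR⟩ := exists_nat_gt (B * Real.log (D.cnt M W) / A)
  rw [div_lt_iff₀ hA0] at hR
  have := key R
  nlinarith

end ExpData
end EC

/-! ### Second order bounds and merging orbits -/

namespace EC
namespace ExpData
variable (D : ExpData)

theorem br_br (n : ℕ) (z : Circle1) (s t : ℝ) : D.br n (D.br n z s) t = D.br n z (s + t) := by
  have h1 : D.br n (D.br n z s) t = (D.B n (D.B n (rep z) s) t : Circle1) := D.br_coe n _ t
  have h2 : D.B n (D.B n (rep z) s) t = D.B n (rep z) (s + t) :=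
    D.B_eq (by rw [D.iter_B, D.iter_B]; ring)
  rw [h1, h2]; rfl

/-- The maximum value `h ↦ β(f + hφ)` has a quadratic upper bound for its second difference
at `0`. -/
def Quad (f φ : Circle1 → ℝ) : Prop := ∃ C h0 : ℝ, 0 < h0 ∧ ∀ h, 0 < h → h ≤ h0 →
  beta (fun x => f x + h * φ x) D.T + beta (fun x => f x + (-h) * φ x) D.T - 2 * beta f D.T ≤
    C * h ^ 2

theorem lip_pert {L L' : ℝ} {f φ : Circle1 → ℝ} (hL' : 0 ≤ L') (hf : Lip L f)
    (hφ : Lip L' φ) {h : ℝ} (hh : |h| ≤ 1) : Lip (L + L') (fun x => f x + h * φ x) := by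
  refine (hf.add (hφ.const_mul h)).mono ?_
  nlinarith [abs_nonneg h]

theorem birkhoff_nonneg {f : Circle1 → ℝ} (hf : ∀ x, 0 ≤ f x) (n : ℕ) (x : Circle1) :
    0 ≤ birkhoffSum D.T f n x := Finset.sum_nonneg fun _ _ => hf _

theorem birkhoff_mono {f : Circle1 → ℝ} (hf : ∀ x, 0 ≤ f x) {m n : ℕ} (hmn : m ≤ n) (x : Circle1) :
    birkhoffSum D.T f m x ≤ birkhoffSum D.T f n x :=
  Finset.sum_le_sum_of_subset_of_nonneg (Finset.range_mono hmn) fun _ _ _ => hf _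

/-- Along an orbit on which the Birkhoff sums of `f` stay within `C0` of their maximum, the defect
of `f + hφ` accumulates at rate `O(h²)`. This is where the second order bound `Quad` enters. -/
theorem rho_bound {L L' : ℝ} {f φ : Circle1 → ℝ} (hL : 0 ≤ L) (hL' : 0 ≤ L') (hf : Lip L f)
    (hφ : Lip L' φ) (hq : D.Quad f φ) (C0 : ℝ) : ∃ C ≥ 0, ∃ h0, 0 < h0 ∧ h0 ≤ 1 ∧
      ∀ h, 0 < h → h ≤ h0 → ∀ z, (∀ n, n * beta f D.T - C0 ≤ birkhoffSum D.T f n z) →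
      ∀ n : ℕ, birkhoffSum D.T (D.R fun x => f x + h * φ x) n z ≤ C * (1 + n * h ^ 2) := by
  obtain ⟨C, h0, hh0, H⟩ := hq
  refine ⟨max (|C|) (2 * (D.C1 * (L + L')) + 2 * |C0|), le_max_of_le_left (abs_nonneg _),
    min h0 1, by positivity, min_le_right _ _, ?_⟩
  intro h hpos hle z hz n
  have hh1 : |h| ≤ 1 := by rw [abs_of_pos hpos]; exact hle.trans (min_le_right _ _)
  have hLL : 0 ≤ L + L' := by positivity
  have l1 := lip_pert hL' hf hφ hh1
  have l2 := lip_pert hL' hf hφ (h := -h) (by rwa [abs_neg])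
  have hb := H h hpos (hle.trans (min_le_left _ _))
  have e1 := D.birkhoff_R (f := fun x => f x + h * φ x) n z
  have e2 := D.birkhoff_R (f := fun x => f x + (-h) * φ x) n z
  have n2 := D.birkhoff_nonneg (D.R_nonneg hLL l2) n z
  have s1 := D.sub_le_C1 hLL l1 (D.T^[n] z)
  have s2 := D.sub_le_C1 hLL l2 (D.T^[n] z)
  have t1 := D.sub_nonneg' hLL l1 z
  have t2 := D.sub_nonneg' hLL l2 z
  have hsum : birkhoffSum D.T (fun x => f x + h * φ x) n z +
      birkhoffSum D.T (fun x => f x + (-h) * φ x) n z = 2 * birkhoffSum D.T f n z := by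
    simp only [birkhoffSum, ← Finset.sum_add_distrib, Finset.mul_sum]
    exact Finset.sum_congr rfl fun i _ => by ring
  have hz' := hz n
  have hn : (0:ℝ) ≤ n := Nat.cast_nonneg n
  have hnb := mul_le_mul_of_nonneg_left hb hn
  have hC0 := le_abs_self C0
  have hCC := le_abs_self C
  have hm1 := le_max_left (|C|) (2 * (D.C1 * (L + L')) + 2 * |C0|)
  have hm2 := le_max_right (|C|) (2 * (D.C1 * (L + L')) + 2 * |C0|)
  set mx := max (|C|) (2 * (D.C1 * (L + L')) + 2 * |C0|)
  have hq2 : (n:ℝ) * (C * h ^ 2) ≤ mx * (n * h ^ 2) := by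
    have : 0 ≤ (n:ℝ) * h ^ 2 := by positivity
    nlinarith
  nlinarith

/-- The defect of `f` has bounded Birkhoff sums along an orbit on which `f` is nearly maximal. -/
theorem R_zero_bound {L : ℝ} {f : Circle1 → ℝ} (hL : 0 ≤ L) (hf : Lip L f) (C0 : ℝ) (z : Circle1)
    (hz : ∀ n, n * beta f D.T - C0 ≤ birkhoffSum D.T f n z) (n : ℕ) :
    birkhoffSum D.T (D.R f) n z ≤ D.C1 * L + |C0| := by
  have e1 := D.birkhoff_R (f := f) n z
  have s1 := D.sub_le_C1 hL hf (D.T^[n] z)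
  have t1 := D.sub_nonneg' hL hf z
  have := hz n
  have hC0 := le_abs_self C0
  linarith

theorem abs_mul_le_of_deriv {ψ ψ' : ℝ → ℝ} {c t : ℝ} (hd : ∀ s, HasDerivAt ψ (ψ' s) s)
    (hc : ∀ s, |s| ≤ |t| → c ≤ |ψ' s|) : c * |t| ≤ |ψ t - ψ 0| := by
  rcases lt_trichotomy t 0 with h | h | h
  · obtain ⟨s, hs, e⟩ := exists_hasDerivAt_eq_slope ψ ψ' h
      (fun s _ => (hd s).continuousAt.continuousWithinAt) (fun s _ => hd s)
    have h1 := hc s (by rw [abs_of_neg h, abs_of_neg hs.2]; linarith [hs.1])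
    rw [e, abs_div, le_div_iff₀ (by rw [abs_pos]; linarith)] at h1
    rw [abs_sub_comm]
    rwa [zero_sub, abs_neg] at h1
  · subst h; simp
  · obtain ⟨s, hs, e⟩ := exists_hasDerivAt_eq_slope ψ ψ' h
      (fun s _ => (hd s).continuousAt.continuousWithinAt) (fun s _ => hd s)
    have h1 := hc s (by rw [abs_of_pos h, abs_of_pos hs.1]; linarith [hs.2])
    rw [e, abs_div, le_div_iff₀ (by rw [abs_pos]; linarith)] at h1
    rwa [sub_zero] at h1

theorem birkhoff_diff {f φ : Circle1 → ℝ} (h : ℝ) (p : ℕ) (z : Circle1) :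
    h * birkhoffSum D.T φ p z =
      (D.sub (fun x => f x + h * φ x) (D.T^[p] z) - D.sub f (D.T^[p] z)) -
      (D.sub (fun x => f x + h * φ x) z - D.sub f z) +
      p * (beta (fun x => f x + h * φ x) D.T - beta f D.T) -
      (birkhoffSum D.T (D.R fun x => f x + h * φ x) p z - birkhoffSum D.T (D.R f) p z) := by
  rw [D.birkhoff_R, D.birkhoff_R]
  have : birkhoffSum D.T (fun x => f x + h * φ x) p z =
      birkhoffSum D.T f p z + h * birkhoffSum D.T φ p z := by
    simp only [birkhoffSum, Finset.sum_add_distrib, Finset.mul_sum]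
  rw [this]; ring

/-- Two pairs of nearly optimal orbits which merge at time `p` (the pairs `(z₁,w₁)` and
`(z₂,w₂)`) along transversal branches: the displacement `t` between the merging points is
small. -/
theorem displacement {L L' : ℝ} {f φ φ' : Circle1 → ℝ} (hL : 0 ≤ L) (hL' : 0 ≤ L') (hf : Lip L f)
    (hφ : Lip L' φ) (hD : HasD φ φ') {h : ℝ} (hh : 0 < h) (hh1 : h ≤ 1) {p : ℕ}
    {z1 w1 : Circle1} {t t' : ℝ} {θ η a c0 : ℝ}
    (hgood : ∀ z ∈ ({z1, w1, D.br p z1 t, D.br p w1 t'} : Set Circle1),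
      birkhoffSum D.T (D.R fun x => f x + h * φ x) p z ≤ θ ∧ birkhoffSum D.T (D.R f) p z ≤ θ)
    (h1 : dist (D.T^[p] z1) (D.T^[p] w1) ≤ η)
    (h2 : dist (D.T^[p] (D.br p z1 t)) (D.T^[p] (D.br p w1 t')) ≤ η)
    (h3 : dist z1 (D.br p z1 t) ≤ a) (h4 : dist w1 (D.br p w1 t') ≤ a)
    (hc : ∀ s, |s| ≤ |t| → c0 ≤ |D.W p φ' (D.br p z1 s) - D.W p φ' (D.br p w1 s)|) :
    c0 * |t| * h ≤ (2 * L + L') * D.C2 * (2 * η + 2 * a) + 8 * θ + h * (L' * D.C2 * |t - t'|) := by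
  set G : Circle1 → ℝ := fun x => D.sub (fun x => f x + h * φ x) x - D.sub f x with hG
  have hLL : 0 ≤ L + L' := by positivity
  have l1 := lip_pert hL' hf hφ (h := h) (by rw [abs_of_pos hh]; exact hh1)
  have hGl : ∀ x y d, dist x y ≤ d → |G x - G y| ≤ (2 * L + L') * D.C2 * d := by
    intro x y d hd
    have a1 := D.sub_lip hLL l1 x y
    have a2 := D.sub_lip hL hf x y
    have : 0 ≤ (2 * L + L') * D.C2 := by have := D.C2_pos; positivity
    calc |G x - G y| ≤ (L + L') * D.C2 * dist x y + L * D.C2 * dist x y := by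
          rw [hG, abs_le] ; rw [abs_le] at a1 a2; constructor <;> simp only <;> linarith [a1.1, a1.2, a2.1, a2.2]
      _ = (2 * L + L') * D.C2 * dist x y := by ring
      _ ≤ _ := by gcongr
  set z2 := D.br p z1 t with hz2
  set w2 := D.br p w1 t' with hw2
  have b1 := D.birkhoff_diff (f := f) (φ := φ) h p z1
  have b2 := D.birkhoff_diff (f := f) (φ := φ) h p z2
  have b3 := D.birkhoff_diff (f := f) (φ := φ) h p w1
  have b4 := D.birkhoff_diff (f := f) (φ := φ) h p w2
  have g1 := abs_le.1 (hGl _ _ _ h1)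
  have g2 := abs_le.1 (hGl _ _ _ h2)
  have g3 := abs_le.1 (hGl _ _ _ h3)
  have g4 := abs_le.1 (hGl _ _ _ h4)
  simp only [hG] at g1 g2 g3 g4
  have R1 := D.birkhoff_nonneg (D.R_nonneg hLL l1) p
  have R0 := D.birkhoff_nonneg (D.R_nonneg hL hf) p
  obtain ⟨p1, p1'⟩ := hgood z1 (by simp)
  obtain ⟨p2, p2'⟩ := hgood z2 (by simp)
  obtain ⟨p3, p3'⟩ := hgood w1 (by simp)
  obtain ⟨p4, p4'⟩ := hgood w2 (by simp)
  have hdd : |h * ((birkhoffSum D.T φ p z2 - birkhoffSum D.T φ p w2) -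
      (birkhoffSum D.T φ p z1 - birkhoffSum D.T φ p w1))| ≤
      (2 * L + L') * D.C2 * (2 * η + 2 * a) + 8 * θ := by
    have q1 := R1 z1; have q2 := R1 z2; have q3 := R1 w1; have q4 := R1 w2
    have r1 := R0 z1; have r2 := R0 z2; have r3 := R0 w1; have r4 := R0 w2
    have e : h * ((birkhoffSum D.T φ p z2 - birkhoffSum D.T φ p w2) -
        (birkhoffSum D.T φ p z1 - birkhoffSum D.T φ p w1)) = (h * birkhoffSum D.T φ p z2 -
        h * birkhoffSum D.T φ p w2) - (h * birkhoffSum D.T φ p z1 - h * birkhoffSum D.T φ p w1) := by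
      ring
    have e2 : (2 * L + L') * D.C2 * (2 * η + 2 * a) = 2 * ((2 * L + L') * D.C2 * η) +
      2 * ((2 * L + L') * D.C2 * a) := by ring
    rw [e, b1, b2, b3, b4, e2]
    generalize (2 * L + L') * D.C2 * η = X at *
    generalize (2 * L + L') * D.C2 * a = Y at *
    clear e e2 b1 b2 b3 b4 h1 h2 h3 h4 hc hgood hGl
    rw [abs_le]; constructor <;> linarith
  have hmv := abs_mul_le_of_deriv (t := t) (c := c0)
    (ψ := fun s => birkhoffSum D.T φ p (D.br p z1 s) - birkhoffSum D.T φ p (D.br p w1 s))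
    (fun s => (D.W_hasDeriv hD p z1 s).sub (D.W_hasDeriv hD p w1 s)) hc
  simp only [br_zero] at hmv
  have hbr := D.birkhoff_br hL' hφ p w2 (t - t')
  rw [hw2, D.br_br, show t' + (t - t') = t by ring, ← hw2] at hbr
  rw [← hz2] at hmv
  have : c0 * |t| ≤ |(birkhoffSum D.T φ p z2 - birkhoffSum D.T φ p w2) -
      (birkhoffSum D.T φ p z1 - birkhoffSum D.T φ p w1)| + L' * D.C2 * |t - t'| := by
    refine hmv.trans ?_
    refine le_trans ?_ (add_le_add_right hbr _)
    refine le_trans (le_of_eq ?_) (abs_sub _ _)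
    congr 1; ring
  rw [abs_mul, abs_of_pos hh] at hdd
  nlinarith

end ExpData

namespace ExpData
variable (D : ExpData)

/-- The defects of `f` and of its perturbations `f + hφₖ`, `k < N`, sum to at most `θ` along
the first `n` steps of the orbit of `z`. -/
def Good (f : Circle1 → ℝ) (φ : ℕ → Circle1 → ℝ) (N : ℕ) (h θ : ℝ) (n : ℕ) (z : Circle1) : Prop :=
  (∀ k < N, birkhoffSum D.T (D.R fun x => f x + h * φ k x) n z ≤ θ) ∧
    birkhoffSum D.T (D.R f) n z ≤ θ

theorem dist_le_of_close' {n : ℕ} {x y : Circle1} (h : D.Close n x y) :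
    dist x y ≤ D.c⁻¹ * D.lam⁻¹ ^ n := by
  have h1 := D.dist_le_of_close h (Nat.zero_le n)
  have h2 := dist_le_half (D.T^[n] x) (D.T^[n] y)
  have h3 : 0 < D.c⁻¹ * D.lam⁻¹ ^ n := mul_pos (inv_pos.2 D.c_pos) (pow_pos D.inv_lam_pos n)
  simp only [Function.iterate_zero, id, Nat.sub_zero] at h1
  nlinarith

theorem close_tail {a b : ℕ} {x y : Circle1}
    (h : ∀ i, a ≤ i → i < b → dist (D.T^[i] x) (D.T^[i] y) ≤ D.r0) :
    D.Close (b - a) (D.T^[a] x) (D.T^[a] y) := by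
  intro i hi
  rw [← Function.iterate_add_apply, ← Function.iterate_add_apply]
  exact h _ (by omega) (by omega)

theorem disp_sub {x y x' y' : Circle1} {t t' η : ℝ} (hx : x' = x + (t : Circle1))
    (hy : y' = y + (t' : Circle1)) (h1 : dist x y ≤ η) (h2 : dist x' y' ≤ η)
    (h : |t - t'| ≤ 1 / 2) : |t - t'| ≤ 2 * η := by
  have e1 : dist ((t - t' : ℝ) : Circle1) ((0 : ℝ) : Circle1) = |t - t'| := by
    rw [dist_coe_eq (by simpa using h), sub_zero]
  have e2 : ((t - t' : ℝ) : Circle1) = (x' - y') - (x - y) := by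
    rw [hx, hy, AddCircle.coe_sub]; abel
  rw [← e1, e2, AddCircle.coe_zero, dist_zero_right]
  refine (norm_sub_le _ _).trans ?_
  rw [← dist_eq_norm, ← dist_eq_norm]; linarith

/-- If two pairs `(z₁,w₁)`, `(z₂,w₂)` of good orbits merge at the same time `p` along transversal
branches, with `z₁`, `z₂` and `w₁`, `w₂` following the same branches up to time `8qm`, then `z₁` and
`z₂` stay close for `m` more steps. All scales are powers of `λ^{-qm}`: perturbation size `h` the
fourth power, total defect at most the sixth power, orbit length `8qm`. -/
theorem merge_lemma {L : ℝ} {f : Circle1 → ℝ} (hL : 0 ≤ L) (hf : Lip L f)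
    {φ φ' : ℕ → Circle1 → ℝ} (hD : ∀ k, HasD (φ k) (φ' k)) (hr : Rich φ')
    {L' : ℕ → ℝ} (hL' : ∀ k, 0 ≤ L' k) (hφ : ∀ k, Lip (L' k) (φ k)) :
    ∃ N : ℕ, ∃ δ > 0, ∃ q ≥ 1, ∃ m0, ∀ m ≥ m0,
      D.c⁻¹ * (D.lam⁻¹ ^ (q * m)) ^ 8 ≤ D.r0 / 2 ∧
      ∀ z1 z2 w1 w2 : Circle1, ∀ p, 8 * (q * m) < p + m → p ≤ 8 * (q * m) →
      (∀ z ∈ ({z1, w1, z2, w2} : Set Circle1), D.Good f φ N ((D.lam⁻¹ ^ (q * m)) ^ 4)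
        ((D.lam⁻¹ ^ (q * m)) ^ 6) (8 * (q * m)) z) →
      (∀ i, p ≤ i → i < 2 * (8 * (q * m)) → dist (D.T^[i] z1) (D.T^[i] w1) ≤ D.r0) →
      (∀ i, p ≤ i → i < 2 * (8 * (q * m)) → dist (D.T^[i] z2) (D.T^[i] w2) ≤ D.r0) →
      D.r0 ≤ dist (D.T^[p - 1] z1) (D.T^[p - 1] w1) →
      D.Close (8 * (q * m)) z1 z2 → D.Close (8 * (q * m)) w1 w2 →
      dist (D.T^[p] z1) (D.T^[p] z2) ≤ δ →
      ∀ i, p ≤ i → i ≤ 8 * (q * m) + m → dist (D.T^[i] z1) (D.T^[i] z2) ≤ D.r0 := by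
  obtain ⟨N, c0, hc0, hN⟩ := D.trans_unif hr (fun k => (hD k).1)
  have hcp := inv_pos.2 D.c_pos
  have hC2 := D.C2_pos
  obtain ⟨q, hq1, hq⟩ : ∃ q : ℕ, 1 ≤ q ∧ D.Lam ^ 2 * D.lam⁻¹ ^ q ≤ 1 := by
    have := (tendsto_pow_atTop_nhds_zero_of_lt_one D.inv_lam_pos.le D.inv_lam_lt).const_mul
      (D.Lam ^ 2)
    rw [mul_zero] at this
    obtain ⟨q, h1, h2⟩ := ((this.eventually (ge_mem_nhds one_pos)).and (eventually_ge_atTop 1)).exists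
    exact ⟨q, h2, h1⟩
  -- a uniform constant over the finitely many directions used
  obtain ⟨A, hA0, hA⟩ : ∃ A, 0 ≤ A ∧ ∀ k < N, L' k ≤ A :=
    ⟨∑ k ∈ Finset.range N, L' k, Finset.sum_nonneg fun k _ => hL' k, fun k hk =>
      Finset.single_le_sum (f := L') (fun k _ => hL' k) (Finset.mem_range.2 hk)⟩
  set K : ℝ := (2 * L + A) * D.C2 * (4 * D.c⁻¹) + 8 + A * D.C2 * (2 * D.c⁻¹) with hK
  have hK0 : 0 < K := by positivity
  have hx : Tendsto (fun m : ℕ => D.lam⁻¹ ^ (q * m)) atTop (𝓝 0) := by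
    have := tendsto_pow_atTop_nhds_zero_of_lt_one D.inv_lam_pos.le D.inv_lam_lt
    exact this.comp (tendsto_id.const_mul_atTop' hq1)
  have ev1 : ∀ᶠ m : ℕ in atTop, D.c⁻¹ * D.lam⁻¹ ^ (q * m) ≤ min (min (D.r0 / 2) (1 / 8)) c0 := by
    have := hx.const_mul D.c⁻¹
    rw [mul_zero] at this
    refine this.eventually (ge_mem_nhds ?_)
    have := D.r0_pos
    positivity
  have ev2 : ∀ᶠ m : ℕ in atTop, K / c0 * D.lam⁻¹ ^ (q * m) ≤ D.r0 := by
    have := hx.const_mul (K / c0)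
    rw [mul_zero] at this
    exact this.eventually (ge_mem_nhds D.r0_pos)
  obtain ⟨m0, hm0⟩ := ((ev1.and ev2).and (eventually_ge_atTop (N + 1))).exists_forall_of_atTop
  refine ⟨N, min (1 / 8) c0, by positivity, q, hq1, m0, fun m hm => ?_⟩
  obtain ⟨⟨hm1, hm2⟩, hm3⟩ := hm0 m hm
  set x := D.lam⁻¹ ^ (q * m) with hxdef
  have hx0 : 0 < x := pow_pos D.inv_lam_pos _
  have hx1 : x ≤ 1 := pow_le_one₀ D.inv_lam_pos.le D.inv_lam_lt.le
  have hx8 : x ^ 8 ≤ x := by simpa using pow_le_pow_of_le_one hx0.le hx1 (show 1 ≤ 8 by norm_num)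
  have hcx8 : D.c⁻¹ * x ^ 8 ≤ min (min (D.r0 / 2) (1 / 8)) c0 :=
    (mul_le_mul_of_nonneg_left hx8 hcp.le).trans hm1
  refine ⟨hcx8.trans ((min_le_left _ _).trans (min_le_left _ _)), ?_⟩
  have hcx8' : D.c⁻¹ * x ^ 8 ≤ 1 / 8 := hcx8.trans ((min_le_left _ _).trans (min_le_right _ _))
  have hcx8'' : D.c⁻¹ * x ^ 8 ≤ c0 := hcx8.trans (min_le_right _ _)
  have hqm : m ≤ q * m := Nat.le_mul_of_pos_left m hq1
  intro z1 z2 w1 w2 p hp1 hp2 hg hcl1 hcl2 hfar hz hw hδ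
  have hη : ∀ z w : Circle1, (∀ i, p ≤ i → i < 2 * (8 * (q * m)) →
      dist (D.T^[i] z) (D.T^[i] w) ≤ D.r0) → dist (D.T^[p] z) (D.T^[p] w) ≤ D.c⁻¹ * x ^ 8 := by
    intro z w h
    refine (D.dist_le_of_close' (D.close_tail h)).trans ?_
    have : x ^ 8 = D.lam⁻¹ ^ (8 * (q * m)) := by rw [hxdef, ← pow_mul, mul_comm]
    rw [this]
    exact mul_le_mul_of_nonneg_left
      (pow_le_pow_of_le_one D.inv_lam_pos.le D.inv_lam_lt.le (by omega)) hcp.le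
  have hη1 := hη z1 w1 hcl1
  have hη2 := hη z2 w2 hcl2
  obtain ⟨t, ht, hzt⟩ := D.exists_br_of_close (hz.mono hp2)
  obtain ⟨t', ht', hwt⟩ := D.exists_br_of_close (hw.mono hp2)
  have htb : |t| ≤ min (1 / 8) c0 := ht ▸ hδ
  have htb1 : |t| ≤ 1 / 8 := htb.trans (min_le_left _ _)
  have htb' : |t'| ≤ 3 / 8 := by
    rw [ht']
    have d1 := dist_triangle4 (D.T^[p] w1) (D.T^[p] z1) (D.T^[p] z2) (D.T^[p] w2)
    rw [dist_comm (D.T^[p] w1) (D.T^[p] z1)] at d1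
    rw [← ht] at d1
    linarith
  have htt : |t - t'| ≤ 2 * (D.c⁻¹ * x ^ 8) := by
    apply disp_sub (x := D.T^[p] z1) (y := D.T^[p] w1) (x' := D.T^[p] z2) (y' := D.T^[p] w2)
      _ _ hη1 hη2
    · exact (abs_sub _ _).trans (by linarith)
    · rw [hzt, D.iter_br]
    · rw [hwt, D.iter_br]
  have hlp : D.lam⁻¹ ^ p ≤ x ^ 7 := by
    have : x ^ 7 = D.lam⁻¹ ^ (7 * (q * m)) := by rw [hxdef, ← pow_mul, mul_comm]
    rw [this]
    exact pow_le_pow_of_le_one D.inv_lam_pos.le D.inv_lam_lt.le (by omega)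
  have hda : ∀ (z : Circle1) (s : ℝ), |s| ≤ 1 → dist z (D.br p z s) ≤ D.c⁻¹ * x ^ 7 := by
    intro z s hs
    refine (D.dist_br_self_le p z s).trans ?_
    have : 0 < D.c⁻¹ * D.lam⁻¹ ^ p := mul_pos hcp (pow_pos D.inv_lam_pos _)
    have h2 := mul_le_mul_of_nonneg_left hlp hcp.le
    nlinarith [abs_nonneg s]
  obtain ⟨k, hk, hkW⟩ := hN p (by omega) z1 w1 (hη1.trans hcx8'') hfar
  have hh0 : 0 < x ^ 4 := by positivity
  have hh1 : x ^ 4 ≤ 1 := pow_le_one₀ hx0.le hx1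
  have lk := lip_pert (hL' k) hf (hφ k) (h := x ^ 4) (by rw [abs_of_pos hh0]; exact hh1)
  have hdisp := D.displacement hL (hL' k) hf (hφ k) (hD k) hh0 hh1 (p := p) (z1 := z1) (w1 := w1)
    (t := t) (t' := t') (θ := x ^ 6) (η := D.c⁻¹ * x ^ 8) (a := D.c⁻¹ * x ^ 7) (c0 := c0)
    (by
      rw [← hzt, ← hwt]
      intro z hz
      have := hg z hz
      refine ⟨le_trans (D.birkhoff_mono (D.R_nonneg (by have := hL' k; positivity) lk) hp2 z) (this.1 k hk),
        le_trans (D.birkhoff_mono (D.R_nonneg hL hf) hp2 z) this.2⟩)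
    hη1 (by rw [← hzt, ← hwt]; exact hη2) (hda _ _ (by linarith)) (hda _ _ (by linarith))
    (fun s hs => hkW s (hs.trans (htb.trans (min_le_right _ _))))
  have hbound : c0 * |t| * x ^ 4 ≤ K * x ^ 6 := by
    refine hdisp.trans ?_
    have hx86 : x ^ 8 ≤ x ^ 6 := pow_le_pow_of_le_one hx0.le hx1 (by norm_num)
    have hx76 : x ^ 7 ≤ x ^ 6 := pow_le_pow_of_le_one hx0.le hx1 (by norm_num)
    have hLk := hA k hk
    have hLk0 := hL' k
    have e1 : (2 * L + L' k) * D.C2 * (2 * (D.c⁻¹ * x ^ 8) + 2 * (D.c⁻¹ * x ^ 7)) ≤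
        (2 * L + A) * D.C2 * (4 * D.c⁻¹) * x ^ 6 := by
      calc _ ≤ (2 * L + A) * D.C2 * (2 * (D.c⁻¹ * x ^ 6) + 2 * (D.c⁻¹ * x ^ 6)) := by gcongr
        _ = _ := by ring
    have e2 : x ^ 4 * (L' k * D.C2 * |t - t'|) ≤ A * D.C2 * (2 * D.c⁻¹) * x ^ 6 := by
      calc _ ≤ 1 * (A * D.C2 * (2 * (D.c⁻¹ * x ^ 6))) := by
            gcongr
            exact htt.trans (by gcongr)
        _ = _ := by ring
    rw [hK]; nlinarith
  have htx : |t| ≤ K / c0 * x ^ 2 := by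
    have h6 : K * x ^ 6 = (K * x ^ 2) * x ^ 4 := by ring
    rw [h6] at hbound
    have := le_of_mul_le_mul_right hbound hh0
    rw [div_mul_eq_mul_div, le_div_iff₀ hc0]
    linarith
  intro i hpi him
  obtain ⟨j, rfl⟩ := Nat.exists_eq_add_of_le hpi
  rw [add_comm p j, Function.iterate_add_apply, Function.iterate_add_apply]
  have hLm : D.Lam ^ j ≤ (D.Lam ^ 2) ^ m := by
    rw [← pow_mul]
    exact pow_le_pow_right₀ D.one_le_Lam (by omega)
  have hLx : (D.Lam ^ 2) ^ m * x ≤ 1 := by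
    rw [hxdef, pow_mul, ← mul_pow]
    exact pow_le_one₀ (by have := D.Lam_pos; have := D.inv_lam_pos; positivity) hq
  calc dist (D.T^[j] (D.T^[p] z1)) (D.T^[j] (D.T^[p] z2)) ≤ D.Lam ^ j * |t| := by
        rw [ht]; exact D.Titer_lip _ _ _
    _ ≤ (D.Lam ^ 2) ^ m * (K / c0 * x ^ 2) := by have := D.Lam_pos; gcongr
    _ = ((D.Lam ^ 2) ^ m * x) * (K / c0 * x) := by ring
    _ ≤ 1 * (K / c0 * x) := by gcongr
    _ ≤ D.r0 := by rw [one_mul]; exact hm2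

end ExpData
end EC

/-! ### Counting separated orbits -/

namespace EC
namespace ExpData
variable (D : ExpData)

/-- As `Close`, at half the expansivity scale. -/
def HClose (n : ℕ) (x y : Circle1) : Prop := ∀ i < n, dist (D.T^[i] x) (D.T^[i] y) ≤ D.r0 / 2

theorem hclose_of_close {n : ℕ} {x y : Circle1} (h : D.Close n x y)
    (h' : dist (D.T^[n] x) (D.T^[n] y) ≤ D.c * (D.r0 / 2)) : D.HClose n x y := by
  intro i hi
  have h1 := D.dist_le_of_close h hi.le
  have h2 : D.lam⁻¹ ^ (n - i) ≤ 1 := pow_le_one₀ D.inv_lam_pos.le D.inv_lam_lt.le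
  have h3 := inv_pos.2 D.c_pos
  have h4 : 0 < D.lam⁻¹ ^ (n - i) := pow_pos D.inv_lam_pos _
  calc _ ≤ D.c⁻¹ * D.lam⁻¹ ^ (n - i) * dist (D.T^[n] x) (D.T^[n] y) := h1
    _ ≤ D.c⁻¹ * 1 * (D.c * (D.r0 / 2)) := by gcongr
    _ = D.r0 / 2 := by have := D.c_pos.ne'; field_simp

theorem card_sq_le {α β : Type*} [Fintype β] [DecidableEq β] [DecidableEq α] (Z : Finset α) (v : α → β) :
    Z.card ^ 2 ≤ Fintype.card β * ((Z ×ˢ Z).filter fun p => v p.1 = v p.2).card := by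
  have h1 : Z.card = ∑ b : β, (Z.filter fun a => v a = b).card :=
    Finset.card_eq_sum_card_fiberwise (fun _ _ => Finset.mem_coe.2 (Finset.mem_univ _))
  have h2 : ((Z ×ˢ Z).filter fun p => v p.1 = v p.2).card =
      ∑ b : β, (Z.filter fun a => v a = b).card ^ 2 := by
    rw [Finset.card_eq_sum_card_fiberwise (f := fun p => v p.1) (t := Finset.univ)
      (fun _ _ => Finset.mem_coe.2 (Finset.mem_univ _))]
    refine Finset.sum_congr rfl fun b _ => ?_
    rw [sq, ← Finset.card_product]
    congr 1
    ext ⟨x, y⟩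
    simp only [Finset.mem_filter, Finset.mem_product]
    constructor
    · rintro ⟨⟨⟨hx, hy⟩, e⟩, rfl⟩; exact ⟨⟨hx, rfl⟩, hy, e.symm⟩
    · rintro ⟨⟨hx, rfl⟩, hy, e⟩; exact ⟨⟨⟨hx, hy⟩, e.symm⟩, rfl⟩
  rw [h1, h2]
  exact sq_sum_le_card_mul_sum_sq

theorem exists_last {P : ℕ → Prop} {a b : ℕ} (h : ∃ i, a ≤ i ∧ i < b ∧ P i) :
    ∃ i, a ≤ i ∧ i < b ∧ P i ∧ ∀ j, i < j → j < b → ¬ P j := by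
  classical
  obtain ⟨i, h1, h2, h3⟩ := h
  let s := (Finset.range b).filter fun i => a ≤ i ∧ P i
  have hs : s.Nonempty := ⟨i, by simp [s, h1, h2, h3]⟩
  have hm := Finset.mem_filter.1 (s.max'_mem hs)
  refine ⟨s.max' hs, hm.2.1, Finset.mem_range.1 hm.1, hm.2.2, fun j hj hjb hP => ?_⟩
  have : j ≤ s.max' hs := s.le_max' j (by
    simp only [s, Finset.mem_filter, Finset.mem_range]; exact ⟨hjb, hm.2.1.trans hj.le, hP⟩)
  omega

/-- Upper bound for the number of separated good orbits of length `2n`: a pair of them sharing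
the last `n` steps either shares the `m` steps before (few such pairs), or merges transversally,
and then the merging point, with `m` further steps, is determined by little data. -/
theorem sep_count {M : Set Circle1} (hM : ∀ x ∈ M, D.T x ∈ M) (hne : M.Nonempty) {n m : ℕ}
    (hmn : m ≤ n) (Gd : Circle1 → Prop) {δ : ℝ} {Q : ℕ}
    (hQ : ∀ x y, cell Q x = cell Q y → dist x y ≤ min δ (D.c * (D.r0 / 2)))
    (hsmall : D.c⁻¹ * D.lam⁻¹ ^ n ≤ D.r0 / 2)
    (hmerge : ∀ z1 z2 w1 w2 : Circle1, ∀ p, n < p + m → p ≤ n →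
      (∀ z ∈ ({z1, w1, z2, w2} : Set Circle1), Gd z) →
      (∀ i, p ≤ i → i < 2 * n → dist (D.T^[i] z1) (D.T^[i] w1) ≤ D.r0) →
      (∀ i, p ≤ i → i < 2 * n → dist (D.T^[i] z2) (D.T^[i] w2) ≤ D.r0) →
      D.r0 ≤ dist (D.T^[p - 1] z1) (D.T^[p - 1] w1) →
      D.Close n z1 z2 → D.Close n w1 w2 → dist (D.T^[p] z1) (D.T^[p] z2) ≤ δ →
      ∀ i, p ≤ i → i ≤ n + m → dist (D.T^[i] z1) (D.T^[i] z2) ≤ D.r0)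
    (Z : Finset Circle1) (hZ : ∀ z ∈ Z, z ∈ M ∧ Gd z)
    (hsep : ∀ x ∈ Z, ∀ y ∈ Z, D.HClose (2 * n) x y → x = y) :
    Z.card ^ 2 ≤ D.cnt M n * (Z.card * (D.cnt M (n - m) * (Q + 1)) +
      m * (Q + 1) ^ 3 * D.cnt M n ^ 2 * D.cnt M (n - m)) := by
  classical
  obtain ⟨l, hl⟩ := D.exists_labF M n hne
  obtain ⟨l', hl'⟩ := D.exists_labF M (n - m) hne
  have hcs := card_sq_le Z (fun z => l (D.T^[n] z))
  rw [Fintype.card_fin] at hcs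
  refine hcs.trans (Nat.mul_le_mul_left _ ?_)
  set P := (Z ×ˢ Z).filter fun p => l (D.T^[n] p.1) = l (D.T^[n] p.2) with hP
  have hPm : ∀ pr ∈ P, pr.1 ∈ Z ∧ pr.2 ∈ Z ∧ D.Close n (D.T^[n] pr.1) (D.T^[n] pr.2) := by
    intro pr hpr
    simp only [hP, Finset.mem_filter, Finset.mem_product] at hpr
    exact ⟨hpr.1.1, hpr.1.2, hl _ (D.iter_mem hM (hZ _ hpr.1.1).1 n) _
      (D.iter_mem hM (hZ _ hpr.1.2).1 n) hpr.2⟩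
  have hPl : ∀ pr ∈ P, l (D.T^[n] pr.1) = l (D.T^[n] pr.2) := by
    intro pr hpr
    simp only [hP, Finset.mem_filter, Finset.mem_product] at hpr
    exact hpr.2
  set A : Circle1 × Circle1 → Prop := fun pr => ∀ i, n - m ≤ i → i < n →
    dist (D.T^[i] pr.1) (D.T^[i] pr.2) ≤ D.r0 with hA
  have hfin : ∀ x ∈ Z, ∀ y ∈ Z, D.Close (2 * n) x y → cell Q (D.T^[2 * n] x) = cell Q (D.T^[2 * n] y) →
      x = y := fun x hx y hy h1 h2 =>
    hsep x hx y hy (D.hclose_of_close h1 ((hQ _ _ h2).trans (min_le_right _ _)))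
  have hlate : ∀ pr ∈ P, ∀ a ≤ n, (∀ i, a ≤ i → i < n → dist (D.T^[i] pr.1) (D.T^[i] pr.2) ≤ D.r0) →
      ∀ i, a ≤ i → i < 2 * n → dist (D.T^[i] pr.1) (D.T^[i] pr.2) ≤ D.r0 := by
    intro pr hpr a ha h i hi hi2
    rcases lt_or_ge i n with h1 | h1
    · exact h i hi h1
    · have := (hPm pr hpr).2.2 (i - n) (by omega)
      rwa [← Function.iterate_add_apply, ← Function.iterate_add_apply, Nat.sub_add_cancel h1] at this
  have hX : (P.filter A).card ≤ Z.card * (D.cnt M (n - m) * (Q + 1)) := by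
    have := Finset.card_le_card_of_injOn (s := P.filter A)
      (t := Z ×ˢ (Finset.univ : Finset (Fin (D.cnt M (n - m)) × Fin (Q + 1))))
      (fun pr => (pr.1, l' pr.2, cell Q (D.T^[2 * n] pr.2))) ?_ ?_
    · simpa [Finset.card_product] using this
    · intro pr hpr
      simp only [Finset.coe_filter, mem_ofPred_eq] at hpr
      simp [(hPm pr hpr.1).1]
    · rintro ⟨z, w⟩ h1 ⟨z', w'⟩ h2 e
      simp only [Finset.coe_filter, mem_ofPred_eq] at h1 h2
      simp only [Prod.mk.injEq] at e
      obtain ⟨rfl, e1, e2⟩ := e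
      obtain ⟨hz, hw, hzw⟩ := hPm _ h1.1
      obtain ⟨-, hw', hzw'⟩ := hPm _ h2.1
      have hd : ∀ w, (z, w) ∈ P → A (z, w) → ∀ i, n - m ≤ i → i < n →
          dist (D.T^[i] z) (D.T^[i] w) ≤ D.r0 / 2 := by
        intro w hw hAw i hi hin
        have := D.dist_le_of_close' (D.close_tail (a := i) (b := 2 * n) (x := z) (y := w)
          fun j hj hj2 => hlate _ hw (n - m) (by omega) hAw j (by omega) hj2)
        refine (this.trans ?_).trans hsmall
        exact mul_le_mul_of_nonneg_left (pow_le_pow_of_le_one D.inv_lam_pos.le D.inv_lam_lt.le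
          (by omega)) (inv_pos.2 D.c_pos).le
      have c1 : D.Close (n - m) w w' := hl' _ (hZ _ hw).1 _ (hZ _ hw').1 e1
      have c3 : D.Close n (D.T^[n] w) (D.T^[n] w') :=
        hl _ (D.iter_mem hM (hZ _ hw).1 n) _ (D.iter_mem hM (hZ _ hw').1 n)
          ((hPl _ h1.1).symm.trans (hPl _ h2.1))
      have c2 : D.Close n w w' := by
        intro i hi
        rcases lt_or_ge i (n - m) with h | h
        · exact c1 i h
        · have a1 := hd w h1.1 h1.2 i h hi
          have a2 := hd w' h2.1 h2.2 i h hi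
          have := dist_triangle_left (D.T^[i] w) (D.T^[i] w') (D.T^[i] z)
          linarith
      have c4 : D.Close (2 * n) w w' := by rw [two_mul]; exact c2.add c3
      rw [hfin w hw w' hw' c4 e2]
  -- the last time before `n` at which the two orbits are apart
  have hlast : ∀ pr : Circle1 × Circle1, ∃ i, ¬ A pr → n - m ≤ i ∧ i < n ∧
      D.r0 < dist (D.T^[i] pr.1) (D.T^[i] pr.2) ∧ ∀ j, i < j → j < n →
        dist (D.T^[j] pr.1) (D.T^[j] pr.2) ≤ D.r0 := by
    intro pr
    by_cases hpr : A pr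
    · exact ⟨0, fun h => absurd hpr h⟩
    · simp only [hA] at hpr
      push Not at hpr
      obtain ⟨i, h1, h2, h3, h4⟩ := exists_last hpr
      exact ⟨i, fun _ => ⟨h1, h2, h3, fun j hj hj2 => not_lt.1 (h4 j hj hj2)⟩⟩
  choose τ hτ using hlast
  have hY : (P.filter fun pr => ¬ A pr).card ≤
      m * (Q + 1) ^ 3 * D.cnt M n ^ 2 * D.cnt M (n - m) := by
    have := Finset.card_le_card_of_injOn (s := P.filter fun pr => ¬ A pr)
      (t := (Finset.Ico (n - m) n) ×ˢ (Finset.univ : Finset (Fin (Q + 1) × Fin (D.cnt M n) ×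
        Fin (D.cnt M n) × Fin (D.cnt M (n - m)) × Fin (Q + 1) × Fin (Q + 1))))
      (fun pr => (τ pr, cell Q (D.T^[τ pr + 1] pr.1), l pr.1, l pr.2, l' (D.T^[n + m] pr.1),
        cell Q (D.T^[2 * n] pr.1), cell Q (D.T^[2 * n] pr.2))) ?_ ?_
    · refine this.trans (le_of_eq ?_)
      simp only [Finset.card_product, Nat.card_Ico, Finset.card_univ, Fintype.card_prod,
        Fintype.card_fin, Nat.sub_sub_self hmn]
      ring
    · intro pr hpr
      simp only [Finset.coe_filter, mem_ofPred_eq] at hpr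
      have := hτ pr hpr.2
      simp [this.1, this.2.1]
    · rintro ⟨z, w⟩ h1 ⟨z', w'⟩ h2 e
      simp only [Finset.coe_filter, mem_ofPred_eq] at h1 h2
      simp only [Prod.mk.injEq] at e
      obtain ⟨e1, e2, e3, e4, e5, e6, e7⟩ := e
      obtain ⟨hz, hw, hzw⟩ := hPm _ h1.1
      obtain ⟨hz', hw', hzw'⟩ := hPm _ h2.1
      obtain ⟨a1, a2, a3, a4⟩ := hτ _ h1.2
      obtain ⟨b1, b2, b3, b4⟩ := hτ _ h2.2
      simp only at hz hw hzw hz' hw' hzw' a3 a4 b3 b4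
      rw [← e1] at b1 b2 b3 b4 e2
      have cz : D.Close n z z' := hl _ (hZ _ hz).1 _ (hZ _ hz').1 e3
      have cw : D.Close n w w' := hl _ (hZ _ hw).1 _ (hZ _ hw').1 e4
      have hmg := hmerge z z' w w' (τ (z, w) + 1) (by omega) (by omega)
        (by
          intro x hx
          simp only [mem_insert_iff, mem_singleton_iff] at hx
          rcases hx with rfl | rfl | rfl | rfl
          exacts [(hZ _ hz).2, (hZ _ hw).2, (hZ _ hz').2, (hZ _ hw').2])
        (hlate _ h1.1 _ (by omega) fun i hi hi2 => a4 i (by omega) hi2)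
        (hlate _ h2.1 _ (by omega) fun i hi hi2 => b4 i (by omega) hi2)
        (by rw [Nat.add_sub_cancel]; exact a3.le) cz cw ((hQ _ _ e2).trans (min_le_left _ _))
      have c5 : D.Close (n - m) (D.T^[n + m] z) (D.T^[n + m] z') :=
        hl' _ (D.iter_mem hM (hZ _ hz).1 _) _ (D.iter_mem hM (hZ _ hz').1 _) e5
      have czz : D.Close (2 * n) z z' := by
        have c6 : D.Close (n + m) z z' := by
          intro i hi
          rcases lt_or_ge i n with h | h
          · exact cz i h
          · exact hmg i (by omega) hi.le
        have := c6.add c5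
        rwa [show n + m + (n - m) = 2 * n by omega] at this
      have ez := hfin z hz z' hz' czz e6
      subst ez
      have c3 : D.Close n (D.T^[n] w) (D.T^[n] w') :=
        hl _ (D.iter_mem hM (hZ _ hw).1 n) _ (D.iter_mem hM (hZ _ hw').1 n)
          ((hPl _ h1.1).symm.trans (hPl _ h2.1))
      have c4 : D.Close (2 * n) w w' := by rw [two_mul]; exact cw.add c3
      rw [hfin w hw w' hw' c4 e7]
  have := Finset.card_filter_add_card_filter_not (s := P) A
  omega

/-- A maximal separated set of good points labels the good points. -/
theorem exists_sep {S : Set Circle1} (hne : S.Nonempty) (n : ℕ) : ∃ Z : Finset Circle1, (∀ z ∈ Z, z ∈ S) ∧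
    (∀ x ∈ Z, ∀ y ∈ Z, D.HClose n x y → x = y) ∧ D.Lab S n Z.card := by
  classical
  obtain ⟨l, hl⟩ := D.exists_labF S n hne
  obtain ⟨Q, hQ⟩ := exists_cell (δ := D.c * (D.r0 / 2)) (by have := D.r0_pos; have := D.c_pos; positivity)
  let X : Set ℕ := {k | ∃ Z : Finset Circle1, (∀ z ∈ Z, z ∈ S) ∧
    (∀ x ∈ Z, ∀ y ∈ Z, D.HClose n x y → x = y) ∧ Z.card = k}
  have hX : X.Nonempty := ⟨0, ∅, by simp, by simp, rfl⟩
  have hXb : BddAbove X := by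
    refine ⟨Fintype.card (Fin (D.cnt S n) × Fin (Q + 1)), ?_⟩
    rintro k ⟨Z, h1, h2, rfl⟩
    have := Finset.card_le_card_of_injOn (s := Z) (t := Finset.univ)
      (fun z => (l z, cell Q (D.T^[n] z))) (fun _ _ => Finset.mem_coe.2 (Finset.mem_univ _)) (by
        intro x hx y hy e
        simp only [Prod.mk.injEq] at e
        exact h2 x hx y hy (D.hclose_of_close (hl _ (h1 _ hx) _ (h1 _ hy) e.1) (hQ _ _ e.2)))
    rwa [Finset.card_univ] at this
  obtain ⟨Z, h1, h2, h3⟩ := Nat.sSup_mem hX hXb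
  refine ⟨Z, h1, h2, ?_⟩
  have hHsymm : ∀ x y, D.HClose n x y → D.HClose n y x := fun x y h i hi => by
    rw [dist_comm]; exact h i hi
  have hcov : ∀ x, ∃ e, x ∈ S → e ∈ Z ∧ D.HClose n x e := by
    intro x
    by_cases hx : x ∈ S
    swap
    · exact ⟨x, fun h => absurd h hx⟩
    by_contra hcon
    push Not at hcon
    have hxZ : x ∉ Z := fun h => (hcon x).2 h fun i _ => by
      rw [dist_self]; have := D.r0_pos; positivity
    have : (insert x Z).card ∈ X := by
      refine ⟨insert x Z, ?_, ?_, rfl⟩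
      · intro z hz
        rcases Finset.mem_insert.1 hz with rfl | h
        exacts [hx, h1 _ h]
      · intro a ha b hb hab
        rcases Finset.mem_insert.1 ha with rfl | ha' <;> rcases Finset.mem_insert.1 hb with rfl | hb'
        · rfl
        · exact absurd hab ((hcon b).2 hb')
        · exact absurd (hHsymm _ _ hab) ((hcon a).2 ha')
        · exact h2 a ha' b hb' hab
    have := le_csSup hXb this
    rw [← h3, Finset.card_insert_of_notMem hxZ] at this
    omega
  choose e he using hcov
  refine D.lab_of_finset e Z (fun x hx => (he x hx).1) fun x hx y hy hxy i hi => ?_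
  have a1 := (he x hx).2 i hi
  have a2 := (he y hy).2 i hi
  rw [hxy] at a1
  have := dist_triangle_right (D.T^[i] x) (D.T^[i] y) (D.T^[i] (e y))
  linarith

end ExpData
end EC

/-! ### Zero entropy of nearly maximizing orbits -/

namespace EC
namespace ExpData
variable (D : ExpData)

theorem birkhoff_blocks {g : Circle1 → ℝ} (hg : ∀ x, 0 ≤ g x) {n W : ℕ} (hn : n ≤ W) (x : Circle1)
    (R : ℕ) : ∑ j ∈ Finset.range R, birkhoffSum D.T g n (D.T^[W * j] x) ≤
      birkhoffSum D.T g (W * R) x := by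
  induction R with
  | zero => simp
  | succ R ih =>
    rw [Finset.sum_range_succ, Nat.mul_succ, birkhoffSum_add]
    exact add_le_add ih (D.birkhoff_mono hg hn _)

theorem bad_count {g : Circle1 → ℝ} (hg : ∀ x, 0 ≤ g x) {n W : ℕ} (hn : n ≤ W) (x : Circle1)
    (R : ℕ) {θ : ℝ} (s : Finset ℕ) (hs : ∀ j ∈ s, j < R ∧ θ ≤ birkhoffSum D.T g n (D.T^[W * j] x)) :
    s.card * θ ≤ birkhoffSum D.T g (W * R) x := by
  refine le_trans ?_ (D.birkhoff_blocks hg hn x R)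
  rw [← nsmul_eq_mul]
  refine (Finset.card_nsmul_le_sum s _ θ fun j hj => (hs j hj).2).trans ?_
  exact Finset.sum_le_sum_of_subset_of_nonneg
    (fun j hj => Finset.mem_range.2 (hs j hj).1) fun j _ _ => D.birkhoff_nonneg hg _ _

/-- Simultaneous version of `rho_bound` for finitely many directions: the number of bad blocks. -/
theorem bad_blocks {L : ℝ} {f : Circle1 → ℝ} (hL : 0 ≤ L) (hf : Lip L f)
    {φ : ℕ → Circle1 → ℝ} {L' : ℕ → ℝ} (hL' : ∀ k, 0 ≤ L' k) (hφ : ∀ k, Lip (L' k) (φ k))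
    (hq : ∀ k, D.Quad f (φ k)) (C0 : ℝ) (N : ℕ) : ∃ C ≥ 0, ∃ h0, 0 < h0 ∧ h0 ≤ 1 ∧
      ∀ h, 0 < h → h ≤ h0 → ∀ θ > 0, ∀ n W : ℕ, n ≤ W → ∀ z,
        (∀ n, n * beta f D.T - C0 ≤ birkhoffSum D.T f n z) → ∀ R : ℕ, ∃ s : Finset ℕ,
        (∀ j < R, ¬ D.Good f φ N h θ n (D.T^[W * j] z) → j ∈ s) ∧
        s.card * θ ≤ C * (1 + (W * R : ℕ) * h ^ 2) := by
  classical
  choose C hC h0 h0p h01 hb using fun k => D.rho_bound hL (hL' k) hf (hφ k) (hq k) C0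
  have hN : ∃ e, 0 < e ∧ e ≤ 1 ∧ ∀ k < N, e ≤ h0 k := by
    induction N with
    | zero => exact ⟨1, one_pos, le_rfl, by simp⟩
    | succ N ih =>
      obtain ⟨e, h1, h2, h3⟩ := ih
      refine ⟨min e (h0 N), lt_min h1 (h0p N), (min_le_left _ _).trans h2, fun k hk => ?_⟩
      rcases Nat.lt_succ_iff_lt_or_eq.1 hk with h | rfl
      · exact (min_le_left _ _).trans (h3 k h)
      · exact min_le_right _ _
  obtain ⟨e, e0, e1, he⟩ := hN
  refine ⟨∑ k ∈ Finset.range N, C k + (D.C1 * L + |C0|), ?_, e, e0, e1, ?_⟩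
  · have := Finset.sum_nonneg fun k (_ : k ∈ Finset.range N) => hC k
    have := mul_nonneg D.C1_pos.le hL
    positivity
  intro h hh hhe θ hθ n W hn z hz R
  let g : Circle1 → ℝ := fun x => ∑ k ∈ Finset.range N, D.R (fun x => f x + h * φ k x) x + D.R f x
  have hRk : ∀ k x, 0 ≤ D.R (fun x => f x + h * φ k x) x := fun k x =>
    D.R_nonneg (add_nonneg hL (hL' k)) (lip_pert (hL' k) hf (hφ k)
      (by rw [abs_of_pos hh]; linarith)) x
  have hR0 : ∀ x, 0 ≤ D.R f x := D.R_nonneg hL hf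
  have hg : ∀ x, 0 ≤ g x := fun x => add_nonneg (Finset.sum_nonneg fun k _ => hRk k x) (hR0 x)
  have hS : ∀ n x, birkhoffSum D.T g n x =
      ∑ k ∈ Finset.range N, birkhoffSum D.T (D.R fun x => f x + h * φ k x) n x
        + birkhoffSum D.T (D.R f) n x := by
    intro n x
    simp only [birkhoffSum, g]
    rw [Finset.sum_add_distrib, Finset.sum_comm]
  have hge : ∀ n x, ¬ D.Good f φ N h θ n x → θ ≤ birkhoffSum D.T g n x := by
    intro n x hx
    rw [hS]
    have h1 := Finset.sum_nonneg fun k (_ : k ∈ Finset.range N) => D.birkhoff_nonneg (hRk k) n x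
    have h2 := D.birkhoff_nonneg hR0 n x
    unfold Good at hx
    rw [not_and_or] at hx
    rcases hx with hx | hx
    · push Not at hx
      obtain ⟨k, hk, hk'⟩ := hx
      have := Finset.single_le_sum (f := fun k => birkhoffSum D.T (D.R fun x => f x + h * φ k x) n x)
        (fun k _ => D.birkhoff_nonneg (hRk k) n x) (Finset.mem_range.2 hk)
      linarith
    · push Not at hx; linarith
  refine ⟨(Finset.range R).filter fun j => ¬ D.Good f φ N h θ n (D.T^[W * j] z), fun j hj hg =>
    Finset.mem_filter.2 ⟨Finset.mem_range.2 hj, hg⟩, ?_⟩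
  refine (D.bad_count hg hn z R _ fun j hj => ⟨Finset.mem_range.1 (Finset.mem_filter.1 hj).1,
    hge _ _ (Finset.mem_filter.1 hj).2⟩).trans ?_
  rw [hS, add_mul, Finset.sum_mul]
  refine add_le_add (Finset.sum_le_sum fun k hk => hb k h hh (hhe.trans (he k
    (Finset.mem_range.1 hk))) z hz _) ?_
  refine (D.R_zero_bound hL hf C0 z hz _).trans ?_
  have : 0 ≤ D.C1 * L + |C0| := add_nonneg (mul_nonneg D.C1_pos.le hL) (abs_nonneg _)
  have h3 : 0 ≤ ((W * R : ℕ) : ℝ) * h ^ 2 := by positivity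
  nlinarith

set_option maxHeartbeats 1600000 in
/-- Orbits along which `f` is nearly maximized have zero entropy, as soon as `β` has a second
order upper bound in a rich set of directions. -/
theorem zero_entropy {L : ℝ} {f : Circle1 → ℝ} (hL : 0 ≤ L) (hf : Lip L f)
    {φ φ' : ℕ → Circle1 → ℝ} (hD : ∀ k, HasD (φ k) (φ' k)) (hr : Rich φ')
    {L' : ℕ → ℝ} (hL' : ∀ k, 0 ≤ L' k) (hφ : ∀ k, Lip (L' k) (φ k))
    (hq : ∀ k, D.Quad f (φ k)) {C0 : ℝ} {M : Set Circle1} (hM : ∀ x ∈ M, D.T x ∈ M)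
    (hne : M.Nonempty) (hC0 : ∀ x ∈ M, ∀ n : ℕ, n * beta f D.T - C0 ≤ birkhoffSum D.T f n x) :
    D.ent M = 0 := by
  by_contra hne0
  have hH : 0 < D.ent M := lt_of_le_of_ne (D.ent_nonneg M) (Ne.symm hne0)
  obtain ⟨N, δ, hδ, q, hq1, m0, hm⟩ := D.merge_lemma hL hf hD hr hL' hφ
  obtain ⟨C, hC, h0, h0p, h01, hbad⟩ := D.bad_blocks hL hf hL' hφ hq C0 N
  obtain ⟨Q, hQ⟩ := exists_cell (lt_min hδ (mul_pos D.c_pos (half_pos D.r0_pos)))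
  set H := D.ent M with hHdef
  have hq0 : (1:ℝ) ≤ q := by exact_mod_cast hq1
  have hqp : (0:ℝ) < q := by linarith
  set ε := H / (64 * q) with hε
  have hεp : 0 < ε := by positivity
  have hεq : 16 * q * ε = H / 4 := by rw [hε]; field_simp; norm_num
  obtain ⟨n0, hn0⟩ := D.cnt_le_exp hM hne (κ := H + ε) (by linarith)
  -- the finitely many smallness conditions on `m`
  have hqm : Tendsto (fun m : ℕ => q * m) atTop atTop :=
    tendsto_atTop_mono (fun m => Nat.le_mul_of_pos_left m hq1) tendsto_id
  have ev1 : ∀ᶠ m : ℕ in atTop, D.lam⁻¹ ^ (q * m) ≤ h0 :=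
    ((tendsto_pow_atTop_nhds_zero_of_lt_one D.inv_lam_pos.le D.inv_lam_lt).comp hqm).eventually
      (ge_mem_nhds h0p)
  have ev2 : ∀ᶠ m : ℕ in atTop,
      256 * C * (H + ε) * (((q * m : ℕ) : ℝ) ^ 2 * (D.lam⁻¹ ^ 2) ^ (q * m)) ≤ 1 := by
    have h1 : Tendsto (fun n : ℕ => (n:ℝ) ^ 2 * (D.lam⁻¹ ^ 2) ^ n) atTop (𝓝 0) :=
      tendsto_pow_const_mul_const_pow_of_abs_lt_one 2 (by
        rw [abs_of_pos (pow_pos D.inv_lam_pos 2)]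
        exact pow_lt_one₀ D.inv_lam_pos.le D.inv_lam_lt two_ne_zero)
    have h2 := (h1.comp hqm).const_mul (256 * C * (H + ε))
    rw [mul_zero] at h2
    exact h2.eventually (ge_mem_nhds one_pos)
  have ev3 : ∀ᶠ m : ℕ in atTop,
      3 * (Q + 1 : ℝ) ^ 2 * Real.exp 1 * ((m : ℝ) ^ 1 * Real.exp (-(H / 4)) ^ m) < 1 := by
    have h1 : Tendsto (fun n : ℕ => (n:ℝ) ^ 1 * Real.exp (-(H / 4)) ^ n) atTop (𝓝 0) :=
      tendsto_pow_const_mul_const_pow_of_abs_lt_one 1 (by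
        rw [abs_of_pos (Real.exp_pos _)]; rw [Real.exp_lt_one_iff]; linarith)
    have h2 := h1.const_mul (3 * (Q + 1 : ℝ) ^ 2 * Real.exp 1)
    rw [mul_zero] at h2
    exact h2.eventually (gt_mem_nhds one_pos)
  obtain ⟨m, hm1, e1, e2, e3, hmn0, hmm0⟩ := ((eventually_ge_atTop 1).and (ev1.and (ev2.and
    (ev3.and ((eventually_ge_atTop n0).and (eventually_ge_atTop m0)))))).exists
  obtain ⟨hsm, hmerge⟩ := hm m hmm0
  set x := D.lam⁻¹ ^ (q * m) with hx
  have hxp : 0 < x := pow_pos D.inv_lam_pos _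
  have hx1 : x ≤ 1 := pow_le_one₀ D.inv_lam_pos.le D.inv_lam_lt.le
  set n := 8 * (q * m) with hn
  have hmqm : m ≤ q * m := Nat.le_mul_of_pos_left m hq1
  set Gd := D.Good f φ N (x ^ 4) (x ^ 6) n with hGd
  obtain ⟨Z, hZ1, hZ2, hZ3⟩ : ∃ Z : Finset Circle1, (∀ z ∈ Z, z ∈ {x | x ∈ M ∧ Gd x}) ∧
      (∀ x ∈ Z, ∀ y ∈ Z, D.HClose (2 * n) x y → x = y) ∧
      D.Lab {x | x ∈ M ∧ Gd x} (2 * n) Z.card := by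
    by_cases hS : {x | x ∈ M ∧ Gd x}.Nonempty
    · exact D.exists_sep hS (2 * n)
    · rw [not_nonempty_iff_eq_empty] at hS
      refine ⟨∅, by simp, by simp, fun _ => 0, ?_, ?_⟩ <;> (rw [hS]; simp)
  have hx4 : x ^ 4 ≤ h0 := (pow_le_of_le_one hxp.le hx1 (by norm_num)).trans e1
  have hent := D.ent_le_of_good hM hne (2 * n) Z.card Gd hZ3 (C / x ^ 6)
    (C * (2 * n) * x ^ 2) (by
      intro z hz R
      obtain ⟨s, hs1, hs2⟩ := hbad (x ^ 4) (by positivity) hx4 (x ^ 6) (by positivity) n (2 * n)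
        (by omega) z (hC0 z hz) R
      refine ⟨s, hs1, ?_⟩
      have h6 : 0 < x ^ 6 := by positivity
      rw [← sub_nonneg, ← mul_nonneg_iff_of_pos_right h6]
      have : (C / x ^ 6 + C * (2 * n) * x ^ 2 * R - s.card) * x ^ 6
        = C + C * (2 * n) * R * x ^ 8 - s.card * x ^ 6 := by field_simp
      rw [this]
      push_cast at hs2
      nlinarith)
  have hcnt2 : Real.log (D.cnt M (2 * n)) ≤ 2 * n * (H + ε) := by
    have h1 := hn0 (2 * n) (by omega)
    have h2 : (0:ℝ) < D.cnt M (2 * n) := by exact_mod_cast D.cnt_pos hne (2 * n)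
    have := Real.log_le_log h2 h1
    rw [Real.log_exp] at this
    push_cast at this; exact this
  have hlogZ : 2 * n * H - 1 ≤ Real.log (Z.card + 1) := by
    have h1 : C * (2 * n) * x ^ 2 * Real.log (D.cnt M (2 * n)) ≤ 1 := by
      refine (mul_le_mul_of_nonneg_left hcnt2 (by positivity)).trans (le_trans (le_of_eq ?_) e2)
      rw [hn, hx, ← pow_mul, ← pow_mul, mul_comm 2 (q * m)]
      push_cast; ring
    push_cast at hent
    linarith
  have hZlow : Real.exp (2 * n * H - 1) ≤ Z.card + 1 := by
    rwa [← Real.le_log_iff_exp_le (by positivity)]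
  have hsmall : D.c⁻¹ * D.lam⁻¹ ^ n ≤ D.r0 / 2 := by
    rw [hn, mul_comm 8, pow_mul]; exact hsm
  have hcount := D.sep_count hM hne (n := n) (m := m) (by omega) Gd hQ hsmall hmerge Z hZ1 hZ2
  have hcount' : (Z.card : ℝ) ^ 2 ≤ D.cnt M n * (Z.card * (D.cnt M (n - m) * (Q + 1)) +
      m * (Q + 1) ^ 3 * D.cnt M n ^ 2 * D.cnt M (n - m)) := by exact_mod_cast hcount
  have a1 := hn0 n (by omega)
  have a2 := hn0 (n - m) (by omega)
  rw [Nat.cast_sub (by omega)] at a2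
  have hm1' : (1:ℝ) ≤ m := by exact_mod_cast hm1
  set V : ℝ := m * (Q + 1) ^ 2 * Real.exp ((2 * n - m / 2) * (H + ε)) with hV
  have hQ1 : (1:ℝ) ≤ Q + 1 := by linarith [Nat.cast_nonneg (α := ℝ) Q]
  have hnm : (m:ℝ) ≤ n := by exact_mod_cast (by omega : m ≤ n)
  have hV1 : 1 ≤ V := by
    have : 1 ≤ Real.exp ((2 * n - m / 2) * (H + ε)) := Real.one_le_exp (by
      apply mul_nonneg _ (by linarith); linarith)
    have h2 : (1:ℝ) ≤ m * (Q + 1) ^ 2 := one_le_mul_of_one_le_of_one_le hm1' (one_le_pow₀ hQ1)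
    exact one_le_mul_of_one_le_of_one_le h2 this
  have hX : (D.cnt M n : ℝ) * (D.cnt M (n - m) * (Q + 1)) ≤ V := by
    have : (D.cnt M n : ℝ) * D.cnt M (n - m) ≤ Real.exp ((2 * n - m / 2) * (H + ε)) := by
      refine (mul_le_mul a1 a2 (by positivity) (by positivity)).trans ?_
      rw [← Real.exp_add]; apply Real.exp_le_exp.2
      have : (m:ℝ) * (H + ε) ≥ 0 := by positivity
      linarith
    have h2 : (Q + 1 : ℝ) ≤ m * (Q + 1) ^ 2 := by
      have := mul_le_mul hm1' (le_self_pow₀ hQ1 two_ne_zero) (by positivity) (by positivity)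
      rwa [one_mul] at this
    calc _ = (Q + 1 : ℝ) * ((D.cnt M n : ℝ) * D.cnt M (n - m)) := by ring
      _ ≤ _ := mul_le_mul h2 this (by positivity) (by positivity)
  have hY : (D.cnt M n : ℝ) * (m * (Q + 1) ^ 3 * D.cnt M n ^ 2 * D.cnt M (n - m)) ≤ V ^ 2 := by
    have : (D.cnt M n : ℝ) ^ 3 * D.cnt M (n - m) ≤ Real.exp ((2 * n - m / 2) * (H + ε)) ^ 2 := by
      refine (mul_le_mul (pow_le_pow_left₀ (by positivity) a1 3) a2 (by positivity)
        (by positivity)).trans (le_of_eq ?_)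
      rw [← Real.exp_nat_mul, ← Real.exp_nat_mul, ← Real.exp_add]; congr 1; push_cast; ring
    have h2 : (m:ℝ) * (Q + 1) ^ 3 ≤ (m * (Q + 1) ^ 2) ^ 2 := by
      rw [mul_pow, ← pow_mul]
      exact mul_le_mul (by nlinarith) (pow_le_pow_right₀ hQ1 (by norm_num)) (by positivity)
        (by positivity)
    calc _ = (m * (Q + 1 : ℝ) ^ 3) * ((D.cnt M n : ℝ) ^ 3 * D.cnt M (n - m)) := by ring
      _ ≤ _ := by rw [hV, mul_pow (m * (Q + 1 : ℝ) ^ 2)]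
                  exact mul_le_mul h2 this (by positivity) (by positivity)
  have hZV : (Z.card : ℝ) ≤ 2 * V := by
    have h1 : (Z.card : ℝ) ^ 2 ≤ Z.card * V + V ^ 2 := by
      refine hcount'.trans ?_
      have := mul_le_mul_of_nonneg_left hX (Nat.cast_nonneg (α := ℝ) Z.card)
      nlinarith
    by_contra h; push Not at h
    nlinarith
  have hfin : Real.exp (2 * n * H - 1) ≤ 3 * V := by linarith
  have hexp : Real.exp (2 * n * H - 1) * (Real.exp 1 * Real.exp (-(H / 4)) ^ m) ≥
      Real.exp ((2 * n - m / 2) * (H + ε)) := by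
    rw [← Real.exp_nat_mul, ← Real.exp_add, ← Real.exp_add]
    apply Real.exp_le_exp.2
    have hnq : (n:ℝ) = 8 * (q * m) := by rw [hn]; push_cast; ring
    have : 2 * n * ε = m * (H / 4) := by rw [hnq, ← hεq]; ring
    have h5 : 0 ≤ (m:ℝ) * ε := by positivity
    nlinarith
  have hE := Real.exp_pos ((2 * n - m / 2) * (H + ε))
  have hE2 : 0 < Real.exp 1 * Real.exp (-(H / 4)) ^ m := by positivity
  have h7 := mul_le_mul_of_nonneg_right hfin hE2.le
  rw [hV] at h7
  have h8 : 3 * (m * (Q + 1 : ℝ) ^ 2 * Real.exp ((2 * n - m / 2) * (H + ε))) *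
      (Real.exp 1 * Real.exp (-(H / 4)) ^ m) = Real.exp ((2 * n - m / 2) * (H + ε)) *
      (3 * (Q + 1 : ℝ) ^ 2 * Real.exp 1 * ((m : ℝ) ^ 1 * Real.exp (-(H / 4)) ^ m)) := by ring
  rw [h8] at h7
  have h9 := mul_lt_mul_of_pos_left e3 hE
  linarith

end ExpData
end EC

/-! ### Random perturbations -/

namespace EC

/-- The parameter space of the random perturbations. -/
abbrev Om : Type := ℕ → unitInterval

/-- The product of the Lebesgue measures. -/
def Pr : Measure Om := Measure.infinitePi fun _ => (volume : Measure unitInterval)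

instance : IsProbabilityMeasure Pr := by unfold Pr; infer_instance

theorem measurable_upd (k : ℕ) :
    Measurable fun p : unitInterval × Om => Function.update p.2 k p.1 := by
  refine measurable_pi_lambda _ fun i => ?_
  by_cases h : i = k
  · subst h; simpa using measurable_fst
  · simp only [Function.update_of_ne h]
    exact (measurable_pi_apply i).comp measurable_snd

/-- Resampling one coordinate preserves the product measure. -/
theorem map_upd (k : ℕ) :
    ((volume : Measure unitInterval).prod Pr).map (fun p => Function.update p.2 k p.1) = Pr := by
  classical
  refine Measure.eq_infinitePi _ fun s t ht => ?_
  rw [Measure.map_apply (measurable_upd k)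
    (MeasurableSet.pi s.countable_toSet fun i _ => ht i)]
  by_cases hk : k ∈ s
  · have : (fun p : unitInterval × Om => Function.update p.2 k p.1) ⁻¹' (Set.pi s t) =
        (t k) ×ˢ (Set.pi (s.erase k : Finset ℕ) t) := by
      ext ⟨a, ω⟩
      simp only [mem_preimage, Set.mem_pi, mem_prod, Finset.mem_coe, Finset.mem_erase]
      constructor
      · intro h
        refine ⟨by simpa using h k hk, fun i hi => ?_⟩
        simpa [Function.update_of_ne hi.1] using h i hi.2
      · rintro ⟨h1, h2⟩ i hi
        by_cases hik : i = k
        · subst hik; simpa using h1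
        · simpa [Function.update_of_ne hik] using h2 i ⟨hik, hi⟩
    rw [this, Measure.prod_prod, Pr, Measure.infinitePi_pi _ fun i _ => ht i,
      Finset.mul_prod_erase s (fun i => volume (t i)) hk]
  · have : (fun p : unitInterval × Om => Function.update p.2 k p.1) ⁻¹' (Set.pi s t) =
        univ ×ˢ (Set.pi s t) := by
      ext ⟨a, ω⟩
      simp only [mem_preimage, Set.mem_pi, mem_prod, Finset.mem_coe, mem_univ, true_and]
      refine forall₂_congr fun i hi => ?_
      rw [Function.update_of_ne (by rintro rfl; exact hk hi)]
    rw [this, Measure.prod_prod, Pr, Measure.infinitePi_pi _ fun i _ => ht i]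
    simp

/-- A measurable set whose sections along one coordinate are small is small. -/
theorem Pr_le_of_sections {A : Set Om} (hA : MeasurableSet A) (k : ℕ) {ε : ENNReal}
    (h : ∀ ω : Om, volume {s : unitInterval | Function.update ω k s ∈ A} ≤ ε) : Pr A ≤ ε := by
  rw [← map_upd k, Measure.map_apply (measurable_upd k) hA,
    Measure.prod_apply_symm (measurable_upd k hA)]
  refine (lintegral_mono (g := fun _ => ε) fun ω => h ω).trans ?_
  simp

/-- An affine function of slope at least `c` in absolute value lies in a strip of width `η` only for a
set of parameters of measure `O(η / c)`. -/
theorem volume_le_of_strip {g : unitInterval → ℝ} {b η c : ℝ} (hc : 0 < c) (hb : c ≤ |b|)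
    (hg : ∀ s t : unitInterval, g s - g t = (s - t : ℝ) * b) :
    volume {s : unitInterval | |g s| ≤ η} ≤ ENNReal.ofReal (4 * η / c) := by
  by_cases hne : {s : unitInterval | |g s| ≤ η}.Nonempty
  · obtain ⟨t, ht⟩ := hne
    rw [unitInterval.volume_apply]
    refine (measure_mono (t := Icc ((t:ℝ) - 2 * η / c) (t + 2 * η / c)) ?_).trans ?_
    · rintro _ ⟨s, hs, rfl⟩
      have h1 := hg s t
      have h2 : |(s - t : ℝ)| * |b| ≤ 2 * η := by
        rw [← abs_mul, ← h1]
        have := abs_sub (g s) (g t)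
        have h3 : |g s| ≤ η := hs
        have h4 : |g t| ≤ η := ht
        linarith
      have h3 : |(s - t : ℝ)| ≤ 2 * η / c := by
        rw [le_div_iff₀ hc]
        exact (mul_le_mul_of_nonneg_left hb (abs_nonneg _)).trans h2
      rw [abs_le] at h3
      constructor <;> linarith
    · rw [Real.volume_Icc]
      apply ENNReal.ofReal_le_ofReal
      apply le_of_eq; ring
  · rw [not_nonempty_iff_eq_empty.1 hne]; simp

/-- A `C^{1+1}` function together with a rich sequence of perturbations, small enough to be added
with arbitrary coefficients in `[0,1]`. -/
structure Pert where
  f : Circle1 → ℝ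
  f' : Circle1 → ℝ
  M : ℝ
  M_nonneg : 0 ≤ M
  hf : HasD f f'
  bf : ∀ z, |f' z| ≤ M
  lf : Lip M f'
  φ : ℕ → Circle1 → ℝ
  φ' : ℕ → Circle1 → ℝ
  hD : ∀ k, HasD (φ k) (φ' k)
  bd : ∀ k z, |φ k z| ≤ (1 / 2) ^ k
  bd' : ∀ k z, |φ' k z| ≤ (1 / 2) ^ k
  lip' : ∀ k, Lip ((1 / 2) ^ k) (φ' k)
  rich : Rich φ
  rich' : Rich φ'
  plat : ∀ (c : Circle1) (ρ₁ ρ₂ : ℝ), 0 < ρ₁ → ρ₁ < ρ₂ → ρ₂ < 1 / 2 → ∃ k, ∃ a > 0,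
    (∀ z, 0 ≤ φ k z) ∧ (∀ z, dist z c ≤ ρ₁ → φ k z = a) ∧ ∀ z, ρ₂ ≤ dist z c → φ k z = 0

theorem summable_half : Summable fun k : ℕ => (1 / 2 : ℝ) ^ k :=
  summable_geometric_of_lt_one (by norm_num) (by norm_num)

theorem summable_of_half {u : ℕ → ℝ} (h : ∀ k, |u k| ≤ (1 / 2) ^ k) : Summable u :=
  Summable.of_norm_bounded summable_half h

theorem abs_tsum_le {u v : ℕ → ℝ} (hv : Summable v) (h : ∀ k, |u k| ≤ v k) :
    |∑' k, u k| ≤ ∑' k, v k :=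
  tsum_of_norm_bounded (f := u) hv.hasSum h

theorem abs_unit_mul_le (s : unitInterval) {x y : ℝ} (h : |x| ≤ y) : |(s : ℝ) * x| ≤ y := by
  rw [abs_mul, abs_of_nonneg s.2.1]
  exact (mul_le_of_le_one_left (abs_nonneg _) s.2.2).trans h

/-- A distance on parameters controlling the perturbations. -/
def dd (ω ω' : Om) : ℝ := ∑' k, (1 / 2 : ℝ) ^ k * |(ω k : ℝ) - ω' k|

theorem dd_bound (ω ω' : Om) (k : ℕ) : |(1 / 2 : ℝ) ^ k * (|(ω k : ℝ) - ω' k|)| ≤ (1 / 2) ^ k := by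
  rw [abs_mul, abs_abs, abs_of_pos (by positivity)]
  refine mul_le_of_le_one_right (by positivity) ?_
  rw [abs_le]
  constructor <;> linarith [(ω k).2.1, (ω k).2.2, (ω' k).2.1, (ω' k).2.2]

theorem dd_cont : Continuous fun p : Om × Om => dd p.1 p.2 := by
  unfold dd
  refine continuous_tsum (fun k => ?_) summable_half fun k p => dd_bound p.1 p.2 k
  fun_prop

theorem dd_self (ω : Om) : dd ω ω = 0 := by simp [dd]

namespace Pert
variable (P : Pert)

/-- The perturbed function. -/
def g (ω : Om) (z : Circle1) : ℝ := P.f z + ∑' k, (ω k : ℝ) * P.φ k z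

/-- The derivative of the perturbed function. -/
def g' (ω : Om) (z : Circle1) : ℝ := P.f' z + ∑' k, (ω k : ℝ) * P.φ' k z

/-- A uniform Lipschitz constant of all perturbed functions and their derivatives. -/
def L : ℝ := P.M + 2

theorem L_nonneg : 0 ≤ P.L := by unfold L; linarith [P.M_nonneg]

theorem sum_half : ∑' k : ℕ, (1 / 2 : ℝ) ^ k = 2 := tsum_geometric_two

theorem g'_lip (ω : Om) : Lip P.L (P.g' ω) := by
  intro x y
  have hs : ∀ z, Summable fun k => (ω k : ℝ) * P.φ' k z := fun z =>
    summable_of_half fun k => abs_unit_mul_le _ (P.bd' k z)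
  have h1 : |∑' k, (ω k : ℝ) * P.φ' k x - ∑' k, (ω k : ℝ) * P.φ' k y| ≤ 2 * dist x y := by
    rw [← (hs x).tsum_sub (hs y), ← sum_half, ← tsum_mul_right]
    refine abs_tsum_le (summable_half.mul_right _) fun k => ?_
    rw [← mul_sub]
    exact abs_unit_mul_le _ (P.lip' k x y)
  have h2 := P.lf x y
  unfold g' L
  have := abs_add_le (P.f' x - P.f' y)
    (∑' k, (ω k : ℝ) * P.φ' k x - ∑' k, (ω k : ℝ) * P.φ' k y)
  rw [show P.f' x + ∑' k, (ω k : ℝ) * P.φ' k x - (P.f' y + ∑' k, (ω k : ℝ) * P.φ' k y) =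
    (P.f' x - P.f' y) + (∑' k, (ω k : ℝ) * P.φ' k x - ∑' k, (ω k : ℝ) * P.φ' k y) by ring]
  linarith

theorem g'_le (ω : Om) (z : Circle1) : |P.g' ω z| ≤ P.L := by
  have h1 : |∑' k, (ω k : ℝ) * P.φ' k z| ≤ 2 := by
    rw [← sum_half]
    exact abs_tsum_le summable_half fun k => abs_unit_mul_le _ (P.bd' k z)
  unfold g' L
  linarith [abs_add_le (P.f' z) (∑' k, (ω k : ℝ) * P.φ' k z), P.bf z]

theorem hasD (ω : Om) : HasD (P.g ω) (P.g' ω) := by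
  refine ⟨(P.g'_lip ω).continuous, fun a => ?_⟩
  refine (P.hf.2 a).add ?_
  have := hasDerivAt_tsum (𝕜 := ℝ) (g := fun k (x : ℝ) => (ω k : ℝ) * P.φ k (x : Circle1))
    (g' := fun k (x : ℝ) => (ω k : ℝ) * P.φ' k (x : Circle1)) (y₀ := 0) summable_half
    (fun k y => ((P.hD k).2 y).const_mul _) (fun k y => abs_unit_mul_le _ (P.bd' k _))
    (summable_of_half fun k => abs_unit_mul_le _ (P.bd k _)) a
  exact this

theorem lip (ω : Om) : Lip P.L (P.g ω) := (P.hasD ω).lip (P.g'_le ω)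

theorem φ_lip (k : ℕ) : Lip ((1 / 2) ^ k) (P.φ k) := (P.hD k).lip (P.bd' k)

theorem tsum_sub_le {ψ : ℕ → ℝ} (h : ∀ k, |ψ k| ≤ (1 / 2) ^ k) (ω ω' : Om) :
    |∑' k, (ω k : ℝ) * ψ k - ∑' k, (ω' k : ℝ) * ψ k| ≤ dd ω ω' := by
  have hs : ∀ ω : Om, Summable fun k => (ω k : ℝ) * ψ k := fun ω =>
    summable_of_half fun k => abs_unit_mul_le _ (h k)
  rw [← (hs ω).tsum_sub (hs ω')]
  refine abs_tsum_le (summable_of_half (dd_bound ω ω')) fun k => ?_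
  rw [← sub_mul, abs_mul, mul_comm]
  exact mul_le_mul_of_nonneg_right (h k) (abs_nonneg _)

theorem g_sub_le (ω ω' : Om) (z : Circle1) : |P.g ω z - P.g ω' z| ≤ dd ω ω' := by
  unfold g; rw [add_sub_add_left_eq_sub]; exact tsum_sub_le (fun k => P.bd k z) ω ω'

theorem g'_sub_le (ω ω' : Om) (z : Circle1) : |P.g' ω z - P.g' ω' z| ≤ dd ω ω' := by
  unfold g'; rw [add_sub_add_left_eq_sub]; exact tsum_sub_le (fun k => P.bd' k z) ω ω'

theorem tsum_upd {ψ : ℕ → ℝ} (h : ∀ k, |ψ k| ≤ (1 / 2) ^ k) (ω : Om) (k : ℕ) (s : unitInterval) :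
    ∑' i, (Function.update ω k s i : ℝ) * ψ i = ∑' i, (ω i : ℝ) * ψ i + (s - ω k : ℝ) * ψ k := by
  have hs : ∀ ω : Om, Summable fun k => (ω k : ℝ) * ψ k := fun ω =>
    summable_of_half fun k => abs_unit_mul_le _ (h k)
  rw [(hs _).tsum_eq_add_tsum_ite k, (hs ω).tsum_eq_add_tsum_ite k]
  have : ∀ i, (if i = k then 0 else (Function.update ω k s i : ℝ) * ψ i) =
      if i = k then 0 else (ω i : ℝ) * ψ i := by
    intro i; split_ifs with hi
    · rfl
    · rw [Function.update_of_ne hi]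
  simp only [this, Function.update_self]
  ring

theorem g_upd (ω : Om) (k : ℕ) (s : unitInterval) :
    P.g (Function.update ω k s) = fun z => P.g ω z + (s - ω k : ℝ) * P.φ k z := by
  funext z; unfold g; rw [tsum_upd fun k => P.bd k z]; ring

theorem g'_upd (ω : Om) (k : ℕ) (s : unitInterval) :
    P.g' (Function.update ω k s) = fun z => P.g' ω z + (s - ω k : ℝ) * P.φ' k z := by
  funext z; unfold g'; rw [tsum_upd fun k => P.bd' k z]; ring

theorem g_cont (ω : Om) : Continuous (P.g ω) := (P.hasD ω).continuous

theorem φ_cont (k : ℕ) : Continuous (P.φ k) := (P.hD k).continuous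

/-- A quantity that is Lipschitz in the parameter, with respect to `dd`, is continuous. -/
theorem cont_of_dd {u : Om → ℝ} {C : ℝ} (h : ∀ ω ω', |u ω - u ω'| ≤ C * dd ω ω') :
    Continuous u := by
  rw [continuous_iff_continuousAt]
  intro ω0
  rw [ContinuousAt, tendsto_iff_norm_sub_tendsto_zero]
  have h0 : Tendsto (fun ω => C * dd ω ω0) (𝓝 ω0) (𝓝 0) := by
    have := ((dd_cont.comp (continuous_id.prodMk (continuous_const (y := ω0)))).const_mul C).tendsto ω0
    simpa [dd_self] using this
  exact squeeze_zero (fun _ => norm_nonneg _) (fun ω => h ω ω0) h0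

theorem beta_cont (D : ExpData) (h : ℝ) (k : ℕ) :
    Continuous fun ω => beta (fun z => P.g ω z + h * P.φ k z) D.T := by
  refine cont_of_dd (C := 1) fun ω ω' => ?_
  rw [one_mul]
  refine D.abs_beta_sub_le ((P.g_cont ω).add ((P.φ_cont k).const_mul h))
    ((P.g_cont ω').add ((P.φ_cont k).const_mul h)) fun x => ?_
  show |P.g ω x + h * P.φ k x - (P.g ω' x + h * P.φ k x)| ≤ _
  rw [add_sub_add_right_eq_sub]; exact P.g_sub_le ω ω' x

theorem beta_cont0 (D : ExpData) : Continuous fun ω => beta (P.g ω) D.T := by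
  have := P.beta_cont D 0 0
  simpa using this

end Pert

/-- A function with everywhere a subgradient has a second order bound at almost every point. -/
theorem ae_quad {B d : ℝ → ℝ} (h : ∀ s u, B s + (u - s) * d s ≤ B u) :
    ∀ᵐ s, ∃ C h0 : ℝ, 0 < h0 ∧ ∀ h, 0 < h → h ≤ h0 → B (s + h) + B (s - h) - 2 * B s ≤ C * h ^ 2 := by
  have hm : Monotone d := by
    intro s u hsu
    rcases hsu.eq_or_lt with rfl | hlt
    · rfl
    have h1 := h s u
    have h2 := h u s
    by_contra hc; push Not at hc
    nlinarith
  filter_upwards [hm.ae_differentiableAt] with s hs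
  have h1 := hs.hasDerivAt.isBigO_sub
  obtain ⟨C, hC, h2⟩ := h1.exists_pos
  rw [Asymptotics.IsBigOWith, Metric.eventually_nhds_iff] at h2
  obtain ⟨e, he, h3⟩ := h2
  refine ⟨2 * C, e / 2, by linarith, fun t ht hte => ?_⟩
  have a1 := h3 (y := s + t) (by rw [Real.dist_eq]; simp [abs_of_pos ht]; linarith)
  have a2 := h3 (y := s - t) (by rw [Real.dist_eq]; simp [abs_of_pos ht]; linarith)
  simp only [Real.norm_eq_abs, add_sub_cancel_left, sub_sub_cancel_left, abs_neg, abs_of_pos ht]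
    at a1 a2
  have b1 := h (s + t) s
  have b2 := h (s - t) s
  have c1 := (abs_le.1 a1).2
  have c2 := (abs_le.1 a2).1
  nlinarith

end EC

/-! ### Almost sure second order bounds -/

namespace EC

/-- `β` has subgradients along lines: the integrals against maximizing measures. -/
theorem ExpData.exists_subgrad (D : ExpData) {f φ : Circle1 → ℝ} (hf : Continuous f)
    (hφ : Continuous φ) : ∃ d : ℝ → ℝ, ∀ s u, beta (fun z => f z + s * φ z) D.T + (u - s) * d s ≤
      beta (fun z => f z + u * φ z) D.T := by
  choose μ hμ using fun s : ℝ => D.exists_max (hf.add (hφ.const_mul s))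
  refine ⟨fun s => ∫ x, φ x ∂(μ s), fun s u => ?_⟩
  have := D.beta_le_add (hf.add (hφ.const_mul s)) hφ (hμ s) (u - s)
  refine this.trans (le_of_eq ?_)
  congr 1
  funext z
  show f z + s * φ z + (u - s) * φ z = _
  ring

theorem unitInterval_null {p : ℝ → Prop} (h : ∀ᵐ s : ℝ, p s) :
    volume {s : unitInterval | ¬ p s} = 0 := by
  rw [unitInterval.volume_apply]
  refine measure_mono_null ?_ (ae_iff.1 h)
  rintro _ ⟨s, hs, rfl⟩; exact hs

namespace Pert
variable (P : Pert) (D : ExpData)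

/-- Almost surely `β` has a second order bound in each perturbation direction: on each coordinate
line `β` is convex, and a convex function has a second order expansion almost everywhere. -/
theorem quad_ae : ∀ᵐ ω ∂Pr, ∀ k, D.Quad (P.g ω) (P.φ k) := by
  rw [ae_all_iff]
  intro k
  have hset : {ω | D.Quad (P.g ω) (P.φ k)} = ⋃ C : ℕ, ⋃ n : ℕ, ⋂ h : ℝ, ⋂ _ : 0 < h,
      ⋂ _ : h ≤ 1 / ((n : ℝ) + 1), {ω | beta (fun x => P.g ω x + h * P.φ k x) D.T +
        beta (fun x => P.g ω x + (-h) * P.φ k x) D.T - 2 * beta (P.g ω) D.T ≤ C * h ^ 2} := by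
    ext ω
    simp only [mem_iUnion, mem_iInter, mem_ofPred_eq, ExpData.Quad]
    constructor
    · rintro ⟨C, h0, hp, H⟩
      obtain ⟨C', hC'⟩ := exists_nat_ge C
      obtain ⟨n, hn⟩ := exists_nat_one_div_lt hp
      exact ⟨C', n, fun h hh hhn => (H h hh (hhn.trans hn.le)).trans
        (mul_le_mul_of_nonneg_right hC' (by positivity))⟩
    · rintro ⟨C, n, H⟩
      exact ⟨C, 1 / ((n : ℝ) + 1), by positivity, H⟩
  have hmeas : MeasurableSet {ω | D.Quad (P.g ω) (P.φ k)} := by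
    rw [hset]
    refine MeasurableSet.iUnion fun C => MeasurableSet.iUnion fun n => IsClosed.measurableSet ?_
    refine isClosed_iInter fun h => isClosed_iInter fun _ => isClosed_iInter fun _ =>
      isClosed_le ?_ continuous_const
    exact ((P.beta_cont D h k).add (P.beta_cont D (-h) k)).sub ((P.beta_cont0 D).const_mul 2)
  rw [ae_iff, ← nonpos_iff_eq_zero]
  refine Pr_le_of_sections (A := {ω | ¬ D.Quad (P.g ω) (P.φ k)}) hmeas.compl k fun ω => ?_
  obtain ⟨d, hd⟩ := D.exists_subgrad (f := fun z => P.g ω z + (-(ω k : ℝ)) * P.φ k z)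
    ((P.g_cont ω).add ((P.φ_cont k).const_mul _)) (P.φ_cont k)
  rw [nonpos_iff_eq_zero]
  refine measure_mono_null ?_ (unitInterval_null (ae_quad hd))
  rintro s hs ⟨C, h0, hp, H⟩
  refine hs ⟨C, h0, hp, fun h hh hh0 => ?_⟩
  have := H h hh hh0
  rw [P.g_upd]
  have e : ∀ x : ℝ, (fun z => P.g ω z + -(ω k : ℝ) * P.φ k z + x * P.φ k z) =
    fun z => P.g ω z + (x - ω k) * P.φ k z := fun x => by funext z; ring
  simp only [e] at this
  have e1 : (fun z => P.g ω z + ((s : ℝ) - ω k) * P.φ k z + h * P.φ k z) =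
    fun z => P.g ω z + (s + h - ω k) * P.φ k z := by funext z; ring
  have e2 : (fun z => P.g ω z + ((s : ℝ) - ω k) * P.φ k z + (-h) * P.φ k z) =
    fun z => P.g ω z + (s - h - ω k) * P.φ k z := by funext z; ring
  rw [e1, e2]; exact this

/-- Almost surely: if decreasing the coefficient of `φₖ` never lowers `β`, then some small increase
does not raise it. On a coordinate line `β` is convex, and the only exceptional parameter is the
right end point of the set where `β` is minimal. -/
theorem pos_ae : ∀ᵐ ω ∂Pr, ∀ k,
    (∀ h > 0, beta (P.g ω) D.T ≤ beta (fun x => P.g ω x + (-h) * P.φ k x) D.T) →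
    ∃ n : ℕ, beta (fun x => P.g ω x + (1 / ((n : ℝ) + 1)) * P.φ k x) D.T ≤ beta (P.g ω) D.T := by
  rw [ae_all_iff]
  intro k
  let A : Set Om := (⋂ h : ℝ, ⋂ _ : 0 < h,
    {ω | beta (P.g ω) D.T ≤ beta (fun x => P.g ω x + (-h) * P.φ k x) D.T}) ∩
    ⋂ n : ℕ, {ω | beta (P.g ω) D.T < beta (fun x => P.g ω x + (1 / ((n : ℝ) + 1)) * P.φ k x) D.T}
  have hA : MeasurableSet A := by
    refine MeasurableSet.inter (IsClosed.measurableSet ?_) (MeasurableSet.iInter fun n =>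
      IsOpen.measurableSet ?_)
    · exact isClosed_iInter fun h => isClosed_iInter fun _ =>
        isClosed_le (P.beta_cont0 D) (P.beta_cont D _ k)
    · exact isOpen_lt (P.beta_cont0 D) (P.beta_cont D _ k)
  have hA0 : Pr A = 0 := by
    rw [← nonpos_iff_eq_zero]
    refine Pr_le_of_sections hA k fun ω => ?_
    rw [nonpos_iff_eq_zero]
    refine Set.Subsingleton.measure_zero ?_ _
    obtain ⟨d, hd⟩ := D.exists_subgrad (f := fun z => P.g ω z + (-(ω k : ℝ)) * P.φ k z)
      ((P.g_cont ω).add ((P.φ_cont k).const_mul _)) (P.φ_cont k)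
    set B : ℝ → ℝ := fun x => beta (fun z => P.g ω z + -(ω k : ℝ) * P.φ k z + x * P.φ k z) D.T
    have hB : ∀ (s : unitInterval) (h : ℝ), beta (fun x => P.g (Function.update ω k s) x +
        h * P.φ k x) D.T = B (s + h) := by
      intro s h
      simp only [B]
      congr 1
      rw [P.g_upd]; funext z; ring
    have hB0 : ∀ (s : unitInterval), beta (P.g (Function.update ω k s)) D.T = B s := by
      intro s
      have := hB s 0
      simpa using this
    have key : ∀ s u : unitInterval, Function.update ω k s ∈ A → Function.update ω k u ∈ A →
        ¬ (s : ℝ) < u := by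
      intro s u hs hu hlt
      have h1 := mem_iInter₂.1 hu.1 (u - s : ℝ) (sub_pos.2 hlt)
      simp only [mem_ofPred_eq, hB, hB0] at h1
      rw [neg_sub, add_sub_cancel] at h1
      obtain ⟨n, hn⟩ := exists_nat_one_div_lt (sub_pos.2 hlt)
      have h2 := mem_iInter.1 hs.2 n
      simp only [mem_ofPred_eq, hB, hB0] at h2
      have hnp : 0 < 1 / ((n : ℝ) + 1) := by positivity
      set y := 1 / ((n : ℝ) + 1)
      have h3 := hd (s + y) s
      have h4 := hd (s + y) u
      change B (s + y) + _ ≤ B s at h3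
      change B (s + y) + _ ≤ B u at h4
      rcases le_total 0 (d (s + y)) with h | h <;> nlinarith
    intro s hs u hu
    rcases lt_trichotomy (s : ℝ) u with h | h | h
    · exact absurd h (key s u hs hu)
    · exact Subtype.ext h
    · exact absurd h (key u s hu hs)
  rw [ae_iff]
  refine measure_mono_null (fun ω hω => ?_) hA0
  simp only [mem_ofPred_eq, Classical.not_imp, not_exists, not_le] at hω
  exact ⟨mem_iInter₂.2 hω.1, mem_iInter.2 hω.2⟩

end Pert

/-- The difference of two integrals as a functional on continuous functions. -/
def diffCLM (μ ν : Measure Circle1) [IsProbabilityMeasure μ] [IsProbabilityMeasure ν] :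
    C(Circle1, ℝ) →L[ℝ] ℝ :=
  LinearMap.mkContinuous
    { toFun := fun f => (∫ x, f x ∂μ) - ∫ x, f x ∂ν
      map_add' := fun f g => by
        simp only [ContinuousMap.add_apply]
        rw [integral_add (integrable_of_cont f.continuous μ) (integrable_of_cont g.continuous μ),
          integral_add (integrable_of_cont f.continuous ν) (integrable_of_cont g.continuous ν)]
        ring
      map_smul' := fun c f => by
        simp only [ContinuousMap.smul_apply, smul_eq_mul, RingHom.id_apply]
        rw [integral_const_mul, integral_const_mul]
        ring } 2 (fun f => by
    have h : ∀ (ρ : Measure Circle1) [IsProbabilityMeasure ρ], ‖∫ x, f x ∂ρ‖ ≤ ‖f‖ := by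
      intro ρ _
      have := norm_integral_le_of_norm_le_const (μ := ρ) (C := ‖f‖)
        (Eventually.of_forall fun x => f.norm_coe_le_norm x)
      simpa using this
    have := norm_sub_le (∫ x, f x ∂μ) (∫ x, f x ∂ν)
    have h1 := h μ
    have h2 := h ν
    show ‖(∫ x, f x ∂μ) - ∫ x, f x ∂ν‖ ≤ _
    linarith)

/-- Probability measures on the circle are determined by their trigonometric moments. -/
theorem measure_ext_trig {μ ν : Measure Circle1} [IsProbabilityMeasure μ] [IsProbabilityMeasure ν]
    (hc : ∀ m, 1 ≤ m → ∫ x, cosF m x ∂μ = ∫ x, cosF m x ∂ν)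
    (hs : ∀ m, 1 ≤ m → ∫ x, sinF m x ∂μ = ∫ x, sinF m x ∂ν) : μ = ν := by
  have h0 := trig_dense (diffCLM μ ν) (by
    show (∫ x, (1 : C(Circle1, ℝ)) x ∂μ) - ∫ x, (1 : C(Circle1, ℝ)) x ∂ν = 0
    simp) (fun m hm => sub_eq_zero.2 (hc m hm)) (fun m hm => sub_eq_zero.2 (hs m hm))
  refine ext_of_forall_integral_eq_of_IsFiniteMeasure fun f => ?_
  have : diffCLM μ ν f.toContinuousMap = 0 := by rw [h0]; rfl
  exact sub_eq_zero.1 this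

theorem Pert.integral_eq_of_quad (D : ExpData) {f φ : Circle1 → ℝ} (hf : Continuous f)
    (hφ : Continuous φ) (hq : D.Quad f φ) {μ ν : Measure Circle1} (hμ : IsMaximizing f D.T μ)
    (hν : IsMaximizing f D.T ν) : ∫ x, φ x ∂μ ≤ ∫ x, φ x ∂ν := by
  obtain ⟨C, h0, hp, H⟩ := hq
  by_contra hc; push Not at hc
  set e := (∫ x, φ x ∂μ) - ∫ x, φ x ∂ν with he
  have hep : 0 < e := sub_pos.2 hc
  set h := min h0 (e / (2 * (|C| + 1))) with hh
  have hpos : 0 < h := lt_min hp (by positivity)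
  have h1 := H h hpos (min_le_left _ _)
  have h2 := D.beta_le_add hf hφ hμ h
  have h3 := D.beta_le_add hf hφ hν (-h)
  have h4 : h * e ≤ C * h ^ 2 := by nlinarith
  have h5 : e ≤ C * h := by
    have : h * e ≤ h * (C * h) := by nlinarith
    exact le_of_mul_le_mul_left this hpos
  have h6 : h * (2 * (|C| + 1)) ≤ e := by
    rw [← le_div_iff₀ (by positivity)]; exact min_le_right _ _
  have h7 : C * h ≤ |C| * h := mul_le_mul_of_nonneg_right (le_abs_self C) hpos.le
  have h8 : 0 ≤ |C| * h := by positivity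
  nlinarith

/-- Second order bounds in the trigonometric directions force a unique maximizing measure. -/
theorem Pert.unique (P : Pert) (D : ExpData) {ω : Om} (hq : ∀ k, D.Quad (P.g ω) (P.φ k))
    {μ ν : Measure Circle1} (hμ : IsMaximizing (P.g ω) D.T μ)
    (hν : IsMaximizing (P.g ω) D.T ν) : μ = ν := by
  have := hμ.1.1
  have := hν.1.1
  have key : ∀ k, ∫ x, P.φ k x ∂μ = ∫ x, P.φ k x ∂ν := fun k => le_antisymm
    (Pert.integral_eq_of_quad D (P.g_cont ω) (P.φ_cont k) (hq k) hμ hν)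
    (Pert.integral_eq_of_quad D (P.g_cont ω) (P.φ_cont k) (hq k) hν hμ)
  refine measure_ext_trig (fun m hm => ?_) fun m hm => ?_
  · obtain ⟨k, a, ha, hk⟩ := (P.rich m hm).1
    have := key k
    rw [hk] at this
    simp only [integral_const_mul] at this
    exact mul_left_cancel₀ ha this
  · obtain ⟨k, a, ha, hk⟩ := (P.rich m hm).2
    have := key k
    rw [hk] at this
    simp only [integral_const_mul] at this
    exact mul_left_cancel₀ ha this

end EC

/-! ### Distortion and labels -/

namespace EC
namespace ExpData
variable (D : ExpData)

/-- At arbitrarily small scales `ρ` the derivative of the lift oscillates by at most `√ρ`. -/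
def HoldScales : Prop := ∀ ρ0 > (0 : ℝ), ∃ ρ, 0 < ρ ∧ ρ < ρ0 ∧
  ∀ x y, |x - y| ≤ ρ → |D.F' x - D.F' y| ≤ Real.sqrt ρ

theorem dT_sub_le {ρ θ : ℝ} (h : ∀ x y, |x - y| ≤ ρ → |D.F' x - D.F' y| ≤ θ) {x y : Circle1}
    (hd : dist x y ≤ ρ) : |D.dT x - D.dT y| ≤ θ := by
  obtain ⟨t, rfl, ht⟩ := exists_disp x y
  have e : x + (t : Circle1) = ((rep x + t : ℝ) : Circle1) := by
    rw [AddCircle.coe_add, coe_rep]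
  rw [e, dT_coe]
  refine h _ _ ?_
  rw [show rep x - (rep x + t) = -t by ring, abs_neg, ht]
  exact hd

/-- Distortion bound. The extra factor `Jc m` makes the induction close. -/
theorem inv_Jc_sub_le {θ : ℝ} (hθ : 0 ≤ θ) {x x' : Circle1} (n : ℕ)
    (h : ∀ i < n, |D.dT (D.T^[i] x) - D.dT (D.T^[i] x')| ≤ θ) (m : ℕ) :
    |((D.Jc n x)⁻¹ - (D.Jc n x')⁻¹) * (D.Jc m (D.T^[n] x))⁻¹| ≤
      n * (D.c⁻¹ ^ 4 * D.lam⁻¹ ^ (n + m) * θ) := by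
  induction n generalizing m with
  | zero => simp [Jc, J]
  | succ n ih =>
    have ih' := ih (fun i hi => h i (by omega)) (m + 1)
    have hT : D.T^[n + 1] x = D.T (D.T^[n] x) := Function.iterate_succ_apply' _ _ _
    have e1 : D.Jc (m + 1) (D.T^[n] x) = D.dT (D.T^[n] x) * D.Jc m (D.T^[n + 1] x) := by
      rw [add_comm m 1, Jc_add, Jc_one, hT]; rfl
    have e2 : ∀ z, D.Jc (n + 1) z = D.Jc n z * D.dT (D.T^[n] z) := fun z => by
      rw [Jc_add, Jc_one]
    have hp : 0 < D.c⁻¹ := inv_pos.2 D.c_pos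
    have hl := D.inv_lam_pos
    have hl1 := D.inv_lam_lt
    have hdne : ∀ z, D.dT z ≠ 0 := fun z => by rw [← Jc_one]; exact D.Jc_ne 1 z
    have hdb : ∀ z, |(D.dT z)⁻¹| ≤ D.c⁻¹ * D.lam⁻¹ := fun z => by
      have := D.inv_Jc_le 1 z
      rwa [Jc_one, pow_one] at this
    have b1 := D.inv_Jc_le n x'
    have b2 := D.inv_Jc_le m (D.T^[n + 1] x)
    have b3 : |(D.dT (D.T^[n] x))⁻¹ - (D.dT (D.T^[n] x'))⁻¹| ≤ D.c⁻¹ ^ 2 * D.lam⁻¹ * θ := by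
      have e : (D.dT (D.T^[n] x))⁻¹ - (D.dT (D.T^[n] x'))⁻¹ =
          -((D.dT (D.T^[n] x))⁻¹ * (D.dT (D.T^[n] x'))⁻¹ *
            (D.dT (D.T^[n] x) - D.dT (D.T^[n] x'))) := by
        have := hdne (D.T^[n] x); have := hdne (D.T^[n] x')
        field_simp; ring
      rw [e, abs_neg, abs_mul, abs_mul]
      calc _ ≤ (D.c⁻¹ * D.lam⁻¹) * (D.c⁻¹ * D.lam⁻¹) * θ := by
            gcongr
            · exact hdb _
            · exact hdb _
            · exact h n (by omega)
        _ = D.c⁻¹ ^ 2 * (D.lam⁻¹ * D.lam⁻¹) * θ := by ring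
        _ ≤ D.c⁻¹ ^ 2 * (D.lam⁻¹ * 1) * θ := by gcongr
        _ = _ := by ring
    have e3 : ((D.Jc (n + 1) x)⁻¹ - (D.Jc (n + 1) x')⁻¹) * (D.Jc m (D.T^[n + 1] x))⁻¹ =
        ((D.Jc n x)⁻¹ - (D.Jc n x')⁻¹) * (D.Jc (m + 1) (D.T^[n] x))⁻¹ +
        (D.Jc n x')⁻¹ * ((D.dT (D.T^[n] x))⁻¹ - (D.dT (D.T^[n] x'))⁻¹) *
          (D.Jc m (D.T^[n + 1] x))⁻¹ := by
      rw [e1, e2, e2, mul_inv, mul_inv, mul_inv]; ring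
    rw [e3]
    refine (abs_add_le _ _).trans ?_
    have b4 : |(D.Jc n x')⁻¹ * ((D.dT (D.T^[n] x))⁻¹ - (D.dT (D.T^[n] x'))⁻¹) *
          (D.Jc m (D.T^[n + 1] x))⁻¹| ≤ D.c⁻¹ ^ 4 * D.lam⁻¹ ^ (n + 1 + m) * θ := by
      rw [abs_mul, abs_mul]
      calc _ ≤ (D.c⁻¹ * D.lam⁻¹ ^ n) * (D.c⁻¹ ^ 2 * D.lam⁻¹ * θ) * (D.c⁻¹ * D.lam⁻¹ ^ m) := by
            gcongr
        _ = _ := by rw [pow_add, pow_add]; ring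
    have e5 : n + (m + 1) = n + 1 + m := by omega
    rw [e5] at ih'
    push_cast
    linarith

theorem summable_lin : Summable fun j : ℕ => ((j + 1 : ℕ) : ℝ) * (D.c⁻¹ ^ 4 * D.lam⁻¹ ^ (j + 1)) := by
  have h := summable_pow_mul_geometric_of_norm_lt_one 1 (r := D.lam⁻¹)
    (by rw [Real.norm_of_nonneg D.inv_lam_pos.le]; exact D.inv_lam_lt)
  have h2 := (summable_nat_add_iff 1).2 (h.mul_left (D.c⁻¹ ^ 4))
  refine h2.congr fun j => ?_
  simp only [pow_one]; push_cast; ring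

/-- The total distortion constant in the comparison of `Winf` along two nearby backward orbits. -/
def C3 : ℝ := ∑' j : ℕ, ((j + 1 : ℕ) : ℝ) * (D.c⁻¹ ^ 4 * D.lam⁻¹ ^ (j + 1))

theorem C3_nonneg : 0 ≤ D.C3 := tsum_nonneg fun j => by
  have := D.inv_lam_pos; have := inv_pos.2 D.c_pos; positivity

/-- Slopes along two backward orbits that stay close for `n` steps differ by the oscillation `θ` of
the derivatives plus an exponentially small tail. -/
theorem Winf_sub_le {φ' : Circle1 → ℝ} {M θ : ℝ} (hM0 : 0 ≤ M) (hθ : 0 ≤ θ)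
    (hM : ∀ z, |φ' z| ≤ M) (n : ℕ) {y y' : ℕ → Circle1} (hy : D.Back y) (hy' : D.Back y')
    (h1 : ∀ i ≤ n, |D.dT (y i) - D.dT (y' i)| ≤ θ)
    (h2 : ∀ i ≤ n, |φ' (y i) - φ' (y' i)| ≤ θ) :
    |D.Winf φ' y - D.Winf φ' y'| ≤ (D.C2 + M * D.C3) * θ + 2 * (M * D.C2 * D.lam⁻¹ ^ (n + 1)) := by
  have a1 := D.Winf_sub_partial hM n y
  have a2 := D.Winf_sub_partial hM n y'
  have hp : 0 < D.c⁻¹ := inv_pos.2 D.c_pos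
  have hl := D.inv_lam_pos
  have key : |∑ j ∈ Finset.range n, D.term φ' j (y (j + 1)) -
      ∑ j ∈ Finset.range n, D.term φ' j (y' (j + 1))| ≤ (D.C2 + M * D.C3) * θ := by
    rw [← Finset.sum_sub_distrib]
    have b : ∀ j ∈ Finset.range n, |D.term φ' j (y (j + 1)) - D.term φ' j (y' (j + 1))| ≤
        θ * (D.c⁻¹ * D.lam⁻¹ ^ (j + 1)) +
          M * θ * (((j + 1 : ℕ) : ℝ) * (D.c⁻¹ ^ 4 * D.lam⁻¹ ^ (j + 1))) := by
      intro j hj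
      rw [Finset.mem_range] at hj
      have hit : ∀ (z : ℕ → Circle1), D.Back z → ∀ i < j + 1, D.T^[i] (z (j + 1)) = z (j + 1 - i) := by
        intro z hz i hi
        have := hz.iter i (j + 1 - i)
        rwa [Nat.sub_add_cancel hi.le] at this
      have d := D.inv_Jc_sub_le hθ (x := y (j + 1)) (x' := y' (j + 1)) (j + 1)
        (fun i hi => by rw [hit y hy i hi, hit y' hy' i hi]; exact h1 _ (by omega)) 0
      have e0 : ∀ z, D.Jc 0 z = 1 := fun z => by simp [Jc, J]
      rw [e0, inv_one, mul_one, add_zero] at d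
      have e : D.term φ' j (y (j + 1)) - D.term φ' j (y' (j + 1)) =
          (φ' (y (j + 1)) - φ' (y' (j + 1))) * (D.Jc (j + 1) (y (j + 1)))⁻¹ +
          φ' (y' (j + 1)) * ((D.Jc (j + 1) (y (j + 1)))⁻¹ - (D.Jc (j + 1) (y' (j + 1)))⁻¹) := by
        unfold term; ring
      rw [e]
      refine (abs_add_le _ _).trans ?_
      rw [abs_mul, abs_mul]
      have c1 := h2 (j + 1) (by omega)
      have c2 := D.inv_Jc_le (j + 1) (y (j + 1))
      have c3 := hM (y' (j + 1))
      refine add_le_add (by gcongr) ?_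
      calc _ ≤ M * (((j + 1 : ℕ) : ℝ) * (D.c⁻¹ ^ 4 * D.lam⁻¹ ^ (j + 1) * θ)) := by gcongr
        _ = _ := by ring
    refine (Finset.abs_sum_le_sum_abs _ _).trans ((Finset.sum_le_sum b).trans ?_)
    rw [Finset.sum_add_distrib]
    have s1 : ∑ j ∈ Finset.range n, (D.c⁻¹ * D.lam⁻¹ ^ (j + 1)) ≤ D.C2 := by
      have t := D.tsum_bound_tail 1 0
      have sb := D.summable_bound 1
      simp only [add_zero, one_mul, zero_add, pow_one] at t sb
      refine (sb.sum_le_tsum (Finset.range n) fun j _ => by positivity).trans ?_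
      rw [t]
      have := D.C2_pos; have := D.inv_lam_lt
      nlinarith
    have s2 : ∑ j ∈ Finset.range n, (((j + 1 : ℕ) : ℝ) * (D.c⁻¹ ^ 4 * D.lam⁻¹ ^ (j + 1))) ≤ D.C3 :=
      D.summable_lin.sum_le_tsum (Finset.range n) fun j _ => by positivity
    have s3 := mul_le_mul_of_nonneg_left s1 hθ
    have s4 := mul_le_mul_of_nonneg_left s2 (mul_nonneg hM0 hθ)
    rw [Finset.mul_sum] at s3 s4
    linarith
  rw [abs_le] at a1 a2 key ⊢
  constructor <;> linarith [a1.1, a1.2, a2.1, a2.2, key.1, key.2]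

/-- An invariant set of zero entropy has an open neighbourhood with subexponentially many labels. -/
theorem exists_open_lab {M : Set Circle1} (hM : ∀ x ∈ M, D.T x ∈ M) (hne : M.Nonempty) {κ : ℝ}
    (hκ : 0 < κ) (h0 : D.ent M = 0) : ∃ m ≥ 1, ∃ K : ℕ, ∃ U : Set Circle1, IsOpen U ∧ M ⊆ U ∧
      D.Lab U m K ∧ (K : ℝ) ≤ Real.exp (m * κ) := by
  obtain ⟨n0, hn0⟩ := D.cnt_le_exp hM hne (κ := κ / 2) (by rw [h0]; linarith)
  have hr : 0 < D.r0 / 4 := by have := D.r0_pos; linarith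
  obtain ⟨a, ha⟩ : ∃ a : ℕ, D.c⁻¹ * D.lam⁻¹ ^ a ≤ D.r0 / 4 := by
    have : Tendsto (fun a : ℕ => D.c⁻¹ * D.lam⁻¹ ^ a) atTop (𝓝 (D.c⁻¹ * 0)) :=
      (tendsto_pow_atTop_nhds_zero_of_lt_one D.inv_lam_pos.le D.inv_lam_lt).const_mul _
    rw [mul_zero] at this
    exact (this.eventually (ge_mem_nhds hr)).exists
  set m := n0 + a + 1 with hm
  obtain ⟨l, hl⟩ := D.exists_labF M (m + a) hne
  classical
  -- representative of each label
  let e : Fin (D.cnt M (m + a)) → Circle1 := fun i =>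
    if h : ∃ x ∈ M, l x = i then h.choose else hne.some
  have he : ∀ x ∈ M, e (l x) ∈ M ∧ l (e (l x)) = l x := by
    intro x hx
    have h : ∃ z ∈ M, l z = l x := ⟨x, hx, rfl⟩
    simp only [e, dif_pos h]
    exact h.choose_spec
  let U : Fin (D.cnt M (m + a)) → Set Circle1 := fun i =>
    {x | ∀ j ∈ Finset.range m, dist (D.T^[j] x) (D.T^[j] (e i)) < D.r0 / 2}
  have hU : ∀ i, IsOpen (U i) := fun i => by
    have : U i = ⋂ j ∈ Finset.range m, {x | dist (D.T^[j] x) (D.T^[j] (e i)) < D.r0 / 2} := by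
      ext x; simp [U]
    rw [this]
    exact isOpen_biInter_finset fun j _ =>
      isOpen_lt ((D.Titer_cont j).dist continuous_const) continuous_const
  have hUM : M ⊆ ⋃ i, U i := by
    intro x hx
    refine mem_iUnion.2 ⟨l x, ?_⟩
    have hc := hl x hx _ (he x hx).1 (he x hx).2.symm
    intro j hj
    rw [Finset.mem_range] at hj
    have hc2 : D.Close (m + a - j) (D.T^[j] x) (D.T^[j] (e (l x))) := by
      intro i hi
      rw [← Function.iterate_add_apply, ← Function.iterate_add_apply]
      exact hc _ (by omega)
    have := D.dist_le_of_close' hc2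
    have h3 : D.lam⁻¹ ^ (m + a - j) ≤ D.lam⁻¹ ^ a :=
      pow_le_pow_of_le_one D.inv_lam_pos.le D.inv_lam_lt.le (by omega)
    have h4 : D.c⁻¹ * D.lam⁻¹ ^ (m + a - j) ≤ D.c⁻¹ * D.lam⁻¹ ^ a :=
      mul_le_mul_of_nonneg_left h3 (inv_pos.2 D.c_pos).le
    linarith
  refine ⟨m, by omega, D.cnt M (m + a), ⋃ i, U i, isOpen_iUnion hU, hUM, ?_, ?_⟩
  · have hch : ∀ x : Circle1, ∃ i, x ∈ ⋃ i, U i → x ∈ U i := fun x => by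
      by_cases hx : x ∈ ⋃ i, U i
      · obtain ⟨i, hi⟩ := mem_iUnion.1 hx
        exact ⟨i, fun _ => hi⟩
      · exact ⟨⟨0, D.cnt_pos hne _⟩, fun h => absurd h hx⟩
    choose k hk using hch
    have := D.lab_of_fintype (S := ⋃ i, U i) (n := m) k (fun x hx y hy hxy => by
      intro j hj
      have h1 := hk x hx j (Finset.mem_range.2 hj)
      have h2 := hk y hy j (Finset.mem_range.2 hj)
      rw [hxy] at h1
      have := dist_triangle_right (D.T^[j] x) (D.T^[j] y) (D.T^[j] (e (k y)))
      linarith)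
    simpa using this
  · refine (hn0 (m + a) (by omega)).trans (Real.exp_le_exp.2 ?_)
    have : ((m + a : ℕ) : ℝ) ≤ 2 * m := by exact_mod_cast (by omega : m + a ≤ 2 * m)
    nlinarith

theorem lab_iterate {U : Set Circle1} {m K : ℕ} (h : D.Lab U m K) (R : ℕ) :
    D.Lab {x | ∀ i, D.T^[i] x ∈ U} (m * R) (K ^ R) := by
  obtain ⟨l, hl, hc⟩ := h
  have := D.lab_of_finset (S := {x | ∀ i, D.T^[i] x ∈ U}) (n := m * R)
    (fun x (j : Fin R) => l (D.T^[m * j] x)) (Fintype.piFinset fun _ => Finset.range K)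
    (fun x hx => by
      rw [Fintype.mem_piFinset]
      intro j
      exact Finset.mem_range.2 (hl _ (hx _)))
    (fun x hx y hy hxy => by
      intro i hi
      have hm : 0 < m := Nat.pos_of_ne_zero fun h => by simp [h] at hi
      have hj : i / m < R := Nat.div_lt_of_lt_mul hi
      have h1 := congrFun hxy ⟨i / m, hj⟩
      have h2 := hc _ (hx _) _ (hy _) h1 (i % m) (Nat.mod_lt _ hm)
      rw [← Function.iterate_add_apply, ← Function.iterate_add_apply] at h2
      simp only [Nat.mod_add_div] at h2
      exact h2)
  simpa using this

end ExpData
end EC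

/-! ### Almost sure absence of collisions -/

namespace EC
namespace Pert
variable (P : Pert) (D : ExpData)

/-- Two backward orbits in `A` which split at the first step and have equal slopes for `ψ`. -/
def _root_.EC.ExpData.Collide (A : Set Circle1) (ψ : Circle1 → ℝ) (y y' : ℕ → Circle1) : Prop :=
  D.Back y ∧ D.Back y' ∧ y 0 = y' 0 ∧ y 1 ≠ y' 1 ∧
    (∀ n i, D.T^[i] (y n) ∈ A) ∧ (∀ n i, D.T^[i] (y' n) ∈ A) ∧ D.Winf ψ y = D.Winf ψ y'

theorem g'_cont (ω : Om) : Continuous (P.g' ω) := (P.g'_lip ω).continuous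

theorem φ'_cont (k : ℕ) : Continuous (P.φ' k) := (P.lip' k).continuous

theorem Winf_cont_om (y : ℕ → Circle1) : Continuous fun ω => D.Winf (P.g' ω) y := by
  refine cont_of_dd (C := D.C2) fun ω ω' => ?_
  have e : P.g' ω = fun z => P.g' ω' z + (P.g' ω z - P.g' ω' z) := by funext z; ring
  have e2 : D.Winf (P.g' ω) y = D.Winf (P.g' ω') y + D.Winf (fun z => P.g' ω z - P.g' ω' z) y := by
    conv_lhs => rw [e]
    exact D.Winf_sub_add (P.g'_cont ω') ((P.g'_cont ω).sub (P.g'_cont ω')) y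
  have := D.Winf_le (φ' := fun z => P.g' ω z - P.g' ω' z) (M := dd ω ω')
    (fun z => P.g'_sub_le ω ω' z) y
  rw [e2, add_sub_cancel_left, mul_comm]
  exact this

theorem Winf_upd (ω : Om) (k : ℕ) (s : unitInterval) (y : ℕ → Circle1) :
    D.Winf (P.g' (Function.update ω k s)) y =
      D.Winf (P.g' ω) y + (s - ω k : ℝ) * D.Winf (P.φ' k) y := by
  rw [P.g'_upd, D.Winf_sub_add (P.g'_cont ω) ((P.φ'_cont k).const_mul _), D.Winf_smul]

/-- A coincidence of slopes up to `η` along two fixed transverse backward orbits is improbable. -/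
theorem Pr_strip {y y' : ℕ → Circle1} {k : ℕ} {c η : ℝ} (hc : 0 < c)
    (h : c ≤ |D.Winf (P.φ' k) y - D.Winf (P.φ' k) y'|) :
    Pr {ω | |D.Winf (P.g' ω) y - D.Winf (P.g' ω) y'| ≤ η} ≤ ENNReal.ofReal (4 * η / c) := by
  refine Pr_le_of_sections ?_ k fun ω => ?_
  · exact (isClosed_le ((P.Winf_cont_om D y).sub (P.Winf_cont_om D y')).abs
      continuous_const).measurableSet
  · refine volume_le_of_strip (g := fun s => D.Winf (P.g' (Function.update ω k s)) y -
      D.Winf (P.g' (Function.update ω k s)) y') hc h fun s t => ?_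
    simp only [Winf_upd]
    ring

/-- Union bound: up to an error controlled by `θ`, slopes depend only on labels of length `mR`, of
which there are `K^R`, and each pair of labels contributes a strip in parameter space. -/
theorem collide_bound {U : Set Circle1} {m K : ℕ} (hlab : D.Lab U m K) {R n : ℕ}
    (hR : 2 * n ≤ m * R) {θ : ℝ} (hθ : 0 ≤ θ)
    (hosc : ∀ x y : Circle1, dist x y ≤ D.c⁻¹ * D.lam⁻¹ ^ n → |D.dT x - D.dT y| ≤ θ)
    (hθ2 : P.L * (D.c⁻¹ * D.lam⁻¹ ^ n) ≤ θ) {N : ℕ} {c : ℝ} (hc : 0 < c)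
    (htr : ∀ y y' : ℕ → Circle1, D.Back y → D.Back y' → y 0 = y' 0 → y 1 ≠ y' 1 →
      ∃ k < N, c ≤ |D.Winf (P.φ' k) y - D.Winf (P.φ' k) y'|) :
    Pr {ω | ∃ y y', D.Collide U (P.g' ω) y y'} ≤
      (K ^ R * K ^ R : ℕ) * ENNReal.ofReal (4 * (2 * ((D.C2 + P.L * D.C3) * θ +
        2 * (P.L * D.C2 * D.lam⁻¹ ^ (n + 1)))) / c) := by
  obtain ⟨l, hl, hcl⟩ := D.lab_iterate hlab R
  set acc := (D.C2 + P.L * D.C3) * θ + 2 * (P.L * D.C2 * D.lam⁻¹ ^ (n + 1)) with hacc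
  have hsub : {ω | ∃ y y', D.Collide U (P.g' ω) y y'} ⊆
      ⋃ p ∈ Finset.range (K ^ R) ×ˢ Finset.range (K ^ R), {ω | ∃ y y', D.Collide U (P.g' ω) y y' ∧
        l (y n) = p.1 ∧ l (y' n) = p.2} := by
    rintro ω ⟨y, y', h⟩
    simp only [mem_iUnion]
    exact ⟨(l (y n), l (y' n)), Finset.mem_product.2 ⟨Finset.mem_range.2 (hl _ (h.2.2.2.2.1 n)),
      Finset.mem_range.2 (hl _ (h.2.2.2.2.2.1 n))⟩, y, y', h, rfl, rfl⟩
  refine (measure_mono hsub).trans ((measure_biUnion_finset_le _ _).trans ?_)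
  have hb : ∀ p ∈ Finset.range (K ^ R) ×ˢ Finset.range (K ^ R),
      Pr {ω | ∃ y y', D.Collide U (P.g' ω) y y' ∧ l (y n) = p.1 ∧ l (y' n) = p.2} ≤
      ENNReal.ofReal (4 * (2 * acc) / c) := by
    intro p _
    rcases eq_empty_or_nonempty {ω | ∃ y y', D.Collide U (P.g' ω) y y' ∧ l (y n) = p.1 ∧
      l (y' n) = p.2} with he | ⟨ω0, z, z', ⟨hz, hz', h0, h1, hzU, hzU', -⟩, hlz, hlz'⟩
    · rw [he]; simp
    obtain ⟨k, -, hk⟩ := htr z z' hz hz' h0 h1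
    refine (measure_mono ?_).trans (P.Pr_strip D hc hk)
    rintro ω ⟨y, y', ⟨hy, hy', -, -, hyU, hyU', he⟩, hly, hly'⟩
    have cmp : ∀ y z : ℕ → Circle1, D.Back y → D.Back z → (∀ n i, D.T^[i] (y n) ∈ U) →
        (∀ n i, D.T^[i] (z n) ∈ U) → l (y n) = l (z n) →
        |D.Winf (P.g' ω) y - D.Winf (P.g' ω) z| ≤ acc := by
      intro y z hy hz hyU hzU hl
      have hcz := hcl _ (hyU n) _ (hzU n) hl
      have hd : ∀ i ≤ n, dist (y i) (z i) ≤ D.c⁻¹ * D.lam⁻¹ ^ n := by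
        intro i hi
        have e : ∀ w : ℕ → Circle1, D.Back w → D.T^[n - i] (w n) = w i := fun w hw => by
          have := hw.iter (n - i) i
          rwa [Nat.add_sub_cancel' hi] at this
        have hc2 : D.Close n (y i) (z i) := by
          intro j hj
          rw [← e y hy, ← e z hz, ← Function.iterate_add_apply, ← Function.iterate_add_apply]
          exact hcz _ (by omega)
        exact D.dist_le_of_close' hc2
      refine D.Winf_sub_le P.L_nonneg hθ (P.g'_le ω) n hy hz (fun i hi => hosc _ _ (hd i hi))
        fun i hi => (P.g'_lip ω _ _).trans (le_trans ?_ hθ2)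
      exact mul_le_mul_of_nonneg_left (hd i hi) P.L_nonneg
    have c1 := cmp y z hy hz hyU hzU (hly.trans hlz.symm)
    have c2 := cmp y' z' hy' hz' hyU' hzU' (hly'.trans hlz'.symm)
    rw [mem_ofPred_eq]
    rw [abs_le] at c1 c2 ⊢
    constructor <;> linarith [c1.1, c1.2, c2.1, c2.2]
  refine (Finset.sum_le_sum hb).trans ?_
  simp [Finset.sum_const, Finset.card_product, nsmul_eq_mul]

/-- At the scales of `HoldScales` the oscillation `√ρ` beats the number of pairs of labels, so that
the union bound tends to `0`. -/
theorem collide_null (hD : D.HoldScales) {U : Set Circle1} {m K : ℕ} (hm : 1 ≤ m)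
    (hlab : D.Lab U m K) {κ : ℝ} (hκ : Real.exp κ ^ 16 = D.lam) (hK : (K : ℝ) ≤ Real.exp (m * κ)) :
    Pr {ω | ∃ y y', D.Collide U (P.g' ω) y y'} = 0 := by
  obtain ⟨N, c, hc, htr⟩ := D.trans_unif_inf P.rich' P.φ'_cont
  set u := Real.exp κ with hu
  have hu0 : 0 < u := Real.exp_pos _
  have hu1 : 1 < u := by
    by_contra h
    have : u ^ 16 ≤ 1 := pow_le_one₀ hu0.le (not_lt.1 h)
    have := D.lam_gt
    linarith
  have hcp := D.c_pos
  have hci : 0 < D.c⁻¹ := inv_pos.2 hcp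
  -- the bound at a scale `n`
  set A := Real.sqrt (D.lam * D.c⁻¹) + P.L * D.c⁻¹ with hA
  have hA0 : 0 ≤ A := add_nonneg (Real.sqrt_nonneg _) (mul_nonneg P.L_nonneg hci.le)
  set B := 4 * (2 * ((D.C2 + P.L * D.C3) * A + 2 * (P.L * D.C2))) / c with hB
  have hC2 := D.C2_pos
  have hC3 := D.C3_nonneg
  have hL := P.L_nonneg
  have hB0 : 0 ≤ B := by positivity
  have hscale : ∀ n0 : ℕ, ∃ n ≥ n0, Pr {ω | ∃ y y', D.Collide U (P.g' ω) y y'} ≤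
      ENNReal.ofReal (u ^ (2 * m) * B * (u⁻¹) ^ (4 * n)) := by
    intro n0
    obtain ⟨ρ, hρ, hρ0, hosc⟩ := hD (D.c⁻¹ * D.lam⁻¹ ^ n0)
      (mul_pos hci (pow_pos D.inv_lam_pos _))
    have hex : ∃ n : ℕ, D.c⁻¹ * D.lam⁻¹ ^ n ≤ ρ := by
      have : Tendsto (fun a : ℕ => D.c⁻¹ * D.lam⁻¹ ^ a) atTop (𝓝 (D.c⁻¹ * 0)) :=
        (tendsto_pow_atTop_nhds_zero_of_lt_one D.inv_lam_pos.le D.inv_lam_lt).const_mul _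
      rw [mul_zero] at this
      exact (this.eventually (ge_mem_nhds hρ)).exists
    classical
    obtain ⟨n, hn, hmin⟩ : ∃ n, D.c⁻¹ * D.lam⁻¹ ^ n ≤ ρ ∧ ∀ k < n, ρ < D.c⁻¹ * D.lam⁻¹ ^ k :=
      ⟨Nat.find hex, Nat.find_spec hex, fun k hk => not_le.1 (Nat.find_min hex hk)⟩
    have hnn : n0 < n := by
      by_contra h
      have : D.lam⁻¹ ^ n0 ≤ D.lam⁻¹ ^ n :=
        pow_le_pow_of_le_one D.inv_lam_pos.le D.inv_lam_lt.le (not_lt.1 h)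
      have := mul_le_mul_of_nonneg_left this hci.le
      linarith
    refine ⟨n, hnn.le, ?_⟩
    have hlu : D.lam⁻¹ = (u⁻¹) ^ 16 := by rw [inv_pow, hκ]
    have hui : 0 < u⁻¹ := inv_pos.2 hu0
    have hui1 : u⁻¹ ≤ 1 := inv_le_one_of_one_le₀ hu1.le
    have hρle : ρ ≤ D.lam * D.c⁻¹ * ((u⁻¹) ^ (8 * n)) ^ 2 := by
      have := (hmin (n - 1) (by omega)).le
      have e : D.c⁻¹ * D.lam⁻¹ ^ (n - 1) = D.lam * D.c⁻¹ * D.lam⁻¹ ^ n := by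
        obtain ⟨k, rfl⟩ : ∃ k, n = k + 1 := ⟨n - 1, by omega⟩
        rw [Nat.add_sub_cancel, pow_succ]
        have := D.lam_pos.ne'
        field_simp
      rw [e] at this
      refine this.trans (le_of_eq ?_)
      rw [hlu, ← pow_mul, ← pow_mul]; congr 2; ring
    have hsq : Real.sqrt ρ ≤ Real.sqrt (D.lam * D.c⁻¹) * (u⁻¹) ^ (8 * n) := by
      refine (Real.sqrt_le_sqrt hρle).trans (le_of_eq ?_)
      rw [Real.sqrt_mul (mul_nonneg D.lam_pos.le hci.le), Real.sqrt_sq (by positivity)]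
    have hl8 : D.lam⁻¹ ^ n ≤ (u⁻¹) ^ (8 * n) := by
      rw [hlu, ← pow_mul]; exact pow_le_pow_of_le_one hui.le hui1 (by omega)
    set θ := A * (u⁻¹) ^ (8 * n) with hθ
    have hθ0 : 0 ≤ θ := by positivity
    -- number of blocks
    set R := 2 * n / m + 1 with hR
    have hR1 : 2 * n ≤ m * R := by
      have := Nat.lt_mul_div_succ (2 * n) (show 0 < m by omega)
      rw [hR]; exact this.le
    have hR2 : m * R ≤ 2 * n + m := by
      rw [hR, mul_add, mul_one]
      have := Nat.mul_div_le (2 * n) m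
      omega
    have hb := P.collide_bound D hlab hR1 hθ0
      (fun x y hxy => (D.dT_sub_le hosc (hxy.trans hn)).trans (by
        rw [hθ, hA, add_mul]
        have : 0 ≤ P.L * D.c⁻¹ * u⁻¹ ^ (8 * n) := by positivity
        linarith))
      (by
        rw [hθ, hA, add_mul]
        have h1 := mul_le_mul_of_nonneg_left hl8 (mul_nonneg hL hci.le)
        have h2 : 0 ≤ Real.sqrt (D.lam * D.c⁻¹) * u⁻¹ ^ (8 * n) := by positivity
        rw [← mul_assoc]; linarith) hc htr
    refine hb.trans ?_
    rw [← ENNReal.ofReal_natCast, ← ENNReal.ofReal_mul (Nat.cast_nonneg _)]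
    refine ENNReal.ofReal_le_ofReal ?_
    have hKR : (K : ℝ) ^ R ≤ u ^ (2 * n + m) := by
      calc (K : ℝ) ^ R ≤ (Real.exp (m * κ)) ^ R := pow_le_pow_left₀ (Nat.cast_nonneg _) hK R
        _ = u ^ (m * R) := by rw [hu, Real.exp_nat_mul, ← pow_mul]
        _ ≤ u ^ (2 * n + m) := pow_le_pow_right₀ hu1.le hR2
    have hKK : ((K ^ R * K ^ R : ℕ) : ℝ) ≤ u ^ (2 * m) * u ^ (4 * n) := by
      push_cast
      calc (K : ℝ) ^ R * (K : ℝ) ^ R ≤ u ^ (2 * n + m) * u ^ (2 * n + m) := by gcongr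
        _ = _ := by rw [← pow_add, ← pow_add]; congr 1; ring
    have hin : 4 * (2 * ((D.C2 + P.L * D.C3) * θ + 2 * (P.L * D.C2 * D.lam⁻¹ ^ (n + 1)))) / c ≤
        B * (u⁻¹) ^ (8 * n) := by
      have h3 : D.lam⁻¹ ^ (n + 1) ≤ (u⁻¹) ^ (8 * n) :=
        (pow_le_pow_of_le_one D.inv_lam_pos.le D.inv_lam_lt.le (by omega)).trans hl8
      calc _ ≤ 4 * (2 * ((D.C2 + P.L * D.C3) * θ + 2 * (P.L * D.C2 * (u⁻¹) ^ (8 * n)))) / c := by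
            gcongr
        _ = _ := by rw [hθ, hB]; ring
    calc _ ≤ (u ^ (2 * m) * u ^ (4 * n)) * (B * (u⁻¹) ^ (8 * n)) := by
          refine mul_le_mul hKK hin ?_ (by positivity)
          have := D.inv_lam_pos
          positivity
      _ = u ^ (2 * m) * B * (u⁻¹) ^ (4 * n) * (u ^ (4 * n) * (u⁻¹) ^ (4 * n)) := by
          rw [show 8 * n = 4 * n + 4 * n by ring, pow_add]; ring
      _ = _ := by rw [← mul_pow, mul_inv_cancel₀ hu0.ne', one_pow, mul_one]
  have hlim : Tendsto (fun n : ℕ => ENNReal.ofReal (u ^ (2 * m) * B * (u⁻¹) ^ (4 * n))) atTop (𝓝 0) := by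
    have h1 : Tendsto (fun n : ℕ => (u⁻¹ ^ 4) ^ n) atTop (𝓝 0) :=
      tendsto_pow_atTop_nhds_zero_of_lt_one (by positivity)
        (pow_lt_one₀ (by positivity) (inv_lt_one_of_one_lt₀ hu1) (by norm_num))
    have h2 := ENNReal.tendsto_ofReal (h1.const_mul (u ^ (2 * m) * B))
    simp only [mul_zero, ENNReal.ofReal_zero, ← pow_mul] at h2
    exact h2
  refine le_antisymm ?_ bot_le
  refine le_of_forall_gt fun ε hε => ?_
  obtain ⟨n0, hn0⟩ := eventually_atTop.1 (hlim.eventually (gt_mem_nhds hε))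
  obtain ⟨n, hn, hle⟩ := hscale n0
  exact hle.trans_lt (hn0 n hn)

/-- Points all of whose forward orbit segments have nearly maximal Birkhoff sums. -/
def Mset (ω : Om) : Set Circle1 := {x | ∀ k n : ℕ,
  n * beta (P.g ω) D.T - D.C1 * P.L ≤ birkhoffSum D.T (P.g ω) n (D.T^[k] x)}

theorem g_joint : Continuous fun p : Om × Circle1 => P.g p.1 p.2 := by
  rw [continuous_iff_continuousAt]
  rintro ⟨ω, x⟩
  rw [ContinuousAt, tendsto_iff_dist_tendsto_zero]
  have h : ∀ p : Om × Circle1, dist (P.g p.1 p.2) (P.g ω x) ≤ dd p.1 ω + dist (P.g ω p.2) (P.g ω x) :=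
    fun p => (dist_triangle _ (P.g ω p.2) _).trans (add_le_add_left (P.g_sub_le p.1 ω p.2) _)
  refine squeeze_zero (fun _ => dist_nonneg) h ?_
  have hc : Continuous fun p : Om × Circle1 => dd p.1 ω + dist (P.g ω p.2) (P.g ω x) :=
    (dd_cont.comp (continuous_fst.prodMk continuous_const)).add
      (((P.g_cont ω).comp continuous_snd).dist continuous_const)
  have := hc.tendsto (ω, x)
  simpa [dd_self] using this

theorem Mset_closed : IsClosed {p : Om × Circle1 | p.2 ∈ P.Mset D p.1} := by
  have : {p : Om × Circle1 | p.2 ∈ P.Mset D p.1} = ⋂ k : ℕ, ⋂ n : ℕ, {p : Om × Circle1 |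
      n * beta (P.g p.1) D.T - D.C1 * P.L ≤ birkhoffSum D.T (P.g p.1) n (D.T^[k] p.2)} := by
    ext p; simp [Mset]
  rw [this]
  refine isClosed_iInter fun k => isClosed_iInter fun n => isClosed_le ?_ ?_
  · exact (((P.beta_cont0 D).comp continuous_fst).const_mul _).sub continuous_const
  · simp only [birkhoffSum]
    refine continuous_finsetSum _ fun i _ => ?_
    exact P.g_joint.comp (continuous_fst.prodMk
      ((D.Titer_cont i).comp ((D.Titer_cont k).comp continuous_snd)))

theorem Mset_usc {U : Set Circle1} (hU : IsOpen U) {ω0 : Om} (h : P.Mset D ω0 ⊆ U) :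
    ∀ᶠ ω in 𝓝 ω0, P.Mset D ω ⊆ U := by
  have hc : IsClosed (Prod.fst '' ({p : Om × Circle1 | p.2 ∈ P.Mset D p.1} ∩ {p | p.2 ∈ Uᶜ})) :=
    isClosedMap_fst_of_compactSpace _
      ((P.Mset_closed D).inter (hU.isClosed_compl.preimage continuous_snd))
  have hn : ω0 ∉ Prod.fst '' ({p : Om × Circle1 | p.2 ∈ P.Mset D p.1} ∩ {p | p.2 ∈ Uᶜ}) := by
    rintro ⟨⟨ω, x⟩, ⟨h1, h2⟩, rfl⟩
    exact h2 (h h1)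
  filter_upwards [hc.isOpen_compl.mem_nhds hn] with ω hω x hx
  by_contra hxU
  exact hω ⟨(ω, x), ⟨hx, hxU⟩, rfl⟩

theorem Mset_inv (ω : Om) (x : Circle1) (hx : x ∈ P.Mset D ω) : D.T x ∈ P.Mset D ω := by
  intro k n
  have := hx (k + 1) n
  rwa [Function.iterate_succ_apply] at this

/-- Almost surely no two splitting backward orbits in `Mset` have the same slope. -/
theorem no_collide_ae (hD : D.HoldScales) :
    ∀ᵐ ω ∂Pr, ∀ y y', ¬ D.Collide (P.Mset D ω) (P.g' ω) y y' := by
  have hq := P.quad_ae D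
  have key : Pr ({ω | ∃ y y', D.Collide (P.Mset D ω) (P.g' ω) y y'} ∩
      {ω | ∀ k, D.Quad (P.g ω) (P.φ k)}) = 0 := by
    refine measure_null_of_locally_null _ fun ω0 hω0 => ?_
    obtain ⟨⟨y, y', hcol⟩, hquad⟩ := hω0
    have hne : (P.Mset D ω0).Nonempty := ⟨_, hcol.2.2.2.2.1 0 0⟩
    have hent : D.ent (P.Mset D ω0) = 0 :=
      D.zero_entropy P.L_nonneg (P.lip ω0) P.hD P.rich' (L' := fun k => (1 / 2) ^ k)
        (fun k => by positivity) P.φ_lip hquad (C0 := D.C1 * P.L) (P.Mset_inv D ω0) hne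
        (fun x hx n => hx 0 n)
    have hκ : 0 < Real.log D.lam / 16 := div_pos (Real.log_pos D.lam_gt) (by norm_num)
    obtain ⟨m, hm, K, U, hU, hMU, hlab, hK⟩ := D.exists_open_lab (P.Mset_inv D ω0) hne hκ hent
    have hnull := P.collide_null D hD hm hlab (κ := Real.log D.lam / 16) (by
      rw [← Real.exp_nat_mul]
      rw [show ((16 : ℕ) : ℝ) * (Real.log D.lam / 16) = Real.log D.lam by push_cast; ring]
      exact Real.exp_log D.lam_pos) hK
    refine ⟨_, ?_, hnull⟩
    refine mem_nhdsWithin.2 ?_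
    obtain ⟨V, hV, hVo, hV0⟩ := mem_nhds_iff.1 (P.Mset_usc D hU hMU)
    refine ⟨V, hVo, hV0, ?_⟩
    rintro ω ⟨hωV, ⟨y, y', h⟩, -⟩
    have hs : P.Mset D ω ⊆ U := hV hωV
    exact ⟨y, y', h.1, h.2.1, h.2.2.1, h.2.2.2.1, fun n i => hs (h.2.2.2.2.1 n i),
      fun n i => hs (h.2.2.2.2.2.1 n i), h.2.2.2.2.2.2⟩
  have h2 : ∀ᵐ ω ∂Pr, ω ∉ ({ω | ∃ y y', D.Collide (P.Mset D ω) (P.g' ω) y y'} ∩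
      {ω | ∀ k, D.Quad (P.g ω) (P.φ k)}) := measure_eq_zero_iff_ae_notMem.1 key
  filter_upwards [hq, h2] with ω h1 h2 y y' h
  exact h2 ⟨⟨y, y', h⟩, h1⟩

end Pert
end EC

/-! ### The support of the maximizing measure -/

namespace EC

/-- The almost sure properties of a random perturbation used below, together with a maximizing
measure `ν` of the perturbed function. -/
structure GoodMax (P : Pert) (D : ExpData) (ω : Om) (ν : Measure Circle1) : Prop where
  quad : ∀ k, D.Quad (P.g ω) (P.φ k)
  noCol : ∀ y y', ¬ D.Collide (P.Mset D ω) (P.g' ω) y y'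
  isMax : IsMaximizing (P.g ω) D.T ν

namespace GoodMax
variable {P : Pert} {D : ExpData} {ω : Om} {ν : Measure Circle1} (h : GoodMax P D ω ν)
include h

theorem prob : IsProbabilityMeasure ν := h.isMax.1.1

theorem map_eq : ν.map D.T = ν := h.isMax.1.2

theorem pre {s : Set Circle1} (hs : MeasurableSet s) : ν (D.T ⁻¹' s) = ν s := by
  conv_rhs => rw [← h.map_eq]
  rw [Measure.map_apply D.T_cont.measurable hs]

theorem K_inv {x : Circle1} (hx : x ∈ ν.support) : D.T x ∈ ν.support := by
  rw [Measure.mem_support_iff_forall] at hx ⊢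
  intro U hU
  obtain ⟨V, hVU, hVo, hxV⟩ := mem_nhds_iff.1 hU
  have h1 := hx (D.T ⁻¹' V) ((hVo.preimage D.T_cont).mem_nhds hxV)
  rw [h.pre hVo.measurableSet] at h1
  exact h1.trans_le (measure_mono hVU)

omit h in
theorem K_closed : IsClosed ν.support := Measure.isClosed_support

theorem K_iter {x : Circle1} (hx : x ∈ ν.support) (n : ℕ) : D.T^[n] x ∈ ν.support :=
  D.iter_mem (fun _ hx => h.K_inv hx) hx n

theorem K_surj {z : Circle1} (hz : z ∈ ν.support) : ∃ y ∈ ν.support, D.T y = z := by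
  have h1 : IsClosed (D.T '' ν.support) := (K_closed.isCompact.image D.T_cont).isClosed
  have h2 : D.T '' ν.support ∈ ae ν := by
    rw [mem_ae_iff, ← h.pre h1.measurableSet.compl]
    refine measure_mono_null ?_ (Measure.measure_compl_support (μ := ν))
    intro x hx hxK
    exact hx ⟨x, hxK, rfl⟩
  exact Measure.support_subset_of_isClosed h1 h2 hz

theorem exists_Back {z : Circle1} (hz : z ∈ ν.support) :
    ∃ y : ℕ → Circle1, D.Back y ∧ y 0 = z ∧ ∀ n, y n ∈ ν.support := by
  choose! s hs1 hs2 using fun z hz => h.K_surj (z := z) hz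
  have key : ∀ n, s^[n] z ∈ ν.support := by
    intro n
    induction n with
    | zero => exact hz
    | succ n ih => rw [Function.iterate_succ_apply']; exact hs1 _ ih
  refine ⟨fun n => s^[n] z, fun j => ?_, rfl, key⟩
  show D.T (s^[j+1] z) = s^[j] z
  rw [Function.iterate_succ_apply']; exact hs2 _ (key j)

theorem R_zero {x : Circle1} (hx : x ∈ ν.support) : D.R (P.g ω) x = 0 :=
  D.R_eq_zero P.L_nonneg (P.lip ω) h.isMax hx

theorem birkhoff_K {x : Circle1} (hx : x ∈ ν.support) (n : ℕ) :
    birkhoffSum D.T (P.g ω) n x =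
      D.sub (P.g ω) (D.T^[n] x) - D.sub (P.g ω) x + n * beta (P.g ω) D.T := by
  have h1 := D.birkhoff_R (f := P.g ω) n x
  have h2 : birkhoffSum D.T (D.R (P.g ω)) n x = 0 :=
    Finset.sum_eq_zero fun k _ => h.R_zero (h.K_iter hx k)
  linarith

theorem birkhoff_ge {x : Circle1} (hx : x ∈ ν.support) (n : ℕ) :
    n * beta (P.g ω) D.T - D.C1 * P.L ≤ birkhoffSum D.T (P.g ω) n x := by
  rw [h.birkhoff_K hx]
  have h1 := D.sub_nonneg' P.L_nonneg (P.lip ω) (D.T^[n] x)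
  have h2 := D.sub_le_C1 P.L_nonneg (P.lip ω) x
  linarith

theorem K_sub {x : Circle1} (hx : x ∈ ν.support) : x ∈ P.Mset D ω :=
  fun k n => h.birkhoff_ge (h.K_iter hx k) n

theorem uniq {μ : Measure Circle1} (hμ : InvProb D.T μ) (hK : μ ν.supportᶜ = 0) : μ = ν := by
  refine P.unique D h.quad (D.isMaximizing_of_R P.L_nonneg (P.lip ω) hμ ?_) h.isMax
  rw [ae_iff]
  refine measure_mono_null ?_ hK
  intro x hx hxK
  exact hx (h.R_zero hxK)

theorem nonempty : ν.support.Nonempty := by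
  have := h.prob
  exact Measure.nonempty_support (IsProbabilityMeasure.ne_zero ν)

theorem ent_zero : D.ent ν.support = 0 :=
  D.zero_entropy P.L_nonneg (P.lip ω) P.hD P.rich' (fun k => by positivity) P.φ_lip h.quad
    (fun _ hx => h.K_inv hx) h.nonempty (C0 := D.C1 * P.L) fun _ hx n => h.birkhoff_ge hx n

theorem cnt_le {κ : ℝ} (hκ : 0 < κ) :
    ∃ n0, ∀ n ≥ n0, (D.cnt ν.support n : ℝ) ≤ Real.exp (n * κ) :=
  D.cnt_le_exp (fun _ hx => h.K_inv hx) h.nonempty (by rw [h.ent_zero]; exact hκ)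

theorem volume_le (n : ℕ) : (volume : Measure Circle1) ν.support ≤
    D.cnt ν.support n * ENNReal.ofReal (2 * (D.c⁻¹ * D.lam⁻¹ ^ n)) := by
  obtain ⟨l, hl⟩ := D.exists_labF ν.support n h.nonempty
  have h1 : ν.support ⊆ ⋃ i : Fin (D.cnt ν.support n), {x | x ∈ ν.support ∧ l x = i} :=
    fun x hx => mem_iUnion.2 ⟨l x, hx, rfl⟩
  refine (measure_mono h1).trans ((measure_iUnion_le _).trans ?_)
  rw [tsum_fintype]
  refine (Finset.sum_le_card_nsmul _ _ (ENNReal.ofReal (2 * (D.c⁻¹ * D.lam⁻¹ ^ n))) ?_).trans ?_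
  · intro i _
    by_cases hne : ∃ x, x ∈ ν.support ∧ l x = i
    · obtain ⟨x, hx, hxi⟩ := hne
      refine (measure_mono (t := Metric.closedBall x (D.c⁻¹ * D.lam⁻¹ ^ n)) ?_).trans ?_
      · rintro y ⟨hy, hyi⟩
        exact D.dist_le_of_close' (hl y hy x hx (hyi.trans hxi.symm))
      · rw [AddCircle.volume_closedBall]
        exact ENNReal.ofReal_le_ofReal (min_le_right _ _)
    · have : {x | x ∈ ν.support ∧ l x = i} = ∅ := by
        ext x; simp only [mem_ofPred_eq, mem_empty_iff_false, iff_false]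
        exact fun hx => hne ⟨x, hx⟩
      rw [this]; simp
  · simp

/-- The support has zero entropy, so it is a null set. -/
theorem volume_K : (volume : Measure Circle1) ν.support = 0 := by
  have hlog : 0 < Real.log D.lam := Real.log_pos D.lam_gt
  obtain ⟨n0, hn0⟩ := h.cnt_le (half_pos hlog)
  set u := Real.exp (Real.log D.lam / 2) with hu
  have hu2 : u * u = D.lam := by
    rw [hu, ← Real.exp_add, add_halves, Real.exp_log D.lam_pos]
  have hu1 : 1 < u := Real.one_lt_exp_iff.2 (half_pos hlog)
  have hup : 0 < u := by linarith
  have key : ∀ n ≥ n0, (volume : Measure Circle1) ν.support ≤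
      ENNReal.ofReal (2 * D.c⁻¹ * u⁻¹ ^ n) := by
    intro n hn
    refine (h.volume_le n).trans ?_
    have h1 : (D.cnt ν.support n : ENNReal) ≤ ENNReal.ofReal (u ^ n) := by
      rw [← ENNReal.ofReal_natCast]
      refine ENNReal.ofReal_le_ofReal ((hn0 n hn).trans_eq ?_)
      rw [hu, ← Real.exp_nat_mul]
    refine (mul_le_mul_left h1 _).trans ?_
    rw [← ENNReal.ofReal_mul (by positivity)]
    refine ENNReal.ofReal_le_ofReal (le_of_eq ?_)
    rw [← hu2, mul_inv, mul_pow]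
    have : u ^ n * u⁻¹ ^ n = 1 := by rw [← mul_pow, mul_inv_cancel₀ hup.ne', one_pow]
    linear_combination (2 * D.c⁻¹ * u⁻¹ ^ n) * this
  have hlim : Tendsto (fun n : ℕ => ENNReal.ofReal (2 * D.c⁻¹ * u⁻¹ ^ n)) atTop (𝓝 0) := by
    have := (tendsto_pow_atTop_nhds_zero_of_lt_one (inv_pos.2 hup).le
      (inv_lt_one_of_one_lt₀ hu1)).const_mul (2 * D.c⁻¹)
    rw [mul_zero] at this
    have h2 := ENNReal.tendsto_ofReal this
    rwa [ENNReal.ofReal_zero] at h2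
  exact le_antisymm (ge_of_tendsto hlim (eventually_atTop.2 ⟨n0, key⟩)) zero_le

/-- The complement of the support is dense. -/
theorem dense_compl : Dense ν.supportᶜ := by
  rw [← interior_eq_empty_iff_dense_compl]
  by_contra hne
  have h1 := isOpen_interior.measure_pos (μ := (volume : Measure Circle1))
    (nonempty_iff_ne_empty.2 hne)
  exact absurd (measure_mono_null interior_subset h.volume_K) h1.ne'

end GoodMax
end EC

/-! ### Recurrence -/

namespace EC

/-- A real number with approximations `m / p`, `p ≤ X`, of quality `|p α - m| ≤ X⁻²` at all large
scales `X` is rational: consecutive approximations coincide. -/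
theorem rat_of_approx {α : ℝ} {X0 : ℕ} (H : ∀ X ≥ X0, ∃ p : ℕ, ∃ m : ℤ, 1 ≤ p ∧ p ≤ X ∧
    |p * α - m| * (X : ℝ) ^ 2 ≤ 1) : ∃ q : ℕ, 1 ≤ q ∧ ∃ m : ℤ, q * α = m := by
  choose! p m h1 h2 h3 using H
  have step : ∀ X ≥ max X0 3, (p X : ℝ) * m (X + 1) = p (X + 1) * m X := by
    intro X hX
    have hX0 : X0 ≤ X := (le_max_left _ _).trans hX
    have hX3 : 3 ≤ X := (le_max_right _ _).trans hX
    have hX3' : (3:ℝ) ≤ X := by exact_mod_cast hX3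
    have a1 := h3 X hX0
    have a2 := h3 (X + 1) (by omega)
    have b1 : (p X : ℝ) ≤ X := by exact_mod_cast h2 X hX0
    have b2 : (p (X + 1) : ℝ) ≤ X + 1 := by exact_mod_cast h2 (X + 1) (by omega)
    push_cast at a2
    set e := (p X : ℝ) * α - m X
    set e' := (p (X + 1) : ℝ) * α - m (X + 1)
    have he : (p X : ℝ) * m (X + 1) - p (X + 1) * m X = p (X + 1) * e - p X * e' := by
      simp only [e, e']; ring
    have c1 : |(p (X + 1) : ℝ) * e| ≤ 4 / 9 := by
      rw [abs_mul, Nat.abs_cast]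
      have : (9:ℝ) * (X + 1) ≤ 4 * X ^ 2 := by nlinarith
      have h0 := abs_nonneg e
      nlinarith [mul_le_mul_of_nonneg_right b2 h0, mul_le_mul_of_nonneg_right this h0]
    have c2 : |(p X : ℝ) * e'| ≤ 1 / 3 := by
      rw [abs_mul, Nat.abs_cast]
      have : (3:ℝ) * X ≤ (X + 1) ^ 2 := by nlinarith
      have h0 := abs_nonneg e'
      nlinarith [mul_le_mul_of_nonneg_right b1 h0, mul_le_mul_of_nonneg_right this h0]
    have c3 : |(p X : ℝ) * m (X + 1) - p (X + 1) * m X| < 1 := by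
      rw [he]; refine (abs_sub _ _).trans_lt ?_; linarith
    have c4 : |(p X : ℤ) * m (X + 1) - p (X + 1) * m X| < 1 := by exact_mod_cast c3
    have c5 := Int.abs_lt_one_iff.1 c4
    have c6 : (p X : ℤ) * m (X + 1) = p (X + 1) * m X := by linarith
    exact_mod_cast c6
  set Y := max X0 3
  have hp : ∀ X ≥ Y, (1:ℝ) ≤ p X := fun X hX => by
    exact_mod_cast h1 X ((le_max_left _ _).trans hX)
  have const : ∀ X ≥ Y, (p Y : ℝ) * m X = p X * m Y := by
    intro X hX
    induction X, hX using Nat.le_induction with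
    | base => rfl
    | succ X hX ih =>
      have s := step X hX
      have := hp X hX
      have hne : (p X : ℝ) ≠ 0 := by linarith
      apply mul_left_cancel₀ hne
      linear_combination (p Y : ℝ) * s + (p (X + 1) : ℝ) * ih
  refine ⟨p Y, h1 Y (le_max_left _ _), m Y, ?_⟩
  have bound : ∀ X ≥ Y, |(p Y : ℝ) * α - m Y| * X ≤ p Y := by
    intro X hX
    have hX3 : 3 ≤ X := (le_max_right X0 3).trans hX
    have hX3' : (3:ℝ) ≤ X := by exact_mod_cast hX3
    have a := h3 X ((le_max_left _ _).trans hX)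
    have e1 : (p X : ℝ) * ((p Y : ℝ) * α - m Y) = p Y * (p X * α - m X) := by
      linear_combination const X hX
    have e2 : (p X : ℝ) * |(p Y : ℝ) * α - m Y| = p Y * |p X * α - m X| := by
      have := congrArg abs e1
      rwa [abs_mul, abs_mul, Nat.abs_cast, Nat.abs_cast] at this
    have hpX := hp X hX
    have hpY := hp Y le_rfl
    have e3 : |(p Y : ℝ) * α - m Y| ≤ p Y * |p X * α - m X| := by
      rw [← e2]; nlinarith [abs_nonneg ((p Y : ℝ) * α - m Y)]
    have h0 := abs_nonneg ((p X : ℝ) * α - m X)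
    have e4 : |(p X : ℝ) * α - m X| * X ≤ 1 := by nlinarith
    nlinarith
  by_contra hne
  have hpos : 0 < |(p Y : ℝ) * α - m Y| := abs_pos.2 (sub_ne_zero.2 hne)
  obtain ⟨X, hX⟩ := exists_nat_gt ((p Y : ℝ) / |(p Y : ℝ) * α - m Y|)
  have h5 := bound (max X Y) (le_max_right _ _)
  rw [div_lt_iff₀ hpos] at hX
  have : (X : ℝ) ≤ (max X Y : ℕ) := by exact_mod_cast le_max_left X Y
  nlinarith

namespace GoodMax
variable {P : Pert} {D : ExpData} {ω : Om} {ν : Measure Circle1} (h : GoodMax P D ω ν)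
include h

/-- Quantitative recurrence on the zero entropy set `ν.support`. -/
theorem recur : ∃ X0 : ℕ, ∀ X ≥ X0, ∀ z ∈ ν.support, ∃ i p : ℕ, 1 ≤ p ∧ i + p ≤ X ∧
    dist (D.T^[p] (D.T^[i] z)) (D.T^[i] z) ≤ 1 / (X : ℝ) ^ 8 := by
  have hlog : 0 < Real.log D.lam := Real.log_pos D.lam_gt
  set κ := Real.log D.lam / 16 with hκ
  obtain ⟨n0, hn0⟩ := h.cnt_le (κ := κ) (by positivity)
  set u := Real.exp κ with hu
  have hu2 : u ^ 16 = D.lam := by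
    rw [hu, ← Real.exp_nat_mul, hκ]
    have : ((16:ℕ):ℝ) * (Real.log D.lam / 16) = Real.log D.lam := by push_cast; ring
    rw [this, Real.exp_log D.lam_pos]
  have hup : 0 < u := Real.exp_pos _
  have hc := D.c_pos
  have hl := D.lam_pos
  obtain ⟨X0, hX0⟩ := exists_nat_gt (1 + D.lam / D.c + D.c * D.lam ^ n0)
  have hq1 : 0 < D.lam / D.c := by positivity
  have hq2 : 0 < D.c * D.lam ^ n0 := by positivity
  refine ⟨X0, fun X hX z hz => ?_⟩
  have hXX : (X0 : ℝ) ≤ X := by exact_mod_cast hX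
  have hX1 : (1:ℝ) ≤ X := by linarith
  have hX8 : (X:ℝ) ≤ X ^ 8 := le_self_pow₀ hX1 (by norm_num)
  have hex : ∃ n : ℕ, (X:ℝ) ^ 8 ≤ D.c * D.lam ^ n := by
    obtain ⟨n, hn⟩ := pow_unbounded_of_one_lt ((X:ℝ) ^ 8 / D.c) D.lam_gt
    refine ⟨n, ?_⟩
    rw [div_lt_iff₀ hc] at hn; linarith
  classical
  set n := Nat.find hex with hn
  have hn1 : (X:ℝ) ^ 8 ≤ D.c * D.lam ^ n := Nat.find_spec hex
  have hnn0 : n0 ≤ n := by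
    by_contra hlt
    have : D.lam ^ n ≤ D.lam ^ n0 := pow_le_pow_right₀ D.lam_gt.le (by omega)
    nlinarith
  have hn2 : D.lam ^ n ≤ D.lam / D.c * X ^ 8 := by
    rcases Nat.eq_zero_or_pos n with h0 | h0
    · rw [h0, pow_zero]
      have : 1 ≤ D.lam / D.c := by
        rw [le_div_iff₀ hc]; linarith [D.c_le_one, D.lam_gt]
      nlinarith
    · have := Nat.find_min hex (m := n - 1) (by omega)
      push Not at this
      have e : D.lam ^ n = D.lam ^ (n - 1) * D.lam := by
        rw [← pow_succ]; congr 1; omega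
      rw [e, div_mul_eq_mul_div, le_div_iff₀ hc]
      nlinarith
  have hun : u ^ n ≤ X := by
    have : (u ^ n) ^ 16 ≤ (X:ℝ) ^ 16 := by
      rw [← pow_mul, mul_comm, pow_mul, hu2]
      refine hn2.trans ?_
      have : (X:ℝ) ^ 16 = X ^ 8 * X ^ 8 := by ring
      rw [this]
      gcongr
      linarith
    exact le_of_pow_le_pow_left₀ (by norm_num) (by linarith) this
  have hcnt : D.cnt ν.support n ≤ X := by
    have := hn0 n hnn0
    rw [Real.exp_nat_mul] at this
    exact_mod_cast this.trans hun
  obtain ⟨l, hl'⟩ := D.exists_labF ν.support n h.nonempty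
  obtain ⟨i, j, hij, hlij⟩ : ∃ i j : Fin (X + 1), i < j ∧ l (D.T^[i] z) = l (D.T^[j] z) := by
    obtain ⟨i, j, hne, he⟩ := Fintype.exists_ne_map_eq_of_card_lt
      (fun i : Fin (X + 1) => l (D.T^[i] z)) (by simpa using Nat.lt_succ_of_le hcnt)
    rcases lt_or_gt_of_ne hne with hlt | hlt
    · exact ⟨i, j, hlt, he⟩
    · exact ⟨j, i, hlt, he.symm⟩
  have hij' : (i:ℕ) < j := hij
  refine ⟨i, j - i, by omega, by omega, ?_⟩
  rw [← Function.iterate_add_apply, Nat.sub_add_cancel hij'.le]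
  refine (D.dist_le_of_close' (hl' _ (h.K_iter hz j) _ (h.K_iter hz i) hlij.symm)).trans ?_
  rw [inv_pow, ← mul_inv, one_div]
  exact inv_anti₀ (by positivity) hn1

end GoodMax
end EC

/-! ### Rationality of measures of arcs -/

namespace EC
namespace GoodMax
variable {P : Pert} {D : ExpData} {ω : Om} {ν : Measure Circle1} (h : GoodMax P D ω ν)
include h

omit h in
/-- If the support avoids the boundary of a ball, it avoids an annulus around that boundary. -/
theorem exists_gap {c : Circle1} {ρ : ℝ} (hρ : 0 < ρ) (hρ2 : ρ < 1 / 2)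
    (hb : ∀ z ∈ ν.support, dist z c ≠ ρ) : ∃ ρ₁ ρ₂ : ℝ, 0 < ρ₁ ∧ ρ₁ < ρ₂ ∧ ρ₂ < 1 / 2 ∧
      ∀ z ∈ ν.support, (dist z c ≤ ρ → dist z c ≤ ρ₁) ∧ (ρ < dist z c → ρ₂ ≤ dist z c) := by
  have hcl : IsClosed ((fun z => dist z c) '' ν.support) :=
    (K_closed.isCompact.image (continuous_id.dist continuous_const)).isClosed
  have hmem : ρ ∈ ((fun z => dist z c) '' ν.support)ᶜ := by
    rintro ⟨z, hz, he⟩; exact hb z hz he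
  obtain ⟨ε, hε, hball⟩ := Metric.isOpen_iff.1 hcl.isOpen_compl ρ hmem
  refine ⟨max (ρ - ε / 2) (ρ / 2), min (ρ + ε / 2) ((ρ + 1 / 2) / 2), ?_, ?_, ?_, ?_⟩
  · exact lt_max_of_lt_right (by linarith)
  · exact (max_lt (by linarith) (by linarith)).trans (lt_min (by linarith) (by linarith) : ρ < _)
  · exact (min_le_right _ _).trans_lt (by linarith)
  · intro z hz
    have hout : ε ≤ |dist z c - ρ| := by
      by_contra hlt
      push Not at hlt
      exact hball (show dist z c ∈ Metric.ball ρ ε by rwa [Metric.mem_ball, Real.dist_eq])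
        ⟨z, hz, rfl⟩
    constructor
    · intro hle
      rw [abs_of_nonpos (by linarith)] at hout
      exact le_max_of_le_left (by linarith)
    · intro hlt
      rw [abs_of_nonneg (by linarith)] at hout
      exact min_le_of_left_le (by linarith)

set_option maxHeartbeats 400000 in
/-- Balls whose boundary avoids the support have rational measure. -/
theorem ball_rat {c : Circle1} {ρ : ℝ} (hρ : 0 < ρ) (hρ2 : ρ < 1 / 2)
    (hb : ∀ z ∈ ν.support, dist z c ≠ ρ) :
    ∃ q : ℕ, 1 ≤ q ∧ ∃ m : ℤ, q * ν.real (Metric.closedBall c ρ) = m := by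
  have := h.prob
  obtain ⟨ρ₁, ρ₂, h1, h12, h2, hgap⟩ := exists_gap hρ hρ2 hb
  obtain ⟨k, a, ha, hφ0, hφa, hφz⟩ := P.plat c ρ₁ ρ₂ h1 h12 h2
  set A := Metric.closedBall c ρ with hA
  set α := ν.real A with hα
  set f := P.g ω with hf
  set φ := P.φ k with hφ
  have hLip := P.lip ω
  have hLφ := P.φ_lip k
  have hL := P.L_nonneg
  have hL' : (0:ℝ) ≤ (1 / 2) ^ k := by positivity
  have hon : ∀ z ∈ ν.support, φ z = A.indicator (fun _ => a) z := by
    intro z hz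
    by_cases hzA : z ∈ A
    · rw [indicator_of_mem hzA]
      exact hφa z ((hgap z hz).1 hzA)
    · rw [indicator_of_notMem hzA]
      refine hφz z ((hgap z hz).2 ?_)
      rw [hA, Metric.mem_closedBall] at hzA
      exact not_le.1 hzA
  have h_int : ∫ z, φ z ∂ν = a * α := by
    have e : ∫ z, φ z ∂ν = ∫ z, A.indicator (fun _ => a) z ∂ν := by
      refine integral_congr_ae ?_
      filter_upwards [Measure.support_mem_ae (μ := ν)] with z hz using hon z hz
    rw [e, integral_indicator Metric.isClosed_closedBall.measurableSet]
    rw [setIntegral_const, smul_eq_mul, mul_comm]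
  obtain ⟨Cq, hq0, hq0p, hquad⟩ := h.quad k
  obtain ⟨C, hC, hr0, hr0p, hr01, hrho⟩ := D.rho_bound hL hL' hLip hLφ (h.quad k) (D.C1 * P.L)
  obtain ⟨X1, hrec⟩ := h.recur
  set Ctot := (2 * P.L + (1 / 2) ^ k) * D.C2 + |Cq| + 2 * C with hCtot
  have hC2 := D.C2_pos
  have hCtot0 : 0 ≤ Ctot := by positivity
  obtain ⟨X2, hX2⟩ := exists_nat_gt (1 + Ctot / a + 1 / hq0 + 1 / hr0)
  refine rat_of_approx (X0 := max X1 X2) fun X hX => ?_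
  have hXX1 : X1 ≤ X := (le_max_left _ _).trans hX
  have hXX2 : (X2:ℝ) ≤ X := by exact_mod_cast (le_max_right _ _).trans hX
  have p1 : 0 ≤ Ctot / a := by positivity
  have p2 : 0 < 1 / hq0 := by positivity
  have p3 : 0 < 1 / hr0 := by positivity
  have hX1 : (1:ℝ) ≤ X := by linarith
  have hXp : (0:ℝ) < X := by linarith
  have hXN : 1 ≤ X := by exact_mod_cast hX1
  set t : ℝ := 1 / (X:ℝ) ^ 4 with ht
  have htp : 0 < t := by positivity
  have htX : t ≤ 1 / X := by
    rw [ht]; exact one_div_le_one_div_of_le hXp (le_self_pow₀ hX1 (by norm_num))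
  have htq : t ≤ hq0 := htX.trans (by
    rw [div_le_iff₀ hXp]; rw [div_eq_mul_inv, one_mul] at p2
    have : 1 / hq0 ≤ X := by linarith
    rw [div_le_iff₀ hq0p] at this; linarith)
  have htr : t ≤ hr0 := htX.trans (by
    rw [div_le_iff₀ hXp]
    have : 1 / hr0 ≤ X := by linarith
    rw [div_le_iff₀ hr0p] at this; linarith)
  have ht1 : t ≤ 1 := htr.trans hr01
  set ft : Circle1 → ℝ := fun x => f x + t * φ x with hft
  have hLft : Lip (P.L + (1 / 2) ^ k) ft :=
    ExpData.lip_pert hL' hLip hLφ (by rw [abs_of_pos htp]; exact ht1)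
  -- first order expansion of `β`
  have hcf : Continuous f := P.g_cont ω
  have hcφ : Continuous φ := P.φ_cont k
  have b1 := D.beta_le_add hcf hcφ h.isMax t
  have b2 := D.beta_le_add hcf hcφ h.isMax (-t)
  have b3 := hquad t htp htq
  rw [h_int] at b1 b2
  set βt := beta ft D.T with hβt
  set β0 := beta f D.T with hβ0
  have hdb : |(βt - β0) - t * (a * α)| ≤ |Cq| * t ^ 2 := by
    have : Cq * t ^ 2 ≤ |Cq| * t ^ 2 := by gcongr; exact le_abs_self _
    rw [abs_le]
    have : 0 ≤ |Cq| * t ^ 2 := by positivity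
    constructor <;> linarith
  -- a point of the support with a small sum of `R`
  have hRn : ∀ x, 0 ≤ D.R ft x := D.R_nonneg (by positivity) hLft
  obtain ⟨x, hx⟩ := h.nonempty
  obtain ⟨z, hz, hzR⟩ : ∃ z ∈ ν.support, birkhoffSum D.T (D.R ft) X z ≤ 2 * C * X * t ^ 2 := by
    obtain ⟨Q, hQ⟩ := exists_nat_gt (1 / t ^ 2)
    have hQp : (0:ℝ) < Q := lt_trans (by positivity) hQ
    rw [div_lt_iff₀ (by positivity)] at hQ
    have s1 := D.birkhoff_blocks hRn (le_refl X) x Q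
    have s2 := hrho t htp htr x (fun n => h.birkhoff_ge hx n) (X * Q)
    by_contra hcon
    push Not at hcon
    have s3 : ∑ j ∈ Finset.range Q, 2 * C * X * t ^ 2 ≤
        ∑ j ∈ Finset.range Q, birkhoffSum D.T (D.R ft) X (D.T^[X * j] x) :=
      Finset.sum_le_sum fun j _ => (hcon _ (h.K_iter hx _)).le
    have s4 : ∑ j ∈ Finset.range Q, 2 * C * X * t ^ 2 <
        ∑ j ∈ Finset.range Q, birkhoffSum D.T (D.R ft) X (D.T^[X * j] x) := by
      refine Finset.sum_lt_sum_of_nonempty ?_ fun j _ => (hcon _ (h.K_iter hx _))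
      rw [Finset.nonempty_range_iff]
      rintro rfl
      simp at hQp
    rw [Finset.sum_const, Finset.card_range, nsmul_eq_mul] at s4
    push_cast at s2
    have s5 : C * (1 + X * Q * t ^ 2) ≤ Q * (2 * C * X * t ^ 2) := by
      have h3 : 1 ≤ X * (Q * t ^ 2) := one_le_mul_of_one_le_of_one_le hX1 hQ.le
      have h4 := mul_le_mul_of_nonneg_left h3 hC
      linear_combination h4
    have s6 := s4.trans_le (s1.trans s2)
    linarith
  obtain ⟨i, p, hp1, hip, hd⟩ := hrec X hXX1 z hz
  set w := D.T^[i] z with hw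
  have hwK : w ∈ ν.support := h.K_iter hz i
  classical
  -- the number of visits
  set m : ℕ := ((Finset.range p).filter fun j => D.T^[j] w ∈ A).card with hm
  have hmS : birkhoffSum D.T φ p w = a * m := by
    rw [birkhoffSum, Finset.sum_congr rfl fun j _ => hon _ (h.K_iter hwK j)]
    simp only [indicator_apply]
    rw [← Finset.sum_filter, Finset.sum_const, nsmul_eq_mul, mul_comm]
  have hRw : birkhoffSum D.T (D.R ft) p w ≤ 2 * C * X * t ^ 2 := by
    refine le_trans ?_ ((D.birkhoff_mono hRn hip z).trans hzR)
    rw [birkhoffSum_add]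
    have := D.birkhoff_nonneg hRn i z
    linarith
  have hR0 : birkhoffSum D.T (D.R f) p w = 0 :=
    Finset.sum_eq_zero fun j _ => h.R_zero (h.K_iter hwK j)
  have hRw0 := D.birkhoff_nonneg hRn p w
  have hdiff := D.birkhoff_diff (f := f) (φ := φ) t p w
  rw [hmS, hR0] at hdiff
  have hd' : dist (D.T^[p] w) w ≤ t ^ 2 := by
    refine hd.trans_eq ?_
    rw [ht]; field_simp
  have l1 := (D.sub_lip (by positivity) hLft) (D.T^[p] w) w
  have l2 := (D.sub_lip hL hLip) (D.T^[p] w) w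
  have l1' : |D.sub ft (D.T^[p] w) - D.sub ft w| ≤ (P.L + (1 / 2) ^ k) * D.C2 * t ^ 2 :=
    l1.trans (by gcongr)
  have l2' : |D.sub f (D.T^[p] w) - D.sub f w| ≤ P.L * D.C2 * t ^ 2 := l2.trans (by gcongr)
  have hpX : (p:ℝ) ≤ X := by exact_mod_cast (by omega : p ≤ X)
  have hp0 : (0:ℝ) ≤ p := by positivity
  refine ⟨p, m, hp1, by omega, ?_⟩
  have hmain : t * a * |p * α - m| ≤ Ctot * X * t ^ 2 := by
    have e : t * a * (p * α - m) = -((D.sub ft (D.T^[p] w) - D.sub ft w) -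
        (D.sub f (D.T^[p] w) - D.sub f w)) - p * ((βt - β0) - t * (a * α)) +
        birkhoffSum D.T (D.R ft) p w := by linear_combination -hdiff
    have hta : 0 < t * a := by positivity
    rw [← abs_of_pos hta, ← abs_mul, e]
    have e1 : |(p:ℝ) * ((βt - β0) - t * (a * α))| ≤ X * (|Cq| * t ^ 2) := by
      rw [abs_mul, Nat.abs_cast]; gcongr
    have e2 : (P.L + (1 / 2) ^ k) * D.C2 * t ^ 2 ≤ (P.L + (1 / 2) ^ k) * D.C2 * t ^ 2 * X :=
      le_mul_of_one_le_right (by positivity) hX1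
    have e3 : P.L * D.C2 * t ^ 2 ≤ P.L * D.C2 * t ^ 2 * X :=
      le_mul_of_one_le_right (by positivity) hX1
    have e4 : Ctot * X * t ^ 2 = (P.L + (1 / 2) ^ k) * D.C2 * t ^ 2 * X + P.L * D.C2 * t ^ 2 * X +
      X * (|Cq| * t ^ 2) + 2 * C * X * t ^ 2 := by rw [hCtot]; ring
    rw [e4]
    rw [abs_le] at e1 l1' l2' ⊢
    obtain ⟨e1a, e1b⟩ := e1
    obtain ⟨l1a, l1b⟩ := l1'
    obtain ⟨l2a, l2b⟩ := l2'
    clear * - e1a e1b l1a l1b l2a l2b e2 e3 hRw hRw0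
    constructor <;> linarith
  have hfin : a * |p * α - m| ≤ Ctot * X * t := by
    have : t * (a * |p * α - m|) ≤ t * (Ctot * X * t) := by
      linear_combination hmain
    exact le_of_mul_le_mul_left this htp
  have hX3 : Ctot * X * t * X ^ 2 ≤ a := by
    have e : Ctot * X * t * X ^ 2 = Ctot / X := by rw [ht]; field_simp
    rw [e, div_le_iff₀ hXp]
    have : Ctot / a ≤ X := by linarith
    rw [div_le_iff₀ ha] at this; linarith
  have : a * (|p * α - m| * X ^ 2) ≤ a * 1 := by
    linear_combination mul_le_mul_of_nonneg_right hfin (sq_nonneg (X:ℝ)) + hX3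
  exact_mod_cast le_of_mul_le_mul_left this ha

end GoodMax
end EC

/-! ### One inverse branch on each side -/

namespace EC

theorem exists_mvt {ψ ψ' : ℝ → ℝ} (hd : ∀ s, HasDerivAt ψ (ψ' s) s) (s : ℝ) :
    ∃ ξ, |ξ| ≤ |s| ∧ ψ s - ψ 0 = s * ψ' ξ := by
  have hc : Continuous ψ := continuous_iff_continuousAt.2 fun x => (hd x).continuousAt
  rcases lt_trichotomy s 0 with hs | hs | hs
  · obtain ⟨ξ, ⟨h1, h2⟩, h3⟩ := exists_hasDerivAt_eq_slope ψ ψ' hs hc.continuousOn fun x _ => hd x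
    refine ⟨ξ, ?_, ?_⟩
    · rw [abs_of_neg h2, abs_of_neg hs]; linarith
    · rw [h3]; field_simp; ring
  · subst hs; exact ⟨0, le_rfl, by simp⟩
  · obtain ⟨ξ, ⟨h1, h2⟩, h3⟩ := exists_hasDerivAt_eq_slope ψ ψ' hs hc.continuousOn fun x _ => hd x
    refine ⟨ξ, ?_, ?_⟩
    · rw [abs_of_pos h1, abs_of_pos hs]; linarith
    · rw [h3]; field_simp; ring

namespace GoodMax
variable {P : Pert} {D : ExpData} {ω : Om} {ν : Measure Circle1} (h : GoodMax P D ω ν)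
include h

theorem birkhoff_le_sub (n : ℕ) (x : Circle1) : birkhoffSum D.T (P.g ω) n x ≤
    D.sub (P.g ω) (D.T^[n] x) - D.sub (P.g ω) x + n * beta (P.g ω) D.T := by
  have h1 := D.birkhoff_R (f := P.g ω) n x
  have h2 := D.birkhoff_nonneg (D.R_nonneg P.L_nonneg (P.lip ω)) n x
  linarith

/-- Both branches are optimal at their own end points, so exchanging the end points cannot gain more
than an exponentially small error. -/
theorem two_point (n : ℕ) {a b : Circle1} (ha : a ∈ ν.support) (hb : b ∈ ν.support) {s : ℝ}
    (hab : D.T^[n] b = D.T^[n] a + (s : Circle1)) :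
    (birkhoffSum D.T (P.g ω) n (D.br n a s) - birkhoffSum D.T (P.g ω) n a) +
      (birkhoffSum D.T (P.g ω) n (D.br n b (-s)) - birkhoffSum D.T (P.g ω) n b) ≤
      2 * (P.L * D.C2 * (D.c⁻¹ * D.lam⁻¹ ^ n)) * |s| := by
  have h1 := h.birkhoff_le_sub n (D.br n a s)
  have h2 := h.birkhoff_le_sub n (D.br n b (-s))
  have h3 := h.birkhoff_K ha n
  have h4 := h.birkhoff_K hb n
  have e1 : D.T^[n] (D.br n a s) = D.T^[n] b := by rw [D.iter_br, hab]
  have e2 : D.T^[n] (D.br n b (-s)) = D.T^[n] a := by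
    rw [D.iter_br, hab, add_assoc, ← AddCircle.coe_add, add_neg_cancel]; simp
  rw [e1] at h1
  rw [e2] at h2
  have hC := D.C2_pos
  have hL := P.L_nonneg
  have l1 := (le_abs_self _).trans (D.sub_lip P.L_nonneg (P.lip ω) a (D.br n a s))
  have l2 := (le_abs_self _).trans (D.sub_lip P.L_nonneg (P.lip ω) b (D.br n b (-s)))
  have d1 := D.dist_br_self_le n a s
  have d2 := D.dist_br_self_le n b (-s)
  rw [abs_neg] at d2
  have m1 := mul_le_mul_of_nonneg_left d1 (by positivity : 0 ≤ P.L * D.C2)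
  have m2 := mul_le_mul_of_nonneg_left d2 (by positivity : 0 ≤ P.L * D.C2)
  linarith

/-- A backward orbit ending at `x` competes with orbits in the support ending near `x` on the side
`σ`: if its slope in the direction `σ` exceeded the limiting slope of those orbits, switching to its
branch would improve on them. -/
theorem side_ineq {σ : ℝ} (hσ : |σ| = 1) {x : Circle1} {y' : ℕ → Circle1} (hy' : D.Back y')
    (hyK' : ∀ n, y' n ∈ ν.support) (hy0 : y' 0 = x) {ys : ℕ → ℕ → Circle1}
    (hys : ∀ m, D.Back (ys m)) (hysK : ∀ m n, ys m n ∈ ν.support) {t : ℕ → ℝ}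
    (ht : ∀ m, 0 < t m) (ht0 : Tendsto t atTop (𝓝 0))
    (hys0 : ∀ m, ys m 0 = x + ((σ * t m : ℝ) : Circle1)) {y : ℕ → Circle1}
    (hlim : Tendsto ys atTop (𝓝 y)) :
    σ * (D.Winf (P.g' ω) y' - D.Winf (P.g' ω) y) ≤ 0 := by
  have habs : ∀ m, |σ * t m| = t m := fun m => by rw [abs_mul, hσ, one_mul, abs_of_pos (ht m)]
  have hb' : ∀ m, D.T^[m] (y' m) = x := fun m => by
    have := hy'.iter m 0; rw [zero_add] at this; rw [this, hy0]
  have hb : ∀ m, D.T^[m] (ys m m) = x + ((σ * t m : ℝ) : Circle1) := fun m => by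
    have := (hys m).iter m 0; rw [zero_add] at this; rw [this, hys0]
  choose ξ hξ1 hξ2 using fun m => exists_mvt (fun s => D.W_hasDeriv (P.hasD ω) m (y' m) s) (σ * t m)
  choose η hη1 hη2 using
    fun m => exists_mvt (fun s => D.W_hasDeriv (P.hasD ω) m (ys m m) s) (-(σ * t m))
  have key : ∀ m, σ * (D.W m (P.g' ω) (D.br m (y' m) (ξ m)) -
      D.W m (P.g' ω) (D.br m (ys m m) (η m))) ≤ 2 * (P.L * D.C2 * (D.c⁻¹ * D.lam⁻¹ ^ m)) := by
    intro m
    have h1 := h.two_point m (hyK' m) (hysK m m) (s := σ * t m) (by rw [hb, hb'])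
    have e1 := hξ2 m
    have e2 := hη2 m
    rw [D.br_zero] at e1 e2
    rw [e1, e2, habs m] at h1
    refine le_of_mul_le_mul_right ?_ (ht m)
    linarith
  have hξ0 : Tendsto ξ atTop (𝓝 0) := by
    refine squeeze_zero_norm (fun m => ?_) ht0
    rw [Real.norm_eq_abs, ← habs m]; exact hξ1 m
  have hη0 : Tendsto η atTop (𝓝 0) := by
    refine squeeze_zero_norm (fun m => ?_) ht0
    rw [Real.norm_eq_abs, ← habs m, ← abs_neg (σ * t m)]; exact hη1 m
  have hcont := P.g'_cont ω
  have lim1 : Tendsto (fun m => D.back m (y' m)) atTop (𝓝 y') := by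
    rw [tendsto_pi_nhds]
    intro j
    refine tendsto_const_nhds.congr' ?_
    filter_upwards [eventually_ge_atTop j] with m hm
    have := hy'.iter (m - j) j
    rw [Nat.add_sub_cancel' hm] at this
    exact this.symm
  have lim2 : Tendsto (fun m => D.back m (ys m m)) atTop (𝓝 y) := by
    rw [tendsto_pi_nhds] at hlim ⊢
    intro j
    refine (hlim j).congr' ?_
    filter_upwards [eventually_ge_atTop j] with m hm
    have := (hys m).iter (m - j) j
    rw [Nat.add_sub_cancel' hm] at this
    exact this.symm
  have w1 := D.W_tendsto hcont tendsto_id (D.back_br_tendsto tendsto_id hξ0 lim1)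
  have w2 := D.W_tendsto hcont tendsto_id (D.back_br_tendsto tendsto_id hη0 lim2)
  have hr : Tendsto (fun m : ℕ => 2 * (P.L * D.C2 * (D.c⁻¹ * D.lam⁻¹ ^ m))) atTop (𝓝 0) := by
    have := (((tendsto_pow_atTop_nhds_zero_of_lt_one D.inv_lam_pos.le D.inv_lam_lt).const_mul
      D.c⁻¹).const_mul (P.L * D.C2)).const_mul 2
    simpa using this
  exact le_of_tendsto_of_tendsto' ((w1.sub w2).const_mul σ) hr key

/-- Extend a sequence of preimages in the support to backward orbits and extract a limit. -/
theorem extract {σ : ℝ} {x w : Circle1} {z : ℕ → Circle1} {t : ℕ → ℝ}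
    (hz : ∀ m, z m ∈ ν.support) (ht : ∀ m, 0 < t m) (ht0 : Tendsto t atTop (𝓝 0))
    (hTz : ∀ m, D.T (z m) = x + ((σ * t m : ℝ) : Circle1)) (hw : Tendsto z atTop (𝓝 w)) :
    ∃ (y : ℕ → Circle1) (ys : ℕ → ℕ → Circle1) (s : ℕ → ℝ), D.Back y ∧ (∀ n, y n ∈ ν.support) ∧
      y 0 = x ∧ y 1 = w ∧ (∀ m, D.Back (ys m)) ∧ (∀ m n, ys m n ∈ ν.support) ∧ (∀ m, 0 < s m) ∧
      Tendsto s atTop (𝓝 0) ∧ (∀ m, ys m 0 = x + ((σ * s m : ℝ) : Circle1)) ∧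
      Tendsto ys atTop (𝓝 y) := by
  choose v hv1 hv2 hv3 using fun m => h.exists_Back (hz m)
  set u : ℕ → ℕ → Circle1 := fun m n => Nat.casesOn n (D.T (z m)) (v m) with hu
  have huB : ∀ m, D.Back (u m) := by
    intro m j
    cases j with
    | zero => show D.T (v m 0) = D.T (z m); rw [hv2]
    | succ j => exact hv1 m j
  have huK : ∀ m n, u m n ∈ ν.support := by
    intro m n
    cases n with
    | zero => exact h.K_inv (hz m)
    | succ n => exact hv3 m n
  obtain ⟨y, φ, hφ, hy⟩ := CompactSpace.tendsto_subseq u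
  have hyj : ∀ j, Tendsto (fun m => u (φ m) j) atTop (𝓝 (y j)) := fun j =>
    (tendsto_pi_nhds.1 hy) j
  have hsc : Tendsto (fun m => t (φ m)) atTop (𝓝 0) := ht0.comp hφ.tendsto_atTop
  refine ⟨y, fun m => u (φ m), fun m => t (φ m), ?_, ?_, ?_, ?_, fun m => huB _, fun m => huK _,
    fun m => ht _, hsc, fun m => hTz _, hy⟩
  · intro j
    have h1 := (D.T_cont.tendsto _).comp (hyj (j + 1))
    refine tendsto_nhds_unique h1 ((hyj j).congr fun m => ?_)
    exact (huB (φ m) j).symm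
  · exact fun n => K_closed.mem_of_tendsto (hyj n) (Eventually.of_forall fun m => huK _ _)
  · have h1 : Tendsto (fun m => x + ((σ * t (φ m) : ℝ) : Circle1)) atTop
        (𝓝 (x + ((σ * 0 : ℝ) : Circle1))) :=
      tendsto_const_nhds.add (((AddCircle.continuous_mk' (1:ℝ)).tendsto _).comp (hsc.const_mul σ))
    have h2 := tendsto_nhds_unique (hyj 0) (h1.congr fun m => (hTz _).symm)
    rw [h2]; simp
  · refine tendsto_nhds_unique (hyj 1) ((hw.comp hφ.tendsto_atTop).congr fun m => ?_)
    exact (hv2 (φ m)).symm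

/-- On either side of each point, the support meets at most one inverse branch of `T`. -/
theorem one_branch {σ : ℝ} (hσ : |σ| = 1) (x : Circle1) : ∃ x' : Circle1, D.T x' = x ∧
    ∃ δ > 0, ∀ z ∈ ν.support, ∀ t, 0 < t → t < δ → D.T z = x + ((σ * t : ℝ) : Circle1) →
      z = D.br 1 x' (σ * t) := by
  set S : Set Circle1 := {w | ∃ z : ℕ → Circle1, ∃ t : ℕ → ℝ, (∀ m, z m ∈ ν.support) ∧
    (∀ m, 0 < t m) ∧ Tendsto t atTop (𝓝 0) ∧
    (∀ m, D.T (z m) = x + ((σ * t m : ℝ) : Circle1)) ∧ Tendsto z atTop (𝓝 w)} with hS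
  have hsub : S.Subsingleton := by
    rintro w ⟨z, t, a1, a2, a3, a4, a5⟩ w' ⟨z', t', b1, b2, b3, b4, b5⟩
    obtain ⟨y, ys, s, c1, c2, c3, c4, c5, c6, c7, c8, c9, c10⟩ := h.extract a1 a2 a3 a4 a5
    obtain ⟨y', ys', s', d1, d2, d3, d4, d5, d6, d7, d8, d9, d10⟩ := h.extract b1 b2 b3 b4 b5
    have i1 := h.side_ineq hσ d1 d2 d3 c5 c6 c7 c8 c9 c10
    have i2 := h.side_ineq hσ c1 c2 c3 d5 d6 d7 d8 d9 d10
    have hW : D.Winf (P.g' ω) y = D.Winf (P.g' ω) y' := by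
      have hσ0 : σ ≠ 0 := by rintro rfl; simp at hσ
      apply mul_left_cancel₀ hσ0
      linarith
    by_contra hne
    refine h.noCol y y' ⟨c1, d1, c3.trans d3.symm, by rwa [c4, d4], ?_, ?_, hW⟩
    · exact fun n i => h.K_sub (h.K_iter (c2 n) i)
    · exact fun n i => h.K_sub (h.K_iter (d2 n) i)
  obtain ⟨x', hx', hxS⟩ : ∃ x', D.T x' = x ∧ ∀ w ∈ S, w = x' := by
    by_cases hne : S.Nonempty
    · obtain ⟨w, hw⟩ := hne
      refine ⟨w, ?_, fun w' hw' => hsub hw' hw⟩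
      obtain ⟨z, t, a1, a2, a3, a4, a5⟩ := hw
      obtain ⟨y, ys, s, c1, c2, c3, c4, -⟩ := h.extract a1 a2 a3 a4 a5
      rw [← c4, ← c3]; exact c1 0
    · obtain ⟨a, ha⟩ := D.F_surj (rep x)
      refine ⟨a, ?_, fun w hw => absurd ⟨w, hw⟩ hne⟩
      rw [D.T_coe, ha, coe_rep]
  refine ⟨x', hx', ?_⟩
  by_contra hcon
  push Not at hcon
  choose z hz t ht htδ hTz hne using fun m : ℕ => hcon (1 / ((m:ℝ) + 1)) (by positivity)
  obtain ⟨w, φ, hφ, hw⟩ := CompactSpace.tendsto_subseq z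
  have ht0 : Tendsto t atTop (𝓝 0) :=
    squeeze_zero (fun m => (ht m).le) (fun m => (htδ m).le) tendsto_one_div_add_atTop_nhds_zero_nat
  have hwS : w = x' := hxS w ⟨fun m => z (φ m), fun m => t (φ m), fun m => hz _, fun m => ht _,
    ht0.comp hφ.tendsto_atTop, fun m => hTz _, hw⟩
  rw [hwS] at hw
  have hbr : Tendsto (fun m => D.br 1 x' (σ * t (φ m))) atTop (𝓝 x') := by
    rw [tendsto_iff_dist_tendsto_zero]
    have h1 : Tendsto (fun m => D.c⁻¹ * D.lam⁻¹ ^ 1 * t (φ m)) atTop (𝓝 0) := by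
      have := (ht0.comp hφ.tendsto_atTop).const_mul (D.c⁻¹ * D.lam⁻¹ ^ 1)
      rwa [mul_zero] at this
    refine squeeze_zero (fun _ => dist_nonneg) (fun m => ?_) h1
    rw [dist_comm]
    refine (D.dist_br_self_le 1 x' _).trans_eq ?_
    rw [abs_mul, hσ, one_mul, abs_of_pos (ht _)]
  have hd : Tendsto (fun m => dist (z (φ m)) (D.br 1 x' (σ * t (φ m)))) atTop (𝓝 0) := by
    have := hw.dist hbr
    rwa [dist_self] at this
  obtain ⟨m, hm⟩ := (hd.eventually (gt_mem_nhds D.r0_pos)).exists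
  refine hne (φ m) (D.eq_of_T_eq ?_ hm.le)
  have := D.iter_br 1 x' (σ * t (φ m))
  simp only [Function.iterate_one] at this
  rw [this, hTz, hx']

end GoodMax
end EC

/-! ### The distribution function of the maximizing measure -/

namespace EC

/-- The distribution function (on the universal cover) of a measure on the circle. -/
def cdf (ν : Measure Circle1) (s : ℝ) : ℝ := ∫ w, (⌊s - rep w⌋ : ℝ) ∂ν

/-- The half-open arc `(s, s']` of the circle. -/
def arc (s s' : ℝ) : Set Circle1 := {w | ∃ k : ℤ, s < rep w + k ∧ rep w + k ≤ s'}

theorem arc_meas (s s' : ℝ) : MeasurableSet (arc s s') := by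
  have : arc s s' = ⋃ k : ℤ, {w | s < rep w + k ∧ rep w + k ≤ s'} := by
    ext w; simp [arc]
  rw [this]
  refine MeasurableSet.iUnion fun k => ?_
  exact (measurableSet_lt measurable_const (measurable_rep.add_const _)).inter
    (measurableSet_le (measurable_rep.add_const _) measurable_const)

section cdf
variable (ν : Measure Circle1) [IsProbabilityMeasure ν]

theorem integrable_floor (s : ℝ) : Integrable (fun w => (⌊s - rep w⌋ : ℝ)) ν := by
  have hm : Measurable fun w => (⌊s - rep w⌋ : ℝ) :=
    (measurable_from_top (f := fun k : ℤ => (k:ℝ))).comp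
      (Int.measurable_floor.comp (measurable_const.sub measurable_rep))
  refine Integrable.of_bound hm.aestronglyMeasurable (|s| + 2) (Eventually.of_forall fun w => ?_)
  rw [Real.norm_eq_abs, abs_le]
  have h1 := Int.floor_le (s - rep w)
  have h2 := Int.lt_floor_add_one (s - rep w)
  have h3 := rep_nonneg w
  have h4 := rep_lt_one w
  have h5 := abs_le.1 (le_refl |s|)
  constructor <;> linarith [h5.1, h5.2]

theorem cdf_add_int (s : ℝ) (k : ℤ) : cdf ν (s + k) = cdf ν s + k := by
  have e : ∀ w, (⌊s + k - rep w⌋ : ℝ) = (⌊s - rep w⌋ : ℝ) + k := fun w => by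
    rw [show s + k - rep w = (s - rep w) + k by ring, Int.floor_add_intCast]; push_cast; ring
  simp only [cdf, e]
  rw [integral_add (integrable_floor ν s) (integrable_const _)]
  simp

theorem cdf_mono : Monotone (cdf ν) := fun s s' hs => by
  refine integral_mono (integrable_floor ν s) (integrable_floor ν s') fun w => ?_
  show (⌊s - rep w⌋ : ℝ) ≤ ⌊s' - rep w⌋
  exact_mod_cast Int.floor_mono (by linarith : s - rep w ≤ s' - rep w)

theorem cdf_sub {s s' : ℝ} (h : s ≤ s') (h' : s' ≤ s + 1) :
    cdf ν s' - cdf ν s = ν.real (arc s s') := by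
  rw [cdf, cdf, ← integral_sub (integrable_floor ν s') (integrable_floor ν s)]
  have e : ∀ w, (⌊s' - rep w⌋ : ℝ) - ⌊s - rep w⌋ = (arc s s').indicator (fun _ => (1:ℝ)) w := by
    intro w
    have hle : ⌊s - rep w⌋ ≤ ⌊s' - rep w⌋ := Int.floor_mono (by linarith)
    have hle' : ⌊s' - rep w⌋ ≤ ⌊s - rep w⌋ + 1 := by
      rw [← Int.floor_add_one]; exact Int.floor_mono (by linarith)
    by_cases hw : w ∈ arc s s'
    · rw [indicator_of_mem hw]
      obtain ⟨k, h1, h2⟩ := hw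
      have a1 : ⌊s - rep w⌋ < k := Int.floor_lt.2 (by linarith)
      have a2 : k ≤ ⌊s' - rep w⌋ := Int.le_floor.2 (by linarith)
      have : ⌊s' - rep w⌋ = ⌊s - rep w⌋ + 1 := by omega
      rw [this]; push_cast; ring
    · rw [indicator_of_notMem hw]
      have : ⌊s' - rep w⌋ = ⌊s - rep w⌋ := by
        by_contra hne
        have a1 : ⌊s - rep w⌋ < ⌊s' - rep w⌋ := lt_of_le_of_ne hle (Ne.symm hne)
        refine hw ⟨⌊s' - rep w⌋, ?_, ?_⟩
        · have := Int.floor_lt.1 a1; linarith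
        · have := Int.floor_le (s' - rep w); linarith
      rw [this, sub_self]
  simp only [e]
  rw [integral_indicator (arc_meas s s'), setIntegral_const]
  simp

theorem mem_arc_iff {s s' : ℝ} {w : Circle1} :
    w ∈ arc s s' ↔ ∃ a : ℝ, (a : Circle1) = w ∧ s < a ∧ a ≤ s' := by
  constructor
  · rintro ⟨k, h1, h2⟩
    exact ⟨rep w + k, by rw [coe_add_int, coe_rep], h1, h2⟩
  · rintro ⟨a, rfl, h1, h2⟩
    obtain ⟨m, hm⟩ := exists_rep a
    refine ⟨-m, ?_, ?_⟩ <;> rw [hm] <;> push_cast <;> linarith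

variable (hna : ∀ x, ν {x} = 0)
include hna

theorem cdf_abs {u v : ℝ} (h : |u - v| ≤ 1) :
    |cdf ν u - cdf ν v| = ν.real ((fun s : ℝ => (s : Circle1)) '' uIcc u v) := by
  wlog huv : u ≤ v generalizing u v
  · rw [abs_sub_comm, uIcc_comm]; exact this (by rwa [abs_sub_comm]) (le_of_not_ge huv)
  rw [abs_sub_comm, abs_of_nonneg (sub_nonneg.2 huv)] at h
  rw [abs_sub_comm, abs_of_nonneg (sub_nonneg.2 (cdf_mono ν huv)), cdf_sub ν huv (by linarith),
    uIcc_of_le huv]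
  refine measureReal_congr ?_
  have h1 : ∀ᵐ w ∂ν, w ≠ (u : Circle1) := by
    rw [ae_iff]; simpa using hna u
  filter_upwards [h1] with w hw
  refine propext ?_
  show w ∈ arc u v ↔ w ∈ (fun s : ℝ => (s : Circle1)) '' Icc u v
  rw [mem_arc_iff]
  constructor
  · rintro ⟨a, ha, h1, h2⟩; exact ⟨a, ⟨h1.le, h2⟩, ha⟩
  · rintro ⟨a, ⟨h1, h2⟩, ha⟩
    refine ⟨a, ha, lt_of_le_of_ne h1 ?_, h2⟩
    rintro rfl; exact hw ha.symm

theorem cdf_cont : Continuous (cdf ν) := by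
  rw [continuous_iff_continuousAt]
  intro s
  refine continuousAt_of_dominated (bound := fun _ => |s| + 3)
    (Eventually.of_forall fun s' => (integrable_floor ν s').aestronglyMeasurable) ?_
    (integrable_const _) ?_
  · filter_upwards [Metric.ball_mem_nhds s one_pos] with s' hs'
    refine Eventually.of_forall fun w => ?_
    rw [Metric.mem_ball, Real.dist_eq, abs_lt] at hs'
    rw [Real.norm_eq_abs, abs_le]
    have h1 := Int.floor_le (s' - rep w)
    have h2 := Int.lt_floor_add_one (s' - rep w)
    have h3 := rep_nonneg w
    have h4 := rep_lt_one w
    have h5 := abs_le.1 (le_refl |s|)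
    constructor <;> linarith [h5.1, h5.2, hs'.1, hs'.2]
  · have h1 : ∀ᵐ w ∂ν, w ≠ (s : Circle1) := by
      rw [ae_iff]; simpa using hna s
    filter_upwards [h1] with w hw
    have hlt : (⌊s - rep w⌋ : ℝ) < s - rep w := by
      refine lt_of_le_of_ne (Int.floor_le _) fun he => hw ?_
      rw [← coe_rep w, coe_eq_iff]
      exact ⟨⌊s - rep w⌋, by linarith⟩
    have h2 : ContinuousAt (fun x : ℝ => (⌊x⌋ : ℝ)) (s - rep w) :=
      (continuousOn_floor (α := ℝ) ⌊s - rep w⌋).continuousAt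
        (Ico_mem_nhds hlt (Int.lt_floor_add_one _))
    exact ContinuousAt.comp (f := fun x : ℝ => x - rep w) h2 (by fun_prop)

theorem cdf_surj : Function.Surjective (cdf ν) := by
  intro y
  have h1 : ∀ k : ℤ, cdf ν k = cdf ν 0 + k := fun k => by
    have := cdf_add_int ν 0 k; rwa [zero_add] at this
  refine mem_range_of_exists_le_of_exists_ge (cdf_cont ν hna) ⟨(⌊y - cdf ν 0⌋ : ℤ), ?_⟩
    ⟨(⌈y - cdf ν 0⌉ : ℤ), ?_⟩
  · rw [h1]; have := Int.floor_le (y - cdf ν 0); linarith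
  · rw [h1]; have := Int.le_ceil (y - cdf ν 0); linarith

end cdf

namespace GoodMax
variable {P : Pert} {D : ExpData} {ω : Om} {ν : Measure Circle1} (h : GoodMax P D ω ν)
include h

/-- Increments of the distribution function between gaps of the support are rational. -/
theorem cdf_rat {c e : ℝ} (hc : (c : Circle1) ∉ ν.support) (he : (e : Circle1) ∉ ν.support) :
    ∃ q : ℕ, 1 ≤ q ∧ ∃ m : ℤ, q * (cdf ν e - cdf ν c) = m := by
  have := h.prob
  -- reduction to `c ≤ e < c + 1`
  obtain ⟨k, hk1, hk2⟩ : ∃ k : ℤ, c ≤ e + k ∧ e + k < c + 1 := by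
    refine ⟨-⌊e - c⌋, ?_, ?_⟩
    · have := Int.floor_le (e - c); push_cast; linarith
    · have := Int.lt_floor_add_one (e - c); push_cast; linarith
  suffices H : ∃ q : ℕ, 1 ≤ q ∧ ∃ m : ℤ, q * (cdf ν (e + k) - cdf ν c) = m by
    obtain ⟨q, hq, m, hm⟩ := H
    refine ⟨q, hq, m - q * k, ?_⟩
    rw [cdf_add_int] at hm
    push_cast
    linear_combination hm
  have he' : ((e + k : ℝ) : Circle1) ∉ ν.support := by rwa [coe_add_int]
  set e' := e + k
  rcases hk1.eq_or_lt with heq | hlt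
  · exact ⟨1, le_rfl, 0, by rw [← heq]; simp⟩
  set ρ := (e' - c) / 2 with hρ
  set mid := (c + e') / 2 with hmid
  have hb : ∀ z ∈ ν.support, dist z (mid : Circle1) ≠ ρ := by
    intro z hz hd
    obtain ⟨t, ht, hta⟩ := exists_disp (mid : Circle1) z
    rw [dist_comm, hd] at hta
    rw [← AddCircle.coe_add] at ht
    rcases abs_choice t with h1 | h1 <;> rw [h1] at hta
    · rw [show mid + t = e' by rw [hta, hρ, hmid]; ring] at ht
      exact he' (ht ▸ hz)
    · rw [show mid + t = c by rw [← neg_neg t, hta, hρ, hmid]; ring] at ht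
      exact hc (ht ▸ hz)
  obtain ⟨q, hq, m, hm⟩ := h.ball_rat (c := mid) (ρ := ρ) (by rw [hρ]; linarith)
    (by rw [hρ]; linarith) hb
  refine ⟨q, hq, m, ?_⟩
  rw [← hm, cdf_sub ν hlt.le hk2.le]
  congr 1
  refine measureReal_congr ?_
  filter_upwards [Measure.support_mem_ae (μ := ν)] with w hw
  refine propext ?_
  show w ∈ arc c e' ↔ w ∈ Metric.closedBall (mid : Circle1) ρ
  rw [mem_arc_iff, Metric.mem_closedBall]
  constructor
  · rintro ⟨a, rfl, h1, h2⟩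
    refine (dist_coe_le _ _).trans (abs_le.2 ⟨?_, ?_⟩) <;> rw [hρ, hmid] <;> linarith
  · intro hd
    obtain ⟨t, ht, hta⟩ := exists_disp (mid : Circle1) w
    rw [dist_comm] at hta
    rw [← hta, abs_le] at hd
    rw [← AddCircle.coe_add] at ht
    refine ⟨mid + t, ht.symm, lt_of_le_of_ne ?_ ?_, ?_⟩
    · rw [hmid]; linarith [hd.1, hρ]
    · intro heq; rw [← heq] at ht; exact hc (ht ▸ hw)
    · rw [hmid]; linarith [hd.2, hρ]

/-- Uniqueness of the maximizing measure makes it ergodic. -/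
theorem ergodic : Ergodic D.T ν := by
  have := h.prob
  refine ⟨⟨D.T_cont.measurable, h.map_eq⟩, ⟨fun s hs hinv => ?_⟩⟩
  rw [Filter.eventuallyConst_set']
  by_cases h0 : ν s = 0
  · left; rwa [ae_eq_empty]
  · right
    have hfin : ν s ≠ ⊤ := measure_ne_top _ _
    have hμ : (ν s)⁻¹ • ν.restrict s = ν := by
      refine h.uniq ⟨⟨?_⟩, ?_⟩ ?_
      · simp [ENNReal.inv_mul_cancel h0 hfin]
      · rw [Measure.map_smul]
        congr 1
        have := Measure.restrict_map (μ := ν) D.T_cont.measurable hs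
        rw [h.map_eq, hinv] at this
        exact this.symm
      · simp only [Measure.smul_apply, smul_eq_mul]
        rw [mul_eq_zero]; right
        exact measure_mono_null (le_refl _) (le_antisymm ((Measure.restrict_apply_le _ _).trans_eq
          Measure.measure_compl_support) zero_le)
    rw [ae_eq_univ]
    rw [← hμ]
    simp [Measure.restrict_apply hs.compl]

end GoodMax
end EC

/-! ### Periodicity of the maximizing measure -/

namespace EC

namespace GoodMax
variable {P : Pert} {D : ExpData} {ω : Om} {ν : Measure Circle1}

/-- In the distribution-function coordinate based at `g0`, the map acts at `s` as an isometry of the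
line, up to a translation by a multiple of `1 / q`. -/
def IsoAt (D : ExpData) (ν : Measure Circle1) (g0 : ℝ) (q : ℕ) (s : ℝ) : Prop :=
  ∃ ε : ℝ, (ε = 1 ∨ ε = -1) ∧ ∃ m : ℤ,
    q * (cdf ν (D.F s) - g0) = ε * (q * (cdf ν s - g0)) + m

theorem IsoAt.mul {g0 : ℝ} {q : ℕ} {s : ℝ} (h : IsoAt D ν g0 q s) (n : ℕ) :
    IsoAt D ν g0 (n * q) s := by
  obtain ⟨ε, hε, m, hm⟩ := h
  refine ⟨ε, hε, n * m, ?_⟩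
  push_cast
  linear_combination n * hm

theorem IsoAt.add_int [IsProbabilityMeasure ν] {g0 : ℝ} {q : ℕ} {s : ℝ} (h : IsoAt D ν g0 q s)
    (k : ℤ) : IsoAt D ν g0 q (s + k) := by
  obtain ⟨ε, hε, m, hm⟩ := h
  have e1 := cdf_add_int ν s k
  have e2 := cdf_add_int ν (D.F s) (D.d * k)
  rw [← D.F_add_int] at e2
  rcases hε with rfl | rfl
  · refine ⟨1, Or.inl rfl, m + q * (D.d * k) - q * k, ?_⟩
    rw [e1, e2]; push_cast; linear_combination hm
  · refine ⟨-1, Or.inr rfl, m + q * (D.d * k) + q * k, ?_⟩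
    rw [e1, e2]; push_cast; linear_combination hm

variable (h : GoodMax P D ω ν)
include h

/-- With a single inverse branch on one side of `x`, invariance of `ν` says that this branch preserves
increments of the distribution function. -/
theorem image_real (hna : ∀ x, ν {x} = 0) {δ σ : ℝ} (hσ : |σ| = 1) {x x' : Circle1}
    (hx' : D.T x' = x)
    (hδ : ∀ z ∈ ν.support, ∀ t, 0 < t → t < δ → D.T z = x + ((σ * t : ℝ) : Circle1) →
      z = D.br 1 x' (σ * t)) {t t' : ℝ} (ht : 0 < t) (htt' : t ≤ t') (ht' : t' < δ)
    (ht1 : t' ≤ 1) (ht2 : t' ≤ D.c * D.lam) :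
    |cdf ν (D.F (rep x') + σ * t) - cdf ν (D.F (rep x') + σ * t')| =
      |cdf ν (D.B 1 (rep x') (σ * t)) - cdf ν (D.B 1 (rep x') (σ * t'))| := by
  have := h.prob
  set a := rep x' with ha
  set b : ℝ → ℝ := fun t => D.B 1 a (σ * t) with hb
  have hFb : ∀ t, D.F (b t) = D.F a + σ * t := fun t => D.iter_B 1 a (σ * t)
  have hbc : Continuous b := (D.B_cont 1 a).comp (continuous_const.mul continuous_id)
  have hst : |σ * t - σ * t'| = t' - t := by
    rw [← mul_sub, abs_mul, hσ, one_mul, abs_sub_comm, abs_of_nonneg (sub_nonneg.2 htt')]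
  have hcl : 0 < D.c * D.lam := mul_pos D.c_pos D.lam_pos
  have hbb : |b t - b t'| ≤ 1 := by
    refine (D.B_sub_le 1 a _ _).trans ?_
    rw [pow_one, hst, ← mul_inv, inv_mul_le_iff₀ hcl]
    linarith
  rw [← hFb, ← hFb]
  show _ = |cdf ν (b t) - cdf ν (b t')|
  rw [cdf_abs ν hna (by rw [hFb, hFb, add_sub_add_left_eq_sub, hst]; linarith),
    cdf_abs ν hna hbb]
  have hcm : ∀ u v : ℝ, MeasurableSet ((fun s : ℝ => (s : Circle1)) '' uIcc u v) := fun u v =>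
    (isCompact_uIcc.image (AddCircle.continuous_mk' (1:ℝ))).isClosed.measurableSet
  rw [measureReal_def, ← h.pre (hcm _ _), ← measureReal_def]
  refine measureReal_congr ?_
  filter_upwards [Measure.support_mem_ae (μ := ν)] with z hz
  refine propext ?_
  show D.T z ∈ (fun s : ℝ => (s : Circle1)) '' uIcc (D.F (b t)) (D.F (b t')) ↔
    z ∈ (fun s : ℝ => (s : Circle1)) '' uIcc (b t) (b t')
  have hlin : ∀ t'' ∈ uIcc t t', D.F (b t'') ∈ uIcc (D.F (b t)) (D.F (b t')) := by
    intro t'' ht''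
    rw [hFb, hFb, hFb]
    rw [uIcc_of_le htt'] at ht''
    rcases abs_choice σ with h1 | h1 <;> rw [hσ] at h1
    · rw [← h1, uIcc_of_le (by linarith)]
      constructor <;> linarith [ht''.1, ht''.2]
    · rw [show σ = -1 by linarith, uIcc_of_ge (by linarith)]
      constructor <;> linarith [ht''.1, ht''.2]
  have hσσ : σ * σ = 1 := by rw [← abs_mul_abs_self, hσ, one_mul]
  constructor
  · rintro ⟨v, hv, hvz⟩
    obtain ⟨w, hw, hwv⟩ := intermediate_value_uIcc D.contF.continuousOn hv
    -- the point `v` is `F a + σ t''` with `t ≤ t'' ≤ t'`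
    have hv' : v ∈ uIcc (D.F a + σ * t) (D.F a + σ * t') := by rwa [hFb, hFb] at hv
    have hcont : Continuous fun s : ℝ => D.F a + σ * s := by fun_prop
    obtain ⟨t'', ht'', hvt⟩ := intermediate_value_uIcc (f := fun s : ℝ => D.F a + σ * s)
      hcont.continuousOn hv'
    rw [uIcc_of_le htt'] at ht''
    have hTz : D.T z = x + ((σ * t'' : ℝ) : Circle1) := by
      rw [← hvz, ← hx', ← coe_rep x', D.T_coe, ← AddCircle.coe_add]
      exact congrArg _ hvt.symm
    have hz' := hδ z hz t'' (ht.trans_le ht''.1) (ht''.2.trans_lt ht') hTz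
    have hwb : w = b t'' := D.iter_inj 1 (by
      show D.F w = D.F (b t'')
      rw [hFb, hwv]; exact hvt.symm)
    exact ⟨w, hw, by rw [hwb, hz']; rfl⟩
  · rintro ⟨w, hw, rfl⟩
    obtain ⟨u, hu, hwt⟩ := intermediate_value_uIcc hbc.continuousOn hw
    refine ⟨D.F w, ?_, by simp only [D.T_coe]⟩
    rw [← hwt]; exact hlin u hu

/-- On each side of a point `x`, the map acts near the preimages of `x` in the support as an isometry
in the distribution-function coordinate. The translation part is rational because it comes from
increments between gaps of the support. -/
theorem side_iso (hna : ∀ x, ν {x} = 0) {c0 : ℝ} (hc0 : (c0 : Circle1) ∉ ν.support) {σ : ℝ}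
    (hσ : |σ| = 1) (x : Circle1) : ∃ q : ℕ, 1 ≤ q ∧ ∃ δ > 0, ∀ s : ℝ, (s : Circle1) ∈ ν.support →
      ∀ t, 0 < t → t < δ → (D.F s : Circle1) = x + ((σ * t : ℝ) : Circle1) →
        IsoAt D ν (cdf ν c0) q s := by
  have := h.prob
  obtain ⟨x', hx', δ, hδ, H⟩ := h.one_branch hσ x
  have hcl : 0 < D.c * D.lam := mul_pos D.c_pos D.lam_pos
  set η := min δ (min 1 (D.c * D.lam)) with hη
  have hη0 : 0 < η := lt_min hδ (lt_min one_pos hcl)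
  have hη1 : η ≤ 1 := (min_le_right _ _).trans (min_le_left _ _)
  -- a gap of the support close to `x` on the chosen side
  obtain ⟨t', ht0, htη, ht'K⟩ : ∃ t', 0 < t' ∧ t' < η ∧
      x + ((σ * t' : ℝ) : Circle1) ∉ ν.support := by
    obtain ⟨y, hy, hyd⟩ := h.dense_compl.exists_dist_lt (x + ((σ * (η / 2) : ℝ) : Circle1))
      (half_pos hη0)
    obtain ⟨τ, hτ, hτa⟩ := exists_disp (x + ((σ * (η / 2) : ℝ) : Circle1)) y
    rw [← hτa, abs_lt] at hyd
    have hσσ : σ * σ = 1 := by rw [← abs_mul_abs_self, hσ, one_mul]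
    have hστ : |σ * τ| < η / 2 := by rw [abs_mul, hσ, one_mul, abs_lt]; exact hyd
    rw [abs_lt] at hστ
    refine ⟨η / 2 + σ * τ, by linarith [hστ.1], by linarith [hστ.2], ?_⟩
    rw [show σ * (η / 2 + σ * τ) = σ * (η / 2) + τ by linear_combination τ * hσσ,
      AddCircle.coe_add, ← add_assoc, ← hτ]
    exact hy
  have hbK : ((D.B 1 (rep x') (σ * t') : ℝ) : Circle1) ∉ ν.support := by
    intro hK
    have h1 := h.K_inv hK
    rw [D.T_coe, show D.F (D.B 1 (rep x') (σ * t')) = D.F (rep x') + σ * t' from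
      D.iter_B 1 (rep x') (σ * t'), AddCircle.coe_add, ← D.T_coe, coe_rep, hx'] at h1
    exact ht'K h1
  have hFK : ((D.F (rep x') + σ * t' : ℝ) : Circle1) ∉ ν.support := by
    rwa [AddCircle.coe_add, ← D.T_coe, coe_rep, hx']
  obtain ⟨q1, hq1, m1, hm1⟩ := h.cdf_rat hc0 hbK
  obtain ⟨q2, hq2, m2, hm2⟩ := h.cdf_rat hc0 hFK
  refine ⟨q1 * q2, Nat.mul_pos hq1 hq2, t', ht0, fun s hs t ht htt hFs => ?_⟩
  have hz := H s hs t ht (htt.trans (htη.trans_le (min_le_left _ _))) (by rw [D.T_coe, hFs])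
  obtain ⟨k, hk⟩ := coe_eq_iff.1 hz.symm
  rw [hk]
  refine IsoAt.add_int ?_ k
  have key := h.image_real hna hσ hx' H ht htt.le (htη.trans_le (min_le_left _ _))
    (htη.le.trans hη1) (htη.le.trans ((min_le_right _ _).trans (min_le_right _ _)))
  have hFb : D.F (D.B 1 (rep x') (σ * t)) = D.F (rep x') + σ * t := D.iter_B 1 (rep x') (σ * t)
  rcases abs_eq_abs.1 key with h1 | h1
  · refine ⟨1, Or.inl rfl, q1 * m2 - q2 * m1, ?_⟩
    rw [hFb]; push_cast
    linear_combination q1 * q2 * h1 + q1 * hm2 - q2 * hm1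
  · refine ⟨-1, Or.inr rfl, q1 * m2 + q2 * m1, ?_⟩
    rw [hFb]; push_cast
    linear_combination q1 * q2 * h1 + q1 * hm2 + q2 * hm1

theorem global_iso (hna : ∀ x, ν {x} = 0) {c0 : ℝ} (hc0 : (c0 : Circle1) ∉ ν.support) :
    ∃ q : ℕ, 1 ≤ q ∧ ∃ E : Set Circle1, E.Finite ∧ ∀ s : ℝ, (s : Circle1) ∈ ν.support →
      (D.F s : Circle1) ∉ E → IsoAt D ν (cdf ν c0) q s := by
  have := h.prob
  suffices H : ∃ q : ℕ, 1 ≤ q ∧ ∃ E : Set Circle1, E.Finite ∧ ∀ s : ℝ, (s : Circle1) ∈ ν.support →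
      (D.F s : Circle1) ∈ (univ : Set Circle1) → (D.F s : Circle1) ∉ E →
      IsoAt D ν (cdf ν c0) q s by
    obtain ⟨q, hq, E, hE, h1⟩ := H
    exact ⟨q, hq, E, hE, fun s hs => h1 s hs (mem_univ _)⟩
  refine isCompact_univ.induction_on (p := fun S => ∃ q : ℕ, 1 ≤ q ∧ ∃ E : Set Circle1, E.Finite ∧
    ∀ s : ℝ, (s : Circle1) ∈ ν.support → (D.F s : Circle1) ∈ S → (D.F s : Circle1) ∉ E →
      IsoAt D ν (cdf ν c0) q s) ?_ ?_ ?_ ?_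
  · exact ⟨1, le_rfl, ∅, finite_empty, fun s _ hs => absurd hs (notMem_empty _)⟩
  · rintro S S' hSS ⟨q, hq, E, hE, h1⟩
    exact ⟨q, hq, E, hE, fun s hs hs' => h1 s hs (hSS hs')⟩
  · rintro S S' ⟨q, hq, E, hE, h1⟩ ⟨q', hq', E', hE', h1'⟩
    refine ⟨q * q', Nat.mul_pos hq hq', E ∪ E', hE.union hE', fun s hs hs' hsE => ?_⟩
    rcases hs' with hs' | hs'
    · rw [mul_comm]; exact (h1 s hs hs' fun h => hsE (Or.inl h)).mul q'
    · exact (h1' s hs hs' fun h => hsE (Or.inr h)).mul q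
  · intro x _
    obtain ⟨q, hq, δ, hδ, h1⟩ := h.side_iso hna hc0 (σ := 1) (by simp) x
    obtain ⟨q', hq', δ', hδ', h1'⟩ := h.side_iso hna hc0 (σ := -1) (by simp) x
    refine ⟨Metric.ball x (min δ δ'), mem_nhdsWithin_of_mem_nhds
      (Metric.ball_mem_nhds x (lt_min hδ hδ')), q * q', Nat.mul_pos hq hq', {x},
      finite_singleton x, fun s hs hsb hsx => ?_⟩
    obtain ⟨τ, hτ, hτa⟩ := exists_disp x (D.F s : Circle1)
    rw [Metric.mem_ball, dist_comm, ← hτa, lt_min_iff] at hsb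
    rcases lt_trichotomy τ 0 with h0 | h0 | h0
    · rw [abs_of_neg h0] at hsb
      exact (h1' s hs (-τ) (by linarith) hsb.2 (by rw [hτ]; congr 2; ring)).mul q
    · rw [h0] at hτ; exact absurd (by simpa using hτ) hsx
    · rw [abs_of_pos h0] at hsb
      rw [mul_comm]
      exact (h1 s hs τ h0 hsb.1 (by rw [hτ, one_mul])).mul _

/-- A maximizing measure of a generic function has an atom: otherwise its dynamics would be
isometric in the distribution-function coordinate up to rational translations, which contradicts
ergodicity. -/
theorem exists_atom : ∃ x, ν {x} ≠ 0 := by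
  by_contra hna
  push Not at hna
  have := h.prob
  obtain ⟨z0, hz0⟩ := h.dense_compl.nonempty
  rw [← coe_rep z0] at hz0
  set c0 := rep z0
  obtain ⟨q, hq, E, hE, hiso⟩ := h.global_iso hna hz0
  set g0 := cdf ν c0
  set u : Circle1 → ℝ := fun z => Real.cos (2 * Real.pi * (q * (cdf ν (rep z) - g0))) with hu
  have hper : ∀ (y : ℝ) (m : ℤ), Real.cos (2 * Real.pi * (y + m)) = Real.cos (2 * Real.pi * y) := by
    intro y m
    rw [show 2 * Real.pi * (y + m) = 2 * Real.pi * y + m * (2 * Real.pi) by ring,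
      Real.cos_add_int_mul_two_pi]
  have hucoe : ∀ s : ℝ, u (s : Circle1) = Real.cos (2 * Real.pi * (q * (cdf ν s - g0))) := by
    intro s
    obtain ⟨m, hm⟩ := exists_rep s
    rw [hu]
    show Real.cos (2 * Real.pi * (q * (cdf ν (rep (s : Circle1)) - g0))) = _
    rw [hm, cdf_add_int, show (q : ℝ) * (cdf ν s + m - g0) = q * (cdf ν s - g0) + ((q * m : ℤ) : ℝ)
      by push_cast; ring, hper]
  have hinv : u ∘ D.T =ᵐ[ν] u := by
    have hE0 : ν E = 0 := by
      rw [← biUnion_of_singleton E, measure_biUnion_null_iff hE.countable]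
      exact fun x _ => hna x
    have hE1 : ∀ᵐ z ∂ν, D.T z ∉ E := by
      rw [ae_iff]
      have := h.pre hE.measurableSet
      rw [hE0] at this
      simpa [preimage] using this
    filter_upwards [hE1, Measure.support_mem_ae (μ := ν)] with z hzE hzK
    rw [← coe_rep z] at hzE hzK
    rw [D.T_coe] at hzE
    obtain ⟨ε, hε, m, hm⟩ := hiso (rep z) hzK hzE
    show u (D.T z) = u z
    rw [← coe_rep z, D.T_coe, hucoe, hucoe, hm, hper]
    rcases hε with rfl | rfl
    · rw [one_mul]
    · rw [← Real.cos_neg]; congr 1; ring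
  have hum : Measurable u := by
    have := (cdf_cont ν hna).measurable.comp measurable_rep
    exact Real.measurable_cos.comp
      (measurable_const.mul (measurable_const.mul (this.sub measurable_const)))
  obtain ⟨r, hr⟩ := h.ergodic.ae_eq_const_of_ae_eq_comp_ae hum.aestronglyMeasurable hinv
  have hq0 : (q : ℝ) ≠ 0 := by positivity
  obtain ⟨θ, hθ⟩ : ∃ θ : ℝ, Real.cos (2 * Real.pi * (q * θ)) ≠ r := by
    by_cases h1 : r = 1
    · refine ⟨(2 * q)⁻¹, ?_⟩
      rw [show 2 * Real.pi * (q * (2 * (q:ℝ))⁻¹) = Real.pi by field_simp, Real.cos_pi, h1]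
      norm_num
    · exact ⟨0, by simpa using Ne.symm h1⟩
  have hcθ : Continuous fun y : ℝ => Real.cos (2 * Real.pi * (q * y)) := by fun_prop
  obtain ⟨η, hη, hηb⟩ := Metric.isOpen_iff.1 (isOpen_ne.preimage hcθ : IsOpen
    ((fun y : ℝ => Real.cos (2 * Real.pi * (q * y))) ⁻¹' {y | y ≠ r})) θ hθ
  set κ := min (η / 2) (1 / 2) with hκ
  have hκ0 : 0 < κ := by positivity
  obtain ⟨s1, hs1⟩ := cdf_surj ν hna (g0 + θ)
  obtain ⟨s2, hs2⟩ := cdf_surj ν hna (g0 + θ + κ)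
  have h12 : s1 ≤ s2 := by
    by_contra hlt
    have := cdf_mono ν (le_of_not_ge hlt)
    linarith
  have h21 : s2 ≤ s1 + 1 := by
    by_contra hlt
    have h1 := cdf_mono ν (le_of_not_ge hlt)
    have h2 := cdf_add_int ν s1 1
    push_cast at h2
    have h3 : κ ≤ 1 / 2 := min_le_right _ _
    linarith
  have harc := cdf_sub ν h12 h21
  have hnull : ν (arc s1 s2) = 0 := by
    refine measure_mono_null ?_ (ae_iff.1 hr)
    intro w hw hwr
    obtain ⟨a, rfl, ha1, ha2⟩ := mem_arc_iff.1 hw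
    rw [hucoe] at hwr
    refine hηb (Metric.mem_ball.2 ?_ : cdf ν a - g0 ∈ Metric.ball θ η) hwr
    have h1 := cdf_mono ν ha1.le
    have h2 := cdf_mono ν ha2
    have h3 : κ ≤ η / 2 := min_le_left _ _
    rw [Real.dist_eq, abs_lt]
    constructor <;> linarith
  rw [measureReal_def, hnull] at harc
  simp at harc
  linarith

/-- The maximizing measure of a generic function is periodic. -/
theorem exists_periodic : ∃ p : Circle1, ∃ n : ℕ, 0 < n ∧ D.T^[n] p = p ∧
    ν = orbMeas D.T n p := by
  have := h.prob
  obtain ⟨x, hx⟩ := h.exists_atom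
  have hstep : ∀ y, ν {y} ≤ ν {D.T y} := fun y => by
    rw [← h.pre (measurableSet_singleton (D.T y))]
    exact measure_mono (by simp)
  have hmono : ∀ k : ℕ, ν {x} ≤ ν {D.T^[k] x} := fun k => by
    induction k with
    | zero => exact le_rfl
    | succ k ih =>
      refine ih.trans ?_
      rw [Function.iterate_succ_apply']
      exact hstep _
  have hninj : ¬ Function.Injective fun k : ℕ => D.T^[k] x := by
    intro hinj
    have hfin := Measure.finite_const_le_meas_of_disjoint_iUnion ν (pos_iff_ne_zero.2 hx)
      (As := fun k : ℕ => {D.T^[k] x}) (fun k => measurableSet_singleton _)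
      (fun i j hij => disjoint_singleton.2 fun he => hij (hinj he)) (measure_ne_top _ _)
    refine infinite_univ (hfin.subset fun k _ => hmono k)
  simp only [Function.Injective, not_forall] at hninj
  obtain ⟨i, j, hij, hne⟩ := hninj
  wlog hlt : i < j generalizing i j
  · exact this j i hij.symm (Ne.symm hne) (lt_of_le_of_ne (le_of_not_gt hlt) (Ne.symm hne))
  have hp : D.T^[j - i] (D.T^[i] x) = D.T^[i] x := by
    rw [← Function.iterate_add_apply, Nat.sub_add_cancel hlt.le]; exact hij.symm
  have hpK : D.T^[i] x ∈ ν.support := by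
    rw [Measure.mem_support_iff_forall]
    intro U hU
    have h1 := hmono i
    have h2 : ν {D.T^[i] x} ≤ ν U := measure_mono (singleton_subset_iff.2 (mem_of_mem_nhds hU))
    exact (pos_iff_ne_zero.2 hx).trans_le (h1.trans h2)
  refine ⟨D.T^[i] x, j - i, Nat.sub_pos_of_lt hlt, hp, (h.uniq (orbMeas_inv D.T_cont
    (Nat.sub_pos_of_lt hlt) hp) ?_).symm⟩
  rw [orbMeas, Measure.smul_apply, Measure.finsetSum_apply, Finset.sum_eq_zero, smul_zero]
  intro k _
  rw [Measure.dirac_apply' _ K_closed.measurableSet.compl, indicator_of_notMem]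
  exact fun hn => hn (h.K_iter hpK k)

end GoodMax
end EC

/-! ### Locking -/

namespace EC

/-- `f` is locked: all functions Lipschitz-close to `f` are uniquely maximized by a periodic
measure. -/
def ExpData.Lock (D : ExpData) (f : Circle1 → ℝ) : Prop :=
  ∃ ε > 0, ∀ f' : Circle1 → ℝ, Lip ε (fun z => f' z - f z) → UniqMaxPeriodic f' D.T

theorem finite_sep {O : Set Circle1} (hO : O.Finite) :
    ∃ s > 0, ∀ x ∈ O, ∀ y ∈ O, x ≠ y → s ≤ dist x y := by
  set S := (hO.toFinset ×ˢ hO.toFinset).filter fun p => p.1 ≠ p.2 with hS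
  rcases S.eq_empty_or_nonempty with he | hne
  · refine ⟨1, one_pos, fun x hx y hy hxy => ?_⟩
    have : (x, y) ∈ S := by simp [hS, hx, hy, hxy]
    rw [he] at this; simp at this
  · obtain ⟨p, hp, hmin⟩ := S.exists_min_image (fun p => dist p.1 p.2) hne
    refine ⟨dist p.1 p.2, dist_pos.2 (by simp [hS] at hp; exact hp.2), fun x hx y hy hxy => ?_⟩
    exact hmin (x, y) (by simp [hS, hx, hy, hxy])

/-- Near a finite invariant set, a high iterate doubles the distance to the set. -/
theorem ExpData.doubling (D : ExpData) {O : Set Circle1} (hO : O.Finite) (hne : O.Nonempty)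
    (hinv : ∀ x ∈ O, D.T x ∈ O) : ∃ N : ℕ, ∃ r > 0, ∀ x, Metric.infDist x O < r →
      2 * Metric.infDist x O ≤ Metric.infDist (D.T^[N] x) O := by
  obtain ⟨N, hN⟩ : ∃ N : ℕ, 2 ≤ D.c * D.lam ^ N := by
    obtain ⟨N, hN⟩ := pow_unbounded_of_one_lt (2 / D.c) D.lam_gt
    refine ⟨N, ?_⟩
    rw [div_lt_iff₀ D.c_pos] at hN
    linarith
  obtain ⟨s, hs, hsep⟩ := finite_sep hO
  set A := D.Lam ^ N with hA
  have hA1 : 1 ≤ A := one_le_pow₀ D.one_le_Lam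
  refine ⟨N, min (1 / (2 * A)) (s / (A + 2)), by positivity, fun x hx => ?_⟩
  obtain ⟨o, ho, hox⟩ := hO.isCompact.exists_infDist_eq_dist hne x
  rw [hox] at hx ⊢
  have h1 : dist x o * (2 * A) < 1 := by
    rw [← lt_div_iff₀ (by positivity)]; exact hx.trans_le (min_le_left _ _)
  have h2 : dist x o * (A + 2) < s := by
    rw [← lt_div_iff₀ (by positivity)]; exact hx.trans_le (min_le_right _ _)
  have hup := D.Titer_lip N x o
  have hlow : 2 * dist x o ≤ dist (D.T^[N] x) (D.T^[N] o) := by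
    obtain ⟨t, ht, hta⟩ := exists_disp o x
    have hx' : x = ((rep o + t : ℝ) : Circle1) := by rw [AddCircle.coe_add, coe_rep]; exact ht
    have e1 := D.expand_dist N (rep o + t) (rep o)
    have e2 := D.iter_lip N (rep o + t) (rep o)
    rw [add_sub_cancel_left, hta, dist_comm] at e1 e2
    have e3 : D.T^[N] x = ((D.F^[N] (rep o + t) : ℝ) : Circle1) := by rw [hx', D.iter_coe]
    have e4 : D.T^[N] o = ((D.F^[N] (rep o) : ℝ) : Circle1) := by
      rw [← D.iter_coe, coe_rep]
    rw [e3, e4, dist_coe_eq (by rw [← hA] at e2; linarith)]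
    refine le_trans ?_ e1
    exact mul_le_mul_of_nonneg_right hN dist_nonneg
  have hN' : D.T^[N] o ∈ O := D.iter_mem (fun _ hx => hinv _ hx) ho N
  refine (Metric.le_infDist hne).2 fun y hy => ?_
  by_cases hyo : y = D.T^[N] o
  · rw [hyo]; exact hlow
  · have h3 := hsep _ hN' y hy (Ne.symm hyo)
    have h4 := dist_triangle (D.T^[N] o) (D.T^[N] x) y
    rw [dist_comm (D.T^[N] o) (D.T^[N] x)] at h4
    rw [← hA] at hup
    linarith

/-- Invariant measures with little mass away from a finite invariant set are close to it. -/
theorem ExpData.integral_infDist_le (D : ExpData) {O : Set Circle1} (hO : O.Finite)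
    (hne : O.Nonempty) (hinv : ∀ x ∈ O, D.T x ∈ O) : ∃ r > 0, ∀ μ, InvProb D.T μ →
      ∫ x, Metric.infDist x O ∂μ ≤ μ.real {x | r ≤ Metric.infDist x O} := by
  obtain ⟨N, r, hr, hd⟩ := D.doubling hO hne hinv
  refine ⟨r, hr, fun μ hμ => ?_⟩
  have := hμ.1
  have hc : Continuous fun x => Metric.infDist x O := Metric.continuous_infDist_pt O
  have hcN : Continuous fun x => Metric.infDist (D.T^[N] x) O := hc.comp (D.Titer_cont N)
  have hmeas : MeasurableSet {x | r ≤ Metric.infDist x O} :=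
    (isClosed_le continuous_const hc).measurableSet
  have e1 : ∫ x, Metric.infDist (D.T^[N] x) O ∂μ = ∫ x, Metric.infDist x O ∂μ :=
    integral_comp_T (D.Titer_cont N) (InvProb.iterate D.T_cont hμ N) hc
  have i1 := integrable_of_cont hc μ
  have i2 := integrable_of_cont hcN μ
  have i3 : Integrable (fun x => {x | r ≤ Metric.infDist x O}.indicator (fun _ => (1:ℝ)) x) μ :=
    (integrable_const (1:ℝ)).indicator hmeas
  have key : ∫ x, 2 * Metric.infDist x O ∂μ ≤
      ∫ x, (Metric.infDist (D.T^[N] x) O +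
        {x | r ≤ Metric.infDist x O}.indicator (fun _ => (1:ℝ)) x) ∂μ := by
    refine integral_mono (i1.const_mul 2) (i2.add i3) fun x => ?_
    show 2 * Metric.infDist x O ≤ Metric.infDist (D.T^[N] x) O +
        {x | r ≤ Metric.infDist x O}.indicator (fun _ => (1:ℝ)) x
    by_cases hx : r ≤ Metric.infDist x O
    · rw [indicator_of_mem (by exact hx)]
      obtain ⟨o, ho⟩ := hne
      have h1 := Metric.infDist_le_dist_of_mem (x := x) ho
      have h2 := dist_le_half x o
      have h3 := Metric.infDist_nonneg (x := D.T^[N] x) (s := O)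
      linarith
    · rw [indicator_of_notMem (by exact hx), add_zero]
      exact hd x (not_le.1 hx)
  rw [integral_const_mul, integral_add i2 i3, e1, integral_indicator_const _ hmeas] at key
  simp only [smul_eq_mul, mul_one] at key
  linarith

/-- Comparison of the integral of a Lipschitz function with its average over a periodic orbit. -/
theorem ExpData.integral_sub_orb (D : ExpData) {n : ℕ} (hn : 0 < n) {p : Circle1}
    (hp : D.T^[n] p = p) {ε : ℝ} (hε : 0 ≤ ε) {η : Circle1 → ℝ} (hη : Lip ε η)
    {μ : Measure Circle1} (hμ : InvProb D.T μ) :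
    ∫ x, η x ∂μ - ∫ x, η x ∂(orbMeas D.T n p) ≤
      ε * D.Lam ^ n * ∫ x, Metric.infDist x ((fun k => D.T^[k] p) '' (Finset.range n : Set ℕ)) ∂μ
    := by
  set O := (fun k => D.T^[k] p) '' (Finset.range n : Set ℕ) with hOdef
  have := hμ.1
  have hOf : O.Finite := (Finset.finite_toSet _).image _
  have hne : O.Nonempty := ⟨p, 0, by simpa using hn, rfl⟩
  have hc : Continuous fun x => Metric.infDist x O := Metric.continuous_infDist_pt O
  have hηc : Continuous η := hη.continuous
  have hn' : (0:ℝ) < n := by exact_mod_cast hn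
  have hper : ∀ k, birkhoffSum D.T η n (D.T^[k] p) = birkhoffSum D.T η n p := by
    intro k
    induction k with
    | zero => rfl
    | succ k ih =>
      rw [Function.iterate_succ_apply', ← ih, ← sub_eq_zero,
        birkhoffSum_apply_sub_birkhoffSum, ← Function.iterate_add_apply, add_comm,
        Function.iterate_add_apply, hp, sub_self]
  have hpt : ∀ x, birkhoffSum D.T η n x ≤
      birkhoffSum D.T η n p + n * (ε * D.Lam ^ n * Metric.infDist x O) := by
    intro x
    obtain ⟨o, ho, hox⟩ := hOf.isCompact.exists_infDist_eq_dist hne x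
    obtain ⟨k, -, rfl⟩ := ho
    rw [hox, ← hper k, birkhoffSum, birkhoffSum]
    have : (n : ℝ) * (ε * D.Lam ^ n * dist x (D.T^[k] p)) =
        ∑ _j ∈ Finset.range n, (ε * D.Lam ^ n * dist x (D.T^[k] p)) := by simp
    show _ ≤ _ + (n : ℝ) * (ε * D.Lam ^ n * dist x (D.T^[k] p))
    rw [this, ← Finset.sum_add_distrib]
    refine Finset.sum_le_sum fun j hj => ?_
    have h1 := hη (D.T^[j] x) (D.T^[j] (D.T^[k] p))
    have h2 := D.Titer_lip j x (D.T^[k] p)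
    have h3 : D.Lam ^ j ≤ D.Lam ^ n :=
      pow_le_pow_right₀ D.one_le_Lam (Finset.mem_range.1 hj).le
    have h4 := (abs_le.1 h1).2
    have h5 : ε * dist (D.T^[j] x) (D.T^[j] (D.T^[k] p)) ≤
        ε * D.Lam ^ n * dist x (D.T^[k] p) := by
      rw [mul_assoc]
      exact mul_le_mul_of_nonneg_left
        (h2.trans (mul_le_mul_of_nonneg_right h3 dist_nonneg)) hε
    linarith
  have e1 := integral_birkhoffSum D.T_cont hμ hηc n
  have i1 : Integrable (fun x => (n:ℝ) * (ε * D.Lam ^ n * Metric.infDist x O)) μ :=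
    integrable_of_cont (by fun_prop) μ
  have key : ∫ x, birkhoffSum D.T η n x ∂μ ≤ ∫ x, (birkhoffSum D.T η n p +
      (n:ℝ) * (ε * D.Lam ^ n * Metric.infDist x O)) ∂μ :=
    integral_mono (integrable_of_cont (continuous_birkhoffSum D.T_cont hηc n) μ)
      ((integrable_const _).add i1) hpt
  rw [e1, integral_add (integrable_const _) i1, integral_const_mul,
    integral_const_mul, integral_const] at key
  rw [integral_orbMeas hηc]
  simp only [probReal_univ, smul_eq_mul, one_mul] at key
  rw [← sub_nonneg]
  have h6 : 0 ≤ (n:ℝ)⁻¹ * (birkhoffSum D.T η n p + n * (ε * D.Lam ^ n * ∫ x, Metric.infDist x O ∂μ)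
      - n * ∫ x, η x ∂μ) := mul_nonneg (by positivity) (by linarith)
  refine h6.trans_eq ?_
  field_simp
  ring

namespace GoodMax
variable {P : Pert} {D : ExpData} {ω : Om} {ν : Measure Circle1} (h : GoodMax P D ω ν)
include h

/-- Mass on a closed set disjoint from the support of the maximizing measure is penalized linearly:
the set is covered by plateaus, and adding a small multiple of a plateau does not raise `β`. -/
theorem penalty (hpos : ∀ k, (∀ h > 0, beta (P.g ω) D.T ≤
      beta (fun x => P.g ω x + (-h) * P.φ k x) D.T) →
      ∃ n : ℕ, beta (fun x => P.g ω x + (1 / ((n : ℝ) + 1)) * P.φ k x) D.T ≤ beta (P.g ω) D.T)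
    {S : Set Circle1} (hS : IsClosed S) (hSK : Disjoint S ν.support) : ∃ κ > 0, ∀ μ, InvProb D.T μ →
      ∫ x, P.g ω x ∂μ + κ * μ.real S ≤ beta (P.g ω) D.T := by
  have hν := h.prob
  suffices H : ∃ κ > 0, ∀ μ, InvProb D.T μ →
      ∫ x, P.g ω x ∂μ + κ * μ.real (S ∩ S) ≤ beta (P.g ω) D.T by simpa using H
  refine hS.isCompact.induction_on (p := fun A => ∃ κ > 0, ∀ μ, InvProb D.T μ →
      ∫ x, P.g ω x ∂μ + κ * μ.real (A ∩ S) ≤ beta (P.g ω) D.T) ?_ ?_ ?_ ?_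
  · refine ⟨1, one_pos, fun μ hμ => ?_⟩
    simpa using le_beta (P.g_cont ω) hμ
  · rintro A A' hA ⟨κ, hκ, H⟩
    refine ⟨κ, hκ, fun μ hμ => le_trans ?_ (H μ hμ)⟩
    have := hμ.1
    gcongr
    exact measure_ne_top _ _
  · rintro A A' ⟨κ, hκ, H⟩ ⟨κ', hκ', H'⟩
    refine ⟨min κ κ' / 2, by positivity, fun μ hμ => ?_⟩
    have := hμ.1
    have h1 := H μ hμ
    have h2 := H' μ hμ
    have h3 : μ.real ((A ∪ A') ∩ S) ≤ μ.real (A ∩ S) + μ.real (A' ∩ S) := by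
      rw [union_inter_distrib_right]; exact measureReal_union_le _ _
    have h4 : min κ κ' * μ.real (A ∩ S) ≤ κ * μ.real (A ∩ S) :=
      mul_le_mul_of_nonneg_right (min_le_left _ _) measureReal_nonneg
    have h5 : min κ κ' * μ.real (A' ∩ S) ≤ κ' * μ.real (A' ∩ S) :=
      mul_le_mul_of_nonneg_right (min_le_right _ _) measureReal_nonneg
    have h6 : min κ κ' / 2 * μ.real ((A ∪ A') ∩ S) ≤
        min κ κ' / 2 * (μ.real (A ∩ S) + μ.real (A' ∩ S)) :=
      mul_le_mul_of_nonneg_left h3 (by positivity)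
    linarith
  · intro c hc
    have hcK : c ∉ ν.support := disjoint_left.1 hSK hc
    obtain ⟨e, he, heK⟩ := Metric.isOpen_iff.1 (K_closed (ν := ν)).isOpen_compl c hcK
    set ρ₂ := min (e / 2) (1 / 3) with hρ
    have hρ0 : 0 < ρ₂ := by positivity
    have hρe : ρ₂ < e := (min_le_left _ _).trans_lt (by linarith)
    have hρh : ρ₂ < 1 / 2 := (min_le_right _ _).trans_lt (by norm_num)
    obtain ⟨k, a, ha, hφ0, hφa, hφz⟩ := P.plat c (ρ₂ / 2) ρ₂ (by positivity) (by linarith) hρh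
    have hφν : ∫ x, P.φ k x ∂ν = 0 := by
      refine integral_eq_zero_of_ae ?_
      filter_upwards [Measure.support_mem_ae (μ := ν)] with x hx
      refine hφz x ?_
      by_contra hlt
      exact heK (Metric.mem_ball.2 ((not_le.1 hlt).trans hρe)) hx
    obtain ⟨n, hn⟩ := hpos k fun t _ => by
      have := D.beta_le_add (P.g_cont ω) (P.φ_cont k) h.isMax (-t)
      rwa [hφν, mul_zero, add_zero] at this
    refine ⟨Metric.closedBall c (ρ₂ / 2), mem_nhdsWithin_of_mem_nhds
      (Metric.closedBall_mem_nhds c (by positivity)), 1 / ((n:ℝ) + 1) * a, by positivity,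
      fun μ hμ => ?_⟩
    have := hμ.1
    have hcont : Continuous fun x => P.g ω x + (1 / ((n : ℝ) + 1)) * P.φ k x :=
      (P.g_cont ω).add (continuous_const.mul (P.φ_cont k))
    have h1 := (le_beta hcont hμ).trans hn
    rw [integral_add (integrable_of_cont (P.g_cont ω) μ)
      ((integrable_of_cont (P.φ_cont k) μ).const_mul _), integral_const_mul] at h1
    have hB : MeasurableSet (Metric.closedBall c (ρ₂ / 2)) := measurableSet_closedBall
    have h2 : μ.real (Metric.closedBall c (ρ₂ / 2)) * a ≤ ∫ x, P.φ k x ∂μ := by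
      rw [← smul_eq_mul, ← integral_indicator_const a hB]
      refine integral_mono ((integrable_const a).indicator hB)
        (integrable_of_cont (P.φ_cont k) μ) fun x => ?_
      show (Metric.closedBall c (ρ₂ / 2)).indicator (fun _ => a) x ≤ P.φ k x
      by_cases hx : x ∈ Metric.closedBall c (ρ₂ / 2)
      · rw [indicator_of_mem hx, hφa x hx]
      · rw [indicator_of_notMem hx]; exact hφ0 x
    have h3 : μ.real (Metric.closedBall c (ρ₂ / 2) ∩ S) ≤ μ.real (Metric.closedBall c (ρ₂ / 2)) :=
      measureReal_mono inter_subset_left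
    have h4 : 1 / ((n:ℝ) + 1) * (μ.real (Metric.closedBall c (ρ₂ / 2) ∩ S) * a) ≤
        1 / ((n:ℝ) + 1) * ∫ x, P.φ k x ∂μ :=
      mul_le_mul_of_nonneg_left ((mul_le_mul_of_nonneg_right h3 ha.le).trans h2) (by positivity)
    linarith

/-- A generic function is locked. -/
theorem lock (hpos : ∀ k, (∀ h > 0, beta (P.g ω) D.T ≤
      beta (fun x => P.g ω x + (-h) * P.φ k x) D.T) →
      ∃ n : ℕ, beta (fun x => P.g ω x + (1 / ((n : ℝ) + 1)) * P.φ k x) D.T ≤ beta (P.g ω) D.T) :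
    D.Lock (P.g ω) := by
  have hν := h.prob
  obtain ⟨p, n, hn, hp, hνp⟩ := h.exists_periodic
  set O := (fun k => D.T^[k] p) '' (Finset.range n : Set ℕ) with hOdef
  have hOf : O.Finite := (Finset.finite_toSet _).image _
  have hne : O.Nonempty := ⟨p, 0, by simpa using hn, rfl⟩
  have hinv : ∀ x ∈ O, D.T x ∈ O := by
    rintro x ⟨k, hk, rfl⟩
    show D.T (D.T^[k] p) ∈ O
    have hk' : k < n := by simpa using hk
    rw [← Function.iterate_succ_apply' D.T]
    rcases Nat.lt_or_ge (k + 1) n with h1 | h1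
    · exact ⟨k + 1, by simpa using h1, rfl⟩
    · rw [show k.succ = n by omega, hp]; exact ⟨0, by simpa using hn, rfl⟩
  have hνO : ∀ A : Set Circle1, MeasurableSet A → A ⊆ Oᶜ → ν A = 0 := by
    intro A hA hAO
    rw [hνp, orbMeas, Measure.smul_apply, Measure.finsetSum_apply, Finset.sum_eq_zero, smul_zero]
    intro k hk
    rw [Measure.dirac_apply' _ hA, indicator_of_notMem]
    exact fun hkA => hAO hkA ⟨k, by simpa using hk, rfl⟩
  have hKO : ν.support ⊆ O := by
    refine Measure.support_subset_of_isClosed hOf.isClosed ?_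
    rw [mem_ae_iff]
    exact hνO _ hOf.measurableSet.compl subset_rfl
  have hOK : O ⊆ ν.support := by
    rintro x ⟨k, hk, rfl⟩
    rw [Measure.mem_support_iff_forall]
    intro U hU
    refine lt_of_lt_of_le ?_ (measure_mono (singleton_subset_iff.2 (mem_of_mem_nhds hU)))
    rw [hνp, orbMeas, Measure.smul_apply, Measure.finsetSum_apply, smul_eq_mul]
    refine ENNReal.mul_pos (by simp) (ne_of_gt ?_)
    refine lt_of_lt_of_le zero_lt_one (le_trans ?_ (Finset.single_le_sum (f := fun i =>
      (Measure.dirac (D.T^[i] p)) {D.T^[k] p}) (fun _ _ => zero_le) (by simpa using hk)))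
    simp
  obtain ⟨r, hr, hD⟩ := D.integral_infDist_le hOf hne hinv
  have hic : Continuous fun x => Metric.infDist x O := Metric.continuous_infDist_pt O
  set S := {x | r ≤ Metric.infDist x O} with hS
  have hSc : IsClosed S := isClosed_le continuous_const hic
  have hSK : Disjoint S ν.support := by
    rw [disjoint_left]
    intro x hx hxK
    have h0 : Metric.infDist x O = 0 := Metric.infDist_zero_of_mem (hKO hxK)
    have hx' : r ≤ Metric.infDist x O := hx
    linarith
  obtain ⟨κ, hκ, hpen⟩ := h.penalty hpos hSc hSK
  have hΛ : 0 < D.Lam ^ n := pow_pos D.Lam_pos n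
  refine ⟨κ / (2 * D.Lam ^ n), by positivity, fun f' hf' => ?_⟩
  set η := fun z => f' z - P.g ω z with hη
  have hηc : Continuous η := hf'.continuous
  have hfc : Continuous f' := by
    have := hηc.add (P.g_cont ω)
    exact this.congr fun x => sub_add_cancel _ _
  have h_int : ∀ μ, InvProb D.T μ → ∫ x, f' x ∂μ = ∫ x, η x ∂μ + ∫ x, P.g ω x ∂μ := by
    intro μ hμ
    have := hμ.1
    rw [← integral_add (integrable_of_cont hηc μ) (integrable_of_cont (P.g_cont ω) μ)]
    exact integral_congr_ae (Eventually.of_forall fun x => (sub_add_cancel _ _).symm)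
  have hνi := h.isMax.1
  have main : ∀ μ, InvProb D.T μ →
      ∫ x, f' x ∂μ + κ / 2 * ∫ x, Metric.infDist x O ∂μ ≤ ∫ x, f' x ∂ν := by
    intro μ hμ
    have h1 := D.integral_sub_orb hn hp (by positivity) hf' hμ
    rw [← hνp] at h1
    have e1 : κ / (2 * D.Lam ^ n) * D.Lam ^ n = κ / 2 := by field_simp
    rw [e1] at h1
    have h2 := hpen μ hμ
    have h3 := mul_le_mul_of_nonneg_left (hD μ hμ) hκ.le
    rw [h_int μ hμ, h_int ν hνi, h.isMax.2]
    change ∫ x, η x ∂μ - ∫ x, η x ∂ν ≤ κ / 2 * ∫ x, Metric.infDist x O ∂μ at h1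
    linarith
  have hnn : ∀ μ : Measure Circle1, 0 ≤ ∫ x, Metric.infDist x O ∂μ := fun μ =>
    integral_nonneg fun x => Metric.infDist_nonneg
  have hβ : ∫ x, f' x ∂ν = beta f' D.T := by
    refine le_antisymm (le_beta hfc hνi) (csSup_le ⟨_, ν, hνi, rfl⟩ ?_)
    rintro _ ⟨μ, hμ, rfl⟩
    have h1 := main μ hμ
    have h2 := mul_nonneg (half_pos hκ).le (hnn μ)
    show ∫ x, f' x ∂μ ≤ _
    linarith
  refine ⟨ν, ⟨hνi, hβ⟩, ⟨hνi, p, n, hn, hp, ?_⟩, fun μ hμ => ?_⟩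
  · refine le_antisymm prob_le_one ?_
    have h1 : ν Oᶜ = 0 := hνO _ hOf.measurableSet.compl subset_rfl
    rw [← (prob_compl_eq_zero_iff hOf.measurableSet).1 h1]
    refine measure_mono ?_
    rintro x ⟨k, -, rfl⟩
    exact ⟨k, rfl⟩
  · refine h.uniq hμ.1 ?_
    have := hμ.1.1
    have h1 := main μ hμ.1
    rw [hμ.2, hβ] at h1
    have h2 : ∫ x, Metric.infDist x O ∂μ = 0 := by
      refine le_antisymm ?_ (hnn μ)
      by_contra hlt
      have := mul_pos (half_pos hκ) (not_le.1 hlt)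
      linarith
    rw [integral_eq_zero_iff_of_nonneg (fun x => Metric.infDist_nonneg)
      (integrable_of_cont hic μ)] at h2
    refine measure_mono_null ?_ (ae_iff.1 h2)
    intro x hx h0
    refine hx (hOK ?_)
    exact (hOf.isClosed.mem_iff_infDist_zero hne).2 h0

end GoodMax

/-- A random perturbation is almost surely locked. -/
theorem Pert.lock_ae (P : Pert) (D : ExpData) (hD : D.HoldScales) :
    ∀ᵐ ω ∂Pr, D.Lock (P.g ω) := by
  filter_upwards [P.quad_ae D, P.pos_ae D, P.no_collide_ae D hD] with ω h1 h2 h3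
  obtain ⟨ν, hν⟩ := D.exists_max (P.g_cont ω)
  exact (GoodMax.mk h1 h3 hν).lock h2

/-! ### Steklov averages -/

section Steklov
variable {V E : Type*} [NormedAddCommGroup V] [NormedSpace ℝ V] [FiniteDimensional ℝ V]
  [NormedAddCommGroup E] [NormedSpace ℝ E] [CompleteSpace E]

/-- The average of `Φ` over the segment `[p - εv, p + εv]`. -/
def stek (v : V) (ε : ℝ) (Φ : V → E) (p : V) : E :=
  (1 / 2 : ℝ) • ∫ y in (-1 : ℝ)..1, Φ (p + (ε * y) • v)

omit [FiniteDimensional ℝ V] in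
theorem stek_close {v : V} {ε e : ℝ} {Φ : V → E} (hΦ : Continuous Φ) {p : V} (hε : 0 < ε)
    (h : ∀ s, |s| ≤ ε → ‖Φ (p + s • v) - Φ p‖ ≤ e) : ‖stek v ε Φ p - Φ p‖ ≤ e := by
  have h1 : stek v ε Φ p - Φ p = (1 / 2 : ℝ) • ∫ y in (-1 : ℝ)..1, (Φ (p + (ε * y) • v) - Φ p) := by
    rw [intervalIntegral.integral_sub, intervalIntegral.integral_const, smul_sub, smul_smul, stek]
    · norm_num
    · exact (by fun_prop : Continuous fun y : ℝ => Φ (p + (ε * y) • v)).intervalIntegrable _ _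
    · exact continuous_const.intervalIntegrable _ _
  have h2 : ‖∫ y in (-1 : ℝ)..1, (Φ (p + (ε * y) • v) - Φ p)‖ ≤ e * |1 - (-1)| := by
    refine intervalIntegral.norm_integral_le_of_norm_le_const fun y hy => h _ ?_
    rw [uIoc_of_le (by norm_num)] at hy
    rw [abs_mul, abs_of_pos hε]
    exact mul_le_of_le_one_right hε.le (abs_le.2 ⟨hy.1.le, hy.2⟩)
  rw [h1, norm_smul]
  norm_num at h2 ⊢
  linarith

omit [FiniteDimensional ℝ V] [CompleteSpace E] in
theorem stek_cont {v : V} {ε : ℝ} {Φ : V → E} (hΦ : Continuous Φ) : Continuous (stek v ε Φ) := by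
  unfold stek
  refine Continuous.const_smul ?_ _
  refine intervalIntegral.continuous_parametric_intervalIntegral_of_continuous' ?_ _ _
  fun_prop

theorem stek_hasFDeriv {v : V} {ε : ℝ} {G : V → ℝ} (hG : ContDiff ℝ 1 G) (p : V) :
    HasFDerivAt (stek v ε G) (stek v ε (fderiv ℝ G) p) p := by
  have hc : Continuous (fderiv ℝ G) := hG.continuous_fderiv one_ne_zero
  have hpr : ProperSpace V := FiniteDimensional.proper ℝ V
  obtain ⟨M, hM⟩ := ((isCompact_closedBall p 1).prod
    (isCompact_Icc (a := (-1 : ℝ)) (b := 1))).exists_bound_of_continuousOn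
    (f := fun q : V × ℝ => fderiv ℝ G (q.1 + (ε * q.2) • v)) (by fun_prop)
  have key := intervalIntegral.hasFDerivAt_integral_of_dominated_of_fderiv_le (𝕜 := ℝ)
    (μ := volume) (a := -1) (b := 1) (F := fun (p : V) (y : ℝ) => G (p + (ε * y) • v))
    (F' := fun (p : V) (y : ℝ) => fderiv ℝ G (p + (ε * y) • v)) (x₀ := p)
    (s := Metric.closedBall p 1) (bound := fun _ => M)
    (Metric.closedBall_mem_nhds p one_pos)
    (Eventually.of_forall fun q => by
      have := hG.continuous
      exact (by fun_prop : Continuous fun y : ℝ => G (q + (ε * y) • v)).aestronglyMeasurable)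
    (by
      have := hG.continuous
      exact (by fun_prop : Continuous fun y : ℝ => G (p + (ε * y) • v)).intervalIntegrable _ _)
    ((by fun_prop : Continuous fun y : ℝ => fderiv ℝ G (p + (ε * y) • v)).aestronglyMeasurable)
    (Eventually.of_forall fun y hy q hq => by
      rw [uIoc_of_le (by norm_num)] at hy
      exact hM (q, y) ⟨hq, hy.1.le, hy.2⟩)
    (continuous_const.intervalIntegrable _ _)
    (Eventually.of_forall fun y hy q hq => by
      have h1 : HasFDerivAt G (fderiv ℝ G (q + (ε * y) • v)) (q + (ε * y) • v) :=
        (hG.differentiable one_ne_zero _).hasFDerivAt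
      simpa [Function.comp_def] using h1.comp q ((hasFDerivAt_id q).add_const ((ε * y) • v)))
  exact key.const_smul (1 / 2 : ℝ)

theorem stek_contDiff {v : V} {ε : ℝ} {G : V → ℝ} (hG : ContDiff ℝ 1 G) :
    ContDiff ℝ 1 (stek v ε G) := by
  rw [contDiff_one_iff_hasFDerivAt]
  exact ⟨_, stek_cont (hG.continuous_fderiv one_ne_zero), stek_hasFDeriv hG⟩

theorem stek_dir {v : V} {ε : ℝ} (hε : 0 < ε) {G : V → ℝ} (hG : ContDiff ℝ 1 G) (p : V) :
    fderiv ℝ (stek v ε G) p v = (G (p + ε • v) - G (p - ε • v)) / (2 * ε) := by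
  have hc : Continuous (fderiv ℝ G) := hG.continuous_fderiv one_ne_zero
  rw [(stek_hasFDeriv hG p).fderiv, stek, _root_.smul_apply,
    ContinuousLinearMap.intervalIntegral_apply]
  · have h := intervalIntegral.integral_eq_sub_of_hasDerivAt (a := -1) (b := 1)
      (f := fun y : ℝ => G (p + (ε * y) • v)) (f' := fun y => ε * fderiv ℝ G (p + (ε * y) • v) v)
      (fun y _ => by
        have h1 : HasFDerivAt G (fderiv ℝ G (p + (ε * y) • v)) (p + (ε * y) • v) :=
          (hG.differentiable one_ne_zero _).hasFDerivAt
        have h2 : HasDerivAt (fun y : ℝ => p + (ε * y) • v) (ε • v) y := by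
          simpa using (((hasDerivAt_id y).const_mul ε).smul_const v).const_add p
        simpa [Function.comp_def] using h1.comp_hasDerivAt y h2)
      ((by fun_prop : Continuous fun y : ℝ =>
        ε * fderiv ℝ G (p + (ε * y) • v) v).intervalIntegrable _ _)
    rw [intervalIntegral.integral_const_mul] at h
    have e1 : p + (ε * (-1)) • v = p - ε • v := by rw [mul_neg_one, neg_smul, sub_eq_add_neg]
    rw [mul_one, e1] at h
    rw [← h, smul_eq_mul]
    field_simp
  · exact (by fun_prop : Continuous fun y : ℝ =>
      fderiv ℝ G (p + (ε * y) • v)).intervalIntegrable _ _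

end Steklov

/-- Uniform continuity in the circle direction, uniformly on compact parameter sets. -/
theorem unif_per {A E : Type*} [PseudoMetricSpace A] [NormedAddCommGroup E] {Φ : A × ℝ → E}
    (hΦ : Continuous Φ) (hp : ∀ t x, Φ (t, x + 1) = Φ (t, x)) {K : Set A} (hK : IsCompact K)
    {e : ℝ} (he : 0 < e) :
    ∃ δ > 0, ∀ t ∈ K, ∀ x s : ℝ, |s| ≤ δ → ‖Φ (t, x + s) - Φ (t, x)‖ ≤ e := by
  have hc := (hK.prod (isCompact_Icc (a := (-1 : ℝ)) (b := 2))).uniformContinuousOn_of_continuous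
    hΦ.continuousOn
  obtain ⟨δ, hδ, h⟩ := Metric.uniformContinuousOn_iff.1 hc e he
  refine ⟨min 1 (δ / 2), by positivity, fun t ht x s hs => ?_⟩
  have hs1 := abs_le.1 (hs.trans (min_le_left _ _))
  have hs2 := hs.trans (min_le_right _ _)
  have hz : ∀ y, Φ (t, y) = Φ (t, y - ⌊x⌋) := fun y => by
    have : Function.Periodic (fun y => Φ (t, y)) 1 := hp t
    simpa using (this.sub_zsmul_eq ⌊x⌋ (x := y)).symm
  rw [hz (x + s), hz x, ← dist_eq_norm]
  have hf0 := Int.fract_nonneg x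
  have hf1 := Int.fract_lt_one x
  have hfx : x - ⌊x⌋ = Int.fract x := rfl
  refine (h _ ⟨ht, ?_⟩ _ ⟨ht, ?_⟩ ?_).le
  · constructor <;> simp only <;> linarith
  · constructor <;> simp only <;> linarith
  · rw [Prod.dist_eq, dist_self, max_lt_iff]
    refine ⟨hδ, ?_⟩
    rw [Real.dist_eq, show x + s - ⌊x⌋ - (x - ⌊x⌋) = s by ring]
    linarith

/-- Periodic continuous functions are bounded over compact parameter sets. -/
theorem bdd_per {A E : Type*} [PseudoMetricSpace A] [NormedAddCommGroup E] {Φ : A × ℝ → E}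
    (hΦ : Continuous Φ) (hp : ∀ t x, Φ (t, x + 1) = Φ (t, x)) {K : Set A} (hK : IsCompact K) :
    ∃ M ≥ 0, ∀ t ∈ K, ∀ x : ℝ, ‖Φ (t, x)‖ ≤ M := by
  obtain ⟨M, hM⟩ := (hK.prod (isCompact_Icc (a := (0 : ℝ)) (b := 1))).exists_bound_of_continuousOn
    hΦ.continuousOn
  refine ⟨max M 0, le_max_right _ _, fun t ht x => ?_⟩
  have hz : Φ (t, x) = Φ (t, x - ⌊x⌋) := by
    have : Function.Periodic (fun y => Φ (t, y)) 1 := hp t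
    simpa using (this.sub_zsmul_eq ⌊x⌋ (x := x)).symm
  rw [hz]
  exact (hM _ ⟨ht, Int.fract_nonneg x, (Int.fract_lt_one x).le⟩).trans (le_max_left _ _)

/-- Uniform continuity of a continuous periodic function on the line. -/
theorem unif_per1 {f : ℝ → ℝ} (hf : Continuous f) (hp : ∀ x, f (x + 1) = f x) {e : ℝ}
    (he : 0 < e) : ∃ δ > 0, ∀ x y : ℝ, |x - y| ≤ δ → |f x - f y| ≤ e := by
  obtain ⟨δ, hδ, h⟩ := unif_per (A := Unit) (Φ := fun p => f p.2) (by fun_prop)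
    (fun _ x => hp x) isCompact_univ he
  refine ⟨δ, hδ, fun x y hxy => ?_⟩
  have := h () trivial y (x - y) hxy
  simpa using this

theorem bdd_per1 {f : ℝ → ℝ} (hf : Continuous f) (hp : ∀ x, f (x + 1) = f x) :
    ∃ M ≥ 0, ∀ x, |f x| ≤ M := by
  obtain ⟨M, hM, h⟩ := bdd_per (A := Unit) (Φ := fun p => f p.2) (by fun_prop)
    (fun _ x => hp x) isCompact_univ
  exact ⟨M, hM, fun x => h () trivial x⟩

/-! ### The generic set of expanding maps -/

theorem iter_prod_hasDeriv {F : ℝ → ℝ} (hd : ∀ x, HasDerivAt F (deriv F x) x) (n : ℕ) (x : ℝ) :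
    HasDerivAt F^[n] (∏ k ∈ Finset.range n, deriv F (F^[k] x)) x := by
  induction n generalizing x with
  | zero => simpa using hasDerivAt_id x
  | succ n ih =>
    rw [Function.iterate_succ, Finset.prod_range_succ']
    simpa [Function.iterate_succ_apply] using (ih (F x)).comp x (hd x)

/-- A lift in `𝓔^r` is the lift of some `ExpData`. -/
theorem ExpandingLift.exists_data {r : ℕ∞} (hr : 1 ≤ r) {F : ℝ → ℝ} (hF : ExpandingLift r F) :
    ∃ D : ExpData, D.F = F ∧ D.F' = deriv F := by
  obtain ⟨hC, ⟨d, hd⟩, C, hC0, l, hl, hx⟩ := hF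
  have hC1 : ContDiff ℝ 1 F := hC.of_le (by exact_mod_cast hr)
  have hD : ∀ x, HasDerivAt F (deriv F x) x := fun x =>
    (hC1.differentiable one_ne_zero x).hasDerivAt
  refine ⟨⟨F, deriv F, hD, hC1.continuous_deriv (le_refl _), d, hd, min C 1, l, by positivity, hl,
    fun n x => ?_⟩, rfl, rfl⟩
  rcases Nat.eq_zero_or_pos n with rfl | hn
  · simp
  · have := hx n hn x
    rw [(iter_prod_hasDeriv hD n x).deriv] at this
    exact (mul_le_mul_of_nonneg_right (min_le_left _ _) (by positivity)).trans this

/-- Expansion is stable under `C¹`-small perturbations of the lift. -/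
theorem ExpData.expand_open (D : ExpData) : ∃ e > 0, ∀ H : ℝ → ℝ, (∀ x, HasDerivAt H (deriv H x) x) →
    (∀ x, |H x - D.F x| ≤ e) → (∀ x, |deriv H x - D.F' x| ≤ e) →
    ∃ C > (0 : ℝ), ∃ l > (1 : ℝ), ∀ n : ℕ, 1 ≤ n → ∀ x : ℝ, C * l ^ n ≤ |deriv (H^[n]) x| := by
  set s := Real.sqrt D.lam with hs
  have hs1 : 1 < s := by rw [hs]; exact Real.lt_sqrt_of_sq_lt (by simpa using D.lam_gt)
  have hs0 : 0 < s := by linarith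
  have hss : s * s = D.lam := Real.mul_self_sqrt D.lam_pos.le
  obtain ⟨N, hN⟩ := pow_unbounded_of_one_lt (1 / D.c) hs1
  have hN' : ∀ x, s ^ N ≤ |D.J N x| := fun x => by
    refine le_trans ?_ (D.J_expand N x)
    rw [div_lt_iff₀ D.c_pos] at hN
    rw [← hss, mul_pow]
    have : 0 < s ^ N := by positivity
    calc s ^ N = 1 * s ^ N := (one_mul _).symm
      _ ≤ s ^ N * D.c * s ^ N := mul_le_mul_of_nonneg_right hN.le this.le
      _ = _ := by ring
  have hN0 : ∀ x, 1 + ∑ k ∈ Finset.range N, (s⁻¹) ^ (k + 1) * |D.J (k + 1) x| =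
      (∑ k ∈ Finset.range N, (s⁻¹) ^ k * |D.J k x|) + (s⁻¹) ^ N * |D.J N x| := fun x => by
    rw [← Finset.sum_range_succ (fun k => (s⁻¹) ^ k * |D.J k x|), Finset.sum_range_succ']
    simp [ExpData.J, add_comm]
  -- a weight adapted to the expansion: `u (F x) |F' x| ≥ s u x`
  set u : ℝ → ℝ := fun x => ∑ k ∈ Finset.range N, (s⁻¹) ^ k * |D.J k x| with hu
  have hstep : ∀ x, s * u x ≤ u (D.F x) * |D.F' x| := fun x => by
    have h1 : u (D.F x) * |D.F' x| = s * ∑ k ∈ Finset.range N, (s⁻¹) ^ (k + 1) * |D.J (k + 1) x| := by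
      rw [hu]; simp only
      rw [Finset.sum_mul, Finset.mul_sum]
      refine Finset.sum_congr rfl fun k _ => ?_
      have : D.J (k + 1) x = D.F' x * D.J k (D.F x) := by
        rw [add_comm, D.J_add]; simp [ExpData.J]
      rw [this, abs_mul, pow_succ]
      field_simp
    rw [h1]
    refine mul_le_mul_of_nonneg_left ?_ hs0.le
    have h2 := hN0 x
    have h3 : 1 ≤ (s⁻¹) ^ N * |D.J N x| := by
      rw [inv_pow, ← div_eq_inv_mul, le_div_iff₀ (by positivity), one_mul]
      exact hN' x
    linarith
  have hNpos : 0 < N := by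
    rcases Nat.eq_zero_or_pos N with h | h
    · rw [h, pow_zero, div_lt_one D.c_pos] at hN
      linarith [D.c_le_one]
    · exact h
  have hu1 : ∀ x, 1 ≤ u x := fun x => by
    have := Finset.single_le_sum (f := fun k => (s⁻¹) ^ k * |D.J k x|) (s := Finset.range N)
      (fun k _ => by positivity) (Finset.mem_range.2 hNpos)
    rw [hu]
    simpa [ExpData.J] using this
  have huc : Continuous u := by
    have := D.J_cont
    exact continuous_finsetSum _ fun k _ => by fun_prop
  have hup : ∀ x, u (x + 1) = u x := fun x => by
    rw [hu]; simp only
    refine Finset.sum_congr rfl fun k _ => ?_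
    have := D.J_add_int k x 1
    rw [Int.cast_one] at this
    rw [this]
  obtain ⟨W, hW0, hW⟩ := bdd_per1 huc hup
  have hW1 : 1 ≤ W := (hu1 0).trans ((le_abs_self _).trans (hW 0))
  set s' := (1 + s) / 2 with hs'
  set η := (s - s') / (2 * D.Lam) with hη
  have hss' : 0 < s - s' := by rw [hs']; linarith
  have hη0 : 0 < η := div_pos hss' (by linarith [D.Lam_pos])
  have hηL : η * D.Lam = (s - s') / 2 := by
    rw [hη]; field_simp [D.Lam_pos.ne']
  obtain ⟨δ, hδ, hδu⟩ := unif_per1 huc hup hη0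
  refine ⟨min δ ((s - s') / (2 * W)), by positivity, fun H hH h1 h2 => ?_⟩
  have hWe : W * ((s - s') / (2 * W)) = (s - s') / 2 := by field_simp
  have hHs : ∀ x, s' * u x ≤ u (H x) * |deriv H x| := fun x => by
    have a1 := abs_le.1 (hδu _ _ ((h1 x).trans (min_le_left _ _)))
    have a2 := (h2 x).trans (min_le_right _ _)
    have a3 := abs_sub_abs_le_abs_sub (D.F' x) (deriv H x)
    rw [abs_sub_comm] at a3
    have a4 := hW (H x)
    rw [abs_of_nonneg (by linarith [hu1 (H x)])] at a4
    have a5 := hstep x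
    have a6 := hu1 (H x)
    have b1 : u (H x) * (|D.F' x| - |deriv H x|) ≤ W * ((s - s') / (2 * W)) := by
      calc u (H x) * (|D.F' x| - |deriv H x|) ≤ u (H x) * ((s - s') / (2 * W)) :=
            mul_le_mul_of_nonneg_left (by linarith) (by linarith)
        _ ≤ _ := mul_le_mul_of_nonneg_right a4 (by positivity)
    have b2 : (u (D.F x) - u (H x)) * |D.F' x| ≤ η * D.Lam := by
      calc (u (D.F x) - u (H x)) * |D.F' x| ≤ η * |D.F' x| :=
            mul_le_mul_of_nonneg_right (by linarith) (abs_nonneg _)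
        _ ≤ _ := mul_le_mul_of_nonneg_left (D.F'_le x) hη0.le
    rw [hWe] at b1
    rw [hηL] at b2
    have b3 : (s - s') * 1 ≤ (s - s') * u x := mul_le_mul_of_nonneg_left (hu1 x) hss'.le
    linarith
  refine ⟨1 / W, by positivity, s', by rw [hs']; linarith, fun n _ x => ?_⟩
  rw [(iter_prod_hasDeriv hH n x).deriv]
  have hind : ∀ n : ℕ, ∀ x, s' ^ n * u x ≤
      u (H^[n] x) * |∏ k ∈ Finset.range n, deriv H (H^[k] x)| := by
    intro n
    induction n with
    | zero => intro x; simp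
    | succ n ih =>
      intro x
      rw [Finset.prod_range_succ, abs_mul, Function.iterate_succ_apply', pow_succ]
      have c1 := mul_le_mul_of_nonneg_right (ih x) (show 0 ≤ s' by rw [hs']; linarith)
      have c2 := mul_le_mul_of_nonneg_right (hHs (H^[n] x))
        (abs_nonneg (∏ k ∈ Finset.range n, deriv H (H^[k] x)))
      linarith
  have c1 := hind n x
  have c2 : s' ^ n * 1 ≤ s' ^ n * u x :=
    mul_le_mul_of_nonneg_left (hu1 x) (pow_nonneg (by rw [hs']; linarith) _)
  have c3 := hW (H^[n] x)
  rw [abs_of_nonneg (by linarith [hu1 (H^[n] x)])] at c3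
  have c4 := mul_le_mul_of_nonneg_right c3 (abs_nonneg (∏ k ∈ Finset.range n, deriv H (H^[k] x)))
  rw [one_div, ← div_eq_inv_mul, div_le_iff₀ (by linarith)]
  linarith

theorem tendsto_crSeq {ι : Type*} {l : Filter ι} {r : ℕ∞} {u : ι → ℝ → ℝ} {F : ℝ → ℝ}
    (h : ∀ k : ℕ, (k : ℕ∞) ≤ r →
      TendstoUniformly (fun i => iteratedDeriv k (u i)) (iteratedDeriv k F) l) :
    Tendsto (fun i => crSeq r (u i)) l (𝓝 (crSeq r F)) := by
  rw [tendsto_pi_nhds]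
  intro k
  by_cases hk : (k : ℕ∞) ≤ r
  · simp only [crSeq, hk, if_true]
    exact UniformFun.tendsto_iff_tendstoUniformly.2 (h k hk)
  · simp only [crSeq, hk, if_false]
    exact tendsto_const_nhds

theorem nhds_deriv {r : ℕ∞} (hr : 1 ≤ r) (F : ExpMap r) {e : ℝ} (he : 0 < e) :
    ∀ᶠ H : ExpMap r in 𝓝 F, ∀ x, |deriv F.1 x - deriv H.1 x| < e := by
  have h1 : Continuous fun H : ExpMap r => crSeq r H.1 1 :=
    (continuous_apply 1).comp (continuous_induced_dom (f := fun F : ExpMap r => crSeq r F.1))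
  have h2 := UniformFun.tendsto_iff_tendstoUniformly.1 (h1.tendsto F)
  have h3 := Metric.tendstoUniformly_iff.1 h2 e he
  filter_upwards [h3] with H hH x
  have := hH x
  simpa [crSeq, hr, iteratedDeriv_one, Real.dist_eq] using this

/-- The maps whose derivative oscillates by less than `√ρ` at some scale `ρ < 1/(j+1)`. -/
def Osc (r : ℕ∞) (j : ℕ) : Set (ExpMap r) :=
  {F | ∃ ρ, 0 < ρ ∧ ρ < 1 / (j + 1 : ℝ) ∧ ∃ θ < Real.sqrt ρ, ∀ x y, |x - y| ≤ ρ →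
    |deriv F.1 x - deriv F.1 y| ≤ θ}

theorem Osc_open {r : ℕ∞} (hr : 1 ≤ r) (j : ℕ) : IsOpen (Osc r j) := by
  rw [isOpen_iff_mem_nhds]
  rintro F ⟨ρ, h0, h1, θ, hθ, h⟩
  filter_upwards [nhds_deriv hr F (e := (Real.sqrt ρ - θ) / 3) (by linarith)] with H hH
  refine ⟨ρ, h0, h1, θ + 2 * ((Real.sqrt ρ - θ) / 3), by linarith, fun x y hxy => ?_⟩
  have a1 := abs_lt.1 (hH x)
  have a2 := abs_lt.1 (hH y)
  have a3 := abs_le.1 (h x y hxy)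
  rw [abs_le]
  constructor <;> linarith

theorem Osc_of_lip {r : ℕ∞} {F : ExpMap r} {M : ℝ}
    (h : ∀ x y, |deriv F.1 x - deriv F.1 y| ≤ M * |x - y|) (j : ℕ) : F ∈ Osc r j := by
  set A := 1 + |M| with hA
  have hA1 : 1 ≤ A := by rw [hA]; linarith [abs_nonneg M]
  set τ := 1 / (2 * A * (j + 1 : ℝ)) with hτ
  have hj : (1:ℝ) ≤ (j + 1 : ℝ) := by linarith [Nat.cast_nonneg (α := ℝ) j]
  have hτ0 : 0 < τ := by positivity
  have hp : A * τ ≤ 1 / 2 := by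
    rw [hτ, mul_one_div, div_le_div_iff₀ (by positivity) (by norm_num)]
    nlinarith
  have hτ2 : τ ≤ 1 / 2 := by nlinarith
  refine ⟨τ ^ 2, by positivity, ?_, A * τ ^ 2, ?_, fun x y hxy => ?_⟩
  · have : τ ≤ 1 / (j + 1 : ℝ) := by
      rw [hτ]; apply one_div_le_one_div_of_le (by positivity); nlinarith
    nlinarith
  · rw [Real.sqrt_sq hτ0.le]; nlinarith
  · refine (h x y).trans ?_
    calc M * |x - y| ≤ A * |x - y| := mul_le_mul_of_nonneg_right
          (by rw [hA]; linarith [le_abs_self M]) (abs_nonneg _)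
      _ ≤ _ := mul_le_mul_of_nonneg_left hxy (by linarith)

theorem lip_of_C2 {F : ℝ → ℝ} (hF : ContDiff ℝ 2 F) {d : ℤ} (hd : ∀ x, F (x + 1) = F x + d) :
    ∃ M, ∀ x y, |deriv F x - deriv F y| ≤ M * |x - y| := by
  have h1 : ContDiff ℝ 1 (deriv F) := hF.deriv' (n := 1)
  have hp1 : ∀ x, deriv F (x + 1) = deriv F x := fun x => by
    rw [← deriv_comp_add_const, show (fun x => F (x + 1)) = fun x => F x + d from funext hd]
    simp
  have hp2 : ∀ x, deriv (deriv F) (x + 1) = deriv (deriv F) x := fun x => by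
    rw [← deriv_comp_add_const, show (fun x => deriv F (x + 1)) = deriv F from funext hp1]
  obtain ⟨M, _, hM⟩ := bdd_per1 (h1.continuous_deriv le_rfl) hp2
  refine ⟨M, fun x y => ?_⟩
  simpa using convex_univ.norm_image_sub_le_of_norm_deriv_le (f := deriv F) (x := y) (y := x)
    (fun z _ => h1.differentiable one_ne_zero z) (fun z _ => hM z) trivial trivial

/-- For `r ≥ 2` the derivative is Lipschitz; for `r = 1`, Steklov averages of a lift are `C^1`-close to
it and have Lipschitz derivative. -/
theorem Osc_dense {r : ℕ∞} (hr : 1 ≤ r) (j : ℕ) : Dense (Osc r j) := by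
  intro F
  obtain ⟨hC, ⟨d, hd⟩, -⟩ := id F.2
  rcases hr.eq_or_lt with h | h
  · subst h
    have hC1 : ContDiff ℝ 1 F.1 := by exact_mod_cast hC
    obtain ⟨D, hDF, hDF'⟩ := ExpandingLift.exists_data le_rfl F.2
    have hDF'p : ∀ x, deriv F.1 (x + 1) = deriv F.1 x := by rw [← hDF']; exact D.F'_periodic
    have hFlip : ∀ a b, |F.1 a - F.1 b| ≤ D.Lam * |a - b| := by rw [← hDF]; exact D.F_lip
    set u : ℝ → ℝ → ℝ := fun ε => stek (1 : ℝ) ε F.1 with hu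
    have huC : ∀ ε, ContDiff ℝ 1 (u ε) := fun ε => stek_contDiff hC1
    have hder : ∀ ε x, deriv (u ε) x = stek (1 : ℝ) ε (deriv F.1) x := fun ε x => by
      rw [← fderiv_apply_one_eq_deriv, (stek_hasFDeriv hC1 x).fderiv, stek, stek,
        _root_.smul_apply, ContinuousLinearMap.intervalIntegral_apply]
      · simp
      · have := hC1.continuous_fderiv one_ne_zero
        exact (by fun_prop : Continuous fun y : ℝ =>
          fderiv ℝ F.1 (x + (ε * y) • (1 : ℝ))).intervalIntegrable _ _
    have hcd : Continuous (deriv F.1) := hC1.continuous_deriv le_rfl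
    have hc0 : ∀ e > 0, ∀ᶠ ε in 𝓝[>] (0 : ℝ), ∀ x, |u ε x - F.1 x| ≤ e := fun e he => by
      have : Ioo 0 (e / D.Lam) ∈ 𝓝[>] (0 : ℝ) := Ioo_mem_nhdsGT (div_pos he D.Lam_pos)
      filter_upwards [this] with ε hε x
      refine stek_close hC1.continuous hε.1 fun s hs => ?_
      have := hFlip (x + s • 1) x
      rw [Real.norm_eq_abs]
      refine this.trans ?_
      have h2 := (lt_div_iff₀ D.Lam_pos).1 hε.2
      have h3 := mul_le_mul_of_nonneg_left hs D.Lam_pos.le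
      simp only [smul_eq_mul, mul_one, add_sub_cancel_left]
      linarith
    have hc1 : ∀ e > 0, ∀ᶠ ε in 𝓝[>] (0 : ℝ), ∀ x, |deriv (u ε) x - deriv F.1 x| ≤ e :=
      fun e he => by
      obtain ⟨δ, hδ, hu⟩ := unif_per1 hcd hDF'p he
      filter_upwards [Ioo_mem_nhdsGT hδ] with ε hε x
      rw [hder]
      refine stek_close hcd hε.1 fun s hs => hu _ _ ?_
      simp only [smul_eq_mul, mul_one, add_sub_cancel_left]
      exact hs.trans hε.2.le
    rw [mem_closure_iff_nhds]
    intro U hU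
    rw [nhds_induced, mem_comap] at hU
    obtain ⟨W, hW, hWU⟩ := hU
    have ht : Tendsto (fun ε => crSeq 1 (u ε)) (𝓝[>] 0) (𝓝 (crSeq 1 F.1)) := by
      refine tendsto_crSeq fun k hk => ?_
      rw [Metric.tendstoUniformly_iff]
      intro e he
      have hk1 : k ≤ 1 := by exact_mod_cast hk
      interval_cases k
      · filter_upwards [hc0 (e / 2) (by linarith)] with ε hε x
        rw [iteratedDeriv_zero, iteratedDeriv_zero, dist_comm, Real.dist_eq]
        linarith [hε x]
      · filter_upwards [hc1 (e / 2) (by linarith)] with ε hε x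
        rw [iteratedDeriv_one, iteratedDeriv_one, dist_comm, Real.dist_eq]
        linarith [hε x]
    obtain ⟨e, he, hopen⟩ := D.expand_open
    rw [hDF, hDF'] at hopen
    obtain ⟨ε, hε, h0, h1, hW'⟩ := ((eventually_mem_nhdsWithin (s := Ioi (0 : ℝ)) (a := 0)).and
      ((hc0 e he).and ((hc1 e he).and (ht hW)))).exists
    have hε : 0 < ε := hε
    have hH : ExpandingLift 1 (u ε) := by
      refine ⟨by exact_mod_cast huC ε, ⟨d, fun x => ?_⟩, hopen _ (fun x =>
        ((huC ε).differentiable one_ne_zero x).hasDerivAt) h0 h1⟩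
      have e1 : ∀ y : ℝ, F.1 (x + 1 + (ε * y) • 1) = F.1 (x + (ε * y) • 1) + d := fun y => by
        rw [← hd, add_right_comm]
      simp only [hu, stek, e1]
      rw [intervalIntegral.integral_add, intervalIntegral.integral_const]
      · simp only [smul_eq_mul]; ring
      · have := hC1.continuous
        exact (by fun_prop : Continuous fun y : ℝ => F.1 (x + (ε * y) • 1)).intervalIntegrable _ _
      · exact continuous_const.intervalIntegrable _ _
    refine ⟨⟨u ε, hH⟩, hWU hW', Osc_of_lip (M := D.Lam / ε) (fun x y => ?_) j⟩
    have hdir : ∀ x, deriv (u ε) x = (F.1 (x + ε) - F.1 (x - ε)) / (2 * ε) := fun x => by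
      rw [← fderiv_apply_one_eq_deriv]
      simpa using stek_dir (v := (1 : ℝ)) hε hC1 x
    simp only [hdir]
    rw [← sub_div, abs_div, abs_of_pos (by linarith : 0 < 2 * ε), div_le_iff₀ (by linarith)]
    have a1 := abs_le.1 (hFlip (x + ε) (y + ε))
    have a2 := abs_le.1 (hFlip (x - ε) (y - ε))
    rw [show x + ε - (y + ε) = x - y by ring] at a1
    rw [show x - ε - (y - ε) = x - y by ring] at a2
    rw [show D.Lam / ε * |x - y| * (2 * ε) = 2 * (D.Lam * |x - y|) by field_simp, abs_le]
    constructor <;> linarith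
  · have h2 : (2 : ℕ∞) ≤ r := by
      have := Order.add_one_le_of_lt h
      simpa [one_add_one_eq_two] using this
    have hC2 : ContDiff ℝ 2 F.1 := hC.of_le (WithTop.coe_le_coe.2 h2)
    obtain ⟨M, hM⟩ := lip_of_C2 hC2 hd
    exact subset_closure (Osc_of_lip hM j)

theorem exists_Estar {r : ℕ∞} (hr : 1 ≤ r) : ∃ Estar : Set (ExpMap r),
    Estar ∈ residual (ExpMap r) ∧ {F : ExpMap r | ∀ x : ℝ, AnalyticAt ℝ F.1 x} ⊆ Estar ∧
    ∀ F ∈ Estar, ∃ D : ExpData, D.HoldScales ∧ D.T = cmap F.1 := by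
  refine ⟨⋂ j, Osc r j, countable_iInter_mem.2 fun j =>
    residual_of_dense_open (Osc_open hr j) (Osc_dense hr j), fun F hF => ?_, fun F hF => ?_⟩
  · have hC2 : ContDiff ℝ 2 F.1 :=
      contDiff_iff_contDiffAt.2 fun x => (hF x).contDiffAt
    obtain ⟨-, ⟨d, hd⟩, -⟩ := id F.2
    obtain ⟨M, hM⟩ := lip_of_C2 hC2 hd
    exact mem_iInter.2 (Osc_of_lip hM)
  · obtain ⟨D, hDF, hDF'⟩ := ExpandingLift.exists_data hr F.2
    refine ⟨D, fun ρ0 hρ0 => ?_, by rw [ExpData.T, hDF]⟩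
    obtain ⟨j, hj⟩ := exists_nat_one_div_lt hρ0
    obtain ⟨ρ, h0, h1, θ, hθ, h⟩ := mem_iInter.1 hF j
    refine ⟨ρ, h0, h1.trans hj, fun x y hxy => ?_⟩
    rw [hDF']
    exact (h x y hxy).trans hθ.le

/-! ### A smooth family of perturbations -/

theorem per_rep {α : Type*} {h : ℝ → α} (hp : ∀ x, h (x + 1) = h x) (x : ℝ) :
    h (rep (x : Circle1)) = h x := by
  obtain ⟨m, hm⟩ := exists_rep x
  rw [hm]
  have : Function.Periodic h 1 := hp
  simpa using this.zsmul m x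

theorem deriv_per {h : ℝ → ℝ} (hp : ∀ x, h (x + 1) = h x) (x : ℝ) : deriv h (x + 1) = deriv h x := by
  rw [← deriv_comp_add_const, show (fun x => h (x + 1)) = h from funext hp]

theorem hasD_of_per {h h' : ℝ → ℝ} (hp : ∀ x, h (x + 1) = h x) (hp' : ∀ x, h' (x + 1) = h' x)
    (hd : ∀ x, HasDerivAt h (h' x) x) (hc : Continuous h') :
    HasD (fun z => h (rep z)) (fun z => h' (rep z)) := by
  refine ⟨continuous_of_coe (by simpa only [per_rep hp'] using hc), fun a => ?_⟩
  simp only [per_rep hp, per_rep hp']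
  exact hd a

theorem cos_dist (a b : ℝ) :
    Real.cos (2 * Real.pi * (a - b)) = Real.cos (2 * Real.pi * dist (a : Circle1) b) := by
  obtain ⟨t, ht, hd⟩ := exists_disp (a : Circle1) b
  rw [← AddCircle.coe_add] at ht
  obtain ⟨m, hm⟩ := coe_eq_iff.1 ht
  have e1 : 2 * Real.pi * (a - b) = m * (2 * Real.pi) - 2 * Real.pi * t := by
    linear_combination 2 * Real.pi * hm
  rw [e1, Real.cos_int_mul_two_pi_sub, ← hd]
  rcases abs_choice t with h | h <;> rw [h]
  rw [mul_neg, Real.cos_neg]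

/-- The base functions: trigonometric monomials and smooth plateaus with rational data. -/
def base0 : ℕ ⊕ ℕ ⊕ (ℚ × ℚ × ℚ) → ℝ → ℝ
  | Sum.inl m, x => Real.cos (2 * Real.pi * m * x)
  | Sum.inr (Sum.inl m), x => Real.sin (2 * Real.pi * m * x)
  | Sum.inr (Sum.inr p), x => Real.smoothTransition
      ((Real.cos (2 * Real.pi * (x - p.1)) - Real.cos (2 * Real.pi * p.2.2)) /
        (Real.cos (2 * Real.pi * p.2.1) - Real.cos (2 * Real.pi * p.2.2)))

/-- An enumeration of the index set of the base functions. -/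
def baseEnum : ℕ → ℕ ⊕ ℕ ⊕ (ℚ × ℚ × ℚ) := (exists_surjective_nat _).choose

theorem baseEnum_surj : Function.Surjective baseEnum := (exists_surjective_nat _).choose_spec

/-- The base functions in a sequence. -/
def base (k : ℕ) : ℝ → ℝ := base0 (baseEnum k)

theorem base_smooth (k : ℕ) : ContDiff ℝ (⊤ : ℕ∞) (base k) := by
  unfold base
  rcases baseEnum k with m | m | p
  · exact Real.contDiff_cos.comp (by fun_prop)
  · exact Real.contDiff_sin.comp (by fun_prop)
  · refine Real.smoothTransition.contDiff.comp ?_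
    refine ContDiff.div_const (ContDiff.sub (Real.contDiff_cos.comp (by fun_prop)) contDiff_const) _

theorem base_per (k : ℕ) (x : ℝ) : base k (x + 1) = base k x := by
  unfold base
  rcases baseEnum k with m | m | p <;> simp only [base0]
  · rw [mul_add, mul_one, show 2 * Real.pi * m = m * (2 * Real.pi) by ring,
      Real.cos_add_nat_mul_two_pi]
  · rw [mul_add, mul_one, show 2 * Real.pi * m = m * (2 * Real.pi) by ring,
      Real.sin_add_nat_mul_two_pi]
  · rw [show 2 * Real.pi * (x + 1 - (p.1 : ℝ)) = 2 * Real.pi * (x - p.1) + 2 * Real.pi by ring,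
      Real.cos_add_two_pi]

theorem iter_per {h : ℝ → ℝ} (hp : ∀ x, h (x + 1) = h x) (j : ℕ) (x : ℝ) :
    iteratedDeriv j h (x + 1) = iteratedDeriv j h x := by
  induction j generalizing x with
  | zero => simpa using hp x
  | succ j ih => rw [iteratedDeriv_succ]; exact deriv_per ih x

theorem base_bdd (j k : ℕ) : ∃ M ≥ 0, ∀ x, |iteratedDeriv j (base k) x| ≤ M :=
  bdd_per1 ((base_smooth k).continuous_iteratedDeriv j (by exact_mod_cast le_top))
    (iter_per (base_per k) j)

/-- A bound of the `j`-th derivative of the `k`-th base function. -/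
def bB (j k : ℕ) : ℝ := (base_bdd j k).choose

theorem bB_nonneg (j k : ℕ) : 0 ≤ bB j k := (base_bdd j k).choose_spec.1

theorem bB_le (j k : ℕ) (x : ℝ) : |iteratedDeriv j (base k) x| ≤ bB j k :=
  (base_bdd j k).choose_spec.2 x

/-- The normalizing coefficient of the `k`-th perturbation. -/
def aco (k : ℕ) : ℝ := (1 / 2) ^ k / (1 + ∑ j ∈ Finset.range (k + 3), bB j k)

theorem aco_den (k : ℕ) : 1 ≤ 1 + ∑ j ∈ Finset.range (k + 3), bB j k := by
  linarith [Finset.sum_nonneg (s := Finset.range (k + 3)) fun j _ => bB_nonneg j k]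

theorem aco_pos (k : ℕ) : 0 < aco k := div_pos (by positivity) (by linarith [aco_den k])

/-- The `k`-th perturbation: a multiple of the `k`-th base function whose derivatives of order at
most `k + 2` are bounded by `2⁻ᵏ`. -/
def psi (k : ℕ) (x : ℝ) : ℝ := aco k * base k x

theorem psi_smooth (k : ℕ) : ContDiff ℝ (⊤ : ℕ∞) (psi k) := contDiff_const.mul (base_smooth k)

theorem psi_per (k : ℕ) (x : ℝ) : psi k (x + 1) = psi k x := by rw [psi, psi, base_per]

theorem psi_iter (j k : ℕ) (x : ℝ) :
    iteratedDeriv j (psi k) x = aco k * iteratedDeriv j (base k) x := by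
  have : ContDiff ℝ j (base k) := (base_smooth k).of_le (by exact_mod_cast le_top)
  exact iteratedDeriv_const_mul (aco k) this.contDiffAt

/-- A summable bound of the `j`-th derivatives of the perturbations. -/
def vB (j k : ℕ) : ℝ := if j < k + 3 then (1 / 2) ^ k else aco k * bB j k

theorem vB_le (j k : ℕ) (x : ℝ) : |iteratedDeriv j (psi k) x| ≤ vB j k := by
  rw [psi_iter, abs_mul, abs_of_pos (aco_pos k)]
  have h1 := mul_le_mul_of_nonneg_left (bB_le j k x) (aco_pos k).le
  unfold vB
  split_ifs with h
  · refine h1.trans ?_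
    rw [aco, div_mul_eq_mul_div, div_le_iff₀ (by linarith [aco_den k])]
    refine mul_le_mul_of_nonneg_left ?_ (by positivity)
    have := Finset.single_le_sum (f := fun j => bB j k) (s := Finset.range (k + 3))
      (fun j _ => bB_nonneg j k) (Finset.mem_range.2 h)
    linarith
  · exact h1

theorem vB_summable (j : ℕ) : Summable (vB j) := by
  rw [← summable_nat_add_iff j]
  refine ((summable_nat_add_iff j).2 summable_half).congr fun k => ?_
  simp only [vB]
  rw [if_pos (by omega)]

/-- The random perturbation with coefficients `ω`. -/
def Psi (ω : Om) (x : ℝ) : ℝ := ∑' k, (ω k : ℝ) * psi k x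

theorem Psi_term (ω : Om) (j k : ℕ) (x : ℝ) :
    ‖iteratedFDeriv ℝ j (fun x => (ω k : ℝ) * psi k x) x‖ ≤ vB j k := by
  rw [norm_iteratedFDeriv_eq_norm_iteratedDeriv, iteratedDeriv_const_mul]
  · exact abs_unit_mul_le _ (vB_le j k x)
  · have : ContDiff ℝ j (psi k) := (psi_smooth k).of_le (by exact_mod_cast le_top)
    exact this.contDiffAt

theorem Psi_smooth (ω : Om) : ContDiff ℝ (⊤ : ℕ∞) (Psi ω) :=
  contDiff_tsum (v := vB) (fun k => contDiff_const.mul (psi_smooth k)) (fun j _ => vB_summable j)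
    fun j k x _ => Psi_term ω j k x

theorem Psi_bound (ω : Om) (j : ℕ) (x : ℝ) : ‖iteratedFDeriv ℝ j (Psi ω) x‖ ≤ ∑' k, vB j k := by
  have h := iteratedFDeriv_tsum (𝕜 := ℝ) (N := ⊤) (v := vB) (f := fun k x => (ω k : ℝ) * psi k x)
    (fun k => contDiff_const.mul (psi_smooth k)) (fun j _ => vB_summable j)
    (fun j k x _ => Psi_term ω j k x) (k := j) le_top
  unfold Psi
  rw [h]
  exact tsum_of_norm_bounded (vB_summable j).hasSum fun k => Psi_term ω j k x

theorem Psi_per (ω : Om) (x : ℝ) : Psi ω (x + 1) = Psi ω x := by simp only [Psi, psi_per]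

theorem psi_hasDeriv (k : ℕ) (x : ℝ) : HasDerivAt (psi k) (deriv (psi k) x) x :=
  ((psi_smooth k).differentiable (by simp) x).hasDerivAt

theorem psi_hasDeriv2 (k : ℕ) (x : ℝ) :
    HasDerivAt (deriv (psi k)) (iteratedDeriv 2 (psi k) x) x := by
  have h : ContDiff ℝ 2 (psi k) := (psi_smooth k).of_le (WithTop.coe_le_coe.2 le_top)
  have h1 : ContDiff ℝ 1 (deriv (psi k)) := h.deriv' (n := 1)
  have := (h1.differentiable one_ne_zero x).hasDerivAt
  rwa [iteratedDeriv_succ, iteratedDeriv_one]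

theorem vB_small {j : ℕ} (hj : j < 3) (k : ℕ) : vB j k = (1 / 2) ^ k := by
  rw [vB, if_pos (by omega)]

/-- The random perturbations of size `ε` of a `C^{1+1}` function form a `Pert`. -/
theorem exists_pert {h h' : ℝ → ℝ} {M ε : ℝ} (hp : ∀ x, h (x + 1) = h x)
    (hd : ∀ x, HasDerivAt h (h' x) x) (hM : 0 ≤ M) (hb : ∀ x, |h' x| ≤ M)
    (hl : ∀ x y, |h' x - h' y| ≤ M * |x - y|) (hε : 0 < ε) (hε1 : ε ≤ 1) :
    ∃ P : Pert, ∀ ω z, P.g ω z = h (rep z) + ε * Psi ω (rep z) := by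
  have hp' : ∀ x, h' (x + 1) = h' x := fun x => by
    have e1 : h' = deriv h := funext fun x => (hd x).deriv.symm
    rw [e1]; exact deriv_per hp x
  have hc' : Continuous h' := by
    have : LipschitzWith (Real.toNNReal M) h' := LipschitzWith.of_dist_le_mul fun x y => by
      rw [Real.coe_toNNReal _ hM]; exact hl x y
    exact this.continuous
  have hsc : ∀ {x B : ℝ}, |x| ≤ B → |ε * x| ≤ B := fun {x B} hx => by
    rw [abs_mul, abs_of_pos hε]
    exact (mul_le_of_le_one_left (abs_nonneg _) hε1).trans hx
  have hD1 : ∀ k, HasD (fun z => ε * psi k (rep z)) (fun z => ε * deriv (psi k) (rep z)) :=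
    fun k => hasD_of_per (h := fun x => ε * psi k x) (h' := fun x => ε * deriv (psi k) x)
      (fun x => by rw [psi_per]) (fun x => by rw [deriv_per (psi_per k)])
      (fun x => (psi_hasDeriv k x).const_mul ε)
      (continuous_const.mul ((psi_smooth k).continuous_deriv (by simp)))
  have hD2 : ∀ k, HasD (fun z => ε * deriv (psi k) (rep z))
      (fun z => ε * iteratedDeriv 2 (psi k) (rep z)) :=
    fun k => hasD_of_per (h := fun x => ε * deriv (psi k) x)
      (h' := fun x => ε * iteratedDeriv 2 (psi k) x)
      (fun x => by rw [deriv_per (psi_per k)]) (fun x => by rw [iter_per (psi_per k)])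
      (fun x => (psi_hasDeriv2 k x).const_mul ε)
      (continuous_const.mul ((psi_smooth k).continuous_iteratedDeriv 2 (WithTop.coe_le_coe.2 le_top)))
  have hder : ∀ k x, deriv (psi k) x = aco k * deriv (base k) x := fun k x => by
    have := psi_iter 1 k x
    rwa [iteratedDeriv_one, iteratedDeriv_one] at this
  have hcr : ∀ (m : ℕ) (z : Circle1), cosF m z = Real.cos (2 * Real.pi * m * rep z) := fun m z => by
    conv_lhs => rw [← coe_rep z]
    exact cosF_coe m _
  have hsr : ∀ (m : ℕ) (z : Circle1), sinF m z = Real.sin (2 * Real.pi * m * rep z) := fun m z => by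
    conv_lhs => rw [← coe_rep z]
    exact sinF_coe m _
  have ha : ∀ k, ε * aco k ≠ 0 := fun k => (mul_pos hε (aco_pos k)).ne'
  have hpm : ∀ m : ℕ, 1 ≤ m → 2 * Real.pi * (m : ℝ) ≠ 0 := fun m hm => by
    have : (0 : ℝ) < m := by exact_mod_cast hm
    positivity
  refine ⟨{ f := fun z => h (rep z), f' := fun z => h' (rep z), M := M, M_nonneg := hM,
            hf := hasD_of_per hp hp' hd hc', bf := fun z => hb _, lf := fun x y => ?_,
            φ := fun k z => ε * psi k (rep z), φ' := fun k z => ε * deriv (psi k) (rep z),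
            hD := hD1, bd := fun k z => hsc ?_, bd' := fun k z => hsc ?_,
            lip' := fun k => (hD2 k).lip fun z => hsc ?_, rich := fun m hm => ?_,
            rich' := fun m hm => ?_, plat := fun c ρ₁ ρ₂ h1 h2 h3 => ?_ }, fun ω z => ?_⟩
  · obtain ⟨t, ht, hdt⟩ := exists_disp x y
    have e1 : h' (rep y) = h' (rep x + t) := by
      rw [← per_rep hp' (rep x + t), AddCircle.coe_add, coe_rep, ht]
    simp only
    rw [e1, ← hdt]
    have := hl (rep x) (rep x + t)
    rwa [show rep x - (rep x + t) = -t by ring, abs_neg] at this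
  · simpa [vB_small] using vB_le 0 k (rep z)
  · simpa [vB_small, iteratedDeriv_one] using vB_le 1 k (rep z)
  · simpa [vB_small] using vB_le 2 k (rep z)
  · obtain ⟨k, hk⟩ := baseEnum_surj (Sum.inl m)
    obtain ⟨k', hk'⟩ := baseEnum_surj (Sum.inr (Sum.inl m))
    refine ⟨⟨k, _, ha k, funext fun z => ?_⟩, ⟨k', _, ha k', funext fun z => ?_⟩⟩
    · simp only [psi, base, hk, base0, hcr]; ring
    · simp only [psi, base, hk', base0, hsr]; ring
  · obtain ⟨k, hk⟩ := baseEnum_surj (Sum.inr (Sum.inl m))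
    obtain ⟨k', hk'⟩ := baseEnum_surj (Sum.inl m)
    refine ⟨⟨k, _, mul_ne_zero (ha k) (hpm m hm), funext fun z => ?_⟩,
      ⟨k', _, neg_ne_zero.2 (mul_ne_zero (ha k') (hpm m hm)), funext fun z => ?_⟩⟩
    · have : deriv (base k) (rep z) = 2 * Real.pi * m * Real.cos (2 * Real.pi * m * rep z) := by
        have e : base k = fun x => Real.sin (2 * Real.pi * m * x) := by
          funext x; simp only [base, hk, base0]
        rw [e]
        have := ((hasDerivAt_id (rep z)).const_mul (2 * Real.pi * m)).sin.deriv
        simp only [id, mul_one] at this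
        rw [this]; ring
      simp only [hder, this, hcr]; ring
    · have : deriv (base k') (rep z) = - (2 * Real.pi * m * Real.sin (2 * Real.pi * m * rep z)) := by
        have e : base k' = fun x => Real.cos (2 * Real.pi * m * x) := by
          funext x; simp only [base, hk', base0]
        rw [e]
        have := ((hasDerivAt_id (rep z)).const_mul (2 * Real.pi * m)).cos.deriv
        simp only [id, mul_one] at this
        rw [this]; ring
      simp only [hder, this, hsr]; ring
  · set η := (ρ₂ - ρ₁) / 4 with hη
    have hη0 : 0 < η := by rw [hη]; linarith
    obtain ⟨c', hc1, hc2⟩ := exists_rat_btwn (show rep c < rep c + η by linarith)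
    obtain ⟨σ₁, hs1, hs2⟩ := exists_rat_btwn (show ρ₁ + η < ρ₁ + 2 * η by linarith)
    obtain ⟨σ₂, hs3, hs4⟩ := exists_rat_btwn (show ρ₁ + 2 * η < ρ₁ + 3 * η by linarith)
    have hρ : ρ₂ = ρ₁ + 4 * η := by rw [hη]; ring
    obtain ⟨k, hk⟩ := baseEnum_surj (Sum.inr (Sum.inr (c', σ₁, σ₂)))
    have hcc : dist c ((c' : ℝ) : Circle1) ≤ η := by
      conv_lhs => rw [← coe_rep c]
      refine (dist_coe_le _ _).trans ?_
      rw [abs_le]; constructor <;> linarith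
    have hval : ∀ z, psi k (rep z) = aco k * Real.smoothTransition
        ((Real.cos (2 * Real.pi * dist z ((c' : ℝ) : Circle1)) - Real.cos (2 * Real.pi * σ₂)) /
        (Real.cos (2 * Real.pi * σ₁) - Real.cos (2 * Real.pi * σ₂))) := fun z => by
      simp only [psi, base, hk, base0]
      rw [cos_dist, coe_rep]
    have hpi := Real.pi_pos
    have hcos : ∀ {a b : ℝ}, 0 ≤ a → a ≤ b → b ≤ 1 / 2 →
        Real.cos (2 * Real.pi * b) ≤ Real.cos (2 * Real.pi * a) := fun {a b} h0 hab hb =>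
      Real.cos_le_cos_of_nonneg_of_le_pi (by positivity) (by nlinarith)
        (mul_le_mul_of_nonneg_left hab (by positivity))
    have hden : 0 < Real.cos (2 * Real.pi * σ₁) - Real.cos (2 * Real.pi * σ₂) := by
      refine sub_pos.2 (Real.cos_lt_cos_of_nonneg_of_le_pi ?_ ?_ ?_)
      · have : (0 : ℝ) < σ₁ := by linarith
        positivity
      · nlinarith
      · exact mul_lt_mul_of_pos_left (by linarith) (by positivity)
    refine ⟨k, ε * aco k, mul_pos hε (aco_pos k), fun z => ?_, fun z hz => ?_, fun z hz => ?_⟩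
    · rw [hval]
      exact mul_nonneg hε.le (mul_nonneg (aco_pos k).le (Real.smoothTransition.nonneg _))
    · simp only [hval]
      rw [Real.smoothTransition.one_of_one_le, mul_one]
      rw [le_div_iff₀ hden, one_mul]
      have := dist_triangle z c ((c' : ℝ) : Circle1)
      have := hcos (a := dist z ((c' : ℝ) : Circle1)) (b := σ₁) dist_nonneg (by linarith)
        (by linarith)
      linarith
    · simp only [hval]
      rw [Real.smoothTransition.zero_of_nonpos, mul_zero, mul_zero]
      refine div_nonpos_of_nonpos_of_nonneg ?_ hden.le
      have := dist_triangle_right z c ((c' : ℝ) : Circle1)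
      have := hcos (a := σ₂) (b := dist z ((c' : ℝ) : Circle1)) (by linarith) (by linarith)
        (dist_le_half _ _)
      linarith
  · simp only [Pert.g, Psi]
    rw [← tsum_mul_left]
    congr 1
    refine tsum_congr fun k => ?_
    ring

/-! ### Families -/

/-- `f` is locked with constant `δ`. -/
def ExpData.LockD (D : ExpData) (δ : ℝ) (f : Circle1 → ℝ) : Prop :=
  ∀ f' : Circle1 → ℝ, Lip δ (fun z => f' z - f z) → UniqMaxPeriodic f' D.T

theorem ExpData.LockD.pert {D : ExpData} {δ s : ℝ} {f h : Circle1 → ℝ} (hf : D.LockD δ f)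
    (hh : Lip s (fun z => h z - f z)) : D.LockD (δ - s) h := fun f' hf' => by
  refine hf f' ?_
  have := hf'.add hh
  simpa using this

theorem ExpData.LockD.lock {D : ExpData} {δ : ℝ} {f : Circle1 → ℝ} (hf : D.LockD δ f) (hδ : 0 < δ) :
    D.Lock f := ⟨δ, hδ, hf⟩

theorem ExpData.Lock.uniq {D : ExpData} {f : Circle1 → ℝ} (hf : D.Lock f) :
    UniqMaxPeriodic f D.T := by
  obtain ⟨δ, hδ, h⟩ := hf
  refine h f fun x y => ?_
  simp only [sub_self, abs_zero]
  positivity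

variable {q : ℕ}

/-- The derivative of a family in the circle direction. -/
def dx (G : (Fin q → ℝ) × ℝ → ℝ) (t : Fin q → ℝ) (x : ℝ) : ℝ := deriv (fun y => G (t, y)) x

theorem dx_hasDeriv' {G : (Fin q → ℝ) × ℝ → ℝ} (hG : ContDiff ℝ 1 G) (t : Fin q → ℝ) (x : ℝ) :
    HasDerivAt (fun y => G (t, y)) (fderiv ℝ G (t, x) (0, 1)) x := by
  have h1 : HasFDerivAt G (fderiv ℝ G (t, x)) (t, x) :=
    (hG.differentiable one_ne_zero _).hasFDerivAt
  exact h1.comp_hasDerivAt x ((hasDerivAt_const x t).prodMk (hasDerivAt_id x))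

theorem dx_eq {G : (Fin q → ℝ) × ℝ → ℝ} (hG : ContDiff ℝ 1 G) (t : Fin q → ℝ) (x : ℝ) :
    dx G t x = fderiv ℝ G (t, x) (0, 1) := (dx_hasDeriv' hG t x).deriv

theorem dx_hasDeriv {G : (Fin q → ℝ) × ℝ → ℝ} (hG : ContDiff ℝ 1 G) (t : Fin q → ℝ) (x : ℝ) :
    HasDerivAt (fun y => G (t, y)) (dx G t x) x := by
  rw [dx_eq hG]; exact dx_hasDeriv' hG t x

theorem dx_cont {G : (Fin q → ℝ) × ℝ → ℝ} (hG : ContDiff ℝ 1 G) :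
    Continuous fun p : (Fin q → ℝ) × ℝ => dx G p.1 p.2 := by
  simp only [dx_eq hG]
  have := hG.continuous_fderiv one_ne_zero
  fun_prop

theorem dx_per {G : (Fin q → ℝ) × ℝ → ℝ} (hp : ∀ t x, G (t, x + 1) = G (t, x)) (t : Fin q → ℝ)
    (x : ℝ) : dx G t (x + 1) = dx G t x := deriv_per (hp t) x

theorem lip_of_dx {G H : (Fin q → ℝ) × ℝ → ℝ} (hG : ContDiff ℝ 1 G) (hH : ContDiff ℝ 1 H)
    (hGp : ∀ t x, G (t, x + 1) = G (t, x)) (hHp : ∀ t x, H (t, x + 1) = H (t, x))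
    {t t' : Fin q → ℝ} {δ : ℝ} (h : ∀ x, |dx H t' x - dx G t x| ≤ δ) :
    Lip δ (fun z => H (t', rep z) - G (t, rep z)) := by
  have hcG := dx_cont hG
  have hcH := dx_cont hH
  have : HasD (fun z => H (t', rep z) - G (t, rep z)) (fun z => dx H t' (rep z) - dx G t (rep z)) :=
    hasD_of_per (h := fun x => H (t', x) - G (t, x)) (h' := fun x => dx H t' x - dx G t x)
      (fun x => by rw [hGp, hHp]) (fun x => by rw [dx_per hGp, dx_per hHp])
      (fun x => (dx_hasDeriv hH t' x).sub (dx_hasDeriv hG t x))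
      ((hcH.comp (by fun_prop : Continuous fun x : ℝ => (t', x))).sub
        (hcG.comp (by fun_prop : Continuous fun x : ℝ => (t, x))))
  exact this.lip fun z => h _

/-- A continuous family of periodic functions depends on the parameter uniformly in the circle
variable. -/
theorem near_param {Φ : (Fin q → ℝ) → ℝ → ℝ} (hΦ : Continuous fun p : (Fin q → ℝ) × ℝ => Φ p.1 p.2)
    (hp : ∀ t x, Φ t (x + 1) = Φ t x) (t : Fin q → ℝ) {e : ℝ} (he : 0 < e) :
    ∀ᶠ t' in 𝓝 t, ∀ x, |Φ t' x - Φ t x| ≤ e := by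
  have h := (isCompact_Icc (a := (0:ℝ)) (b := 1)).eventually_forall_of_forall_eventually (x₀ := t)
    (P := fun t' x => |Φ t' x - Φ t x| < e) (fun x _ => by
      have hc : Continuous fun p : (Fin q → ℝ) × ℝ => |Φ p.1 p.2 - Φ t p.2| :=
        (hΦ.sub (hΦ.comp (by fun_prop : Continuous fun p : (Fin q → ℝ) × ℝ => (t, p.2)))).abs
      exact hc.continuousAt.eventually_lt continuousAt_const (by simpa using he))
  filter_upwards [h] with t' ht' x
  have hz : ∀ s, Φ s x = Φ s (x - ⌊x⌋) := fun s => by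
    have : Function.Periodic (fun y => Φ s y) 1 := hp s
    simpa using (this.sub_zsmul_eq ⌊x⌋ (x := x)).symm
  rw [hz t', hz t]
  exact (ht' _ ⟨Int.fract_nonneg x, (Int.fract_lt_one x).le⟩).le

/-- The parameter cube. -/
def cube (q : ℕ) : Set (Fin q → ℝ) := {t | ∀ i, t i ∈ Set.Icc (0 : ℝ) 1}

theorem cube_eq (q : ℕ) : cube q = Set.Icc 0 1 := by
  ext t
  simp only [cube, mem_ofPred_eq, Set.mem_Icc, Pi.le_def, Pi.zero_apply, Pi.one_apply]
  exact forall_and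

theorem cube_compact (q : ℕ) : IsCompact (cube q) := by rw [cube_eq]; exact isCompact_Icc

theorem FamFun.c1 {r : ℕ∞} (hr : 1 ≤ r) (G : FamFun r q) : ContDiff ℝ 1 G.1 :=
  G.2.1.of_le (by exact_mod_cast hr)

theorem nhds_dx {r : ℕ∞} (hr : 1 ≤ r) (G : FamFun r q) {e : ℝ} (he : 0 < e) :
    ∀ᶠ H : FamFun r q in 𝓝 G, ∀ t x, |dx H.1 t x - dx G.1 t x| ≤ e := by
  have h1 : Continuous fun H : FamFun r q => famSeq r q H.1 1 :=
    (continuous_apply 1).comp (continuous_induced_dom (f := fun G : FamFun r q => famSeq r q G.1))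
  have h2 := UniformFun.tendsto_iff_tendstoUniformly.1 (h1.tendsto G)
  have h3 := Metric.tendstoUniformly_iff.1 h2 e he
  filter_upwards [h3] with H hH t x
  have h4 := hH (t, x)
  rw [dist_comm, dist_eq_norm] at h4
  have h5 : ‖iteratedFDeriv ℝ 1 H.1 (t, x) - iteratedFDeriv ℝ 1 G.1 (t, x)‖ < e := by
    simpa [famSeq, hr] using h4
  have h6 := ContinuousMultilinearMap.le_opNorm
    (iteratedFDeriv ℝ 1 H.1 (t, x) - iteratedFDeriv ℝ 1 G.1 (t, x)) (fun _ => ((0, 1) : (Fin q → ℝ) × ℝ))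
  rw [dx_eq (FamFun.c1 hr H), dx_eq (FamFun.c1 hr G)]
  simp [iteratedFDeriv_one_apply, Prod.norm_def] at h6
  linarith

theorem tendsto_fam {ι : Type*} {l : Filter ι} {r : ℕ∞} {u : ι → FamFun r q} {G : FamFun r q}
    {W : ι → (Fin q → ℝ) × ℝ → ℝ} (hu : ∀ i, (u i).1 = fun p => G.1 p + W i p)
    (hW : ∀ i, ContDiff ℝ r (W i))
    (h : ∀ k : ℕ, (k : ℕ∞) ≤ r → ∀ e > 0, ∀ᶠ i in l, ∀ p, ‖iteratedFDeriv ℝ k (W i) p‖ ≤ e) :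
    Tendsto u l (𝓝 G) := by
  rw [nhds_induced, tendsto_comap_iff, tendsto_pi_nhds]
  intro k
  by_cases hk : (k : ℕ∞) ≤ r
  · simp only [Function.comp_def, famSeq, hk, if_true]
    refine UniformFun.tendsto_iff_tendstoUniformly.2 ?_
    rw [Metric.tendstoUniformly_iff]
    intro e he
    filter_upwards [h k hk (e / 2) (by linarith)] with i hi p
    rw [dist_comm, dist_eq_norm]
    have hk' : (k : WithTop ℕ∞) ≤ (r : WithTop ℕ∞) := by exact_mod_cast hk
    have e1 : iteratedFDeriv ℝ k (u i).1 p = iteratedFDeriv ℝ k G.1 p + iteratedFDeriv ℝ k (W i) p := by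
      rw [hu i]
      exact iteratedFDeriv_add_apply (G.2.1.of_le hk').contDiffAt ((hW i).of_le hk').contDiffAt
    simp only [Function.comp_def, UniformFun.toFun_ofFun, e1, add_sub_cancel_left]
    linarith [hi p]
  · simp only [Function.comp_def, famSeq, hk, if_false]
    exact tendsto_const_nhds

/-- The families for which the set of parameters in the cube with a non-locked member has measure
less than `1/(n+1)`. -/
def GoodFam (D : ExpData) (r : ℕ∞) (q n : ℕ) : Set (FamFun r q) :=
  {G | volume {t | t ∈ cube q ∧ ¬ D.Lock (famMem G t)} < ENNReal.ofReal (1 / (n + 1 : ℝ))}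

theorem isOpen_lockD {D : ExpData} {r : ℕ∞} (hr : 1 ≤ r) (G : FamFun r q) (δ : ℝ) :
    IsOpen {t | ∃ δ' > δ, D.LockD δ' (famMem G t)} := by
  rw [isOpen_iff_mem_nhds]
  rintro t ⟨δ', hδ, h⟩
  have hC := FamFun.c1 hr G
  filter_upwards [near_param (dx_cont hC) (dx_per G.2.2) t (e := (δ' - δ) / 2) (by linarith)]
    with s hs
  exact ⟨δ' - (δ' - δ) / 2, by linarith, h.pert (lip_of_dx hC hC G.2.2 G.2.2 hs)⟩

/-- Locking is open in the `C^1` topology, uniformly off a set of parameters of small measure. -/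
theorem GoodFam_open (D : ExpData) {r : ℕ∞} (hr : 1 ≤ r) (n : ℕ) : IsOpen (GoodFam D r q n) := by
  rw [isOpen_iff_mem_nhds]
  intro G hG
  set B : ℕ → Set (Fin q → ℝ) := fun j =>
    cube q ∩ {t | ∃ δ' > (1 / 2 : ℝ) ^ j, D.LockD δ' (famMem G t)}ᶜ with hB
  have hBc : ∀ j, IsClosed (B j) := fun j =>
    (cube_compact q).isClosed.inter (isOpen_lockD hr G _).isClosed_compl
  have hBa : Antitone B := fun i j hij t ht => by
    refine ⟨ht.1, fun ⟨δ', h1, h2⟩ => ht.2 ⟨δ', lt_of_le_of_lt ?_ h1, h2⟩⟩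
    exact pow_le_pow_of_le_one (by norm_num) (by norm_num) hij
  have hBi : ⋂ j, B j = {t | t ∈ cube q ∧ ¬ D.Lock (famMem G t)} := by
    ext t
    simp only [mem_iInter, mem_ofPred_eq]
    constructor
    · intro h
      refine ⟨(h 0).1, fun ⟨δ, hδ, hl⟩ => ?_⟩
      obtain ⟨j, hj⟩ := exists_pow_lt_of_lt_one hδ (show (1 / 2 : ℝ) < 1 by norm_num)
      exact (h j).2 ⟨δ, hj, hl⟩
    · intro h j
      refine ⟨h.1, fun ⟨δ', h1, h2⟩ => h.2 (h2.lock (lt_trans (by positivity) h1))⟩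
  have ht := tendsto_measure_iInter_atTop (μ := volume) (s := B)
    (fun j => (hBc j).measurableSet.nullMeasurableSet) hBa
    ⟨0, ((measure_mono inter_subset_left).trans_lt (cube_compact q).measure_lt_top).ne⟩
  rw [hBi] at ht
  obtain ⟨j, hj⟩ := (ht.eventually_lt_const hG).exists
  filter_upwards [nhds_dx hr G (e := (1 / 2 : ℝ) ^ j) (by positivity)] with H hH
  refine lt_of_le_of_lt (measure_mono ?_) hj
  rintro t ⟨htc, hl⟩
  refine ⟨htc, fun ⟨δ', h1, h2⟩ => hl ?_⟩
  exact (h2.pert (lip_of_dx (FamFun.c1 hr G) (FamFun.c1 hr H) G.2.2 H.2.2 (hH t))).lock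
    (by linarith)

/-- The families whose derivative in the circle direction is uniformly Lipschitz over the cube. -/
def LipFam (r : ℕ∞) (q : ℕ) : Set (FamFun r q) :=
  {G | ∃ M, ∀ t ∈ cube q, ∀ x y, |dx G.1 t x - dx G.1 t y| ≤ M * |x - y|}

end EC

/-! ### Generic families -/

namespace EC

variable {q : ℕ}

theorem Psi_lip (ω ω' : Om) : Lip (dd ω ω') (fun z => Psi ω (rep z) - Psi ω' (rep z)) := by
  obtain ⟨P, hP⟩ := exists_pert (h := fun _ => 0) (h' := fun _ => 0) (M := 0) (ε := 1)
    (fun _ => rfl) (fun x => hasDerivAt_const x 0) le_rfl (by simp) (by simp) one_pos le_rfl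
  have : HasD (fun z => P.g ω z - P.g ω' z) (fun z => P.g' ω z - P.g' ω' z) :=
    ⟨(P.hasD ω).1.sub (P.hasD ω').1, fun a => ((P.hasD ω).2 a).sub ((P.hasD ω').2 a)⟩
  simpa [hP] using this.lip (P.g'_sub_le ω _)

/-- The family perturbed by `ε Ψ_ω`. -/
def addPsi {r : ℕ∞} (G : FamFun r q) (ε : ℝ) (ω : Om) : FamFun r q :=
  ⟨fun p => G.1 p + ε * Psi ω p.2, G.2.1.add (contDiff_const.mul
    (((Psi_smooth ω).of_le (WithTop.coe_le_coe.2 le_top)).comp contDiff_snd)),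
    fun t x => by simp only [G.2.2, Psi_per]⟩

theorem isOpen_lock_pair (D : ExpData) {r : ℕ∞} (hr : 1 ≤ r) (G : FamFun r q) {ε : ℝ}
    (hε : 0 < ε) (hε1 : ε ≤ 1) :
    IsOpen {p : (Fin q → ℝ) × Om | D.Lock (famMem (addPsi G ε p.2) p.1)} := by
  rw [isOpen_iff_mem_nhds]
  rintro ⟨t, ω⟩ ⟨δ, hδ, h⟩
  have hC := FamFun.c1 hr G
  have h1 : ∀ᶠ p : (Fin q → ℝ) × Om in 𝓝 (t, ω), ∀ x, |dx G.1 p.1 x - dx G.1 t x| ≤ δ / 4 := by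
    have h0 := near_param (dx_cont hC) (dx_per G.2.2) t (e := δ / 4) (by linarith)
    exact (continuous_fst.tendsto (t, ω)).eventually h0
  have h2 : ∀ᶠ p : (Fin q → ℝ) × Om in 𝓝 (t, ω), dd p.2 ω < δ / 4 := by
    have hc : Continuous fun p : (Fin q → ℝ) × Om => dd p.2 ω :=
      dd_cont.comp (by fun_prop : Continuous fun p : (Fin q → ℝ) × Om => (p.2, ω))
    exact hc.continuousAt.eventually_lt continuousAt_const (by simp [dd_self]; linarith)
  filter_upwards [h1, h2] with p hp1 hp2
  have hl := (lip_of_dx hC hC G.2.2 G.2.2 hp1).add ((Psi_lip p.2 ω).const_mul ε)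
  have hl2 : Lip (δ / 2) (fun z => famMem (addPsi G ε p.2) p.1 z - famMem (addPsi G ε ω) t z) := by
    refine Lip.mono (L := δ / 4 + |ε| * dd p.2 ω) ?_ ?_
    · intro x y
      have := hl x y
      simp only [famMem, addPsi]
      convert this using 2
      ring
    · rw [abs_of_pos hε]
      nlinarith
  have hD : D.LockD δ (famMem (addPsi G ε ω) t) := h
  exact (hD.pert hl2).lock (by linarith)

/-- By Fubini, some single `ω` makes almost every member of the perturbed family locked. -/
theorem exists_good_omega (D : ExpData) (hD : D.HoldScales) {r : ℕ∞} (hr : 1 ≤ r) {G : FamFun r q}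
    (hG : G ∈ LipFam r q) {ε : ℝ} (hε : 0 < ε) (hε1 : ε ≤ 1) :
    ∃ ω, volume {t | t ∈ cube q ∧ ¬ D.Lock (famMem (addPsi G ε ω) t)} = 0 := by
  obtain ⟨M, hM⟩ := hG
  have hC := FamFun.c1 hr G
  have hae : ∀ᵐ t : Fin q → ℝ, ∀ᵐ ω ∂Pr, t ∈ cube q → D.Lock (famMem (addPsi G ε ω) t) := by
    refine Eventually.of_forall fun t => ?_
    by_cases ht : t ∈ cube q
    · have hcx := dx_cont hC
      obtain ⟨M', hM'0, hM'⟩ := bdd_per1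
        (hcx.comp (by fun_prop : Continuous fun x : ℝ => (t, x))) (dx_per G.2.2 t)
      obtain ⟨P, hP⟩ := exists_pert (h := fun x => G.1 (t, x)) (h' := dx G.1 t)
        (M := max M' (max M 0)) (G.2.2 t) (dx_hasDeriv hC t) (by positivity)
        (fun x => (hM' x).trans (le_max_left _ _))
        (fun x y => (hM t ht x y).trans (mul_le_mul_of_nonneg_right
          ((le_max_left _ _).trans (le_max_right _ _)) (abs_nonneg _))) hε hε1
      filter_upwards [P.lock_ae D hD] with ω hω _
      have e : P.g ω = famMem (addPsi G ε ω) t := funext fun z => hP ω z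
      rwa [e] at hω
    · exact Eventually.of_forall fun ω h => absurd h ht
  have hmeas : MeasurableSet {p : (Fin q → ℝ) × Om |
      p.1 ∈ cube q → D.Lock (famMem (addPsi G ε p.2) p.1)} := by
    have : {p : (Fin q → ℝ) × Om | p.1 ∈ cube q → D.Lock (famMem (addPsi G ε p.2) p.1)} =
        (Prod.fst ⁻¹' cube q)ᶜ ∪ {p | D.Lock (famMem (addPsi G ε p.2) p.1)} := by
      ext p; simp only [mem_ofPred_eq, mem_union, mem_compl_iff, mem_preimage]; tauto
    rw [this]
    exact ((cube_compact q).isClosed.preimage continuous_fst).measurableSet.compl.union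
      (isOpen_lock_pair D hr G hε hε1).measurableSet
  rw [Measure.ae_ae_comm hmeas] at hae
  obtain ⟨ω, hω⟩ := hae.exists
  refine ⟨ω, ?_⟩
  rw [ae_iff] at hω
  convert hω using 3
  ext t
  simp [Classical.not_imp]

theorem Psi_snd_bound (ω : Om) (ε : ℝ) (k : ℕ) (p : (Fin q → ℝ) × ℝ) :
    ‖iteratedFDeriv ℝ k (fun p : (Fin q → ℝ) × ℝ => ε * Psi ω p.2) p‖ ≤ |ε| * ∑' i, vB k i := by
  have hs : ContDiff ℝ k (Psi ω) := (Psi_smooth ω).of_le (by exact_mod_cast le_top)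
  have h1 : iteratedFDeriv ℝ k (fun p : (Fin q → ℝ) × ℝ => ε * Psi ω p.2) p =
      ε • iteratedFDeriv ℝ k (fun p : (Fin q → ℝ) × ℝ => Psi ω p.2) p := by
    have hc : ContDiff ℝ k (fun p : (Fin q → ℝ) × ℝ => Psi ω p.2) := hs.comp contDiff_snd
    exact iteratedFDeriv_const_smul_apply (a := ε) hc.contDiffAt
  have h2 : iteratedFDeriv ℝ k (fun p : (Fin q → ℝ) × ℝ => Psi ω p.2) p =
      (iteratedFDeriv ℝ k (Psi ω) p.2).compContinuousLinearMap
        fun _ => ContinuousLinearMap.snd ℝ (Fin q → ℝ) ℝ :=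
    (ContinuousLinearMap.snd ℝ (Fin q → ℝ) ℝ).iteratedFDeriv_comp_right hs p le_rfl
  rw [h1, norm_smul, Real.norm_eq_abs, h2]
  refine mul_le_mul_of_nonneg_left ?_ (abs_nonneg _)
  refine (ContinuousMultilinearMap.norm_compContinuousLinearMap_le _ _).trans ?_
  refine le_trans (mul_le_of_le_one_right (norm_nonneg _) ?_) (Psi_bound ω k p.2)
  exact Finset.prod_le_one (fun _ _ => norm_nonneg _)
    fun _ _ => ContinuousLinearMap.norm_snd_le ..

theorem LipFam_subset (D : ExpData) (hD : D.HoldScales) {r : ℕ∞} (hr : 1 ≤ r) (n : ℕ) :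
    LipFam r q ⊆ closure (GoodFam D r q n) := by
  intro G hG
  have hε : ∀ i : ℕ, 0 < 1 / ((i : ℝ) + 1) := fun i => by positivity
  have hε1 : ∀ i : ℕ, 1 / ((i : ℝ) + 1) ≤ 1 := fun i => by
    rw [div_le_one (by positivity)]; linarith [Nat.cast_nonneg (α := ℝ) i]
  choose ω hω using fun i => exists_good_omega D hD hr hG (hε i) (hε1 i)
  refine mem_closure_of_tendsto (f := fun i : ℕ => addPsi G (1 / ((i : ℝ) + 1)) (ω i)) (b := atTop)
    ?_ (Eventually.of_forall fun i => ?_)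
  · refine tendsto_fam (W := fun i p => 1 / ((i : ℝ) + 1) * Psi (ω i) p.2) (fun i => rfl)
      (fun i => contDiff_const.mul
        (((Psi_smooth (ω i)).of_le (WithTop.coe_le_coe.2 le_top)).comp contDiff_snd))
      fun k _ e he => ?_
    have ht : Tendsto (fun i : ℕ => |1 / ((i : ℝ) + 1)| * ∑' i, vB k i) atTop (𝓝 0) := by
      simpa using (tendsto_one_div_add_atTop_nhds_zero_nat (𝕜 := ℝ)).abs.mul_const (∑' i, vB k i)
    filter_upwards [ht.eventually_lt_const he] with i hi p
    exact (Psi_snd_bound (ω i) _ k p).trans hi.le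
  · change volume _ < _
    rw [hω i, ENNReal.ofReal_pos]
    positivity

theorem fderiv_per {G : (Fin q → ℝ) × ℝ → ℝ} (hp : ∀ t x, G (t, x + 1) = G (t, x))
    (t : Fin q → ℝ) (x : ℝ) : fderiv ℝ G (t, x + 1) = fderiv ℝ G (t, x) := by
  have h := fderiv_comp_add_right (𝕜 := ℝ) (f := G) (x := (t, x)) ((0, 1) : (Fin q → ℝ) × ℝ)
  have e : (fun p : (Fin q → ℝ) × ℝ => G (p + (0, 1))) = G := by
    funext p
    have := hp p.1 p.2
    simpa [Prod.add_def] using this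
  rw [e] at h
  rw [h]
  simp

theorem LipFam_of_two_le {r : ℕ∞} (hr : 2 ≤ r) (G : FamFun r q) : G ∈ LipFam r q := by
  have hC2 : ContDiff ℝ 2 G.1 := G.2.1.of_le (WithTop.coe_le_coe.2 hr)
  have hC1 : ContDiff ℝ 1 G.1 := hC2.of_le (by norm_num)
  set K : (Fin q → ℝ) × ℝ → ℝ := fun p => dx G.1 p.1 p.2 with hK
  have hKC : ContDiff ℝ 1 K := by
    have : K = fun p => fderiv ℝ G.1 p (0, 1) := funext fun p => dx_eq hC1 p.1 p.2
    rw [this]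
    exact (hC2.fderiv_right (m := 1) (by norm_num)).clm_apply contDiff_const
  have hKp : ∀ t x, K (t, x + 1) = K (t, x) := fun t x => dx_per G.2.2 t x
  obtain ⟨M, _, hM⟩ := bdd_per (dx_cont hKC) (fun t x => dx_per hKp t x) (cube_compact q)
  refine ⟨M, fun t ht x y => ?_⟩
  exact convex_univ.norm_image_sub_le_of_norm_hasDerivWithin_le (f := fun x => K (t, x)) (x := y)
    (y := x) (fun z _ => (dx_hasDeriv hKC t z).hasDerivWithinAt) (fun z _ => hM t ht z)
    trivial trivial

/-- For `r ≥ 2` all families qualify; for `r = 1`, Steklov averages in the circle variable, cut off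
in the parameter, approximate a given family. -/
theorem LipFam_dense {r : ℕ∞} (hr : 1 ≤ r) : Dense (LipFam r q) := by
  intro G
  rcases hr.eq_or_lt with h | h
  swap
  · have h2 : (2 : ℕ∞) ≤ r := by
      have := Order.add_one_le_of_lt h
      simpa [one_add_one_eq_two] using this
    exact subset_closure (LipFam_of_two_le h2 G)
  subst h
  have hC1 : ContDiff ℝ 1 G.1 := FamFun.c1 le_rfl G
  have hp := G.2.2
  set v : (Fin q → ℝ) × ℝ := (0, 1) with hv
  have hpv : ∀ (t : Fin q → ℝ) (x s : ℝ), (t, x) + s • v = (t, x + s) := fun t x s => by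
    simp [hv, Prod.add_def]
  set S : ℝ → (Fin q → ℝ) × ℝ → ℝ := fun ε => stek v ε G.1 with hS
  have hSC : ∀ ε, ContDiff ℝ 1 (S ε) := fun ε => stek_contDiff hC1
  have hSp : ∀ ε t x, S ε (t, x + 1) = S ε (t, x) := fun ε t x => by
    simp only [hS, stek, hpv]
    congr 1
    refine intervalIntegral.integral_congr fun y _ => ?_
    rw [add_right_comm, hp]
  let χ : ContDiffBump (0 : Fin q → ℝ) := ⟨1, 2, one_pos, one_lt_two⟩
  have hχC : ContDiff ℝ 1 (fun p : (Fin q → ℝ) × ℝ => χ p.1) := χ.contDiff.comp contDiff_fst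
  set K : Set (Fin q → ℝ) := Metric.closedBall 0 2 with hK
  have hKc : IsCompact K := isCompact_closedBall _ _
  have hχ0 : ∀ p : (Fin q → ℝ) × ℝ, p.1 ∉ K →
      (fun p : (Fin q → ℝ) × ℝ => χ p.1) =ᶠ[𝓝 p] fun _ => 0 := fun p hp => by
    have : {p : (Fin q → ℝ) × ℝ | p.1 ∉ K} ∈ 𝓝 p :=
      (hKc.isClosed.preimage continuous_fst).isOpen_compl.mem_nhds hp
    filter_upwards [this] with p' hp'
    refine χ.zero_of_le_dist ?_
    have h1 : p'.1 ∉ K := hp'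
    simp only [hK, Metric.mem_closedBall, not_le] at h1
    exact h1.le
  obtain ⟨C, hC0, hC⟩ := bdd_per (Φ := fderiv ℝ fun p : (Fin q → ℝ) × ℝ => χ p.1)
    (hχC.continuous_fderiv one_ne_zero) (fun t x => fderiv_per (fun _ _ => rfl) t x) hKc
  set W : ℝ → (Fin q → ℝ) × ℝ → ℝ := fun ε p => χ p.1 * (S ε p - G.1 p) with hW
  have hWC : ∀ ε, ContDiff ℝ 1 (W ε) := fun ε => hχC.mul ((hSC ε).sub hC1)
  have hSd : ∀ ε p, HasFDerivAt (S ε) (stek v ε (fderiv ℝ G.1) p) p := fun ε p =>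
    stek_hasFDeriv hC1 p
  have hWd : ∀ ε p, fderiv ℝ (W ε) p = χ p.1 • (stek v ε (fderiv ℝ G.1) p - fderiv ℝ G.1 p) +
      (S ε p - G.1 p) • fderiv ℝ (fun p : (Fin q → ℝ) × ℝ => χ p.1) p := fun ε p =>
    (((hχC.differentiable one_ne_zero p).hasFDerivAt).mul
      ((hSd ε p).sub (hC1.differentiable one_ne_zero p).hasFDerivAt)).fderiv
  have hχ1 : ∀ t, |χ t| ≤ 1 := fun t => by rw [abs_of_nonneg χ.nonneg]; exact χ.le_one
  -- uniform smallness of the two factors over the support of the cutoff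
  have hs0 : ∀ e > 0, ∀ᶠ ε in 𝓝[>] (0 : ℝ), ∀ t ∈ K, ∀ x, |S ε (t, x) - G.1 (t, x)| ≤ e :=
    fun e he => by
    obtain ⟨δ, hδ, hu⟩ := unif_per hC1.continuous hp hKc he
    filter_upwards [Ioo_mem_nhdsGT hδ] with ε hε t ht x
    refine stek_close hC1.continuous hε.1 fun s hs => ?_
    rw [hpv]
    exact hu t ht x s (hs.trans hε.2.le)
  have hs1 : ∀ e > 0, ∀ᶠ ε in 𝓝[>] (0 : ℝ), ∀ t ∈ K, ∀ x,
      ‖stek v ε (fderiv ℝ G.1) (t, x) - fderiv ℝ G.1 (t, x)‖ ≤ e := fun e he => by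
    have hc := hC1.continuous_fderiv one_ne_zero
    obtain ⟨δ, hδ, hu⟩ := unif_per hc (fderiv_per hp) hKc he
    filter_upwards [Ioo_mem_nhdsGT hδ] with ε hε t ht x
    refine stek_close hc hε.1 fun s hs => ?_
    rw [hpv]
    exact hu t ht x s (hs.trans hε.2.le)
  let u : ℝ → FamFun 1 q := fun ε => ⟨fun p => G.1 p + W ε p, by
      exact_mod_cast hC1.add (hWC ε), fun t x => by simp only [hW, hp, hSp]⟩
  refine mem_closure_of_tendsto (f := u) (b := 𝓝[>] (0 : ℝ)) ?_ ?_
  · refine tendsto_fam (W := W) (fun _ => rfl) (fun ε => by exact_mod_cast hWC ε)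
      fun k hk e he => ?_
    have hk1 : k ≤ 1 := by exact_mod_cast hk
    interval_cases k
    · filter_upwards [hs0 e he] with ε hε p
      rw [norm_iteratedFDeriv_zero, Real.norm_eq_abs]
      by_cases hpK : p.1 ∈ K
      · simp only [hW]
        rw [abs_mul]
        exact (mul_le_of_le_one_left (abs_nonneg _) (hχ1 _)).trans (hε p.1 hpK p.2)
      · simp only [hW]
        rw [(hχ0 p hpK).eq_of_nhds, zero_mul, abs_zero]
        exact he.le
    · filter_upwards [hs0 (e / (2 * (C + 1))) (by positivity), hs1 (e / 2) (by positivity)]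
        with ε h0 h1 p
      rw [norm_iteratedFDeriv_one, hWd]
      by_cases hpK : p.1 ∈ K
      · have a0 := h0 p.1 hpK p.2
        have a1 := h1 p.1 hpK p.2
        have a2 := hC p.1 hpK p.2
        refine (norm_add_le _ _).trans ?_
        rw [norm_smul, norm_smul, Real.norm_eq_abs, Real.norm_eq_abs]
        have b1 := mul_le_of_le_one_left
          (norm_nonneg (stek v ε (fderiv ℝ G.1) p - fderiv ℝ G.1 p)) (hχ1 p.1)
        have b2 : |S ε p - G.1 p| * ‖fderiv ℝ (fun p : (Fin q → ℝ) × ℝ => χ p.1) p‖ ≤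
            e / (2 * (C + 1)) * (C + 1) :=
          mul_le_mul a0 (a2.trans (by linarith)) (norm_nonneg _) (by positivity)
        rw [show e / (2 * (C + 1)) * (C + 1) = e / 2 by field_simp] at b2
        have a1' : ‖stek v ε (fderiv ℝ G.1) p - fderiv ℝ G.1 p‖ ≤ e / 2 := a1
        linarith
      · have e1 : χ p.1 = 0 := (hχ0 p hpK).eq_of_nhds
        have e2 : fderiv ℝ (fun p : (Fin q → ℝ) × ℝ => χ p.1) p = 0 := by
          rw [(hχ0 p hpK).fderiv_eq]; simp
        rw [e1, e2, zero_smul, smul_zero, add_zero, norm_zero]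
        exact he.le
  · filter_upwards [self_mem_nhdsWithin] with ε hε
    have hε : 0 < ε := hε
    obtain ⟨M, hM0, hM⟩ := bdd_per (dx_cont hC1) (fun t x => dx_per hp t x) (cube_compact q)
    refine ⟨M / ε, fun t ht x y => ?_⟩
    have hχt : χ t = 1 := by
      refine χ.one_of_mem_closedBall ?_
      rw [mem_closedBall_zero_iff, pi_norm_le_iff_of_nonneg (by norm_num)]
      intro i
      rw [Real.norm_eq_abs, abs_of_nonneg (ht i).1]
      exact (ht i).2
    have hd : ∀ z, dx (u ε).1 t z = (G.1 (t, z + ε) - G.1 (t, z - ε)) / (2 * ε) := fun z => by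
      have e1 : (fun y => (u ε).1 (t, y)) = fun y => S ε (t, y) := by
        funext y
        simp only [u, hW, hχt]; ring
      have e2 : dx (u ε).1 t z = dx (S ε) t z := by unfold dx; rw [e1]
      rw [e2, dx_eq (hSC ε)]
      have := stek_dir (v := v) hε hC1 (t, z)
      rw [sub_eq_add_neg (t, z), ← neg_smul, hpv, hpv] at this
      exact this
    have hl : ∀ a b, |G.1 (t, a) - G.1 (t, b)| ≤ M * |a - b| := fun a b =>
      convex_univ.norm_image_sub_le_of_norm_hasDerivWithin_le (f := fun x => G.1 (t, x)) (x := b)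
        (y := a) (fun z _ => (dx_hasDeriv hC1 t z).hasDerivWithinAt) (fun z _ => hM t ht z)
        trivial trivial
    rw [hd, hd, ← sub_div, abs_div, abs_of_pos (by linarith : 0 < 2 * ε), div_le_iff₀ (by linarith)]
    have a1 := abs_le.1 (hl (x + ε) (y + ε))
    have a2 := abs_le.1 (hl (x - ε) (y - ε))
    rw [show x + ε - (y + ε) = x - y by ring] at a1
    rw [show x - ε - (y - ε) = x - y by ring] at a2
    rw [show M / ε * |x - y| * (2 * ε) = 2 * (M * |x - y|) by field_simp, abs_le]
    constructor <;> linarith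

theorem GoodFam_dense (D : ExpData) (hD : D.HoldScales) {r : ℕ∞} (hr : 1 ≤ r) (n : ℕ) :
    Dense (GoodFam D r q n) := by
  rw [← dense_closure]
  exact (LipFam_dense hr).mono (LipFam_subset D hD hr n)

theorem exists_families (D : ExpData) (hD : D.HoldScales) {r : ℕ∞} (hr : 1 ≤ r) :
    ∃ R : Set (FamFun r q), R ∈ residual (FamFun r q) ∧ ∀ G ∈ R,
      volume {t : Fin q → ℝ | (∀ i, t i ∈ Set.Icc (0 : ℝ) 1) ∧
        ¬ UniqMaxPeriodic (famMem G t) D.T} = 0 := by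
  refine ⟨⋂ n, GoodFam D r q n, countable_iInter_mem.2 fun n =>
    residual_of_dense_open (GoodFam_open D hr n) (GoodFam_dense D hD hr n), fun G hG => ?_⟩
  have h0 : volume {t | t ∈ cube q ∧ ¬ D.Lock (famMem G t)} = 0 := by
    by_contra hne
    have ht : Tendsto (fun n : ℕ => ENNReal.ofReal (1 / (n + 1 : ℝ))) atTop (𝓝 0) := by
      simpa using ENNReal.tendsto_ofReal (tendsto_one_div_add_atTop_nhds_zero_nat (𝕜 := ℝ))
    obtain ⟨n, hn⟩ := (ht.eventually_lt_const (pos_iff_ne_zero.2 hne)).exists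
    exact absurd (mem_iInter.1 hG n) (not_lt.2 hn.le)
  refine measure_mono_null ?_ h0
  rintro t ⟨ht, hu⟩
  exact ⟨ht, fun hl => hu hl.uniq⟩

end EC

end

/-- **Theorem A.** For `r ∈ {1,2,…,∞}` and `q ≥ 1` there is a residual subset `𝓔^r_*` of
`𝓔^r` containing `𝓔^ω` such that for every `T ∈ 𝓔^r_*`, for a generic `C^r` family of
functions with `q` parameters, for Lebesgue a.e. parameter `t ∈ [0,1]^q` the pair `(f_t, T)`
is uniquely maximized by a periodic measure. -/
theorem theoremA (r : ℕ∞) (hr : 1 ≤ r) (q : ℕ) (hq : 1 ≤ q) :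
    ∃ Estar : Set (ExpMap r),
      Estar ∈ residual (ExpMap r) ∧
      {F : ExpMap r | ∀ x : ℝ, AnalyticAt ℝ F.1 x} ⊆ Estar ∧
      ∀ F ∈ Estar, ∃ R : Set (FamFun r q),
        R ∈ residual (FamFun r q) ∧
        ∀ G ∈ R,
          volume {t : Fin q → ℝ | (∀ i, t i ∈ Set.Icc (0 : ℝ) 1) ∧
            ¬ UniqMaxPeriodic (famMem G t) (cmap F.1)} = 0 := by
  obtain ⟨Estar, h1, h2, h3⟩ := EC.exists_Estar hr
  refine ⟨Estar, h1, h2, fun F hF => ?_⟩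
  obtain ⟨D, hD, hDT⟩ := h3 F hF
  rw [← hDT]
  exact EC.exists_families D hD hr
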